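/- Let N ≥ 8 and let u : ℝ^N → ℝ be a smooth solution of the minimal surface equation div(∇u / √(1 + |∇u|²)) = 0 on all of ℝ^N. Suppose there exist N − 7 indices j ∈ {1, …, N} such that for each of these indices the partial derivative ∂u/∂x_j is bounded on one side on ℝ^N (i.e., for each such j, either ∂u/∂x_j is bounded from below on ℝ^N or ∂u/∂x_j is bounded from above on ℝ^N; the side may depend on j). Then u is an affine function, i.e., there exist a ∈ ℝ^N and b ∈ ℝ such that u(x) = ⟨a, x⟩ + b for all x ∈ ℝ^N. -/

import Mathlib

/-!
Let `M` be the graph of `u`, normalized so that `u 0 = 0`, and let `ν` be its upward unit normal,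
`δ` its tangential derivatives, `A` its second fundamental form, `a2 = |A|²`, `s = ⟪X, ν⟫` its
support function and `w = ⟪ν, ξ⟫` a component of the normal. Everything is computed on the base
`ℝ^N`: `u`, `ν`, `A` are smooth functions there, and integrals over `M` are integrals against the
density `√(1 + |∇u|²)`. For a family of minimal graphs, call a nonnegative quantity *negligible*
(`Neg`) if its integrals over the part of the graphs in any fixed ball tend to zero.

*Blow-down.* A one-sided bound on `∂u/∂x_j` says that some vector `ξ` has `⟪ν, ξ⟫ ≥ 0` on all of
`M`, with `ν_j` a combination of `⟪ν, ξ⟫` and of the vertical component `ν_none > 0`. Hence all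
components of `ν` but seven are controlled by nonnegative functions `w` with `Δ w = -a2 w`. The
graphs are area minimizing (calibration by the vertically constant extension of `ν`), which bounds
the area ratios, and the monotonicity formula for these ratios and for their `w`-weighted versions
provides rescalings of `M` along which `s²` and `a2 w` are negligible (`blowdown`).

*Vanishing of the curvature.* Stability, the Simons identity and a Kato type inequality bound
`∫ a2²` and `∫ |∇|A||²` locally. Thus the gradients of the controlled components `ν_k`, and the
functions `a2 |ν_k|`, are negligible, so in the limit the picture is invariant in these directions
and is conical in the other seven. Testing the stability inequality with
`|A| (1 + |X'|²)^(-b/2)`, `b = 11/10`, where `X'` collects the other seven coordinates, leaves a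
positive multiple of `∫ a2 (1 + |X'|²)^(-b-1)`; the number seven enters as positivity of
`6 - 4 * b - b ^ 2`. Compared with the area of tubes around `X' = 0` this gives decay of the curvature
at large scales, and the divergence identity for `δ_k a2` (translation invariance of the measure
`a2` in the limit) carries the decay back to scale one: `a2` itself is negligible (`neg_a2`).

*Flatness of the limit.* When `a2` and `s²` are negligible, most points are good, in that little
curvature accumulates around them on every scale. If two good points had different normals, the
almost invariance of the corresponding sheets under translations and stretchings would let both
sheets be moved onto the same axis, and their total area would beat the calibration bound
(`two_points`). So all good points have nearly the same normal, and the area ratio of the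
rescaled graph is nearly that of a plane (`density_limit`).

*Conclusion.* The area ratios of `M` about `0` increase with the scale and their limits at zero
and at infinity both equal the planar value, so they are constant; then `s = 0`, the graph is a
cone, and a smooth function homogeneous of degree one is linear.
-/

open scoped BigOperators RealInnerProductSpace

/-- Partial derivative of `f : ℝ^N → ℝ` in the `i`-th coordinate direction. -/
noncomputable def partialDeriv' {N : ℕ} (f : EuclideanSpace ℝ (Fin N) → ℝ) (i : Fin N)
    (x : EuclideanSpace ℝ (Fin N)) : ℝ :=
  fderiv ℝ f x (EuclideanSpace.single i 1)

/-- `u` solves the minimal surface equation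
`∑ i ∂/∂xᵢ ( (∂u/∂xᵢ) / √(1 + |∇u|²) ) = 0` on all of `ℝ^N`. -/
def IsMSESolution {N : ℕ} (u : EuclideanSpace ℝ (Fin N) → ℝ) : Prop :=
  ∀ x, ∑ i, partialDeriv'
      (fun y => partialDeriv' u i y / Real.sqrt (1 + ∑ k, (partialDeriv' u k y) ^ 2)) i x = 0

/-- `u` is affine: `u x = ⟪a, x⟫ + b`. -/
def IsAffineFun {N : ℕ} (u : EuclideanSpace ℝ (Fin N) → ℝ) : Prop :=
  ∃ (a : EuclideanSpace ℝ (Fin N)) (b : ℝ), ∀ x, u x = ⟪a, x⟫ + b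

/-! ### Algebra of the tangential derivatives of a minimal hypersurface -/

/-- The tangential derivations `δ i` and the unit normal `ν` of a minimal hypersurface, over a
commutative ring of functions: the `δ i` kill the normal direction, the second fundamental form
`δ i (ν j)` is symmetric and trace free, and the commutators are those induced by the flat ambient
space. -/
structure TangentialCalculus (R ι : Type*) [CommRing R] [Algebra ℝ R] [Fintype ι] where
  δ : ι → Derivation ℝ R R
  ν : ι → R
  unit : ∑ i, ν i * ν i = 1
  tangent : ∀ f, ∑ i, ν i * δ i f = 0
  symm : ∀ i j, δ i (ν j) = δ j (ν i)
  trace : ∑ i, δ i (ν i) = 0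
  comm : ∀ i j f, δ i (δ j f) - δ j (δ i f)
    = ∑ h, (ν i * δ j (ν h) - ν j * δ i (ν h)) * δ h f

namespace TangentialCalculus

variable {R ι : Type*} [CommRing R] [Algebra ℝ R] [Fintype ι] (T : TangentialCalculus R ι)

/-- The second fundamental form. -/
def A (i j : ι) : R := T.δ i (T.ν j)

/-- The square of the second fundamental form. -/
def A2 (i j : ι) : R := ∑ h, T.A i h * T.A h j

/-- The squared norm of the second fundamental form. -/
def a2 : R := ∑ i, ∑ j, T.A i j * T.A i j

/-- The Laplace-Beltrami operator. -/
def lap (f : R) : R := ∑ i, T.δ i (T.δ i f)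

/-- The inner product of tangential gradients. -/
def Γ (f g : R) : R := ∑ i, T.δ i f * T.δ i g

lemma A_symm (i j : ι) : T.A i j = T.A j i := T.symm i j

lemma A2_symm (i j : ι) : T.A2 i j = T.A2 j i := by
  unfold A2
  exact Finset.sum_congr rfl fun h _ => by rw [T.A_symm i h, T.A_symm h j, mul_comm]

private lemma half_cancel {x : R} (h : x + x = 0) : x = 0 := by
  have h2 : (2 : ℝ) • x = 0 := by rw [two_smul]; exact h
  calc x = (1 / 2 : ℝ) • ((2 : ℝ) • x) := by rw [smul_smul]; norm_num
    _ = 0 := by rw [h2, smul_zero]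

lemma A_nu (i : ι) : ∑ j, T.A i j * T.ν j = 0 := by
  apply half_cancel
  have h := congrArg (T.δ i) T.unit
  simp only [map_sum, Derivation.leibniz, Derivation.map_one_eq_zero, smul_eq_mul] at h
  rw [← Finset.sum_add_distrib]
  rw [← h]
  exact Finset.sum_congr rfl fun j _ => by unfold A; ring

lemma nu_A (j : ι) : ∑ i, T.ν i * T.A i j = 0 := T.tangent _

lemma tr_A : ∑ i, T.A i i = 0 := T.trace

lemma nu_A2 (j : ι) : ∑ i, T.ν i * T.A2 i j = 0 := by
  unfold A2
  simp_rw [Finset.mul_sum]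
  rw [Finset.sum_comm]
  refine Finset.sum_eq_zero fun h _ => ?_
  simp_rw [← mul_assoc]
  rw [← Finset.sum_mul, T.nu_A, zero_mul]

lemma tr_A2 : ∑ i, T.A2 i i = T.a2 := by
  unfold A2 a2
  refine Finset.sum_congr rfl fun i _ => Finset.sum_congr rfl fun h _ => ?_
  rw [T.A_symm h i]

/-- `δ k` of the relation `A ν = 0`. -/
lemma nu_dA (k j : ι) : ∑ i, T.ν i * T.δ k (T.A i j) = - T.A2 k j := by
  have h := congrArg (T.δ k) (T.nu_A j)
  simp only [map_sum, Derivation.leibniz, map_zero, smul_eq_mul, Finset.sum_add_distrib] at h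
  rw [eq_neg_iff_add_eq_zero, ← h]
  congr 1
  exact Finset.sum_congr rfl fun i _ => by change T.A k i * _ = _ * T.A k i; ring

lemma comm' (i j : ι) (f : R) : T.δ i (T.δ j f) - T.δ j (T.δ i f)
    = ∑ h, (T.ν i * T.A j h - T.ν j * T.A i h) * T.δ h f := T.comm i j f

lemma div_A (j : ι) : ∑ i, T.δ i (T.A i j) = - (T.a2 * T.ν j) := by
  have h1 : ∀ i, T.δ i (T.A i j) = T.δ j (T.A i i)
      + ∑ h, (T.ν i * T.A j h - T.ν j * T.A i h) * T.A h i := by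
    intro i
    rw [T.A_symm i j]
    have := T.comm' i j (T.ν i)
    unfold A at *
    linear_combination this
  simp_rw [h1, Finset.sum_add_distrib, ← map_sum, T.tr_A, map_zero, zero_add, sub_mul,
    Finset.sum_sub_distrib]
  have h2 : ∑ i, ∑ h, T.ν i * T.A j h * T.A h i = 0 := by
    rw [Finset.sum_comm]
    refine Finset.sum_eq_zero fun h _ => ?_
    calc _ = T.A j h * ∑ i, T.ν i * T.A i h := by
          rw [Finset.mul_sum]
          exact Finset.sum_congr rfl fun i _ => by rw [T.A_symm h i]; ring
      _ = 0 := by rw [T.nu_A, mul_zero]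
  rw [h2, zero_sub, a2, Finset.sum_mul]
  congr 1
  refine Finset.sum_congr rfl fun i _ => ?_
  rw [Finset.sum_mul]
  exact Finset.sum_congr rfl fun h _ => by rw [T.A_symm h i]; ring

lemma lap_nu (j : ι) : T.lap (T.ν j) = - (T.a2 * T.ν j) := T.div_A j

/-- The Codazzi equation. -/
lemma codazzi (k i j : ι) : T.δ k (T.A i j) - T.δ i (T.A k j)
    = T.ν k * T.A2 i j - T.ν i * T.A2 k j := by
  have := T.comm' k i (T.ν j)
  unfold A2
  rw [Finset.mul_sum, Finset.mul_sum, ← Finset.sum_sub_distrib]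
  refine this.trans (Finset.sum_congr rfl fun h _ => ?_)
  change _ * T.A h j = _
  ring

/-- The contraction of `Δ A` with `A`. The Codazzi equations move the free index of `A` to the trace,
at the cost of commutators of tangential derivatives, which are quadratic in `A`. -/
lemma lap_A_contract : ∑ i, ∑ j, T.A i j * T.lap (T.A i j)
    = - (T.a2 * T.a2) - 2 * ∑ i, ∑ j, T.A2 i j * T.A2 i j := by
  have h1 : ∀ i j k, T.δ k (T.δ k (T.A i j)) = T.δ i (T.δ k (T.A k j))
      + (∑ h, (T.ν k * T.A i h - T.ν i * T.A k h) * T.δ h (T.A k j))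
      + (T.ν k * T.δ k (T.A2 i j) + T.A2 i j * T.A k k)
      - (T.ν i * T.δ k (T.A2 k j) + T.A2 k j * T.A k i) := by
    intro i j k
    have a := T.comm' k i (T.A k j)
    have b := congrArg (T.δ k) (T.codazzi k i j)
    simp only [map_sub, Derivation.leibniz, smul_eq_mul] at b
    change _ = _ + _ * T.A k k - (_ + _ * T.A k i) at b
    linear_combination a + b
  have h2 : ∀ i j, T.lap (T.A i j) = - (T.ν j * T.δ i T.a2) - T.a2 * T.A i j
      - (∑ h, T.A i h * T.A2 h j) - T.ν i * (∑ k, ∑ h, T.A k h * T.δ h (T.A k j))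
      - T.ν i * (∑ k, T.δ k (T.A2 k j)) - ∑ k, T.A2 k j * T.A k i := by
    intro i j
    unfold lap
    simp_rw [h1, Finset.sum_sub_distrib, Finset.sum_add_distrib, ← map_sum, T.div_A j,
      T.tangent, ← Finset.mul_sum, T.tr_A, sub_mul, Finset.sum_sub_distrib]
    have e1 : ∑ k, ∑ h, T.ν k * T.A i h * T.δ h (T.A k j) = - ∑ h, T.A i h * T.A2 h j := by
      rw [Finset.sum_comm, ← Finset.sum_neg_distrib]
      refine Finset.sum_congr rfl fun h _ => ?_
      rw [← mul_neg, ← T.nu_dA, Finset.mul_sum]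
      exact Finset.sum_congr rfl fun i _ => by ring
    have e2 : ∑ k, ∑ h, T.ν i * T.A k h * T.δ h (T.A k j)
        = T.ν i * (∑ k, ∑ h, T.A k h * T.δ h (T.A k j)) := by
      rw [Finset.mul_sum]
      refine Finset.sum_congr rfl fun k _ => ?_
      rw [Finset.mul_sum]
      exact Finset.sum_congr rfl fun i _ => by ring
    rw [e1, e2]
    simp only [map_neg, Derivation.leibniz, smul_eq_mul]
    change - (T.a2 * T.A i j + _) + _ + _ - _ = _
    ring
  have e3 : ∀ c : ι → R, ∑ i, ∑ j, T.A i j * (T.ν j * c i) = 0 := fun c =>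
    Finset.sum_eq_zero fun i _ => by
      rw [← zero_mul (c i), ← T.A_nu i, Finset.sum_mul]
      exact Finset.sum_congr rfl fun j _ => by ring
  have e4 : ∀ c : ι → R, ∑ i, ∑ j, T.A i j * (T.ν i * c j) = 0 := fun c => by
    rw [← e3 c, Finset.sum_comm]
    exact Finset.sum_congr rfl fun i _ => Finset.sum_congr rfl fun j _ => by rw [T.A_symm i j]
  have e5 : ∑ i, ∑ j, T.A i j * (∑ h, T.A i h * T.A2 h j) = ∑ i, ∑ j, T.A2 i j * T.A2 i j := by
    simp_rw [Finset.mul_sum]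
    rw [Finset.sum_comm]
    refine (Finset.sum_congr rfl fun j _ => Finset.sum_comm).trans ?_
    rw [Finset.sum_comm]
    refine Finset.sum_congr rfl fun i _ => Finset.sum_congr rfl fun j _ => ?_
    conv_rhs => rw [show T.A2 i j = ∑ h, T.A i h * T.A h j from rfl, Finset.sum_mul]
    exact Finset.sum_congr rfl fun h _ => by rw [T.A_symm h i]; unfold A2; ring
  have e6 : ∑ i, ∑ j, T.A i j * (∑ k, T.A2 k j * T.A k i) = ∑ i, ∑ j, T.A2 i j * T.A2 i j := by
    rw [← e5]
    refine Finset.sum_congr rfl fun i _ => Finset.sum_congr rfl fun j _ => ?_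
    congr 1
    exact Finset.sum_congr rfl fun k _ => by rw [T.A_symm k i]; ring
  simp_rw [h2, mul_sub, mul_neg, Finset.sum_sub_distrib, Finset.sum_neg_distrib]
  rw [e3, e4, e4, e5, e6]
  have e7 : ∑ i, ∑ j, T.A i j * (T.a2 * T.A i j) = T.a2 * T.a2 := by
    conv_rhs => rw [a2, Finset.sum_mul]
    refine Finset.sum_congr rfl fun i _ => ?_
    rw [Finset.sum_mul]
    exact Finset.sum_congr rfl fun j _ => by unfold a2; ring
  rw [e7]; ring

lemma delta_a2 (k : ι) : T.δ k T.a2 = 2 * ∑ i, ∑ j, T.A i j * T.δ k (T.A i j) := by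
  unfold a2
  simp only [map_sum, Derivation.leibniz, smul_eq_mul, Finset.mul_sum]
  exact Finset.sum_congr rfl fun i _ => Finset.sum_congr rfl fun j _ => by ring

/-- Simons' identity. -/
lemma simons : T.lap T.a2 = 2 * (∑ k, ∑ i, ∑ j, T.δ k (T.A i j) * T.δ k (T.A i j))
    - 4 * (∑ i, ∑ j, T.A2 i j * T.A2 i j) - 2 * (T.a2 * T.a2) := by
  have h : T.lap T.a2 = 2 * (∑ k, ∑ i, ∑ j, T.δ k (T.A i j) * T.δ k (T.A i j))
      + 2 * ∑ i, ∑ j, T.A i j * T.lap (T.A i j) := by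
    unfold lap
    simp_rw [delta_a2, Finset.mul_sum]
    conv_rhs =>
      enter [2]
      rw [Finset.sum_congr rfl fun i _ => Finset.sum_comm, Finset.sum_comm]
    rw [← Finset.sum_add_distrib]
    refine Finset.sum_congr rfl fun k _ => ?_
    rw [map_sum, ← Finset.sum_add_distrib]
    refine Finset.sum_congr rfl fun i _ => ?_
    rw [map_sum, ← Finset.sum_add_distrib]
    refine Finset.sum_congr rfl fun j _ => ?_
    have h2 : T.δ k (2 : R) = 0 := by
      have := (T.δ k).map_natCast 2
      simpa using this
    simp only [Derivation.leibniz, smul_eq_mul, h2]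
    ring
  rw [h, T.lap_A_contract]; ring

/-- The gradient of the squared norm of the second fundamental form as a divergence, up to a term
that carries a factor `ν k`. -/
lemma delta_a2_eq_div (k : ι) : T.δ k T.a2
    = 2 * (∑ i, T.δ i (T.A2 i k)) + 2 * (T.ν k * ∑ i, ∑ j, T.A i j * T.A2 i j) := by
  have h1 : ∑ i, T.δ i (T.A2 i k)
      = (∑ i, ∑ j, T.A i j * T.δ i (T.A j k)) + ∑ j, T.A j k * ∑ i, T.δ i (T.A i j) := by
    unfold A2
    simp only [map_sum, Derivation.leibniz, smul_eq_mul, Finset.sum_add_distrib, Finset.mul_sum]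
    congr 1
    exact Finset.sum_comm
  have h2 : ∑ j, T.A j k * ∑ i, T.δ i (T.A i j) = 0 := by
    simp_rw [T.div_A]
    calc _ = - (T.a2 * ∑ j, T.ν j * T.A j k) := by
          rw [Finset.mul_sum, ← Finset.sum_neg_distrib]
          exact Finset.sum_congr rfl fun j _ => by ring
      _ = 0 := by rw [T.nu_A]; ring
  have h3 : ∀ i j, T.A i j * T.δ i (T.A j k) = T.A i j * T.δ k (T.A i j)
      + T.A i j * (T.ν i * T.A2 k j) - T.ν k * (T.A i j * T.A2 i j) := by
    intro i j
    rw [T.A_symm j k]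
    have := T.codazzi k i j
    linear_combination (-T.A i j) * this
  have e4 : ∑ i, ∑ j, T.A i j * (T.ν i * T.A2 k j) = 0 := by
    rw [Finset.sum_comm]
    refine Finset.sum_eq_zero fun j _ => ?_
    rw [← zero_mul (T.A2 k j), ← T.nu_A j, Finset.sum_mul]
    exact Finset.sum_congr rfl fun i _ => by ring
  rw [h1, h2, delta_a2]
  simp_rw [h3, Finset.sum_sub_distrib, Finset.sum_add_distrib, ← Finset.mul_sum, e4]
  ring

end TangentialCalculus

/-- The data of a graph of mean curvature zero in terms of the coordinate derivations `D i`: with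
`v` the area element, `p = v ν` is a curl free field and `ν` is a divergence free unit field. -/
structure GraphCalculus (R ι : Type*) [CommRing R] [Algebra ℝ R] [Fintype ι] where
  D : ι → Derivation ℝ R R
  p : ι → R
  ν : ι → R
  v : R
  g : R
  vg : v * g = 1
  p_eq : ∀ i, p i = v * ν i
  comm : ∀ i j f, D i (D j f) = D j (D i f)
  curl : ∀ i j, D i (p j) = D j (p i)
  unit : ∑ i, ν i * ν i = 1
  div : ∑ i, D i (ν i) = 0

namespace GraphCalculus

variable {R ι : Type*} [CommRing R] [Algebra ℝ R] [Fintype ι] (G : GraphCalculus R ι)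

/-- The tangential derivation: the `i`-th component of the tangential part of the gradient. -/
def δ (i : ι) : Derivation ℝ R R := G.D i - G.ν i • ∑ k, G.ν k • G.D k

lemma δ_apply (i : ι) (f : R) : G.δ i f = G.D i f - G.ν i * ∑ k, G.ν k * G.D k f := by
  have h : (∑ k, G.ν k • G.D k) f = ∑ k, (G.ν k • G.D k) f := by
    have := map_sum (Derivation.coeFnAddMonoidHom (R := ℝ) (A := R) (M := R))
      (fun k => G.ν k • G.D k) Finset.univ
    exact (congrFun this f).trans (Finset.sum_apply _ _ _)
  rw [δ, Derivation.sub_apply, Derivation.smul_apply, h]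
  simp

private lemma half_cancel {x : R} (h : x + x = 0) : x = 0 := by
  have h2 : (2 : ℝ) • x = 0 := by rw [two_smul]; exact h
  calc x = (1 / 2 : ℝ) • ((2 : ℝ) • x) := by rw [smul_smul]; norm_num
    _ = 0 := by rw [h2, smul_zero]

lemma nu_D_nu (i : ι) : ∑ j, G.ν j * G.D i (G.ν j) = 0 := by
  apply half_cancel
  have h := congrArg (G.D i) G.unit
  simpa only [map_sum, Derivation.leibniz, Derivation.map_one_eq_zero, smul_eq_mul,
    Finset.sum_add_distrib] using h

lemma D_nu (l j : ι) : G.D l (G.ν j)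
    = G.g * G.D l (G.p j) - G.ν j * ∑ k, G.ν k * (G.g * G.D l (G.p k)) := by
  have h : ∀ k, G.D l (G.p k) = G.v * G.D l (G.ν k) + G.ν k * G.D l G.v := by
    intro k; rw [G.p_eq, Derivation.leibniz]; simp
  have e : ∑ k, G.ν k * (G.g * G.D l (G.p k)) = G.g * G.D l G.v := by
    simp_rw [h]
    calc _ = G.g * G.v * (∑ k, G.ν k * G.D l (G.ν k))
          + (∑ k, G.ν k * G.ν k) * (G.g * G.D l G.v) := by
          rw [Finset.mul_sum, Finset.sum_mul, ← Finset.sum_add_distrib]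
          exact Finset.sum_congr rfl fun k _ => by ring
      _ = _ := by rw [G.nu_D_nu, G.unit]; ring
  rw [e, h]
  linear_combination (- G.D l (G.ν j)) * G.vg

lemma δ_symm (i j : ι) : G.δ i (G.ν j) = G.δ j (G.ν i) := by
  have key : ∀ i j, G.δ i (G.ν j) = G.g * G.D i (G.p j)
      - G.ν j * (∑ k, G.ν k * (G.g * G.D i (G.p k)))
      - G.ν i * (∑ k, G.ν k * (G.g * G.D j (G.p k)))
      + G.ν i * G.ν j * ∑ l, G.ν l * ∑ k, G.ν k * (G.g * G.D l (G.p k)) := by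
    intro i j
    rw [δ_apply]
    simp_rw [G.D_nu, mul_sub, Finset.sum_sub_distrib]
    have e : ∑ x, G.ν x * (G.g * G.D x (G.p j)) = ∑ k, G.ν k * (G.g * G.D j (G.p k)) :=
      Finset.sum_congr rfl fun k _ => by rw [G.curl]
    have e2 : ∑ x, G.ν x * (G.ν j * ∑ k, G.ν k * (G.g * G.D x (G.p k)))
        = G.ν j * ∑ l, G.ν l * ∑ k, G.ν k * (G.g * G.D l (G.p k)) := by
      rw [Finset.mul_sum]
      exact Finset.sum_congr rfl fun k _ => by ring
    rw [e, e2]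
    ring
  rw [key, key, G.curl i j]; ring

lemma δ_tangent (f : R) : ∑ i, G.ν i * G.δ i f = 0 := by
  simp_rw [δ_apply, mul_sub, Finset.sum_sub_distrib, ← mul_assoc, ← Finset.sum_mul, G.unit]
  ring

/-- The tangential calculus of a minimal graph. -/
def toT : TangentialCalculus R ι where
  δ := G.δ
  ν := G.ν
  unit := G.unit
  tangent := G.δ_tangent
  symm := G.δ_symm
  trace := by
    simp_rw [δ_apply, Finset.sum_sub_distrib, G.div]
    rw [zero_sub, neg_eq_zero]
    simp_rw [Finset.mul_sum]
    rw [Finset.sum_comm]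
    refine Finset.sum_eq_zero fun k _ => ?_
    rw [← mul_zero (G.ν k), ← G.nu_D_nu k, Finset.mul_sum]
    exact Finset.sum_congr rfl fun j _ => by ring
  comm := by
    intro i j f
    have key : ∀ i j, G.δ i (G.δ j f) = G.D i (G.D j f)
        - G.ν j * (∑ k, G.ν k * G.D i (G.D k f)) - G.ν j * (∑ k, G.D k f * G.D i (G.ν k))
        - (∑ k, G.ν k * G.D k f) * G.δ i (G.ν j)
        - G.ν i * (∑ k, G.ν k * G.D j (G.D k f))
        + G.ν i * G.ν j * (∑ l, G.ν l * ∑ k, (G.ν k * G.D l (G.D k f) + G.D k f * G.D l (G.ν k)))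
        := by
      intro i j
      have e1 : ∀ i, G.D i (∑ k, G.ν k * G.D k f)
          = ∑ k, (G.ν k * G.D i (G.D k f) + G.D k f * G.D i (G.ν k)) := fun i => by
        simp [Derivation.leibniz]
      have e2 : G.δ i (G.D j f) = G.D i (G.D j f) - G.ν i * (∑ k, G.ν k * G.D j (G.D k f)) := by
        rw [δ_apply]
        congr 2
        exact Finset.sum_congr rfl fun k _ => by rw [G.comm]
      rw [G.δ_apply j f, map_sub, Derivation.leibniz, e2, G.δ_apply i (∑ k, _), e1]
      simp_rw [e1]
      rw [smul_eq_mul, smul_eq_mul, Finset.sum_add_distrib]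
      ring
    have h2 : ∀ i j, ∑ h, G.ν i * G.δ j (G.ν h) * G.δ h f
        = G.ν i * ∑ k, G.D k f * G.D j (G.ν k)
          - G.ν i * G.ν j * ∑ l, G.ν l * ∑ k, G.D k f * G.D l (G.ν k) := by
      intro i j
      calc ∑ h, G.ν i * G.δ j (G.ν h) * G.δ h f
          = G.ν i * (∑ h, G.δ j (G.ν h) * G.D h f)
            - (G.ν i * ∑ k, G.ν k * G.D k f) * ∑ h, G.ν h * G.δ h (G.ν j) := by
            simp_rw [G.δ_apply _ f, Finset.mul_sum, ← Finset.sum_sub_distrib]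
            refine Finset.sum_congr rfl fun h _ => ?_
            rw [G.δ_symm j h]; simp_rw [mul_assoc (G.ν i), ← Finset.mul_sum]; ring
        _ = _ := by
            rw [G.δ_tangent, mul_zero, sub_zero]
            simp_rw [δ_apply, sub_mul, Finset.sum_sub_distrib, mul_sub]
            congr 1
            · congr 1
              exact Finset.sum_congr rfl fun h _ => by ring
            · rw [mul_assoc]
              congr 1
              simp_rw [Finset.mul_sum, Finset.sum_mul]
              rw [Finset.sum_comm]
              exact Finset.sum_congr rfl fun h _ => Finset.sum_congr rfl fun l _ => by ring
    simp_rw [sub_mul, Finset.sum_sub_distrib, h2, key]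
    rw [G.comm j i f, G.δ_symm j i]
    ring

/-- The area element times a tangential derivative is a divergence. -/
lemma v_mul_δ (i : ι) (f : R) :
    G.v * G.δ i f = G.D i (G.v * f) - ∑ k, G.D k (G.p i * G.ν k * f) := by
  have e : ∑ k, G.D k (G.p i * G.ν k) = G.D i G.v := by
    simp_rw [Derivation.leibniz, Finset.sum_add_distrib, smul_eq_mul, ← Finset.mul_sum, G.div,
      G.curl, G.p_eq, Derivation.leibniz, smul_eq_mul, mul_add, Finset.sum_add_distrib]
    calc _ = G.v * (∑ j, G.ν j * G.D i (G.ν j)) + (∑ j, G.ν j * G.ν j) * G.D i G.v := by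
          rw [Finset.mul_sum, Finset.sum_mul, mul_zero, zero_add]
          congr 1 <;> exact Finset.sum_congr rfl fun k _ => by ring
      _ = _ := by rw [G.nu_D_nu, G.unit]; ring
  simp_rw [G.D _ |>.leibniz (G.p i * _) f, Finset.sum_add_distrib, smul_eq_mul, ← Finset.mul_sum]
  rw [e, Derivation.leibniz, smul_eq_mul, smul_eq_mul, δ_apply]
  simp_rw [G.p_eq, Finset.mul_sum]
  have : ∀ k, G.v * G.ν i * G.ν k * G.D k f = G.v * (G.ν i * (G.ν k * G.D k f)) := fun k => by ring
  simp_rw [this, ← Finset.mul_sum]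
  ring

end GraphCalculus

/-! ### Pointwise inequalities for the second fundamental form -/

section Pointwise

variable {ι : Type*} [Fintype ι]

/-- A trace free symmetric matrix maps a vector `e` to a vector that is strictly shorter than its
Hilbert-Schmidt norm allows. The test matrix is `e ⊗ y + y ⊗ e` with `y = A e`, made trace free. -/
lemma traceless_apply_sq_le (A : ι → ι → ℝ) (hA : ∀ i j, A i j = A j i) (htr : ∑ i, A i i = 0)
    (e : ι → ℝ) (m : ℝ) (hm : m = Fintype.card ι) (hm0 : 2 ≤ m) :
    ∑ i, (∑ j, A i j * e j) ^ 2 ≤ (1 - 1 / m) * (∑ i, ∑ j, A i j ^ 2) * ∑ i, e i ^ 2 := by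
  classical
  set y : ι → ℝ := fun i => ∑ j, A i j * e j with hy
  set n := ∑ i, e i ^ 2 with hn
  set a := ∑ i, ∑ j, A i j ^ 2 with ha
  set Y := ∑ i, y i ^ 2 with hY
  set l := ∑ i, e i * y i with hl
  have n0 : 0 ≤ n := Finset.sum_nonneg fun i _ => sq_nonneg _
  have a0 : 0 ≤ a := Finset.sum_nonneg fun i _ => Finset.sum_nonneg fun i _ => sq_nonneg _
  have Y0 : 0 ≤ Y := Finset.sum_nonneg fun i _ => sq_nonneg _
  have cs : l ^ 2 ≤ n * Y := Finset.sum_mul_sq_le_sq_mul_sq _ _ _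
  have mp : 0 < m := by linarith
  -- the test matrix is `e ⊗ y + y ⊗ e - c`, with `c = 2 l / m`
  set c := 2 * l / m with hc
  have hc' : c * m = 2 * l := by rw [hc]; field_simp
  have ye : ∀ i, ∑ j, A i j * e j = y i := fun i => rfl
  have expand : ∀ t : ℝ, 0 ≤ a - 4 * t * Y + t ^ 2 * (2 * n * Y + 2 * l ^ 2 - 2 * c * l) := by
    intro t
    have h0 : 0 ≤ ∑ i, ∑ j, (A i j - t * (e i * y j + y i * e j - if i = j then c else 0)) ^ 2 :=
      Finset.sum_nonneg fun i _ => Finset.sum_nonneg fun i _ => sq_nonneg _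
    refine h0.trans (le_of_eq ?_)
    have h1 : ∀ i j, (A i j - t * (e i * y j + y i * e j - if i = j then c else 0)) ^ 2
        = A i j ^ 2 - 2 * t * (y j * (A j i * e i)) - 2 * t * (y i * (A i j * e j))
          + (if i = j then 2 * t * c * A i i else 0)
          + t ^ 2 * (e i ^ 2 * y j ^ 2 + y i ^ 2 * e j ^ 2 + 2 * ((e i * y i) * (e j * y j))
            - (if i = j then 4 * c * (e i * y i) else 0) + if i = j then c ^ 2 else 0) := by
      intro i j
      rw [hA j i]
      split_ifs with h
      · subst h; ring
      · ring
    have s1 : ∑ i, ∑ j, y j * (A j i * e i) = Y := by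
      rw [Finset.sum_comm, hY]
      exact Finset.sum_congr rfl fun i _ => by rw [← Finset.mul_sum, ye]; ring
    have s2 : ∑ i, y i * ∑ j, A i j * e j = Y := by
      rw [hY]
      exact Finset.sum_congr rfl fun i _ => by rw [ye]; ring
    simp_rw [h1, Finset.sum_add_distrib, Finset.sum_sub_distrib, ← Finset.mul_sum,
      Finset.sum_add_distrib, Finset.sum_sub_distrib, Finset.sum_add_distrib]
    simp only [Finset.sum_ite_eq, Finset.mem_univ, if_true, ← Finset.mul_sum, ← Finset.sum_mul,
      Finset.sum_const, Finset.card_univ, nsmul_eq_mul, ← hm]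
    rw [s1, s2, htr, ← hn, ← hY, ← ha, ← hl]
    have : m * c ^ 2 = 2 * c * l := by linear_combination c * hc'
    rw [this]; ring
  set Q := 2 * n * Y + 2 * l ^ 2 - 2 * c * l with hQ
  have hQle : Q ≤ 4 * (1 - 1 / m) * (n * Y) := by
    have e1 : Q = 2 * (n * Y) + (2 - 4 / m) * l ^ 2 := by rw [hQ, hc]; field_simp; ring
    have e2 : 0 ≤ 2 - 4 / m := by
      rw [sub_nonneg, div_le_iff₀ mp]; linarith
    rw [e1]
    have := mul_le_mul_of_nonneg_left cs e2
    calc _ ≤ 2 * (n * Y) + (2 - 4 / m) * (n * Y) := by linarith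
      _ = _ := by ring
  rcases Y0.eq_or_lt with h | h
  · rw [← h]
    have : 0 ≤ 1 - 1 / m := by rw [sub_nonneg, div_le_iff₀ mp]; linarith
    positivity
  have hQpos : 0 < Q := by
    by_contra hneg
    push Not at hneg
    have := expand ((a + 1) / (4 * Y))
    have e3 : 4 * ((a + 1) / (4 * Y)) * Y = a + 1 := by field_simp
    nlinarith [sq_nonneg ((a + 1) / (4 * Y))]
  have h4 := expand (2 * Y / Q)
  have h5 : a - 4 * (2 * Y / Q) * Y + (2 * Y / Q) ^ 2 * Q = a - 4 * Y ^ 2 / Q := by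
    field_simp; ring
  rw [h5, sub_nonneg, div_le_iff₀ hQpos] at h4
  have h6 : 4 * Y ^ 2 ≤ a * (4 * (1 - 1 / m) * (n * Y)) :=
    h4.trans (mul_le_mul_of_nonneg_left hQle a0)
  have h7 : Y * (4 * Y) ≤ ((1 - 1 / m) * a * n) * (4 * Y) := by linarith
  exact le_of_mul_le_mul_right h7 (by positivity)

/-- The refined Kato-type deficit inequality: the totally symmetric tensor
`B k i j = T k i j + ν i A² k j + ν j A² k i` is tested against `t k A i j + V i A j k + V j A i k`.
-/
lemma deficit_inequality (A A2 : ι → ι → ℝ) (ν : ι → ℝ) (T : ι → ι → ι → ℝ) (t V : ι → ℝ)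
    (hA : ∀ i j, A i j = A j i) (hA2 : ∀ i j, A2 i j = ∑ h, A i h * A h j)
    (hν : ∑ i, ν i * ν i = 1) (hAν : ∀ j, ∑ i, ν i * A i j = 0)
    (hT : ∀ k i j, T k i j = T k j i)
    (hcod : ∀ k i j, T k i j - T i k j = ν k * A2 i j - ν i * A2 k j)
    (hTν : ∀ k j, ∑ i, ν i * T k i j = - A2 k j) :
    4 * (∑ i, V i * ∑ j, ∑ k, A j k * T i j k)
      - 4 * (∑ j, (∑ k, A j k * t k) * ∑ i, A j i * V i)
      - 2 * ((∑ i, V i ^ 2) * (∑ i, ∑ j, A i j ^ 2) + ∑ j, (∑ i, A j i * V i) ^ 2)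
    ≤ (∑ k, ∑ i, ∑ j, T k i j ^ 2) - 2 * (∑ i, ∑ j, A2 i j ^ 2)
      - 2 * (∑ k, t k * ∑ i, ∑ j, A i j * T k i j)
      + (∑ k, t k ^ 2) * (∑ i, ∑ j, A i j ^ 2) := by
  have hA2s : ∀ i j, A2 i j = A2 j i := fun i j => by
    rw [hA2, hA2]; exact Finset.sum_congr rfl fun h _ => by rw [hA i h, hA h j, mul_comm]
  have hA2ν : ∀ j, ∑ i, ν i * A2 i j = 0 := by
    intro j
    simp_rw [hA2, Finset.mul_sum]
    rw [Finset.sum_comm]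
    refine Finset.sum_eq_zero fun h _ => ?_
    simp_rw [← mul_assoc]
    rw [← Finset.sum_mul, hAν, zero_mul]
  set B : ι → ι → ι → ℝ := fun k i j => T k i j + ν i * A2 k j + ν j * A2 k i with hB
  have B1 : ∀ k i j, B k i j = B k j i := fun k i j => by simp only [hB]; rw [hT k i j]; ring
  have B2 : ∀ k i j, B k i j = B i k j := fun k i j => by
    simp only [hB]; rw [hA2s k i]; linarith [hcod k i j]
  have hAν' : ∀ j, ∑ i, ν i * A j i = 0 := fun j => by simp_rw [hA j]; exact hAν j
  have hA2ν' : ∀ j, ∑ i, ν i * A2 j i = 0 := fun j => by simp_rw [hA2s j]; exact hA2ν j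
  have hTν' : ∀ k i, ∑ j, ν j * T k i j = - A2 k i := fun k i => by
    simp_rw [hT k i]; exact hTν k i
  have PB : ∀ k, ∑ i, ∑ j, B k i j * A i j = ∑ i, ∑ j, A i j * T k i j := by
    intro k
    have z1 : ∑ i, ∑ j, ν i * A2 k j * A i j = 0 := by
      rw [Finset.sum_comm]
      refine Finset.sum_eq_zero fun j _ => ?_
      rw [← mul_zero (A2 k j), ← hAν j, Finset.mul_sum]
      exact Finset.sum_congr rfl fun j _ => by ring
    have z2 : ∑ i, ∑ j, ν j * A2 k i * A i j = 0 := by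
      refine Finset.sum_eq_zero fun j _ => ?_
      rw [← mul_zero (A2 k j), ← hAν' j, Finset.mul_sum]
      exact Finset.sum_congr rfl fun j _ => by ring
    simp only [hB, add_mul, Finset.sum_add_distrib, z1, z2, add_zero]
    exact Finset.sum_congr rfl fun i _ => Finset.sum_congr rfl fun j _ => mul_comm _ _
  have BB : ∑ k, ∑ i, ∑ j, B k i j ^ 2
      = (∑ k, ∑ i, ∑ j, T k i j ^ 2) - 2 * (∑ i, ∑ j, A2 i j ^ 2) := by
    have hk : ∀ k, ∑ i, ∑ j, B k i j ^ 2 = (∑ i, ∑ j, T k i j ^ 2) - 2 * ∑ j, A2 k j ^ 2 := by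
      intro k
      have h1 : ∀ i j, B k i j ^ 2 = T k i j ^ 2 + (ν i * ν i) * A2 k j ^ 2
          + A2 k i ^ 2 * (ν j * ν j) + 2 * A2 k j * (ν i * T k i j) + 2 * A2 k i * (ν j * T k i j)
          + 2 * ((ν i * A2 k i) * (ν j * A2 k j)) := fun i j => by simp only [hB]; ring
      simp_rw [h1, Finset.sum_add_distrib, ← Finset.mul_sum, hA2ν', hTν']
      rw [Finset.sum_comm (f := fun i j => 2 * A2 k j * (ν i * T k i j))]
      simp_rw [← Finset.mul_sum, ← Finset.sum_mul, hν, hTν, hA2ν']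
      have : ∑ j, 2 * A2 k j * -A2 k j = - 2 * ∑ j, A2 k j ^ 2 := by
        rw [Finset.mul_sum]; exact Finset.sum_congr rfl fun j _ => by ring
      rw [this]; ring
    simp_rw [hk, Finset.sum_sub_distrib, ← Finset.mul_sum]
  have BV : ∑ k, ∑ i, ∑ j, B k i j * (V i * A j k) = ∑ i, V i * ∑ j, ∑ k, A j k * T i j k := by
    rw [Finset.sum_comm]
    refine Finset.sum_congr rfl fun i _ => ?_
    rw [← PB, Finset.mul_sum, Finset.sum_comm]
    refine Finset.sum_congr rfl fun j _ => ?_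
    rw [Finset.mul_sum]
    exact Finset.sum_congr rfl fun k _ => by rw [B2 k i j, B1 i k j]; ring
  have BV' : ∑ k, ∑ i, ∑ j, B k i j * (V j * A i k) = ∑ i, V i * ∑ j, ∑ k, A j k * T i j k := by
    rw [← BV]
    refine Finset.sum_congr rfl fun k _ => ?_
    rw [Finset.sum_comm]
    exact Finset.sum_congr rfl fun i _ => Finset.sum_congr rfl fun j _ => by rw [B1 k j i]
  have tV : ∑ k, ∑ i, ∑ j, t k * A i j * (V i * A j k)
      = ∑ j, (∑ k, A j k * t k) * ∑ i, A j i * V i := by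
    rw [Finset.sum_congr rfl fun k _ => Finset.sum_comm, Finset.sum_comm]
    refine Finset.sum_congr rfl fun j _ => ?_
    rw [Finset.sum_mul]
    refine Finset.sum_congr rfl fun k _ => ?_
    rw [Finset.mul_sum]
    exact Finset.sum_congr rfl fun i _ => by rw [hA i j]; ring
  have tV' : ∑ k, ∑ i, ∑ j, t k * A i j * (V j * A i k)
      = ∑ j, (∑ k, A j k * t k) * ∑ i, A j i * V i := by
    rw [← tV]
    refine Finset.sum_congr rfl fun k _ => ?_
    rw [Finset.sum_comm]
    exact Finset.sum_congr rfl fun i _ => Finset.sum_congr rfl fun j _ => by rw [hA j i]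
  have VV : ∑ k, ∑ i, ∑ j, (V i * A j k) * (V j * A i k) = ∑ j, (∑ i, A j i * V i) ^ 2 := by
    refine Finset.sum_congr rfl fun k _ => ?_
    rw [sq, Finset.sum_mul]
    refine Finset.sum_congr rfl fun i _ => ?_
    rw [Finset.mul_sum]
    exact Finset.sum_congr rfl fun j _ => by rw [hA k i, hA k j]; ring
  have V1 : ∑ k, ∑ i, ∑ j, (V i * A j k) ^ 2 = (∑ i, V i ^ 2) * ∑ i, ∑ j, A i j ^ 2 := by
    rw [Finset.sum_comm, Finset.sum_mul]
    refine Finset.sum_congr rfl fun i _ => ?_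
    rw [Finset.sum_comm, Finset.mul_sum]
    refine Finset.sum_congr rfl fun j _ => ?_
    rw [Finset.mul_sum]
    exact Finset.sum_congr rfl fun k _ => by ring
  have V2 : ∑ k, ∑ i, ∑ j, (V j * A i k) ^ 2 = (∑ i, V i ^ 2) * ∑ i, ∑ j, A i j ^ 2 := by
    rw [← V1]
    exact Finset.sum_congr rfl fun k _ => Finset.sum_comm
  have tB : ∑ k, ∑ i, ∑ j, t k * (B k i j * A i j) = ∑ k, t k * ∑ i, ∑ j, A i j * T k i j := by
    refine Finset.sum_congr rfl fun k _ => ?_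
    rw [← PB]; simp_rw [Finset.mul_sum]
  have tt : ∑ k, ∑ i, ∑ j, t k ^ 2 * A i j ^ 2 = (∑ k, t k ^ 2) * ∑ i, ∑ j, A i j ^ 2 := by
    rw [Finset.sum_mul]
    exact Finset.sum_congr rfl fun k _ => by simp_rw [Finset.mul_sum]
  have h0 : 0 ≤ ∑ k, ∑ i, ∑ j, (B k i j - t k * A i j - (V i * A j k + V j * A i k)) ^ 2 :=
    Finset.sum_nonneg fun _ _ => Finset.sum_nonneg fun _ _ => Finset.sum_nonneg fun _ _ =>
      sq_nonneg _
  have h1 : ∀ k i j, (B k i j - t k * A i j - (V i * A j k + V j * A i k)) ^ 2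
      = B k i j ^ 2 - 2 * (t k * (B k i j * A i j)) + t k ^ 2 * A i j ^ 2
        - 2 * (B k i j * (V i * A j k)) - 2 * (B k i j * (V j * A i k))
        + 2 * (t k * A i j * (V i * A j k)) + 2 * (t k * A i j * (V j * A i k))
        + (V i * A j k) ^ 2 + (V j * A i k) ^ 2 + 2 * ((V i * A j k) * (V j * A i k)) :=
    fun k i j => by ring
  simp_rw [h1] at h0
  simp only [Finset.sum_add_distrib, Finset.sum_sub_distrib] at h0
  simp only [← Finset.mul_sum (a := (2 : ℝ))] at h0
  rw [BB, BV, BV', tV, tV', VV, V1, V2, tB, tt] at h0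
  linarith

end Pointwise

/-! ### Smooth functions on the base and the calculus on an entire minimal graph -/

open scoped ContDiff

/-- The base space `ℝ^N`. -/
abbrev E (N : ℕ) := EuclideanSpace ℝ (Fin N)

/-- The algebra of smooth functions on `ℝ^N`. -/
def SF (N : ℕ) : Subalgebra ℝ (E N → ℝ) where
  carrier := {f | ContDiff ℝ ∞ f}
  mul_mem' {f g} (hf : ContDiff ℝ ∞ f) (hg : ContDiff ℝ ∞ g) :=
    show ContDiff ℝ ∞ (f * g) from hf.mul hg
  add_mem' {f g} (hf : ContDiff ℝ ∞ f) (hg : ContDiff ℝ ∞ g) :=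
    show ContDiff ℝ ∞ (f + g) from hf.add hg
  algebraMap_mem' c := show ContDiff ℝ ∞ (fun _ : E N => c) from contDiff_const

namespace SF

variable {N : ℕ}

instance : CoeFun (SF N) fun _ => E N → ℝ := ⟨Subtype.val⟩

@[simp] lemma add_apply (f g : SF N) (x : E N) : (f + g) x = f x + g x := rfl
@[simp] lemma sub_apply (f g : SF N) (x : E N) : (f - g) x = f x - g x := rfl
@[simp] lemma mul_apply (f g : SF N) (x : E N) : (f * g) x = f x * g x := rfl
@[simp] lemma neg_apply (f : SF N) (x : E N) : (-f) x = -f x := rfl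
@[simp] lemma one_apply (x : E N) : (1 : SF N) x = 1 := rfl
@[simp] lemma zero_apply (x : E N) : (0 : SF N) x = 0 := rfl
@[simp] lemma smul_apply (c : ℝ) (f : SF N) (x : E N) : (c • f) x = c * f x := rfl
@[simp] lemma pow_apply (f : SF N) (n : ℕ) (x : E N) : (f ^ n) x = f x ^ n := rfl
@[simp] lemma two_apply (x : E N) : (2 : SF N) x = 2 := rfl
@[simp] lemma four_apply (x : E N) : (4 : SF N) x = 4 := rfl
@[simp] lemma natCast_apply (n : ℕ) (x : E N) : (n : SF N) x = n := rfl
instance : CharZero (SF N) := ⟨fun m n h => by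
  have := congrArg (fun f : SF N => f 0) h
  simpa using this⟩

@[simp] lemma mk_apply (f : E N → ℝ) (hf : f ∈ SF N) (x : E N) : (⟨f, hf⟩ : SF N) x = f x := rfl
@[simp] lemma sum_apply {κ : Type*} (s : Finset κ) (f : κ → SF N) (x : E N) :
    (∑ i ∈ s, f i : SF N) x = ∑ i ∈ s, f i x := by
  have : ((∑ i ∈ s, f i : SF N) : E N → ℝ) = ∑ i ∈ s, (f i : E N → ℝ) :=
    map_sum (SF N).subtype f s
  rw [this, Finset.sum_apply]

@[ext] lemma ext {f g : SF N} (h : ∀ x, f x = g x) : f = g := Subtype.ext (funext h)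

@[fun_prop] lemma contDiff (f : SF N) : ContDiff ℝ ∞ (f : E N → ℝ) := f.2

@[fun_prop] lemma differentiable (f : SF N) : Differentiable ℝ (f : E N → ℝ) :=
  (contDiff f).differentiable (by simp)

@[fun_prop] lemma continuous (f : SF N) : Continuous (f : E N → ℝ) := (contDiff f).continuous

/-- The constant functions. -/
def const (N : ℕ) (c : ℝ) : SF N := ⟨fun _ => c, show ContDiff ℝ ∞ (fun _ : E N => c) from contDiff_const⟩

@[simp] lemma const_apply (c : ℝ) (x : E N) : const N c x = c := rfl

/-- The directional derivative along a constant vector. -/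
noncomputable def pd (e : E N) : Derivation ℝ (SF N) (SF N) :=
  Derivation.mk'
    { toFun := fun f => ⟨fun x => fderiv ℝ f x e,
        show ContDiff ℝ ∞ (fun x => fderiv ℝ f x e) from
          ((contDiff f).fderiv_right (m := ∞) le_rfl).clm_apply contDiff_const⟩
      map_add' := fun f g => ext fun x => by
        change fderiv ℝ ((f : E N → ℝ) + (g : E N → ℝ)) x e = _
        rw [fderiv_add (differentiable f x) (differentiable g x)]; rfl
      map_smul' := fun c f => ext fun x => by
        change fderiv ℝ (c • (f : E N → ℝ)) x e = _
        rw [fderiv_const_smul (differentiable f x)]; rfl }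
    (fun f g => ext fun x => by
      change fderiv ℝ ((f : E N → ℝ) * (g : E N → ℝ)) x e = _
      rw [fderiv_mul (differentiable f x) (differentiable g x)]; rfl)

lemma pd_apply (e : E N) (f : SF N) (x : E N) : pd e f x = fderiv ℝ f x e := rfl

lemma pd_comm (e e' : E N) (f : SF N) : pd e (pd e' f) = pd e' (pd e f) := by
  ext x
  have hd : DifferentiableAt ℝ (fderiv ℝ f) x :=
    (((contDiff f).fderiv_right (m := ∞) le_rfl).differentiable (by simp)) x
  have h1 : ∀ e e' : E N, pd e (pd e' f) x = fderiv ℝ (fderiv ℝ f) x e e' := by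
    intro e e'
    change fderiv ℝ (fun y => fderiv ℝ f y e') x e = _
    rw [fderiv_clm_apply hd (differentiableAt_const _)]
    simp
  rw [h1, h1]
  exact ((contDiff f).contDiffAt.isSymmSndFDerivAt (by
    rw [minSmoothness_of_isRCLikeNormedField]; exact ENat.LEInfty.out)).eq e e'

lemma pd_chain (e : E N) (F f : SF N) {g : ℝ → ℝ} {g' : ℝ} {x : E N} (h : ∀ y, F y = g (f y))
    (hg : HasDerivAt g g' (f x)) : pd e F x = g' * pd e f x := by
  have : (F : E N → ℝ) = g ∘ f := funext h
  rw [pd_apply, pd_apply, this]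
  rw [(hg.comp_hasFDerivAt x (differentiable f x).hasFDerivAt).fderiv]
  simp

@[simp] lemma pd_const (e : E N) (c : ℝ) : pd e (const N c) = 0 := by
  ext x; rw [pd_apply]; change fderiv ℝ (fun _ => c) x e = _; simp

end SF

/-- A smooth entire solution of the minimal surface equation, regarded as a graph. -/
structure MinGraph (N : ℕ) where
  u : SF N
  mse : IsMSESolution (u : E N → ℝ)

/-- Indices of the ambient space `ℝ^{N+1}`: `none` stands for the vertical direction. -/
abbrev Idx (N : ℕ) := Option (Fin N)

namespace MinGraph

variable {N : ℕ}

/-- The coordinate derivations; functions on the base do not depend on the height. -/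
noncomputable def D : Idx N → Derivation ℝ (SF N) (SF N)
  | none => 0
  | some i => SF.pd (EuclideanSpace.single i 1)

@[simp] lemma D_none : (D none : Derivation ℝ (SF N) (SF N)) = 0 := rfl

variable (G : MinGraph N)

/-- The partial derivatives of `u`. -/
noncomputable def du (i : Fin N) : SF N := SF.pd (EuclideanSpace.single i 1) G.u

lemma du_apply (i : Fin N) (x : E N) : G.du i x = partialDeriv' G.u i x := rfl

/-- The area element. -/
noncomputable def v : SF N := ⟨fun x => Real.sqrt (1 + ∑ k, G.du k x ^ 2), by
  change ContDiff ℝ ∞ _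
  refine ContDiff.sqrt (by fun_prop) fun x => ?_
  have : 0 ≤ ∑ k, G.du k x ^ 2 := Finset.sum_nonneg fun _ _ => sq_nonneg _
  positivity⟩

lemma v_apply (x : E N) : G.v x = Real.sqrt (1 + ∑ k, G.du k x ^ 2) := rfl

lemma v_sq (x : E N) : G.v x ^ 2 = 1 + ∑ k, G.du k x ^ 2 := by
  have : 0 ≤ ∑ k, G.du k x ^ 2 := Finset.sum_nonneg fun _ _ => sq_nonneg _
  rw [v_apply, Real.sq_sqrt (by positivity)]

lemma one_le_v (x : E N) : 1 ≤ G.v x := by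
  rw [v_apply, Real.one_le_sqrt]
  have : 0 ≤ ∑ k, G.du k x ^ 2 := Finset.sum_nonneg fun _ _ => sq_nonneg _
  linarith

lemma v_pos (x : E N) : 0 < G.v x := lt_of_lt_of_le one_pos (G.one_le_v x)

/-- The inverse of the area element. -/
noncomputable def g : SF N := ⟨fun x => (G.v x)⁻¹, show ContDiff ℝ ∞ _ from (SF.contDiff G.v).inv fun x => (G.v_pos x).ne'⟩

lemma g_apply (x : E N) : G.g x = (G.v x)⁻¹ := rfl

/-- The vector field `(-∇u, 1)`. -/
noncomputable def p : Idx N → SF N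
  | none => 1
  | some i => - G.du i

/-- The calculus of the graph in terms of the coordinate derivations. -/
noncomputable def gc : GraphCalculus (SF N) (Idx N) where
  D := D
  p := G.p
  ν i := G.g * G.p i
  v := G.v
  g := G.g
  vg := SF.ext fun x => by simp [g_apply, (G.v_pos x).ne']
  p_eq i := SF.ext fun x => by
    have := (G.v_pos x).ne'
    simp only [SF.mul_apply, g_apply]; field_simp
  comm i j f := by
    rcases i with _ | i <;> rcases j with _ | j <;> simp [D, SF.pd_comm]
  curl i j := by
    rcases i with _ | i <;> rcases j with _ | j <;> simp [D, p, du, SF.pd_comm]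
  unit := SF.ext fun x => by
    have h := G.v_sq x
    have h0 := (G.v_pos x).ne'
    simp only [Fintype.sum_option, SF.add_apply, SF.sum_apply, SF.mul_apply, p, SF.one_apply,
      SF.neg_apply, g_apply]
    have : ∀ k, (G.v x)⁻¹ * -G.du k x * ((G.v x)⁻¹ * -G.du k x)
      = (G.v x)⁻¹ ^ 2 * G.du k x ^ 2 := fun k => by ring
    simp_rw [this, ← Finset.mul_sum]
    calc _ = (G.v x)⁻¹ ^ 2 * (1 + ∑ k, G.du k x ^ 2) := by ring
      _ = 1 := by rw [← h]; field_simp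
  div := SF.ext fun x => by
    have h := G.mse x
    simp only [Fintype.sum_option, D, Derivation.zero_apply, zero_add, SF.sum_apply, p,
      SF.zero_apply]
    rw [← neg_eq_zero, ← Finset.sum_neg_distrib, ← h]
    refine Finset.sum_congr rfl fun i _ => ?_
    rw [← SF.neg_apply, ← map_neg, SF.pd_apply]
    unfold partialDeriv'
    congr 2
    ext y
    rw [SF.neg_apply, SF.mul_apply, SF.neg_apply, mul_neg, neg_neg, mul_comm]; rfl

/-- The tangential calculus of the graph. -/
noncomputable def T : TangentialCalculus (SF N) (Idx N) := G.gc.toT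

/-- The tangential derivations. -/
noncomputable abbrev δ (i : Idx N) : Derivation ℝ (SF N) (SF N) := G.T.δ i
/-- The components of the upward unit normal. -/
noncomputable abbrev ν (i : Idx N) : SF N := G.T.ν i
/-- The second fundamental form. -/
noncomputable abbrev A (i j : Idx N) : SF N := G.T.A i j
/-- The squared norm of the second fundamental form. -/
noncomputable abbrev a2 : SF N := G.T.a2
/-- The Laplace–Beltrami operator. -/
noncomputable abbrev lap (f : SF N) : SF N := G.T.lap f
/-- The inner product of tangential gradients. -/
noncomputable abbrev Γ (f g : SF N) : SF N := G.T.Γ f g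

lemma δ_eq (i : Idx N) (f : SF N) : G.δ i f = D i f - G.ν i * ∑ k, G.ν k * D k f :=
  G.gc.δ_apply i f

lemma ν_none (x : E N) : G.ν none x = (G.v x)⁻¹ := by
  change (G.g * 1 : SF N) x = _
  simp [g_apply]

lemma ν_some (i : Fin N) (x : E N) : G.ν (some i) x = - ((G.v x)⁻¹ * G.du i x) := by
  change (G.g * - G.du i : SF N) x = _
  simp [g_apply]

lemma ν_none_pos (x : E N) : 0 < G.ν none x := by
  rw [ν_none]; exact inv_pos.2 (G.v_pos x)

lemma v_mul_δ (i : Idx N) (f : SF N) :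
    G.v * G.δ i f = D i (G.v * f) - ∑ k, D k (G.p i * G.ν k * f) := G.gc.v_mul_δ i f

lemma D_chain (i : Idx N) (F f : SF N) {g : ℝ → ℝ} {g' : ℝ} {x : E N} (h : ∀ y, F y = g (f y))
    (hg : HasDerivAt g g' (f x)) : D i F x = g' * D i f x := by
  rcases i with _ | i
  · simp
  · exact SF.pd_chain _ F f h hg

lemma δ_chain (i : Idx N) (F f : SF N) {g : ℝ → ℝ} {g' : ℝ} {x : E N} (h : ∀ y, F y = g (f y))
    (hg : HasDerivAt g g' (f x)) : G.δ i F x = g' * G.δ i f x := by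
  rw [δ_eq, δ_eq]
  simp only [SF.sub_apply, SF.mul_apply, SF.sum_apply, D_chain _ F f h hg]
  rw [mul_sub, Finset.mul_sum, Finset.mul_sum, Finset.mul_sum]
  congr 1
  exact Finset.sum_congr rfl fun k _ => by ring

@[simp] lemma δ_const (i : Idx N) (c : ℝ) : G.δ i (SF.const N c) = 0 := by
  rw [δ_eq]
  have : ∀ i : Idx N, D i (SF.const N c) = 0 := fun i => by
    rcases i with _ | i
    · rfl
    · exact SF.pd_const _ _
  simp [this]

/-- The position vector of the graph. -/
noncomputable def X : Idx N → SF N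
  | none => G.u
  | some i => ⟨fun x => x i, by
      show ContDiff ℝ ∞ fun x : E N => x i
      fun_prop⟩

@[simp] lemma X_none (x : E N) : G.X none x = G.u x := rfl
@[simp] lemma X_some (i : Fin N) (x : E N) : G.X (some i) x = x i := rfl

lemma δ_X (i j : Idx N) : G.δ i (G.X j) = (if i = j then 1 else 0) - G.ν i * G.ν j := by
  have hs : ∀ i j : Fin N, D (some i) (G.X (some j)) = if i = j then 1 else 0 := by
    intro i j
    ext x
    change fderiv ℝ (fun x : E N => x j) x (EuclideanSpace.single i 1) = _
    have : HasFDerivAt (fun x : E N => x j) (EuclideanSpace.proj j : E N →L[ℝ] ℝ) x :=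
      (EuclideanSpace.proj j : E N →L[ℝ] ℝ).hasFDerivAt
    rw [this.fderiv]
    by_cases h : i = j
    · simp [h]
    · simp [h, Ne.symm h]
  have hn : ∀ i : Fin N, D (some i) (G.X none) = - (G.v * G.ν (some i)) := by
    intro i
    ext x
    have := (G.v_pos x).ne'
    rw [SF.neg_apply, SF.mul_apply, ν_some]
    field_simp
    rfl
  have hv : G.v * G.ν none = 1 := by
    ext x; have := (G.v_pos x).ne'; simp [ν_none, this]
  have hu := G.T.unit
  rw [Fintype.sum_option] at hu
  rw [δ_eq, Fintype.sum_option]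
  have key : ∑ k : Fin N, G.ν (some k) * D (some k) (G.X j)
      = match j with
        | none => G.v * (G.ν none * G.ν none) - G.v
        | some j => G.ν (some j) := by
    rcases j with _ | j
    · simp_rw [hn]
      calc _ = - (G.v * ∑ k, G.ν (some k) * G.ν (some k)) := by
            rw [Finset.mul_sum, ← Finset.sum_neg_distrib]
            exact Finset.sum_congr rfl fun k _ => by ring
        _ = _ := by linear_combination (-G.v) * hu
    · simp [hs]
  rw [key]
  rcases i with _ | i <;> rcases j with _ | j
  · simp
    linear_combination (1 - G.ν none * G.ν none) * hv
  · simp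
  · simp only [hn, D_none, Derivation.zero_apply, mul_zero, zero_add, reduceCtorEq, if_false]
    linear_combination (-G.ν none * G.ν (some i)) * hv
  · simp only [hs, D_none, Derivation.zero_apply, mul_zero, zero_add, Option.some.injEq]

end MinGraph

/-! ### Position vector, support function and integration by parts -/

open MeasureTheory Filter Topology

namespace MinGraph

variable {N : ℕ} (G : MinGraph N)

/-- The position vector relative to the centre `p`. -/
noncomputable def XP (p : Idx N → ℝ) (i : Idx N) : SF N := G.X i - SF.const N (p i)

@[simp] lemma XP_apply (p : Idx N → ℝ) (i : Idx N) (x : E N) : G.XP p i x = G.X i x - p i := rfl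

lemma δ_XP (p : Idx N → ℝ) (i j : Idx N) :
    G.δ i (G.XP p j) = (if i = j then 1 else 0) - G.ν i * G.ν j := by
  rw [XP, map_sub, δ_const, sub_zero, δ_X]

/-- The support function relative to the centre `p`. -/
noncomputable def s (p : Idx N → ℝ) : SF N := ∑ i, G.XP p i * G.ν i

/-- The squared distance to the centre `p`. -/
noncomputable def r2 (p : Idx N → ℝ) : SF N := ∑ i, G.XP p i * G.XP p i

lemma s_apply (p : Idx N → ℝ) (x : E N) : G.s p x = ∑ i, G.XP p i x * G.ν i x := by simp [s]

lemma r2_apply (p : Idx N → ℝ) (x : E N) : G.r2 p x = ∑ i, G.XP p i x ^ 2 := by simp [r2, sq]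

lemma unit : ∑ i, G.ν i * G.ν i = 1 := G.T.unit

lemma unit_apply (x : E N) : ∑ i, G.ν i x ^ 2 = 1 := by
  have := congrArg (fun f : SF N => f x) G.unit
  simpa [sq] using this

lemma tangent (f : SF N) : ∑ i, G.ν i * G.δ i f = 0 := G.T.tangent f

lemma δ_s (p : Idx N → ℝ) (j : Idx N) : G.δ j (G.s p) = ∑ i, G.A j i * G.XP p i := by
  have h : ∀ i, G.δ j (G.XP p i * G.ν i)
      = G.A j i * G.XP p i + ((if j = i then G.ν i else 0) - G.ν j * (G.ν i * G.ν i)) := by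
    intro i
    rw [Derivation.leibniz, δ_XP, smul_eq_mul, smul_eq_mul]
    change _ * G.A j i + _ = _
    split_ifs with h
    · ring
    · ring
  rw [s, map_sum, Finset.sum_congr rfl fun i _ => h i, Finset.sum_add_distrib,
    Finset.sum_sub_distrib, ← Finset.mul_sum, unit]
  simp

lemma δ_r2 (p : Idx N → ℝ) (j : Idx N) :
    G.δ j (G.r2 p) = 2 * (G.XP p j - G.ν j * G.s p) := by
  have h : ∀ i, G.δ j (G.XP p i * G.XP p i)
      = 2 * ((if j = i then G.XP p i else 0) - G.ν j * (G.XP p i * G.ν i)) := by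
    intro i
    rw [Derivation.leibniz, δ_XP, smul_eq_mul]
    split_ifs with h
    · ring
    · ring
  rw [r2, map_sum, Finset.sum_congr rfl fun i _ => h i, ← Finset.mul_sum,
    Finset.sum_sub_distrib, ← Finset.mul_sum, ← s]
  simp

lemma Γ_r2 (p : Idx N → ℝ) : G.Γ (G.r2 p) (G.r2 p) = 4 * (G.r2 p - G.s p * G.s p) := by
  have h : ∀ j, G.δ j (G.r2 p) * G.δ j (G.r2 p) = 4 * (G.XP p j * G.XP p j)
      - 8 * G.s p * (G.XP p j * G.ν j) + 4 * (G.s p * G.s p) * (G.ν j * G.ν j) := by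
    intro j; rw [δ_r2]; ring
  change ∑ j, G.δ j (G.r2 p) * G.δ j (G.r2 p) = _
  rw [Finset.sum_congr rfl fun i _ => h i, Finset.sum_add_distrib, Finset.sum_sub_distrib,
    ← Finset.mul_sum, ← Finset.mul_sum, ← Finset.mul_sum, unit, ← s, ← r2]
  ring

lemma div_XP (p : Idx N → ℝ) : ∑ i, G.δ i (G.XP p i) = (N : SF N) := by
  simp only [δ_XP, if_true, Finset.sum_sub_distrib, unit]
  simp

lemma lap_s (p : Idx N → ℝ) : G.lap (G.s p) = - (G.a2 * G.s p) := by
  change ∑ j, G.δ j (G.δ j (G.s p)) = _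
  have h : ∀ j i, G.δ j (G.A j i * G.XP p i)
      = G.XP p i * G.δ j (G.A j i) + ((if j = i then G.A j i else 0) - (G.A j i * G.ν i) * G.ν j) := by
    intro j i
    rw [Derivation.leibniz, δ_XP, smul_eq_mul, smul_eq_mul]
    split_ifs with h <;> ring
  simp_rw [δ_s, map_sum, h, Finset.sum_add_distrib, Finset.sum_sub_distrib, ← Finset.sum_mul]
  rw [Finset.sum_comm]
  simp_rw [← Finset.mul_sum]
  have h1 := G.T.div_A
  have h2 := G.T.A_nu
  have h3 := G.T.tr_A
  simp only [T, δ, A, a2, ν] at *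
  simp_rw [h1, h2]
  simp only [Finset.sum_ite_eq, Finset.mem_univ, if_true, zero_mul, h3, Finset.sum_const_zero,
    sub_zero, add_zero]
  rw [s, Finset.mul_sum, ← Finset.sum_neg_distrib]
  exact Finset.sum_congr rfl fun i _ => by change _ = -(G.gc.toT.a2 * (_ * G.gc.toT.ν i)); ring

lemma lap_r2 (p : Idx N → ℝ) : G.lap (G.r2 p) = 2 * (N : SF N) := by
  change ∑ j, G.δ j (G.δ j (G.r2 p)) = _
  have h : ∀ j, G.δ j (2 * (G.XP p j - G.ν j * G.s p))
      = 2 * (G.δ j (G.XP p j) - (G.s p * G.δ j (G.ν j) + G.ν j * G.δ j (G.s p))) := by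
    intro j
    have h2 : G.δ j (2 : SF N) = 0 := by
      have : (2 : SF N) = algebraMap ℝ (SF N) 2 := (map_ofNat _ 2).symm
      rw [this, Derivation.map_algebraMap]
    rw [Derivation.leibniz, h2, map_sub, Derivation.leibniz, smul_eq_mul, smul_eq_mul, smul_eq_mul]
    simp; ring
  have h1 : ∑ j, G.δ j (G.ν j) = 0 := G.T.trace
  simp_rw [δ_r2, h]
  rw [← Finset.mul_sum, Finset.sum_sub_distrib, Finset.sum_add_distrib, ← Finset.mul_sum, h1,
    tangent, div_XP]
  simp

/-! #### The area measure -/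

/-- The area measure of the graph, in the coordinates of the base. -/
noncomputable def μ : Measure (E N) := volume.withDensity fun x => ENNReal.ofReal (G.v x)

instance : IsLocallyFiniteMeasure G.μ :=
  IsLocallyFiniteMeasure.withDensity_ofReal (SF.continuous G.v)

lemma integral_μ (f : E N → ℝ) : ∫ x, f x ∂G.μ = ∫ x, G.v x * f x := by
  rw [μ, integral_withDensity_eq_integral_toReal_smul]
  · refine integral_congr_ae (Eventually.of_forall fun x => ?_)
    simp [ENNReal.toReal_ofReal (G.v_pos x).le]
  · exact (SF.continuous G.v).measurable.ennreal_ofReal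
  · simp

lemma integrable_μ {f : E N → ℝ} : Integrable f G.μ ↔ Integrable fun x => G.v x * f x := by
  rw [μ, integrable_withDensity_iff_integrable_smul']
  · refine integrable_congr (Eventually.of_forall fun x => ?_)
    simp [ENNReal.toReal_ofReal (G.v_pos x).le]
  · exact (SF.continuous G.v).measurable.ennreal_ofReal
  · simp

/-- Compact support of a smooth function. -/
abbrev CS (f : SF N) : Prop := HasCompactSupport (f : E N → ℝ)

lemma CS.mul_r {f : SF N} (hf : CS f) (h : SF N) : CS (f * h) := HasCompactSupport.mul_right hf
lemma CS.mul_l {f : SF N} (hf : CS f) (h : SF N) : CS (h * f) := HasCompactSupport.mul_left hf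

lemma CS.D {f : SF N} (hf : CS f) (i : Idx N) : CS (D i f) := by
  rcases i with _ | i
  · exact HasCompactSupport.zero
  · exact HasCompactSupport.mono' (hf.fderiv (𝕜 := ℝ)) fun x hx => by
      refine subset_tsupport _ fun h => hx ?_
      change fderiv ℝ f x _ = 0
      rw [h]; rfl

lemma CS.sum {κ : Type*} (t : Finset κ) (f : κ → SF N) (h : ∀ i ∈ t, CS (f i)) :
    CS (∑ i ∈ t, f i) := by
  classical
  induction t using Finset.induction_on with
  | empty => exact HasCompactSupport.zero
  | insert a t ha ih =>
    rw [Finset.sum_insert ha]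
    exact HasCompactSupport.add (h _ (Finset.mem_insert_self _ _))
      (ih fun i hi => h i (Finset.mem_insert_of_mem hi))

lemma CS.δ {f : SF N} (hf : CS f) (i : Idx N) : CS (G.δ i f) := by
  rw [δ_eq]
  refine HasCompactSupport.sub (hf.D i) ?_
  refine CS.mul_l ?_ _
  exact CS.sum _ _ fun k _ => (hf.D k).mul_l _

lemma CS.integrable {f : SF N} (hf : CS f) : Integrable f G.μ :=
  (SF.continuous f).integrable_of_hasCompactSupport hf

lemma CS.integrable' {f : SF N} (hf : CS f) : Integrable f (volume : Measure (E N)) :=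
  (SF.continuous f).integrable_of_hasCompactSupport hf

lemma integral_D {f : SF N} (hf : CS f) (i : Idx N) : ∫ x, D i f x = 0 := by
  rcases i with _ | i
  · simp
  · have h := integral_mul_fderiv_eq_neg_fderiv_mul_of_integrable (μ := (volume : Measure (E N)))
      (f := fun _ => (1 : ℝ)) (g := f) (v := EuclideanSpace.single i 1) (by simp)
      (by simp only [one_mul]; exact (hf.D (some i)).integrable') (by simpa using hf.integrable')
      (by fun_prop) (by fun_prop)
    simp only [one_mul] at h
    change ∫ x, fderiv ℝ f x (EuclideanSpace.single i 1) = 0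
    rw [h]; simp

/-- Integration by parts on the graph. -/
lemma ibp {f : SF N} (hf : CS f) (i : Idx N) : ∫ x, G.δ i f x ∂G.μ = 0 := by
  rw [integral_μ]
  have h : ∀ x, G.v x * G.δ i f x
      = D i (G.v * f) x - ∑ k, D k (G.p i * G.ν k * f) x := fun x => by
    rw [← SF.mul_apply, v_mul_δ]; simp
  simp_rw [h]
  rw [integral_sub, integral_finsetSum, integral_D (hf.mul_l _)]
  · rw [zero_sub, neg_eq_zero]
    exact Finset.sum_eq_zero fun k _ => integral_D (hf.mul_l _) k
  · exact fun k _ => ((hf.mul_l _).D k).integrable'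
  · exact ((hf.mul_l _).D i).integrable'
  · exact integrable_finsetSum _ fun k _ => ((hf.mul_l _).D k).integrable'

lemma Γ_def (f h : SF N) : G.Γ f h = ∑ i, G.δ i f * G.δ i h := rfl

lemma Γ_apply (f h : SF N) (x : E N) : G.Γ f h x = ∑ i, G.δ i f x * G.δ i h x := by
  rw [Γ_def]; simp

lemma Γ_self_nonneg (f : SF N) (x : E N) : 0 ≤ G.Γ f f x := by
  rw [Γ_apply]; exact Finset.sum_nonneg fun i _ => mul_self_nonneg _

lemma Γ_comm (f h : SF N) : G.Γ f h = G.Γ h f := by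
  rw [Γ_def, Γ_def]; exact Finset.sum_congr rfl fun _ _ => mul_comm _ _

lemma Γ_mul_right (f h k : SF N) : G.Γ f (h * k) = h * G.Γ f k + k * G.Γ f h := by
  simp only [Γ_def, Derivation.leibniz, smul_eq_mul, Finset.mul_sum, ← Finset.sum_add_distrib]
  exact Finset.sum_congr rfl fun _ _ => by ring

lemma Γ_mul_left (f h k : SF N) : G.Γ (h * k) f = h * G.Γ k f + k * G.Γ h f := by
  rw [Γ_comm, Γ_mul_right, G.Γ_comm f, G.Γ_comm f]

lemma lap_def (f : SF N) : G.lap f = ∑ i, G.δ i (G.δ i f) := rfl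

lemma CS.Γ {f : SF N} (hf : CS f) (h : SF N) : CS (G.Γ f h) :=
  CS.sum _ _ fun i _ => (hf.δ G i).mul_r _

lemma CS.Γ' {f : SF N} (hf : CS f) (h : SF N) : CS (G.Γ h f) :=
  CS.sum _ _ fun i _ => (hf.δ G i).mul_l _

lemma integral_lap_mul (f : SF N) {φ : SF N} (hφ : CS φ) :
    ∫ x, (G.lap f * φ) x ∂G.μ = - ∫ x, G.Γ f φ x ∂G.μ := by
  have h : ∀ x, (G.lap f * φ) x + G.Γ f φ x = ∑ i, G.δ i (φ * G.δ i f) x := by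
    intro x
    rw [← SF.add_apply, ← SF.sum_apply, lap_def, Γ_def, Finset.sum_mul, ← Finset.sum_add_distrib]
    refine congrArg (fun f : SF N => f x) (Finset.sum_congr rfl fun i _ => ?_)
    rw [Derivation.leibniz, smul_eq_mul, smul_eq_mul]; ring
  have h2 : ∫ x, ((G.lap f * φ) x + G.Γ f φ x) ∂G.μ = 0 := by
    simp_rw [h]
    rw [integral_finsetSum _ fun i _ => ((hφ.mul_r _).δ G i).integrable G]
    exact Finset.sum_eq_zero fun k _ => G.ibp (hφ.mul_r _) k
  rw [integral_add ((hφ.mul_l _).integrable G) ((hφ.Γ' G _).integrable G)] at h2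
  linarith

end MinGraph

/-! ### Cutoff functions, stability and the Simons–Kato inequality -/

/-- A smooth function of one variable equal to `1` on `(-∞, 1]` and to `0` on `[2, ∞)`. -/
noncomputable def cutFun (t : ℝ) : ℝ := Real.smoothTransition (2 - t)

lemma cutFun_contDiff : ContDiff ℝ ∞ cutFun :=
  Real.smoothTransition.contDiff.comp (contDiff_const.sub contDiff_id)

lemma cutFun_nonneg (t : ℝ) : 0 ≤ cutFun t := Real.smoothTransition.nonneg _
lemma cutFun_le_one (t : ℝ) : cutFun t ≤ 1 := Real.smoothTransition.le_one _
lemma cutFun_one {t : ℝ} (h : t ≤ 1) : cutFun t = 1 :=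
  Real.smoothTransition.one_of_one_le (by linarith)
lemma cutFun_zero {t : ℝ} (h : 2 ≤ t) : cutFun t = 0 :=
  Real.smoothTransition.zero_of_nonpos (by linarith)

lemma deriv_cutFun_zero {t : ℝ} (h : 2 ≤ t) : deriv cutFun t = 0 := by
  refine IsLocalMin.deriv_eq_zero (Eventually.of_forall fun y => ?_)
  rw [cutFun_zero h]; exact cutFun_nonneg y

lemma exists_deriv_cutFun_le : ∃ C : ℝ, 0 < C ∧ ∀ t, |deriv cutFun t| ≤ C := by
  have hs : HasCompactSupport (deriv cutFun) := by
    refine HasCompactSupport.of_support_subset_isCompact (isCompact_Icc (a := (0:ℝ)) (b := 2)) ?_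
    intro t ht
    by_contra hc
    simp only [Set.mem_Icc, not_and_or, not_le] at hc
    rcases hc with hc | hc
    · refine ht (IsLocalMax.deriv_eq_zero (Eventually.of_forall fun y => ?_))
      rw [cutFun_one (by linarith : t ≤ 1)]; exact cutFun_le_one y
    · exact ht (deriv_cutFun_zero hc.le)
  obtain ⟨C, hC⟩ := hs.exists_bound_of_continuous
    (cutFun_contDiff.continuous_deriv ENat.LEInfty.out)
  exact ⟨max C 1, by positivity, fun t => (hC t).trans (le_max_left _ _)⟩

/-- A bound for eight times the square of the derivative of `cutFun`. -/
noncomputable def cutC : ℝ := 8 * exists_deriv_cutFun_le.choose ^ 2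

lemma cutC_pos : 0 < cutC := by
  have := exists_deriv_cutFun_le.choose_spec.1
  unfold cutC; positivity

lemma deriv_cutFun_sq_le (t : ℝ) : 8 * deriv cutFun t ^ 2 ≤ cutC := by
  have h := exists_deriv_cutFun_le.choose_spec.2 t
  unfold cutC
  have := pow_le_pow_left₀ (abs_nonneg _) h 2
  rw [sq_abs] at this
  linarith

namespace MinGraph

variable {N : ℕ} (G : MinGraph N)

lemma sum_sq_le_r2 (x : E N) : ‖x‖ ^ 2 ≤ G.r2 0 x := by
  rw [r2_apply, Fintype.sum_option, EuclideanSpace.norm_sq_eq]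
  simp; positivity

lemma r2_nonneg (p : Idx N → ℝ) (x : E N) : 0 ≤ G.r2 p x := by
  rw [r2_apply]; positivity

/-- Cutoff functions: `1` on the ball of radius `R` and `0` off the ball of radius `√2 R`. -/
noncomputable def cut (R : ℝ) : SF N := ⟨fun x => cutFun (G.r2 0 x / R ^ 2), by
  change ContDiff ℝ ∞ _
  exact cutFun_contDiff.comp (by fun_prop)⟩

lemma cut_apply (R : ℝ) (x : E N) : G.cut R x = cutFun (G.r2 0 x / R ^ 2) := rfl
lemma cut_nonneg (R : ℝ) (x : E N) : 0 ≤ G.cut R x := cutFun_nonneg _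
lemma cut_le_one (R : ℝ) (x : E N) : G.cut R x ≤ 1 := cutFun_le_one _

lemma cut_one {R : ℝ} (hR : 0 < R) {x : E N} (h : G.r2 0 x ≤ R ^ 2) : G.cut R x = 1 :=
  cutFun_one ((div_le_one (by positivity)).2 h)

lemma cut_zero {R : ℝ} (hR : 0 < R) {x : E N} (h : 2 * R ^ 2 ≤ G.r2 0 x) : G.cut R x = 0 :=
  cutFun_zero ((le_div_iff₀ (by positivity)).2 h)

lemma CS_of_r2 {f : SF N} (R : ℝ) (h : ∀ x, R < G.r2 0 x → f x = 0) : CS f := by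
  refine HasCompactSupport.of_support_subset_isCompact
    (isCompact_closedBall (0 : E N) (Real.sqrt R)) fun x hx => ?_
  rw [mem_closedBall_zero_iff]
  refine Real.le_sqrt_of_sq_le ((G.sum_sq_le_r2 x).trans ?_)
  by_contra hc
  exact hx (h x (not_le.1 hc))

lemma cut_CS {R : ℝ} (hR : 0 < R) : CS (G.cut R) :=
  G.CS_of_r2 (2 * R ^ 2) fun _ hx => G.cut_zero hR hx.le

lemma s_sq_le (p : Idx N → ℝ) (x : E N) : G.s p x ^ 2 ≤ G.r2 p x := by
  rw [s_apply, r2_apply]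
  refine (Finset.sum_mul_sq_le_sq_mul_sq _ _ _).trans ?_
  rw [unit_apply, mul_one]

lemma Γ_r2_le (p : Idx N → ℝ) (x : E N) : G.Γ (G.r2 p) (G.r2 p) x ≤ 4 * G.r2 p x := by
  rw [Γ_r2]
  simp only [SF.mul_apply, SF.sub_apply, SF.four_apply]
  nlinarith [mul_self_nonneg (G.s p x)]

lemma δ_cut (R : ℝ) (i : Idx N) (x : E N) :
    G.δ i (G.cut R) x = deriv cutFun (G.r2 0 x / R ^ 2) / R ^ 2 * G.δ i (G.r2 0) x := by
  have hg : HasDerivAt (fun t => cutFun (t / R ^ 2)) (deriv cutFun (G.r2 0 x / R ^ 2) / R ^ 2)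
      (G.r2 0 x) := by
    have h := (cutFun_contDiff.differentiable (by simp)
      (G.r2 0 x / R ^ 2)).hasDerivAt.comp (G.r2 0 x) ((hasDerivAt_id _).div_const (R ^ 2))
    exact h.congr_deriv (by ring)
  have hy : ∀ y, G.cut R y = (fun t => cutFun (t / R ^ 2)) (G.r2 0 y) := fun y => rfl
  exact G.δ_chain i _ _ hy hg

lemma Γ_cut (R : ℝ) (x : E N) : G.Γ (G.cut R) (G.cut R) x
    = (deriv cutFun (G.r2 0 x / R ^ 2) / R ^ 2) ^ 2 * G.Γ (G.r2 0) (G.r2 0) x := by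
  rw [Γ_apply, Γ_apply, Finset.mul_sum]
  refine Finset.sum_congr rfl fun i _ => ?_
  rw [δ_cut]; ring

lemma Γ_cut_zero {R : ℝ} (hR : 0 < R) {x : E N} (h : 2 * R ^ 2 ≤ G.r2 0 x) :
    G.Γ (G.cut R) (G.cut R) x = 0 := by
  rw [Γ_cut, deriv_cutFun_zero ((le_div_iff₀ (by positivity)).2 h)]; simp

lemma Γ_cut_le' {R : ℝ} (hR : 0 < R) (x : E N) : G.Γ (G.cut R) (G.cut R) x ≤ cutC / R ^ 2 := by
  by_cases h : 2 * R ^ 2 ≤ G.r2 0 x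
  · rw [G.Γ_cut_zero hR h]; have := cutC_pos; positivity
  · rw [Γ_cut]
    push Not at h
    calc _ ≤ (deriv cutFun (G.r2 0 x / R ^ 2) / R ^ 2) ^ 2 * (4 * (2 * R ^ 2)) := by
          gcongr
          exact (G.Γ_r2_le 0 x).trans (by linarith)
      _ = 8 * deriv cutFun (G.r2 0 x / R ^ 2) ^ 2 / R ^ 2 := by field_simp; ring
      _ ≤ _ := by gcongr; exact deriv_cutFun_sq_le _

lemma Γ_cut_le {R : ℝ} (hR : 0 < R) (x : E N) :
    G.Γ (G.cut R) (G.cut R) x ≤ cutC / R ^ 2 * G.cut (2 * R) x := by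
  by_cases h : 2 * R ^ 2 ≤ G.r2 0 x
  · rw [G.Γ_cut_zero hR h]; have := cutC_pos; have := G.cut_nonneg (2 * R) x; positivity
  · rw [G.cut_one (by positivity) (by nlinarith [sq_nonneg R]), mul_one]; exact G.Γ_cut_le' hR x

/-! #### Stability -/

/-- Integral of a smooth function over the graph. -/
noncomputable def I (f : SF N) : ℝ := ∫ x, f x ∂G.μ

lemma I_add {f h : SF N} (hf : CS f) (hh : CS h) : G.I (f + h) = G.I f + G.I h :=
  integral_add (hf.integrable G) (hh.integrable G)

lemma I_mono {f h : SF N} (hf : CS f) (hh : CS h) (hle : ∀ x, f x ≤ h x) : G.I f ≤ G.I h :=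
  integral_mono (hf.integrable G) (hh.integrable G) hle

lemma I_smul (c : ℝ) (f : SF N) : G.I (c • f) = c * G.I f := integral_const_mul _ _

lemma I_sub {f h : SF N} (hf : CS f) (hh : CS h) : G.I (f - h) = G.I f - G.I h :=
  integral_sub (hf.integrable G) (hh.integrable G)

lemma I_nonneg {f : SF N} (hle : ∀ x, 0 ≤ f x) : 0 ≤ G.I f := integral_nonneg hle

lemma I_neg (f : SF N) : G.I (-f) = - G.I f := integral_neg _

lemma I_lap_mul (f : SF N) {φ : SF N} (hφ : CS φ) : G.I (G.lap f * φ) = - G.I (G.Γ f φ) :=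
  G.integral_lap_mul f hφ

lemma CS.sub {f h : SF N} (hf : CS f) (hh : CS h) : CS (f - h) := HasCompactSupport.sub hf hh
lemma CS.add {f h : SF N} (hf : CS f) (hh : CS h) : CS (f + h) := HasCompactSupport.add hf hh
lemma CS.smul {f : SF N} (hf : CS f) (c : ℝ) : CS (c • f) := by
  have : c • f = SF.const N c * f := rfl
  rw [this]; exact hf.mul_l _

lemma a2_apply (x : E N) : G.a2 x = ∑ i, ∑ j, G.A i j x ^ 2 := by
  change (∑ i, ∑ j, G.A i j * G.A i j : SF N) x = _
  simp only [SF.sum_apply, SF.mul_apply, sq]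

lemma a2_nonneg (x : E N) : 0 ≤ G.a2 x := by
  rw [a2_apply]; exact Finset.sum_nonneg fun _ _ => Finset.sum_nonneg fun _ _ => sq_nonneg _

lemma lap_ν (j : Idx N) : G.lap (G.ν j) = -(G.a2 * G.ν j) := G.T.lap_nu j

lemma v_mul_ν_none : G.v * G.ν none = 1 := by
  ext x; have := (G.v_pos x).ne'; simp [ν_none, this]

/-- Stability of minimal graphs: the vertical component of the normal is a positive Jacobi
function. -/
lemma stability {φ : SF N} (hφ : CS φ) : G.I (G.a2 * (φ * φ)) ≤ G.I (G.Γ φ φ) := by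
  have h1 := G.I_lap_mul (G.ν none) ((hφ.mul_r φ).mul_r G.v)
  have h2 : G.lap (G.ν none) * (φ * φ * G.v) = - (G.a2 * (φ * φ)) := by
    rw [lap_ν]; linear_combination (-G.a2 * φ * φ) * G.v_mul_ν_none
  rw [h2, I_neg, neg_inj] at h1
  rw [h1]
  refine G.I_mono (((hφ.mul_r φ).mul_r G.v).Γ' G _) (hφ.Γ G _) fun x => ?_
  rw [Γ_apply, Γ_apply]
  refine Finset.sum_le_sum fun i _ => ?_
  have h3 : G.δ i G.v = - (G.v * G.v * G.δ i (G.ν none)) := by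
    have h := congrArg (G.δ i) G.v_mul_ν_none
    rw [Derivation.leibniz, Derivation.map_one_eq_zero, smul_eq_mul, smul_eq_mul] at h
    linear_combination G.v * h - (G.δ i G.v) * G.v_mul_ν_none
  rw [Derivation.leibniz, Derivation.leibniz, h3]
  simp only [smul_eq_mul, SF.add_apply, SF.mul_apply, SF.neg_apply]
  nlinarith [sq_nonneg (φ x * G.v x * G.δ i (G.ν none) x - G.δ i φ x)]

/-- The regularised norm of the second fundamental form, `√(|A|² + τ²)`. -/
noncomputable def aτ {τ : ℝ} (hτ : 0 < τ) : SF N := ⟨fun x => Real.sqrt (G.a2 x + τ ^ 2), by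
  change ContDiff ℝ ∞ _
  exact ContDiff.sqrt (by fun_prop) fun x => by have := G.a2_nonneg x; positivity⟩

section

variable {τ : ℝ} (hτ : 0 < τ)

lemma aτ_sq : G.aτ hτ * G.aτ hτ = G.a2 + SF.const N (τ ^ 2) := by
  ext x
  have := G.a2_nonneg x
  exact Real.mul_self_sqrt (by positivity)

lemma aτ_pos (x : E N) : 0 < G.aτ hτ x := by
  have := G.a2_nonneg x
  exact Real.sqrt_pos.2 (by positivity)

lemma aτ_sq_apply (x : E N) : G.aτ hτ x ^ 2 = G.a2 x + τ ^ 2 := by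
  have := congrArg (fun f : SF N => f x) (G.aτ_sq hτ)
  simpa [sq] using this

lemma δ_a2_eq (i : Idx N) : G.δ i G.a2 = 2 * (G.aτ hτ * G.δ i (G.aτ hτ)) := by
  have h := congrArg (G.δ i) (G.aτ_sq hτ)
  rw [Derivation.leibniz, map_add, δ_const, smul_eq_mul] at h
  linear_combination -h

/-- The squared norm of the covariant derivative of the second fundamental form. -/
noncomputable def B2 : SF N := (∑ k, ∑ i, ∑ j, G.δ k (G.A i j) * G.δ k (G.A i j))
  - 2 * ∑ i, ∑ j, G.T.A2 i j * G.T.A2 i j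

lemma simons : G.lap G.a2 = 2 * G.B2 - 2 * (G.a2 * G.a2) := by
  have := G.T.simons
  unfold B2
  change G.T.lap G.T.a2 = _
  rw [this]; ring

/-- The stability inequality for `√(|A|² + τ²) φ`, with the quartic terms eliminated by the Simons
identity. -/
lemma simons_stability {φ : SF N} (hφ : CS φ) :
    G.I ((G.B2 - G.Γ (G.aτ hτ) (G.aτ hτ)) * (φ * φ)) ≤ G.I ((G.a2 + SF.const N (τ ^ 2)) * G.Γ φ φ) := by
  set a := G.aτ hτ
  have h1 := G.stability (hφ.mul_l a)
  have h2 := G.I_lap_mul G.a2 (hφ.mul_r φ)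
  have h3 : G.Γ G.a2 (φ * φ) = 4 * (a * φ * G.Γ a φ) := by
    simp only [Γ_def, δ_a2_eq G hτ, Derivation.leibniz, smul_eq_mul, Finset.mul_sum]
    exact Finset.sum_congr rfl fun i _ => by ring
  have h4 : G.Γ (a * φ) (a * φ) = φ * φ * G.Γ a a + 2 * (a * φ * G.Γ a φ) + a * a * G.Γ φ φ := by
    simp only [Γ_def, Derivation.leibniz, smul_eq_mul, Finset.mul_sum, ← Finset.sum_add_distrib]
    exact Finset.sum_congr rfl fun i _ => by ring
  rw [h3, simons] at h2
  rw [h4, G.aτ_sq hτ] at h1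
  have c1 : CS (φ * φ) := hφ.mul_r φ
  have c2 : CS (a * φ * G.Γ a φ) := (hφ.mul_l a).mul_r _
  have c3 : CS (G.Γ φ φ) := hφ.Γ G φ
  have e1 : (2 * G.B2 - 2 * (G.a2 * G.a2)) * (φ * φ)
      = (2:ℝ) • (G.B2 * (φ * φ)) - (2:ℝ) • (G.a2 * G.a2 * (φ * φ)) := by
    ext x; simp; ring
  have e2 : 4 * (a * φ * G.Γ a φ) = (4:ℝ) • (a * φ * G.Γ a φ) := by ext x; simp
  have e3 : 2 * (a * φ * G.Γ a φ) = (2:ℝ) • (a * φ * G.Γ a φ) := by ext x; simp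
  rw [e1, e2, G.I_sub ((c1.mul_l _).smul _) ((c1.mul_l _).smul _), I_smul, I_smul, I_smul] at h2
  rw [e3, G.I_add ((c1.mul_r _).add (c2.smul _)) (c3.mul_l _), G.I_add (c1.mul_r _) (c2.smul _),
    I_smul] at h1
  have h5 : G.I (G.a2 * G.a2 * (φ * φ)) ≤ G.I (G.a2 * (a * φ * (a * φ))) := by
    refine G.I_mono (c1.mul_l _) ((hφ.mul_l _ |>.mul_l _).mul_l _) fun x => ?_
    have e : (a * φ * (a * φ) : SF N) x = (G.a2 x + τ ^ 2) * (φ x * φ x) := by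
      rw [← G.aτ_sq_apply hτ x]; simp only [SF.mul_apply]; ring
    rw [SF.mul_apply G.a2, e]
    have := G.a2_nonneg x
    have h6 : 0 ≤ φ x * φ x := mul_self_nonneg _
    have : 0 ≤ G.a2 x * (τ ^ 2 * (φ x * φ x)) := by positivity
    simp only [SF.mul_apply]; linarith
  have e4 : (G.B2 - G.Γ a a) * (φ * φ) = G.B2 * (φ * φ) - φ * φ * G.Γ a a := by ring
  rw [e4, G.I_sub (c1.mul_l _) (c1.mul_r _)]
  linarith

lemma A_symm_apply (i j : Idx N) (x : E N) : G.A i j x = G.A j i x := by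
  rw [A, G.T.A_symm]

/-- The deficit in the Kato inequality tested against an arbitrary vector `V`. -/
lemma deficit (x : E N) (V : Idx N → ℝ) :
    2 * (∑ i, V i * G.δ i G.a2 x)
      - 4 * (∑ j, (∑ k, G.A j k x * (G.δ k (G.aτ hτ) x / G.aτ hτ x)) * ∑ i, G.A j i x * V i)
      - 2 * ((∑ i, V i ^ 2) * G.a2 x + ∑ j, (∑ i, G.A j i x * V i) ^ 2)
    ≤ G.B2 x - G.Γ (G.aτ hτ) (G.aτ hτ) x := by
  have ev : ∀ {f h : SF N}, f = h → f x = h x := fun h => by rw [h]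
  have hd : ∀ k, ∑ i, ∑ j, G.A i j x * G.δ k (G.A i j) x = 1 / 2 * G.δ k G.a2 x := by
    intro k
    have := ev (G.T.delta_a2 k)
    simp only [SF.mul_apply, SF.sum_apply, SF.two_apply] at this
    change _ = 1 / 2 * G.T.δ k G.T.a2 x
    rw [this]; ring
  have key := deficit_inequality (fun i j => G.A i j x) (fun i j => G.T.A2 i j x)
    (fun i => G.ν i x) (fun k i j => G.δ k (G.A i j) x)
    (fun k => G.δ k (G.aτ hτ) x / G.aτ hτ x) V (fun i j => G.A_symm_apply i j x)
    (fun i j => by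
      change (∑ h, G.T.A i h * G.T.A h j : SF N) x = _
      rw [SF.sum_apply]; rfl)
    (by simpa [sq] using G.unit_apply x)
    (fun j => by
      have := ev (G.T.nu_A j)
      rw [SF.sum_apply] at this; exact this)
    (fun k i j => by rw [A, G.T.A_symm])
    (fun k i j => ev (G.T.codazzi k i j))
    (fun k j => by
      have := ev (G.T.nu_dA k j)
      rw [SF.sum_apply] at this; exact this)
  simp_rw [hd, ← a2_apply] at key
  have hB : G.B2 x = (∑ k, ∑ i, ∑ j, G.δ k (G.A i j) x ^ 2)
      - 2 * (∑ i, ∑ j, G.T.A2 i j x ^ 2) := by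
    simp only [B2, SF.sub_apply, SF.mul_apply, SF.sum_apply, SF.two_apply, sq]
  have ha := G.aτ_pos hτ x
  have h1 : ∑ k, G.δ k (G.aτ hτ) x / G.aτ hτ x * (1 / 2 * G.δ k G.a2 x)
      = G.Γ (G.aτ hτ) (G.aτ hτ) x := by
    rw [Γ_apply]
    refine Finset.sum_congr rfl fun k _ => ?_
    rw [δ_a2_eq G hτ]
    simp only [SF.mul_apply, SF.two_apply]
    field_simp
  have h2 : (∑ k, (G.δ k (G.aτ hτ) x / G.aτ hτ x) ^ 2) * G.a2 x ≤ G.Γ (G.aτ hτ) (G.aτ hτ) x := by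
    have e : (∑ k, (G.δ k (G.aτ hτ) x / G.aτ hτ x) ^ 2) = G.Γ (G.aτ hτ) (G.aτ hτ) x / G.aτ hτ x ^ 2 := by
      rw [Γ_apply, Finset.sum_div]
      exact Finset.sum_congr rfl fun k _ => by rw [div_pow, sq (G.δ k _ x)]
    rw [e, div_mul_eq_mul_div, div_le_iff₀ (by positivity), aτ_sq_apply]
    have := G.Γ_self_nonneg (G.aτ hτ) x
    nlinarith [sq_nonneg τ]
  have h3 : ∑ i, V i * (1 / 2 * G.δ i G.a2 x) = 1 / 2 * ∑ i, V i * G.δ i G.a2 x := by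
    rw [Finset.mul_sum]; exact Finset.sum_congr rfl fun _ _ => by ring
  rw [h1, h3] at key
  linarith

/-- A Kato inequality with a dimensional gain: `deficit` for a small multiple of the logarithmic
gradient of `√(|A|² + τ²)`; vanishing of the trace of `A` keeps `|A V|²` strictly below `|A|² |V|²`. -/
lemma kato (hN : 1 ≤ N) (x : E N) :
    G.Γ (G.aτ hτ) (G.aτ hτ) x / ((N : ℝ) + 1) ^ 2 ≤ G.B2 x - G.Γ (G.aτ hτ) (G.aτ hτ) x := by
  set m : ℝ := (N : ℝ) + 1 with hm
  have hm0 : (2 : ℝ) ≤ m := by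
    have : (1 : ℝ) ≤ N := by exact_mod_cast hN
    linarith
  set t : Idx N → ℝ := fun k => G.δ k (G.aτ hτ) x / G.aτ hτ x with ht
  set Ga := G.Γ (G.aτ hτ) (G.aτ hτ) x with hGa
  have ha := G.aτ_pos hτ x
  have key := G.deficit hτ x (fun k => 1 / (2 * m) * t k)
  have htr : ∑ i, G.A i i x = 0 := by
    have : (∑ i, G.T.A i i : SF N) x = (0 : SF N) x := by rw [G.T.tr_A]
    rw [SF.sum_apply] at this; exact this
  have hAt := traceless_apply_sq_le (fun i j => G.A i j x) (fun i j => G.A_symm_apply i j x) htr t m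
    (by simp [hm]) hm0
  rw [← a2_apply] at hAt
  have h2 : G.a2 x * (∑ k, t k ^ 2) ≤ Ga := by
    have e : (∑ k, t k ^ 2) = Ga / G.aτ hτ x ^ 2 := by
      rw [hGa, Γ_apply, Finset.sum_div]
      exact Finset.sum_congr rfl fun k _ => by rw [ht, div_pow, sq (G.δ k _ x)]
    rw [e, mul_div_assoc', div_le_iff₀ (by positivity), aτ_sq_apply]
    have := G.Γ_self_nonneg (G.aτ hτ) x
    nlinarith [sq_nonneg τ]
  have h1 : ∑ k, 1 / (2 * m) * t k * G.δ k G.a2 x = 1 / m * Ga := by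
    rw [hGa, Γ_apply, Finset.mul_sum]
    refine Finset.sum_congr rfl fun k _ => ?_
    rw [δ_a2_eq G hτ]
    simp only [SF.mul_apply, SF.two_apply, ht]
    field_simp
  have h3 : ∀ j, ∑ i, G.A j i x * (1 / (2 * m) * t i) = 1 / (2 * m) * ∑ i, G.A j i x * t i := by
    intro j; rw [Finset.mul_sum]; exact Finset.sum_congr rfl fun _ _ => by ring
  have h4 : ∑ i, (1 / (2 * m) * t i) ^ 2 = (1 / (2 * m)) ^ 2 * ∑ i, t i ^ 2 := by
    rw [Finset.mul_sum]; exact Finset.sum_congr rfl fun _ _ => by ring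
  set Q := ∑ j, (∑ i, G.A j i x * t i) ^ 2 with hQ
  have h5 : ∑ j, (∑ i, G.A j i x * t i) * (1 / (2 * m) * ∑ i, G.A j i x * t i)
      = 1 / (2 * m) * Q := by
    rw [hQ, Finset.mul_sum]; exact Finset.sum_congr rfl fun _ _ => by ring
  have h6 : ∑ j, (1 / (2 * m) * ∑ i, G.A j i x * t i) ^ 2 = (1 / (2 * m)) ^ 2 * Q := by
    rw [hQ, Finset.mul_sum]; exact Finset.sum_congr rfl fun _ _ => by ring
  simp only [h3, h4, h1] at key
  change 2 * (1 / m * Ga) - 4 * (∑ j, (∑ i, G.A j i x * t i) * (1 / (2 * m) * ∑ i, G.A j i x * t i))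
    - _ ≤ _ at key
  rw [h5, h6] at key
  have h7 : Q ≤ (1 - 1 / m) * Ga := by
    refine hAt.trans ?_
    rw [mul_assoc]
    refine mul_le_mul_of_nonneg_left h2 ?_
    rw [sub_nonneg, div_le_one (by linarith)]; linarith
  refine le_trans ?_ key
  have hm1 : 0 < m := by linarith
  have hG0 : 0 ≤ Ga := G.Γ_self_nonneg _ x
  have e : (1 / (2 * m)) ^ 2 * (∑ k, t k ^ 2) * G.a2 x = (1 / (2 * m)) ^ 2 * (G.a2 x * ∑ k, t k ^ 2) := by
    ring
  rw [e]
  have b1 : (1 / (2 * m)) ^ 2 * (G.a2 x * ∑ k, t k ^ 2) ≤ (1 / (2 * m)) ^ 2 * Ga := by gcongr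
  have b2 : (1 / (2 * m)) ^ 2 * Q ≤ (1 / (2 * m)) ^ 2 * Ga := by
    gcongr
    refine h7.trans ?_
    have : 0 ≤ 1 / m * Ga := by positivity
    linarith
  have b3 : 1 / (2 * m) * Q ≤ 1 / (2 * m) * ((1 - 1 / m) * Ga) := by gcongr
  have e2 : Ga / m ^ 2 = 2 * (1 / m * Ga) - 4 * (1 / (2 * m) * ((1 - 1 / m) * Ga))
      - 2 * ((1 / (2 * m)) ^ 2 * Ga + (1 / (2 * m)) ^ 2 * Ga) := by
    field_simp; ring
  rw [e2]
  linarith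

end

end MinGraph

/-! ### Test functions on the ambient space and calibration -/

/-- The ambient space `ℝ^{N+1}`. -/
abbrev W (N : ℕ) := EuclideanSpace ℝ (Idx N)

section Ambient

variable {N : ℕ}

/-- The standard basis vectors of the ambient space. -/
noncomputable def bv (i : Idx N) : W N := EuclideanSpace.single i 1

/-- The point of the ambient space over a given base point at a given height. -/
noncomputable def pt : (E N × ℝ) →L[ℝ] W N :=
  LinearMap.toContinuousLinearMap
    { toFun := fun z => WithLp.toLp 2 fun i => Option.elim i z.2 fun k => z.1 k
      map_add' := fun a b => by ext i; rcases i with _ | i <;> rfl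
      map_smul' := fun c a => by ext i; rcases i with _ | i <;> rfl }

@[simp] lemma pt_none (z : E N × ℝ) : pt z none = z.2 := rfl
@[simp] lemma pt_some (z : E N × ℝ) (i : Fin N) : pt z (some i) = z.1 i := rfl

lemma pt_single (i : Fin N) : pt ((EuclideanSpace.single i 1 : E N), (0:ℝ)) = bv (some i) := by
  ext j
  rcases j with _ | j
  · simp [bv]
  · by_cases h : j = i <;> simp [bv, h]

lemma pt_vert (t : ℝ) : pt ((0 : E N), t) = t • bv none := by
  ext j
  rcases j with _ | j <;> simp [bv]

/-- The projection of the ambient space to the base. -/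
noncomputable def pr : W N →L[ℝ] E N :=
  LinearMap.toContinuousLinearMap
    { toFun := fun y => WithLp.toLp 2 fun i => y (some i)
      map_add' := fun a b => by ext i; rfl
      map_smul' := fun c a => by ext i; rfl }

@[simp] lemma pr_apply (y : W N) (i : Fin N) : pr y i = y (some i) := rfl
@[simp] lemma pr_pt (z : E N × ℝ) : pr (pt z) = z.1 := by ext i; rfl

lemma pt_preserving : MeasurePreserving (fun z : E N × ℝ => pt z)
    ((volume : Measure (E N)).prod (volume : Measure ℝ)) (volume : Measure (W N)) := by
  have h1 : MeasurePreserving (fun z : E N × ℝ => ((WithLp.ofLp z.1 : Fin N → ℝ), z.2))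
      ((volume : Measure (E N)).prod (volume : Measure ℝ))
      ((volume : Measure (Fin N → ℝ)).prod (volume : Measure ℝ)) :=
    (PiLp.volume_preserving_ofLp (Fin N)).prod (MeasurePreserving.id _)
  have h2 : MeasurePreserving (MeasurableEquiv.piOptionEquivProd fun _ : Option (Fin N) => ℝ).symm
      ((volume : Measure (Fin N → ℝ)).prod (volume : Measure ℝ)) (volume : Measure (Idx N → ℝ)) :=
    ⟨MeasurableEquiv.measurable _, Measure.pi_map_piOptionEquivProd fun _ => (volume : Measure ℝ)⟩
  have h3 := (PiLp.volume_preserving_toLp (Idx N)).comp (h2.comp h1)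
  have h4 : (fun z : E N × ℝ => pt z) = WithLp.toLp 2 ∘
      ((MeasurableEquiv.piOptionEquivProd fun _ : Option (Fin N) => ℝ).symm ∘
        fun z : E N × ℝ => ((WithLp.ofLp z.1 : Fin N → ℝ), z.2)) := by
    funext z
    ext i
    rcases i with _ | i <;> rfl
  rw [h4]
  exact h3

end Ambient

/-- Smooth compactly supported functions on the ambient space. -/
structure TF (N : ℕ) where
  f : W N → ℝ
  smooth : ContDiff ℝ ∞ f
  cs : HasCompactSupport f

namespace TF

variable {N : ℕ}

instance : CoeFun (TF N) fun _ => W N → ℝ := ⟨TF.f⟩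

lemma differentiable (ζ : TF N) : Differentiable ℝ ζ := ζ.smooth.differentiable (by simp)
lemma continuous (ζ : TF N) : Continuous ζ := ζ.smooth.continuous

lemma integrable (ζ : TF N) : Integrable ζ := ζ.continuous.integrable_of_hasCompactSupport ζ.cs

/-- The derivative in direction `b`. -/
noncomputable def pd (b : W N) (ζ : TF N) : TF N where
  f y := fderiv ℝ ζ y b
  smooth := (ζ.smooth.fderiv_right (m := ∞) le_rfl).clm_apply contDiff_const
  cs := ζ.cs.fderiv_apply (𝕜 := ℝ) b

lemma pd_apply (b : W N) (ζ : TF N) (y : W N) : pd b ζ y = fderiv ℝ ζ y b := rfl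

/-- The translate `y ↦ ζ (y + b)`. -/
noncomputable def tl (b : W N) (ζ : TF N) : TF N where
  f y := ζ (y + b)
  smooth := ζ.smooth.comp (contDiff_id.add contDiff_const)
  cs := ζ.cs.comp_homeomorph (Homeomorph.addRight b)

@[simp] lemma tl_apply (b : W N) (ζ : TF N) (y : W N) : tl b ζ y = ζ (y + b) := rfl

lemma pd_tl (a b : W N) (ζ : TF N) (y : W N) : pd a (tl b ζ) y = pd a ζ (y + b) := by
  rw [pd_apply, pd_apply]
  change fderiv ℝ (fun y => ζ (y + b)) y a = _
  rw [fderiv_comp_add_right]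

lemma exists_support (ζ : TF N) : ∃ R : ℝ, 0 < R ∧ ∀ y : W N, R < ‖y‖ → ζ y = 0 := by
  obtain ⟨R, hR⟩ := ζ.cs.isCompact.isBounded.exists_norm_le
  refine ⟨max R 1, by positivity, fun y hy => ?_⟩
  by_contra h
  exact absurd (hR y (subset_tsupport _ h)) (not_le.2 ((le_max_left _ _).trans_lt hy))

lemma fderiv_eq_sum (ζ : TF N) (y b : W N) : fderiv ℝ ζ y b = ∑ i, b i * pd (bv i) ζ y := by
  have hb : b = ∑ i, b i • bv i := by
    ext j
    simp only [WithLp.ofLp_sum, Finset.sum_apply, PiLp.smul_apply, bv, PiLp.single_apply,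
      smul_eq_mul, mul_ite, mul_one, mul_zero, Finset.sum_ite_eq, Finset.mem_univ, if_true]
  conv_lhs => rw [hb]
  rw [map_sum]
  simp [pd_apply]

end TF

/-- A sign function. -/
noncomputable def sg (t : ℝ) : ℝ := if 0 < t then 1 else -1

lemma sg_measurable : Measurable sg :=
  Measurable.ite measurableSet_Ioi measurable_const measurable_const

lemma abs_sg (t : ℝ) : |sg t| = 1 := by unfold sg; split_ifs <;> simp

lemma integral_sg_deriv {h : ℝ → ℝ} (hh : ContDiff ℝ 1 h) (hc : HasCompactSupport h) :
    ∫ t, sg t * deriv h t = -2 * h 0 := by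
  have hi : Integrable fun t => sg t * deriv h t := by
    refine ((hh.continuous_deriv le_rfl).integrable_of_hasCompactSupport hc.deriv).bdd_mul
      (c := 1) sg_measurable.aestronglyMeasurable (Eventually.of_forall fun t => ?_)
    rw [Real.norm_eq_abs, abs_sg]
  rw [← intervalIntegral.integral_Iic_add_Ioi (b := 0) hi.integrableOn hi.integrableOn]
  have h1 : ∫ t in Set.Iic 0, sg t * deriv h t = ∫ t in Set.Iic 0, -deriv h t := by
    refine setIntegral_congr_fun measurableSet_Iic fun t ht => ?_
    have ht' : t ≤ 0 := ht
    simp [sg, not_lt.2 ht']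
  have h2 : ∫ t in Set.Ioi 0, sg t * deriv h t = ∫ t in Set.Ioi 0, deriv h t := by
    refine setIntegral_congr_fun measurableSet_Ioi fun t ht => ?_
    have : (0:ℝ) < t := ht
    simp [sg, this]
  rw [h1, h2, integral_neg, HasCompactSupport.integral_Iic_deriv_eq hh hc,
    HasCompactSupport.integral_Ioi_deriv_eq hh hc]
  ring

namespace MinGraph

variable {N : ℕ} (G : MinGraph N)

/-- The point of the graph over `x`. -/
noncomputable def pos (x : E N) : W N := pt (x, G.u x)

lemma pos_apply (x : E N) (i : Idx N) : G.pos x i = G.X i x := by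
  rcases i with _ | i <;> rfl

lemma norm_pos_sq (x : E N) : ‖G.pos x‖ ^ 2 = G.r2 0 x := by
  rw [EuclideanSpace.norm_sq_eq, r2_apply]
  simp [pos_apply]

lemma pos_contDiff : ContDiff ℝ ∞ G.pos := by
  unfold pos
  exact pt.contDiff.comp (contDiff_id.prodMk (SF.contDiff G.u))

/-- The restriction of a test function to the graph. -/
noncomputable def tr (ζ : TF N) : SF N := ⟨fun x => ζ (G.pos x), by
  change ContDiff ℝ ∞ _
  exact ζ.smooth.comp G.pos_contDiff⟩

@[simp] lemma tr_apply (ζ : TF N) (x : E N) : G.tr ζ x = ζ (G.pos x) := rfl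

lemma tr_CS (ζ : TF N) : CS (G.tr ζ) := by
  obtain ⟨R, hR, h⟩ := ζ.exists_support
  refine G.CS_of_r2 (R ^ 2) fun x hx => h _ ?_
  rw [← norm_pos_sq] at hx
  exact lt_of_pow_lt_pow_left₀ 2 (norm_nonneg _) hx

lemma p_eq (i : Idx N) : G.p i = G.v * G.ν i := G.gc.p_eq i

lemma D_tr (ζ : TF N) (i : Idx N) :
    D i (G.tr ζ) = G.tr (ζ.pd (bv i)) - G.p i * G.tr (ζ.pd (bv none)) := by
  rcases i with _ | i
  · simp [p]
  · ext x
    change fderiv ℝ (fun x => ζ (pt (x, G.u x))) x (EuclideanSpace.single i 1) = _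
    have h1 : HasFDerivAt (fun x : E N => pt (x, G.u x))
        (pt.comp ((ContinuousLinearMap.id ℝ (E N)).prod (fderiv ℝ G.u x))) x :=
      pt.hasFDerivAt.comp x ((hasFDerivAt_id x).prodMk (SF.differentiable G.u x).hasFDerivAt)
    have h2 := (ζ.differentiable (pt (x, G.u x))).hasFDerivAt.comp x h1
    have h3 : fderiv ℝ (fun x => ζ (pt (x, G.u x))) x = _ := h2.fderiv
    have h4 : pt ((EuclideanSpace.single i 1 : E N), fderiv ℝ G.u x (EuclideanSpace.single i 1))
        = bv (some i) + G.du i x • bv none := by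
      rw [← pt_single, ← pt_vert, ← map_add]
      simp; rfl
    rw [h3]
    simp only [ContinuousLinearMap.comp_apply, ContinuousLinearMap.prod_apply,
      ContinuousLinearMap.id_apply, h4, map_add, map_smul]
    simp only [p, SF.sub_apply, SF.mul_apply, SF.neg_apply, tr_apply, TF.pd_apply, smul_eq_mul]
    change _ + _ = fderiv ℝ ζ (pt (x, G.u x)) _ - _ * fderiv ℝ ζ (pt (x, G.u x)) _
    ring

lemma δ_tr (ζ : TF N) (i : Idx N) :
    G.δ i (G.tr ζ) = G.tr (ζ.pd (bv i)) - G.ν i * ∑ k, G.ν k * G.tr (ζ.pd (bv k)) := by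
  rw [δ_eq]
  simp_rw [D_tr, p_eq]
  have h : ∀ k, G.ν k * (G.tr (ζ.pd (bv k)) - G.v * G.ν k * G.tr (ζ.pd (bv none)))
      = G.ν k * G.tr (ζ.pd (bv k)) - G.v * G.tr (ζ.pd (bv none)) * (G.ν k * G.ν k) := by
    intro k; ring
  simp_rw [h]
  rw [Finset.sum_sub_distrib, ← Finset.mul_sum, unit]
  ring

lemma div_ν : ∑ i, D i (G.ν i) = 0 := G.gc.div

/-- The shear of the ambient space taking the base to the graph. -/
noncomputable def shear (z : E N × ℝ) : W N := pt (z.1, G.u z.1 + z.2)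

lemma shear_eq (z : E N × ℝ) : G.shear z = G.pos z.1 + z.2 • bv none := by
  rw [pos, ← pt_vert, ← map_add]; simp [shear]

lemma shear_continuous : Continuous G.shear := by
  unfold shear
  have := SF.continuous G.u
  fun_prop

lemma shear_preserving : MeasurePreserving G.shear
    ((volume : Measure (E N)).prod (volume : Measure ℝ)) (volume : Measure (W N)) := by
  have hu := SF.continuous G.u
  have h1 : MeasurePreserving (fun z : E N × ℝ => (z.1, G.u z.1 + z.2))
      ((volume : Measure (E N)).prod (volume : Measure ℝ))
      ((volume : Measure (E N)).prod (volume : Measure ℝ)) :=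
    (MeasurePreserving.id (volume : Measure (E N))).skew_product (g := fun x t => G.u x + t)
      (by fun_prop) (Eventually.of_forall fun x => (measurePreserving_add_left _ (G.u x)).map_eq)
  exact pt_preserving.comp h1

/-- The shear as a measurable equivalence. -/
noncomputable def shearInv (y : W N) : E N × ℝ := (pr y, y none - G.u (pr y))

lemma shear_embedding : MeasurableEmbedding G.shear := by
  have hl : Function.LeftInverse G.shearInv G.shear := fun z => by
    simp [shear, shearInv]
  have hr : Function.RightInverse G.shearInv G.shear := fun y => by
    ext i; rcases i with _ | i <;> simp [shear, shearInv]
  have hu := SF.continuous G.u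
  have hc : Continuous G.shearInv := by
    unfold shearInv
    have : Continuous fun y : W N => y none := by fun_prop
    fun_prop
  exact (⟨⟨G.shear, G.shearInv, hl, hr⟩, G.shear_continuous, hc⟩ :
    E N × ℝ ≃ₜ W N).isClosedEmbedding.measurableEmbedding

lemma shear_compact {F : W N → ℝ} (hF : HasCompactSupport F) :
    HasCompactSupport fun z => F (G.shear z) := by
  have hl : Function.LeftInverse G.shearInv G.shear := fun z => by
    simp [shear, shearInv]
  have hr : Function.RightInverse G.shearInv G.shear := fun y => by
    ext i; rcases i with _ | i <;> simp [shear, shearInv]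
  have hu := SF.continuous G.u
  have hc : Continuous G.shearInv := by
    unfold shearInv
    have : Continuous fun y : W N => y none := by fun_prop
    fun_prop
  exact hF.comp_homeomorph (⟨⟨G.shear, G.shearInv, hl, hr⟩, G.shear_continuous, hc⟩ :
    E N × ℝ ≃ₜ W N)

/-- On each horizontal slice of the sheared coordinates the divergence theorem moves all
derivatives to the vertical one. -/
lemma calibration_slice (ζ : TF N) (V : Idx N → SF N) (hV : ∑ i, D i (V i) = 0) (t : ℝ) :
    ∫ x, ∑ i, V i x * ζ.pd (bv i) (G.shear (x, t))
      = ∫ x, (G.v * ∑ i, V i * G.ν i : SF N) x * ζ.pd (bv none) (G.shear (x, t)) := by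
  set c : SF N := G.v * ∑ i, V i * G.ν i with hc
  set h : SF N := G.tr (ζ.tl (t • bv none))
  have hCS : CS h := G.tr_CS _
  have k1 : ∀ b x, G.tr ((ζ.tl (t • bv none)).pd b) x = ζ.pd b (G.shear (x, t)) := by
    intro b x; rw [tr_apply, TF.pd_tl, shear_eq]
  have k2 : ∑ i, D i (V i * h) = ∑ i, V i * G.tr ((ζ.tl (t • bv none)).pd (bv i))
      - c * G.tr ((ζ.tl (t • bv none)).pd (bv none)) := by
    have : ∀ i, D i (V i * h) = V i * G.tr ((ζ.tl (t • bv none)).pd (bv i))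
        - V i * G.ν i * (G.v * G.tr ((ζ.tl (t • bv none)).pd (bv none))) + h * D i (V i) := by
      intro i
      rw [Derivation.leibniz, smul_eq_mul, smul_eq_mul, D_tr, p_eq]; ring
    rw [Finset.sum_congr rfl fun i _ => this i, Finset.sum_add_distrib, Finset.sum_sub_distrib,
      ← Finset.mul_sum, hV, ← Finset.sum_mul, hc]
    ring
  have k3 : ∫ x, (∑ i, D i (V i * h) : SF N) x = 0 := by
    simp only [SF.sum_apply]
    rw [integral_finsetSum _ fun i _ => ((hCS.mul_l (V i)).D i).integrable']
    exact Finset.sum_eq_zero fun i _ => integral_D (hCS.mul_l (V i)) i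
  have k4 : CS (∑ i, V i * G.tr ((ζ.tl (t • bv none)).pd (bv i))) :=
    CS.sum _ _ fun i _ => (G.tr_CS _).mul_l (V i)
  have k5 : CS (c * G.tr ((ζ.tl (t • bv none)).pd (bv none))) := (G.tr_CS _).mul_l c
  rw [k2] at k3
  simp only [SF.sub_apply] at k3
  rw [integral_sub k4.integrable' k5.integrable'] at k3
  simp only [SF.sum_apply, SF.mul_apply, k1] at k3 ⊢
  linarith

lemma calibration_fiber (ζ : TF N) (x : E N) :
    ∫ t : ℝ, sg t * ζ.pd (bv none) (G.shear (x, t)) = -2 * ζ (G.pos x) := by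
  have k1 : ∀ t : ℝ, ζ.pd (bv none) (G.shear (x, t))
      = deriv (fun t : ℝ => ζ (G.pos x + t • bv none)) t := by
    intro t
    have hd : HasDerivAt (fun t : ℝ => G.pos x + t • bv none) (bv none) t := by
      simpa using ((hasDerivAt_id t).smul_const (bv none : W N)).const_add (G.pos x)
    have : HasDerivAt (fun t : ℝ => ζ (G.pos x + t • bv none)) _ t :=
      (ζ.differentiable _).hasFDerivAt.comp_hasDerivAt t hd
    rw [this.deriv, TF.pd_apply, shear_eq]
  simp only [k1]
  rw [integral_sg_deriv]
  · simp
  · exact (ζ.smooth.of_le ENat.LEInfty.out).comp (by fun_prop)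
  · have hcl : Topology.IsClosedEmbedding fun t : ℝ => ((x, t) : E N × ℝ) :=
      Topology.IsClosedEmbedding.of_isEmbedding_isClosedMap (isEmbedding_prodMkRight x)
        (isClosedMap_prodMk_left x)
    have := (G.shear_compact ζ.cs).comp_isClosedEmbedding hcl
    simpa only [Function.comp_def, shear_eq] using this

lemma integrable_sg_mul {F : E N × ℝ → ℝ} (h1 : Continuous F) (h2 : HasCompactSupport F) :
    Integrable (fun z => sg z.2 * F z) ((volume : Measure (E N)).prod (volume : Measure ℝ)) := by
  refine (h1.integrable_of_hasCompactSupport h2).bdd_mul (c := 1)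
    (sg_measurable.comp measurable_snd).aestronglyMeasurable (Eventually.of_forall fun t => ?_)
  rw [Real.norm_eq_abs, abs_sg]

/-- Calibration: for a divergence-free field independent of the height, integrals over the graph
are integrals over the ambient space. -/
lemma calibration (ζ : TF N) (V : Idx N → SF N) (hV : ∑ i, D i (V i) = 0) :
    2 * G.I (G.tr ζ * ∑ i, V i * G.ν i)
      = -∫ y : W N, sg (y none - G.u (pr y)) * ∑ i, V i (pr y) * ζ.pd (bv i) y := by
  set c : SF N := G.v * ∑ i, V i * G.ν i with hc
  have e1 : ∫ y : W N, sg (y none - G.u (pr y)) * ∑ i, V i (pr y) * ζ.pd (bv i) y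
      = ∫ z : E N × ℝ, sg z.2 * ∑ i, V i z.1 * ζ.pd (bv i) (G.shear z)
          ∂((volume : Measure (E N)).prod (volume : Measure ℝ)) := by
    rw [← G.shear_preserving.integral_comp G.shear_embedding]
    have k : ∀ z : E N × ℝ, G.shear z none - G.u (pr (G.shear z)) = z.2 := by
      intro z; simp only [shear, pr_pt, pt_none]; ring
    have k' : ∀ z : E N × ℝ, pr (G.shear z) = z.1 := by
      intro z; simp only [shear, pr_pt]
    refine integral_congr_ae (Eventually.of_forall fun z => ?_)
    beta_reduce
    rw [k, k']
  have c1 : Continuous fun z : E N × ℝ => ∑ i, V i z.1 * ζ.pd (bv i) (G.shear z) :=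
    continuous_finsetSum _ fun i _ => ((SF.continuous (V i)).comp continuous_fst).mul
      ((ζ.pd (bv i)).continuous.comp G.shear_continuous)
  have s1 : HasCompactSupport fun z : E N × ℝ => ∑ i, V i z.1 * ζ.pd (bv i) (G.shear z) := by
    refine (G.shear_compact (ζ.cs.fderiv (𝕜 := ℝ)).norm).mono fun z hz => ?_
    rw [Function.mem_support] at hz ⊢
    contrapose! hz
    refine Finset.sum_eq_zero fun i _ => ?_
    rw [TF.pd_apply, norm_eq_zero.1 hz]; simp
  have c2 : Continuous fun z : E N × ℝ => c z.1 * ζ.pd (bv none) (G.shear z) :=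
    ((SF.continuous c).comp continuous_fst).mul
      ((ζ.pd (bv none)).continuous.comp G.shear_continuous)
  have s2 : HasCompactSupport fun z : E N × ℝ => c z.1 * ζ.pd (bv none) (G.shear z) :=
    (G.shear_compact (ζ.pd (bv none)).cs).mul_left
  have e3 : ∫ z : E N × ℝ, sg z.2 * ∑ i, V i z.1 * ζ.pd (bv i) (G.shear z)
        ∂((volume : Measure (E N)).prod (volume : Measure ℝ))
      = ∫ z : E N × ℝ, sg z.2 * (c z.1 * ζ.pd (bv none) (G.shear z))
        ∂((volume : Measure (E N)).prod (volume : Measure ℝ)) := by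
    rw [integral_prod_symm _ (integrable_sg_mul c1 s1),
      integral_prod_symm _ (integrable_sg_mul c2 s2)]
    refine integral_congr_ae (Eventually.of_forall fun t => ?_)
    change ∫ x, sg t * ∑ i, V i x * ζ.pd (bv i) (G.shear (x, t))
      = ∫ x, sg t * (c x * ζ.pd (bv none) (G.shear (x, t)))
    rw [integral_const_mul, integral_const_mul, G.calibration_slice ζ V hV t]
  have e4 : ∫ z : E N × ℝ, sg z.2 * (c z.1 * ζ.pd (bv none) (G.shear z))
        ∂((volume : Measure (E N)).prod (volume : Measure ℝ))
      = ∫ x, c x * (-2 * ζ (G.pos x)) := by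
    rw [integral_prod _ (integrable_sg_mul c2 s2)]
    refine integral_congr_ae (Eventually.of_forall fun x => ?_)
    have k1 : ∀ t : ℝ, sg t * (c x * ζ.pd (bv none) (G.shear (x, t)))
        = c x * (sg t * ζ.pd (bv none) (G.shear (x, t))) := fun t => by ring
    simp only [k1]
    rw [integral_const_mul, calibration_fiber]
  rw [e1, e3, e4, I, integral_μ, ← integral_neg, ← integral_const_mul]
  refine integral_congr_ae (Eventually.of_forall fun x => ?_)
  simp only [hc, SF.mul_apply, tr_apply]
  ring

end MinGraph

/-! ### Radial test functions and the calibration constant -/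

/-- A smooth nonnegative profile vanishing on `[2, ∞)`. -/
structure Prof where
  f : ℝ → ℝ
  smooth : ContDiff ℝ ∞ f
  zero : ∀ t, 2 ≤ t → f t = 0
  nonneg : ∀ t, 0 ≤ f t

namespace Prof

instance : CoeFun Prof fun _ => ℝ → ℝ := ⟨Prof.f⟩

variable (P : Prof)

lemma continuous : Continuous P := P.smooth.continuous

lemma tail_aux (t : ℝ) : HasDerivAt (fun t => ∫ s in t..2, P s) (-P t) t :=
  intervalIntegral.integral_hasDerivAt_left (P.continuous.intervalIntegrable _ _)
    P.continuous.aestronglyMeasurable.stronglyMeasurableAtFilter P.continuous.continuousAt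

/-- The profile `t ↦ ∫ₜ² P`. -/
noncomputable def tail : Prof where
  f t := ∫ s in t..2, P s
  smooth := by
    rw [contDiff_infty_iff_deriv]
    refine ⟨fun t => (P.tail_aux t).differentiableAt, ?_⟩
    have : deriv (fun t => ∫ s in t..2, P s) = fun t => -P t :=
      funext fun t => (P.tail_aux t).deriv
    rw [this]; exact P.smooth.neg
  zero t ht := by
    rw [intervalIntegral.integral_symm, neg_eq_zero]
    refine (intervalIntegral.integral_congr (g := fun _ => 0) fun s hs => ?_).trans (by simp)
    rw [Set.uIcc_of_le ht] at hs
    exact P.zero s hs.1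
  nonneg t := by
    rcases le_total t 2 with h | h
    · exact intervalIntegral.integral_nonneg h fun s _ => P.nonneg s
    · rw [intervalIntegral.integral_symm]
      have : ∫ s in (2:ℝ)..t, P s = 0 :=
        (intervalIntegral.integral_congr (g := fun _ => 0) fun s hs => by
          rw [Set.uIcc_of_le h] at hs
          exact P.zero s hs.1).trans (by simp)
      rw [this]; simp

lemma tail_apply (t : ℝ) : P.tail t = ∫ s in t..2, P s := rfl

lemma tail_hasDerivAt (t : ℝ) : HasDerivAt P.tail (-P t) t := P.tail_aux t

lemma tail_antitone : Antitone P.tail := by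
  refine antitone_of_hasDerivAt_nonpos (f' := fun t => -P t) (fun t => P.tail_hasDerivAt t) ?_
  intro t; simpa using P.nonneg t

lemma tail_ge {c a b : ℝ} (hab : a ≤ b) (hb : b ≤ 2) (h : ∀ t, t ≤ b → c ≤ P t) :
    c * (b - a) ≤ P.tail a := by
  rw [tail_apply, ← intervalIntegral.integral_add_adjacent_intervals
    (P.continuous.intervalIntegrable a b) (P.continuous.intervalIntegrable b 2)]
  have h1 : ∫ s in a..b, c ≤ ∫ s in a..b, P s :=
    intervalIntegral.integral_mono_on hab (by simp) (P.continuous.intervalIntegrable _ _)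
      fun s hs => h s hs.2
  have h2 : 0 ≤ ∫ s in b..2, P s := intervalIntegral.integral_nonneg hb fun s _ => P.nonneg s
  rw [intervalIntegral.integral_const, smul_eq_mul] at h1
  linarith

/-- The cutoff profile. -/
noncomputable def cut : Prof := ⟨cutFun, cutFun_contDiff, fun _ h => cutFun_zero h, cutFun_nonneg⟩

/-- The first tail of the cutoff profile. -/
noncomputable def phi : Prof := cut.tail

/-- The second tail of the cutoff profile. -/
noncomputable def psi : Prof := phi.tail

@[simp] lemma cut_apply (t : ℝ) : cut t = cutFun t := rfl

lemma phi_hasDerivAt (t : ℝ) : HasDerivAt phi (-cutFun t) t := cut.tail_hasDerivAt t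
lemma psi_hasDerivAt (t : ℝ) : HasDerivAt psi (-phi t) t := phi.tail_hasDerivAt t

lemma phi_ge {t : ℝ} (h : t ≤ 1 / 2) : 1 / 2 ≤ phi t := by
  have := cut.tail_ge (c := 1) (a := t) (b := 1) (by linarith) (by norm_num)
    fun t ht => (cutFun_one ht).ge
  have h2 : phi t = cut.tail t := rfl
  rw [h2]; linarith

lemma psi_ge {t : ℝ} (h : t ≤ 1 / 4) : 1 / 8 ≤ psi t := by
  have := phi.tail_ge (c := 1 / 2) (a := t) (b := 1 / 2) (by linarith) (by norm_num)
    fun t ht => phi_ge ht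
  have h2 : psi t = phi.tail t := rfl
  rw [h2]; linarith

lemma cut_le_phi (t : ℝ) : cutFun t ≤ 2 * phi (t / 4) := by
  rcases le_total 2 t with h | h
  · rw [cutFun_zero h]; have := phi.nonneg (t / 4); linarith
  · have := phi_ge (t := t / 4) (by linarith)
    have := cutFun_le_one t; linarith

lemma phi_le {t : ℝ} (h : 0 ≤ t) : phi t ≤ 2 := by
  refine (cut.tail_antitone h).trans ?_
  rw [tail_apply]
  have : ∫ s in (0:ℝ)..2, cut s ≤ ∫ s in (0:ℝ)..2, (1:ℝ) :=
    intervalIntegral.integral_mono_on (by norm_num) (cut.continuous.intervalIntegrable _ _)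
      (by simp) fun s _ => cutFun_le_one s
  simpa using this

lemma psi_le {t : ℝ} (h : 0 ≤ t) : psi t ≤ 4 := by
  refine (phi.tail_antitone h).trans ?_
  rw [tail_apply]
  have : ∫ s in (0:ℝ)..2, phi s ≤ ∫ s in (0:ℝ)..2, (2:ℝ) :=
    intervalIntegral.integral_mono_on (by norm_num) (phi.continuous.intervalIntegrable _ _)
      (by simp) fun s hs => phi_le hs.1
  simp at this; linarith

lemma psi_antitone : Antitone psi := phi.tail_antitone

end Prof

section Scale

variable {N : ℕ}

lemma finrank_W : Module.finrank ℝ (W N) = N + 1 := by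
  rw [finrank_euclideanSpace]; simp

lemma integral_scale (F : W N → ℝ) (p : W N) {κ : ℝ} (hκ : 0 < κ) :
    ∫ y, F (κ⁻¹ • (y - p)) = κ ^ (N + 1) * ∫ y, F y := by
  rw [integral_sub_right_eq_self (fun y => F (κ⁻¹ • y)), Measure.integral_comp_inv_smul,
    finrank_W, smul_eq_mul, abs_of_pos (by positivity)]

/-- The calibration constant. -/
noncomputable def cc (N : ℕ) : ℝ := ∫ y : W N, |y none| * cutFun (‖y‖ ^ 2)

lemma cutFun_norm_cs : HasCompactSupport fun y : W N => cutFun (‖y‖ ^ 2) := by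
  refine HasCompactSupport.of_support_subset_isCompact (isCompact_closedBall (0 : W N) 2)
    fun y hy => ?_
  rw [mem_closedBall_zero_iff]
  by_contra h
  exact hy (cutFun_zero (by nlinarith [not_le.1 h]))

lemma cutFun_norm_continuous : Continuous fun y : W N => cutFun (‖y‖ ^ 2) :=
  cutFun_contDiff.continuous.comp (by fun_prop)

lemma cc_pos : 0 < cc N := by
  have hc : Continuous fun y : W N => |y none| * cutFun (‖y‖ ^ 2) := by
    have := cutFun_norm_continuous (N := N); fun_prop
  refine hc.integral_pos_of_hasCompactSupport_nonneg_nonzero cutFun_norm_cs.mul_left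
    (fun y => mul_nonneg (abs_nonneg _) (cutFun_nonneg _)) (x := bv none) ?_
  rw [cutFun_one (by simp [bv])]; simp [bv]

lemma exists_basis {e : W N} (he : ‖e‖ = 1) :
    ∃ b : OrthonormalBasis (Idx N) ℝ (W N), b none = e := by
  have h1 : Orthonormal ℝ (({none} : Set (Idx N)).domRestrict fun _ => e) := by
    constructor
    · intro i; exact he
    · intro i j hij; exact absurd (Subsingleton.elim i j) hij
  obtain ⟨b, hb⟩ := h1.exists_orthonormalBasis_extension_of_card_eq (by simp)
  exact ⟨b, hb none rfl⟩

lemma cc_inner (e : W N) : ∫ y : W N, |⟪e, y⟫| * cutFun (‖y‖ ^ 2) = ‖e‖ * cc N := by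
  rcases eq_or_ne e 0 with rfl | h0
  · simp
  have hn : ‖e‖ ≠ 0 := norm_ne_zero_iff.2 h0
  obtain ⟨b, hb⟩ := exists_basis (e := ‖e‖⁻¹ • e) (by rw [norm_smul]; simp [hn])
  have h1 : ∀ y : W N, |⟪e, y⟫| * cutFun (‖y‖ ^ 2)
      = ‖e‖ * (|b.repr y none| * cutFun (‖b.repr y‖ ^ 2)) := by
    intro y
    rw [b.repr_apply_apply, hb, b.repr.norm_map, real_inner_smul_left, abs_mul, abs_inv, abs_norm]
    field_simp
  simp only [h1]
  rw [integral_const_mul, cc]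
  congr 1
  exact b.repr.measurePreserving.integral_comp b.repr.toHomeomorph.measurableEmbedding
    (fun z : W N => |z none| * cutFun (‖z‖ ^ 2))

/-- The constant in the area bound. -/
noncomputable def aC (N : ℕ) : ℝ := ∫ y : W N, ‖y‖ * cutFun (‖y‖ ^ 2)

lemma aC_nonneg : 0 ≤ aC N := integral_nonneg fun _ => mul_nonneg (norm_nonneg _) (cutFun_nonneg _)

end Scale

namespace TF

variable {N : ℕ}

/-- The radial function `P(|y - p|² / κ²)`. -/
noncomputable def rad (P : Prof) (p : W N) {κ : ℝ} (hκ : 0 < κ) : TF N where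
  f y := P (‖y - p‖ ^ 2 / κ ^ 2)
  smooth := P.smooth.comp (((contDiff_id.sub contDiff_const).norm_sq ℝ).div_const _)
  cs := by
    refine HasCompactSupport.of_support_subset_isCompact (isCompact_closedBall p (2 * κ))
      fun y hy => ?_
    rw [mem_closedBall_iff_norm]
    by_contra h
    refine hy (P.zero _ ?_)
    rw [le_div_iff₀ (by positivity)]
    nlinarith [not_le.1 h]

variable {κ : ℝ} (hκ : 0 < κ) (p : W N)

lemma rad_apply (P : Prof) (y : W N) : rad P p hκ y = P (‖y - p‖ ^ 2 / κ ^ 2) := rfl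

lemma pd_rad (P : Prof) {P' : ℝ} (b y : W N) (h : HasDerivAt P P' (‖y - p‖ ^ 2 / κ ^ 2)) :
    pd b (rad P p hκ) y = P' * (2 * ⟪b, y - p⟫ / κ ^ 2) := by
  have h1 : HasFDerivAt (fun y : W N => ‖y - p‖ ^ 2) (2 • innerSL ℝ (y - p)) y := by
    simpa using ((hasFDerivAt_id y).sub_const p).norm_sq
  have h2 : HasFDerivAt (fun y : W N => ‖y - p‖ ^ 2 / κ ^ 2) ((κ ^ 2)⁻¹ • (2 • innerSL ℝ (y - p))) y := by
    simpa [div_eq_inv_mul] using h1.const_mul ((κ ^ 2)⁻¹)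
  have h3 : HasFDerivAt (rad P p hκ) _ y := h.comp_hasFDerivAt y h2
  rw [pd_apply, h3.fderiv]
  simp only [_root_.smul_apply, innerSL_apply_apply, smul_eq_mul, nsmul_eq_mul,
    Nat.cast_ofNat]
  rw [real_inner_comm]
  ring

lemma pd_rad_phi (b y : W N) :
    pd b (rad Prof.phi p hκ) y = -(2 * ⟪b, y - p⟫ / κ ^ 2 * cutFun (‖y - p‖ ^ 2 / κ ^ 2)) := by
  rw [pd_rad hκ p _ b y (Prof.phi_hasDerivAt _)]; ring

lemma norm_scale {κ : ℝ} (hκ : 0 < κ) (p y : W N) : ‖y - p‖ ^ 2 / κ ^ 2 = ‖κ⁻¹ • (y - p)‖ ^ 2 := by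
  rw [norm_smul, norm_inv, Real.norm_of_nonneg hκ.le]; field_simp

/-- The total variation of the radial test function in direction `e`. -/
lemma integral_pd_rad (e : W N) :
    ∫ y, |pd e (rad Prof.phi p hκ) y| = 2 * (κ ^ N * (‖e‖ * cc N)) := by
  have h : ∀ y, |pd e (rad Prof.phi p hκ) y|
      = (fun z : W N => 2 * κ⁻¹ * (|⟪e, z⟫| * cutFun (‖z‖ ^ 2))) (κ⁻¹ • (y - p)) := by
    intro y
    rw [pd_rad_phi, abs_neg, abs_mul, abs_of_nonneg (cutFun_nonneg _), norm_scale hκ p]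
    simp only [inner_smul_right, abs_mul, abs_div, abs_inv, abs_of_pos hκ, abs_pow, abs_two]
    field_simp
  simp only [h]
  rw [integral_scale (fun z : W N => 2 * κ⁻¹ * (|⟪e, z⟫| * cutFun (‖z‖ ^ 2))) p hκ,
    integral_const_mul, cc_inner, pow_succ]
  field_simp

lemma integral_fderiv_rad_le :
    ∫ y, ‖fderiv ℝ (rad Prof.phi p hκ) y‖ ≤ 2 * (κ ^ N * aC N) := by
  have h : ∀ y, ‖fderiv ℝ (rad Prof.phi p hκ) y‖
      ≤ (fun z : W N => 2 * κ⁻¹ * (‖z‖ * cutFun (‖z‖ ^ 2))) (κ⁻¹ • (y - p)) := by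
    intro y
    have hc := cutFun_nonneg (‖κ⁻¹ • (y - p)‖ ^ 2)
    have hn : ‖κ⁻¹ • (y - p)‖ = κ⁻¹ * ‖y - p‖ := by
      rw [norm_smul, norm_inv, Real.norm_of_nonneg hκ.le]
    refine ContinuousLinearMap.opNorm_le_bound _ (by positivity) fun b => ?_
    rw [← pd_apply, pd_rad_phi, norm_neg, norm_mul, Real.norm_of_nonneg (cutFun_nonneg _),
      norm_scale hκ p, norm_div, norm_mul, Real.norm_two, Real.norm_of_nonneg (sq_nonneg κ)]
    have := norm_inner_le_norm (𝕜 := ℝ) b (y - p)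
    calc _ ≤ 2 * (‖b‖ * ‖y - p‖) / κ ^ 2 * cutFun (‖κ⁻¹ • (y - p)‖ ^ 2) := by gcongr
      _ = 2 * κ⁻¹ * (κ⁻¹ * ‖y - p‖ * cutFun (‖κ⁻¹ • (y - p)‖ ^ 2)) * ‖b‖ := by field_simp
      _ = _ := by rw [← hn]
  have hi : Integrable fun y : W N => ‖fderiv ℝ (rad Prof.phi p hκ) y‖ :=
    (((rad Prof.phi p hκ).smooth.continuous_fderiv (by simp)).norm).integrable_of_hasCompactSupport
      ((rad Prof.phi p hκ).cs.fderiv (𝕜 := ℝ)).norm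
  have hj : Integrable fun z : W N => 2 * κ⁻¹ * (‖z‖ * cutFun (‖z‖ ^ 2)) := by
    have := cutFun_norm_continuous (N := N)
    exact Continuous.integrable_of_hasCompactSupport (by fun_prop)
      (cutFun_norm_cs.mul_left.mul_left)
  have hj' : Integrable fun y : W N =>
      (fun z : W N => 2 * κ⁻¹ * (‖z‖ * cutFun (‖z‖ ^ 2))) (κ⁻¹ • (y - p)) :=
    (hj.comp_smul (inv_ne_zero hκ.ne')).comp_sub_right p
  refine (integral_mono hi hj' h).trans (le_of_eq ?_)
  rw [integral_scale (fun z : W N => 2 * κ⁻¹ * (‖z‖ * cutFun (‖z‖ ^ 2))) p hκ,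
    integral_const_mul, ← aC, pow_succ]
  field_simp

end TF

/-! ### Area bounds and the monotonicity formula -/

namespace MinGraph

variable {N : ℕ} (G : MinGraph N)

lemma calib_le (ζ : TF N) (V : Idx N → SF N) (hV : ∑ i, D i (V i) = 0) {H : W N → ℝ}
    (hH : Integrable H) (h : ∀ y z, |∑ i, V i z * ζ.pd (bv i) y| ≤ H y) :
    2 * |G.I (G.tr ζ * ∑ i, V i * G.ν i)| ≤ ∫ y, H y := by
  have h1 := congrArg abs (G.calibration ζ V hV)
  rw [abs_mul, abs_two, abs_neg] at h1
  rw [h1]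
  refine (abs_integral_le_integral_abs).trans ?_
  by_cases hi : Integrable fun y : W N =>
      |sg (y none - G.u (pr y)) * ∑ i, V i (pr y) * ζ.pd (bv i) y|
  · refine integral_mono hi hH fun y => ?_
    rw [abs_mul, abs_sg, one_mul]
    exact h y _
  · rw [integral_undef hi]
    exact integral_nonneg fun y => (abs_nonneg _).trans (h y 0)

/-- The unit normal as a vector of the ambient space. -/
noncomputable def nu (x : E N) : W N := WithLp.toLp 2 fun i => G.ν i x

@[simp] lemma nu_apply (x : E N) (i : Idx N) : G.nu x i = G.ν i x := rfl

lemma norm_nu (x : E N) : ‖G.nu x‖ = 1 := by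
  have : ‖G.nu x‖ ^ 2 = 1 := by
    rw [EuclideanSpace.norm_sq_eq, ← G.unit_apply x]; simp
  have h0 := norm_nonneg (G.nu x)
  nlinarith

/-- The component of the unit normal in a fixed direction. -/
noncomputable def νe (e : W N) : SF N := ∑ i, SF.const N (e i) * G.ν i

lemma νe_apply (e : W N) (x : E N) : G.νe e x = ⟪e, G.nu x⟫ := by
  simp only [νe, SF.sum_apply, SF.mul_apply, SF.const_apply, PiLp.inner_apply, nu_apply]
  refine Finset.sum_congr rfl fun i _ => ?_
  simp [mul_comm]

lemma abs_νe_le (e : W N) (x : E N) : |G.νe e x| ≤ ‖e‖ := by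
  rw [νe_apply]
  simpa [G.norm_nu x] using abs_real_inner_le_norm e (G.nu x)

lemma area (ζ : TF N) : 2 * G.I (G.tr ζ) ≤ ∫ y, ‖fderiv ℝ ζ y‖ := by
  have hi : Integrable fun y : W N => ‖fderiv ℝ ζ y‖ :=
    ((ζ.smooth.continuous_fderiv (by simp)).norm).integrable_of_hasCompactSupport
      (ζ.cs.fderiv (𝕜 := ℝ)).norm
  have h := G.calib_le ζ G.ν G.div_ν hi fun y z => by
    have := (fderiv ℝ ζ y).le_opNorm (G.nu z)
    rwa [G.norm_nu, mul_one, ζ.fderiv_eq_sum] at this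
  rw [G.unit, mul_one] at h
  exact (mul_le_mul_of_nonneg_left (le_abs_self _) zero_le_two).trans h

lemma dir_calib (ζ : TF N) (e : W N) : 2 * |G.I (G.tr ζ * G.νe e)| ≤ ∫ y, |ζ.pd e y| := by
  refine G.calib_le ζ (fun i => SF.const N (e i)) ?_ (ζ.pd e).integrable.abs fun y z => ?_
  · refine Finset.sum_eq_zero fun i _ => ?_
    rcases i with _ | i
    · rfl
    · ext x
      change fderiv ℝ (fun _ : E N => e (some i)) x _ = 0
      simp
  · rw [TF.pd_apply, ζ.fderiv_eq_sum]; simp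

/-- The restriction to the graph of a radial function. -/
noncomputable def rd (P : Prof) (p : W N) (κ : ℝ) : SF N := ⟨fun x => P (G.r2 p x / κ ^ 2), by
  change ContDiff ℝ ∞ _
  exact P.smooth.comp (by fun_prop)⟩

lemma rd_apply (P : Prof) (p : W N) (κ : ℝ) (x : E N) : G.rd P p κ x = P (G.r2 p x / κ ^ 2) := rfl

lemma rd_nonneg (P : Prof) (p : W N) (κ : ℝ) (x : E N) : 0 ≤ G.rd P p κ x := P.nonneg _

lemma norm_pos_sub_sq (p : W N) (x : E N) : ‖G.pos x - p‖ ^ 2 = G.r2 p x := by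
  rw [EuclideanSpace.norm_sq_eq, r2_apply]
  simp [pos_apply]

lemma tr_rad (P : Prof) (p : W N) {κ : ℝ} (hκ : 0 < κ) : G.tr (TF.rad P p hκ) = G.rd P p κ := by
  ext x
  rw [tr_apply, TF.rad_apply, norm_pos_sub_sq, rd_apply]

lemma rd_CS (P : Prof) (p : W N) {κ : ℝ} (hκ : 0 < κ) : CS (G.rd P p κ) := by
  rw [← G.tr_rad P p hκ]; exact G.tr_CS _

lemma I_rd_le (p : W N) {κ : ℝ} (hκ : 0 < κ) : G.I (G.rd .phi p κ) ≤ κ ^ N * aC N := by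
  have := (G.area (TF.rad .phi p hκ)).trans (TF.integral_fderiv_rad_le hκ p)
  rw [tr_rad] at this; linarith

lemma I_rd_νe_le (p e : W N) {κ : ℝ} (hκ : 0 < κ) :
    |G.I (G.rd .phi p κ * G.νe e)| ≤ κ ^ N * (‖e‖ * cc N) := by
  have := G.dir_calib (TF.rad .phi p hκ) e
  rw [TF.integral_pd_rad hκ p e, tr_rad] at this; linarith

lemma rd_zero (P : Prof) (p : W N) {κ : ℝ} (hκ : 0 < κ) {x : E N} (h : 2 * κ ^ 2 ≤ G.r2 p x) :
    G.rd P p κ x = 0 := P.zero _ ((le_div_iff₀ (by positivity)).2 h)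

lemma cut_eq_rd (R : ℝ) : G.cut R = G.rd .cut 0 R := rfl

lemma rd_cut_le (p : W N) (κ : ℝ) (x : E N) :
    G.rd .cut p κ x ≤ 2 * G.rd .phi p (2 * κ) x := by
  rw [rd_apply, rd_apply]
  have := Prof.cut_le_phi (G.r2 p x / κ ^ 2)
  rw [div_div] at this
  rwa [mul_pow, show (2:ℝ) ^ 2 = 4 by norm_num, mul_comm 4]

lemma I_rd_cut_le (p : W N) {κ : ℝ} (hκ : 0 < κ) :
    G.I (G.rd .cut p κ) ≤ 2 * ((2 * κ) ^ N * aC N) := by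
  have h1 := G.I_rd_le p (κ := 2 * κ) (by positivity)
  have h2 := G.I_mono (G.rd_CS .cut p hκ) ((G.rd_CS .phi p (κ := 2 * κ) (by positivity)).smul 2)
    fun x => by simpa using G.rd_cut_le p κ x
  rw [I_smul] at h2
  linarith

lemma δ_rd (P : Prof) (p : W N) (κ : ℝ) (i : Idx N) (x : E N) {P' : ℝ}
    (h : HasDerivAt P P' (G.r2 p x / κ ^ 2)) :
    G.δ i (G.rd P p κ) x = P' / κ ^ 2 * G.δ i (G.r2 p) x := by
  have hg : HasDerivAt (fun t => P (t / κ ^ 2)) (P' / κ ^ 2) (G.r2 p x) :=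
    (h.comp (G.r2 p x) ((hasDerivAt_id _).div_const (κ ^ 2))).congr_deriv (by ring)
  have hy : ∀ y, G.rd P p κ y = (fun t => P (t / κ ^ 2)) (G.r2 p y) := fun y => rfl
  exact G.δ_chain i _ _ hy hg

lemma δ_rd_phi (p : W N) (κ : ℝ) (i : Idx N) :
    G.δ i (G.rd .phi p κ) = -((κ ^ 2)⁻¹ • (G.rd .cut p κ * G.δ i (G.r2 p))) := by
  ext x
  rw [G.δ_rd _ p κ i x (Prof.phi_hasDerivAt _)]
  simp only [SF.neg_apply, SF.smul_apply, SF.mul_apply, rd_apply, Prof.cut_apply]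
  ring

lemma δ_rd_psi (p : W N) (κ : ℝ) (i : Idx N) :
    G.δ i (G.rd .psi p κ) = -((κ ^ 2)⁻¹ • (G.rd .phi p κ * G.δ i (G.r2 p))) := by
  ext x
  rw [G.δ_rd _ p κ i x (Prof.psi_hasDerivAt _)]
  simp only [SF.neg_apply, SF.smul_apply, SF.mul_apply, rd_apply]
  ring

lemma Γ_rd_phi (p : W N) (κ : ℝ) (f : SF N) :
    G.Γ f (G.rd .phi p κ) = -((κ ^ 2)⁻¹ • (G.rd .cut p κ * G.Γ f (G.r2 p))) := by
  simp only [Γ_def, δ_rd_phi, Finset.mul_sum, Finset.smul_sum, ← Finset.sum_neg_distrib]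
  refine Finset.sum_congr rfl fun i _ => ?_
  ext x
  simp only [SF.mul_apply, SF.neg_apply, SF.smul_apply]; ring

lemma Γ_rd_psi (p : W N) (κ : ℝ) (f : SF N) :
    G.Γ f (G.rd .psi p κ) = -((κ ^ 2)⁻¹ • (G.rd .phi p κ * G.Γ f (G.r2 p))) := by
  simp only [Γ_def, δ_rd_psi, Finset.mul_sum, Finset.smul_sum, ← Finset.sum_neg_distrib]
  refine Finset.sum_congr rfl fun i _ => ?_
  ext x
  simp only [SF.mul_apply, SF.neg_apply, SF.smul_apply]; ring

/-- The integral identity behind the monotonicity formula. -/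
lemma mono_identity (f : SF N) (p : W N) {κ : ℝ} (hκ : 0 < κ) :
    N * G.I (f * G.rd .phi p κ) = 2 * (κ ^ 2)⁻¹ * G.I (f * G.r2 p * G.rd .cut p κ)
      - (2 * (κ ^ 2)⁻¹ * G.I (f * (G.s p * G.s p) * G.rd .cut p κ)
        + κ ^ 2 / 2 * G.I (G.lap f * G.rd .psi p κ)) := by
  have c1 : CS (G.rd .psi p κ) := G.rd_CS _ p hκ
  have c2 : CS (G.rd .phi p κ) := G.rd_CS _ p hκ
  have c3 : CS (G.rd .cut p κ) := G.rd_CS _ p hκ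
  have h1 := G.I_lap_mul f c1
  rw [Γ_rd_psi, I_neg, I_smul, neg_neg] at h1
  have h2 := G.I_lap_mul (G.r2 p) (c2.mul_l f)
  have e1 : G.lap (G.r2 p) * (f * G.rd .phi p κ) = (2 * (N : ℝ)) • (f * G.rd .phi p κ) := by
    rw [lap_r2]; ext x; simp
  have e2 : G.Γ (G.r2 p) (f * G.rd .phi p κ)
      = G.rd .phi p κ * G.Γ f (G.r2 p) + (-(4 * (κ ^ 2)⁻¹)) • (f * G.r2 p * G.rd .cut p κ)
        + (4 * (κ ^ 2)⁻¹) • (f * (G.s p * G.s p) * G.rd .cut p κ) := by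
    rw [Γ_mul_right, Γ_rd_phi, Γ_r2, G.Γ_comm (G.r2 p) f]
    ext x
    simp only [SF.add_apply, SF.mul_apply, SF.neg_apply, SF.smul_apply, SF.sub_apply,
      SF.four_apply]
    ring
  rw [e1, e2, I_smul, G.I_add, G.I_add, I_smul, I_smul] at h2
  · have hk : κ ^ 2 * (κ ^ 2)⁻¹ = 1 := mul_inv_cancel₀ (by positivity)
    linear_combination h2 / 2 + (κ ^ 2 / 2) * h1
      + G.I (G.rd .phi p κ * G.Γ f (G.r2 p)) / 2 * hk
  · exact c2.mul_r _
  · exact (c3.mul_l _).smul _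
  · exact (c2.mul_r _).add ((c3.mul_l _).smul _)
  · exact (c3.mul_l _).smul _

lemma hasDerivAt_I_rd (f : SF N) (p : W N) {κ : ℝ} (hκ : 0 < κ) :
    HasDerivAt (fun κ => G.I (f * G.rd .phi p κ))
      (2 * (κ ^ 3)⁻¹ * G.I (f * G.r2 p * G.rd .cut p κ)) κ := by
  have hb : CS (f * G.r2 p * G.rd .cut p (4 * κ)) := (G.rd_CS _ p (by positivity)).mul_l _
  have key := hasDerivAt_integral_of_dominated_loc_of_deriv_le (μ := G.μ) (x₀ := κ)
    (s := Metric.ball κ (κ / 2)) (F := fun κ x => (f * G.rd .phi p κ) x)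
    (F' := fun κ x => 2 * (κ ^ 3)⁻¹ * (f * G.r2 p * G.rd .cut p κ) x)
    (bound := fun x => 16 * (κ ^ 3)⁻¹ * |(f * G.r2 p * G.rd .cut p (4 * κ)) x|)
    (Metric.ball_mem_nhds κ (by positivity))
    (Eventually.of_forall fun k => (SF.continuous _).aestronglyMeasurable)
    (((G.rd_CS .phi p hκ).mul_l f).integrable G)
    ((SF.continuous (f * G.r2 p * G.rd .cut p κ)).const_mul _ |>.aestronglyMeasurable)
    ?_ ((hb.integrable G).abs.const_mul _) ?_
  · refine key.2.congr_deriv ?_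
    exact integral_const_mul _ _
  · refine Eventually.of_forall fun x k hk => ?_
    rw [Metric.mem_ball, Real.dist_eq, abs_lt] at hk
    have hk0 : 0 < k := by linarith
    have hr := G.r2_nonneg p x
    by_cases hc : 2 * k ^ 2 ≤ G.r2 p x
    · have := G.rd_zero .cut p hk0 hc
      simp only [SF.mul_apply, this, mul_zero, norm_zero]
      positivity
    · push Not at hc
      have h1 : G.rd .cut p (4 * κ) x = 1 := by
        refine cutFun_one ((div_le_one (by positivity)).2 ?_)
        nlinarith
      have h2 : |G.rd .cut p k x| ≤ 1 := by
        rw [abs_of_nonneg (G.rd_nonneg _ _ _ _)]; exact cutFun_le_one _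
      have h3 : (κ / 2) ^ 3 ≤ k ^ 3 := pow_le_pow_left₀ (by positivity) (by linarith) 3
      have h4 : (k ^ 3)⁻¹ ≤ 8 * (κ ^ 3)⁻¹ := by
        refine (inv_anti₀ (by positivity) h3).trans (le_of_eq ?_)
        rw [div_pow, inv_div]; norm_num; ring
      simp only [SF.mul_apply, h1, mul_one, Real.norm_eq_abs, abs_mul]
      rw [abs_of_nonneg (by positivity : (0:ℝ) ≤ (k ^ 3)⁻¹), abs_two]
      calc _ ≤ 2 * (8 * (κ ^ 3)⁻¹) * (|f x| * |G.r2 p x| * 1) := by gcongr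
        _ = _ := by ring
  · refine Eventually.of_forall fun x k hk => ?_
    rw [Metric.mem_ball, Real.dist_eq, abs_lt] at hk
    have hk0 : 0 < k := by linarith
    have h1 : HasDerivAt (fun k : ℝ => G.r2 p x / k ^ 2) (-(2 * G.r2 p x * (k ^ 3)⁻¹)) k := by
      have := ((hasDerivAt_pow 2 k).inv (by positivity)).const_mul (G.r2 p x)
      refine this.congr_deriv ?_
      field_simp; norm_num; ring
    have h2 := ((Prof.phi_hasDerivAt (G.r2 p x / k ^ 2)).comp k h1).const_mul (f x)
    refine h2.congr_deriv ?_
    simp only [SF.mul_apply, rd_apply, Prof.cut_apply]; ring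

/-- The normalised integral of `f` near `p` at scale `κ`. -/
noncomputable def J (f : SF N) (p : W N) (κ : ℝ) : ℝ := (κ ^ N)⁻¹ * G.I (f * G.rd .phi p κ)

/-- The derivative of `J` in the monotonicity formula. -/
noncomputable def J' (f : SF N) (p : W N) (κ : ℝ) : ℝ :=
  (κ ^ (N + 1))⁻¹ * (2 * (κ ^ 2)⁻¹ * G.I (f * (G.s p * G.s p) * G.rd .cut p κ)
        + κ ^ 2 / 2 * G.I (G.lap f * G.rd .psi p κ))

/-- The monotonicity formula. -/
lemma hasDerivAt_J (f : SF N) (p : W N) {κ : ℝ} (hκ : 0 < κ) :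
    HasDerivAt (G.J f p) (G.J' f p κ) κ := by
  have h1 := ((hasDerivAt_pow N κ).inv (by positivity)).mul (G.hasDerivAt_I_rd f p hκ)
  refine h1.congr_deriv ?_
  have h2 := G.mono_identity f p hκ
  have h3 : (N : ℝ) * κ ^ (N - 1) * κ = N * κ ^ N := by
    rcases N with _ | n
    · simp
    · simp [pow_succ]; ring
  have h4 : -((N : ℝ) * κ ^ (N - 1)) / (κ ^ N) ^ 2 = -((κ ^ (N + 1))⁻¹ * N) := by
    rw [eq_comm, ← div_eq_inv_mul, ← neg_div, div_eq_div_iff (by positivity) (by positivity)]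
    linear_combination κ ^ N * h3
  have h6 : (fun x : ℝ => x ^ N)⁻¹ κ = (κ ^ N)⁻¹ := rfl
  rw [h4, h6, J']
  have h5 : (κ ^ N)⁻¹ * (κ ^ 3)⁻¹ = (κ ^ (N + 1))⁻¹ * (κ ^ 2)⁻¹ := by
    rw [← mul_inv, ← mul_inv, ← pow_add, ← pow_add]
  linear_combination -(κ ^ (N + 1))⁻¹ * h2 + 2 * G.I (f * G.r2 p * G.rd .cut p κ) * h5

lemma J_le_of_nonneg {f h : SF N} (hle : ∀ x, f x ≤ h x) (p : W N) {κ : ℝ} (hκ : 0 < κ) :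
    G.J f p κ ≤ G.J h p κ := by
  unfold J
  refine mul_le_mul_of_nonneg_left ?_ (by positivity)
  refine G.I_mono ((G.rd_CS _ p hκ).mul_l _) ((G.rd_CS _ p hκ).mul_l _) fun x => ?_
  exact mul_le_mul_of_nonneg_right (hle x) (G.rd_nonneg _ _ _ _)

lemma J_one_le (p : W N) {κ : ℝ} (hκ : 0 < κ) : G.J 1 p κ ≤ aC N := by
  unfold J
  rw [one_mul, inv_mul_le_iff₀ (by positivity)]
  exact G.I_rd_le p hκ

lemma abs_J_νe_le (p e : W N) {κ : ℝ} (hκ : 0 < κ) : |G.J (G.νe e) p κ| ≤ ‖e‖ * cc N := by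
  unfold J
  rw [abs_mul, abs_of_nonneg (by positivity : (0:ℝ) ≤ (κ ^ N)⁻¹), inv_mul_le_iff₀ (by positivity),
    mul_comm (G.νe e)]
  exact G.I_rd_νe_le p e hκ

end MinGraph

/-! ### Density at a point of the graph -/

lemma sg_mul_self (t : ℝ) : sg t * t = |t| := by
  unfold sg
  split_ifs with h
  · rw [one_mul, abs_of_pos h]
  · rw [abs_of_nonpos (not_lt.1 h)]; ring

lemma sg_scale {k : ℝ} (hk : 0 < k) (t : ℝ) : sg (k * t) = sg t := by
  unfold sg; simp [mul_pos_iff_of_pos_left hk]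

lemma sg_tendsto {ι : Type*} {l : Filter ι} {h : ι → ℝ} {L : ℝ} (hl : Tendsto h l (𝓝 L))
    (hL : L ≠ 0) : Tendsto (fun i => sg (h i)) l (𝓝 (sg L)) := by
  refine Tendsto.congr' ?_ tendsto_const_nhds
  rcases lt_or_gt_of_ne hL with hL | hL
  · filter_upwards [hl.eventually (gt_mem_nhds hL)] with i hi
    simp [sg, not_lt.2 hL.le, not_lt.2 hi.le]
  · filter_upwards [hl.eventually (lt_mem_nhds hL)] with i hi
    simp [sg, hL, hi]

namespace MinGraph

variable {N : ℕ} (G : MinGraph N)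

/-- The height of a point near `pos x₀` above the graph, in units of the scale `κ`. -/
noncomputable def relHeight (x₀ : E N) (κ : ℝ) (z : W N) : ℝ :=
  z none - κ⁻¹ * (G.u (x₀ + κ • pr z) - G.u x₀)

/-- The calibration identity for a constant direction `e`, rescaled around a point of the graph. -/
lemma J_νe_eq (x₀ : E N) (e : W N) {κ : ℝ} (hκ : 0 < κ) :
    G.J (G.νe e) (G.pos x₀) κ
      = ∫ z : W N, sg (G.relHeight x₀ κ z) * (⟪e, z⟫ * cutFun (‖z‖ ^ 2)) := by
  set p := G.pos x₀ with hp
  have h1 := G.calibration (TF.rad .phi p hκ) (fun i => SF.const N (e i)) (by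
    refine Finset.sum_eq_zero fun i _ => ?_
    rcases i with _ | i
    · rfl
    · ext x
      change fderiv ℝ (fun _ : E N => e (some i)) x _ = 0
      simp)
  have h2 : ∀ y : W N, sg (y none - G.u (pr y)) *
      ∑ i, SF.const N (e i) (pr y) * (TF.rad .phi p hκ).pd (bv i) y
      = -(fun z : W N => 2 * κ⁻¹ * (sg (G.relHeight x₀ κ z) * (⟪e, z⟫ * cutFun (‖z‖ ^ 2))))
          (κ⁻¹ • (y - p)) := by
    intro y
    have k1 : ∑ i, SF.const N (e i) (pr y) * (TF.rad .phi p hκ).pd (bv i) y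
        = (TF.rad .phi p hκ).pd e y := by
      rw [TF.pd_apply, TF.fderiv_eq_sum]; simp
    have k2 : sg (G.relHeight x₀ κ (κ⁻¹ • (y - p))) = sg (y none - G.u (pr y)) := by
      rw [← sg_scale hκ]
      congr 1
      have : x₀ + κ • pr (κ⁻¹ • (y - p)) = pr y := by
        rw [map_smul, smul_smul, mul_inv_cancel₀ hκ.ne', one_smul, map_sub, hp, pos, pr_pt]
        simp
      rw [relHeight, this, hp]
      simp [pos]
      field_simp
      ring
    rw [k1, TF.pd_rad_phi, TF.norm_scale hκ p]
    beta_reduce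
    rw [k2, inner_smul_right]
    field_simp
  simp only [h2] at h1
  rw [integral_neg, neg_neg, integral_scale
    (fun z : W N => 2 * κ⁻¹ * (sg (G.relHeight x₀ κ z) * (⟪e, z⟫ * cutFun (‖z‖ ^ 2)))) p hκ,
    integral_const_mul, tr_rad, pow_succ] at h1
  have h3 : κ * κ⁻¹ = 1 := mul_inv_cancel₀ hκ.ne'
  have h4 : (κ ^ N)⁻¹ * κ ^ N = 1 := inv_mul_cancel₀ (by positivity)
  have h5 : G.νe e * G.rd .phi p κ = G.rd .phi p κ * ∑ i, SF.const N (e i) * G.ν i := mul_comm _ _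
  rw [J, h5]
  set Z := ∫ z : W N, sg (G.relHeight x₀ κ z) * (⟪e, z⟫ * cutFun (‖z‖ ^ 2))
  linear_combination (κ ^ N)⁻¹ / 2 * h1 + (κ ^ N)⁻¹ * κ ^ N * Z * h3 + Z * h4

/-- Blown up at one of its points, the graph converges to its tangent plane. -/
lemma relHeight_tendsto (x₀ : E N) (z : W N) :
    Tendsto (fun κ => G.relHeight x₀ κ z) (𝓝[>] 0) (𝓝 (G.v x₀ * ⟪G.nu x₀, z⟫)) := by
  have h1 : HasDerivAt (fun κ : ℝ => G.u (x₀ + κ • pr z)) (fderiv ℝ G.u x₀ (pr z)) 0 := by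
    have hd : HasDerivAt (fun κ : ℝ => x₀ + κ • pr z) (pr z) 0 := by
      simpa using ((hasDerivAt_id (0:ℝ)).smul_const (pr z)).const_add x₀
    have h := (SF.differentiable G.u (x₀ + (0:ℝ) • pr z)).hasFDerivAt.comp_hasDerivAt 0 hd
    have h' : HasDerivAt (fun κ : ℝ => G.u (x₀ + κ • pr z)) _ 0 := h
    rwa [zero_smul, add_zero] at h'
  have h2 := (hasDerivAt_iff_tendsto_slope_zero.1 h1).mono_left
    (nhdsWithin_mono (0:ℝ) fun x (hx : x ∈ Set.Ioi (0:ℝ)) => (ne_of_gt hx : x ≠ 0))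
  have h3 : G.v x₀ * ⟪G.nu x₀, z⟫ = z none - fderiv ℝ G.u x₀ (pr z) := by
    have k1 : fderiv ℝ G.u x₀ (pr z) = ∑ i, z (some i) * G.du i x₀ := by
      have : pr z = ∑ i, z (some i) • (EuclideanSpace.single i 1 : E N) := by
        ext j
        simp [Finset.sum_apply, Pi.single_apply]
      conv_lhs => rw [this]
      rw [map_sum]
      refine Finset.sum_congr rfl fun i _ => ?_
      rw [map_smul]; rfl
    have hv := (G.v_pos x₀).ne'
    rw [k1, PiLp.inner_apply, Fintype.sum_option, mul_add, Finset.mul_sum, sub_eq_add_neg,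
      ← Finset.sum_neg_distrib]
    congr 1
    · simp [ν_none]; field_simp
    · refine Finset.sum_congr rfl fun i _ => ?_
      simp [ν_some]
      field_simp
  rw [h3]
  refine Tendsto.congr (fun κ => ?_) (h2.const_sub (z none))
  simp [relHeight]

/-- The density of the graph at each of its points is that of a plane. -/
lemma J_νe_tendsto (x₀ : E N) :
    Tendsto (fun κ => G.J (G.νe (G.nu x₀)) (G.pos x₀) κ) (𝓝[>] 0) (𝓝 (cc N)) := by
  set e := G.nu x₀
  have h1 : cc N = ∫ z : W N, sg (G.v x₀ * ⟪e, z⟫) * (⟪e, z⟫ * cutFun (‖z‖ ^ 2)) := by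
    have : cc N = ∫ z : W N, |⟪e, z⟫| * cutFun (‖z‖ ^ 2) := by
      rw [cc_inner, G.norm_nu, one_mul]
    rw [this]
    refine integral_congr_ae (Eventually.of_forall fun z => ?_)
    beta_reduce
    rw [sg_scale (G.v_pos x₀), ← mul_assoc, sg_mul_self]
  rw [h1]
  have hc := cutFun_norm_continuous (N := N)
  have hu := SF.continuous G.u
  have key : Tendsto (fun κ => ∫ z : W N, sg (G.relHeight x₀ κ z) * (⟪e, z⟫ * cutFun (‖z‖ ^ 2)))
      (𝓝[>] 0) (𝓝 (∫ z : W N, sg (G.v x₀ * ⟪e, z⟫) * (⟪e, z⟫ * cutFun (‖z‖ ^ 2)))) := by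
    have hi : Integrable fun z : W N => ⟪e, z⟫ * cutFun (‖z‖ ^ 2) :=
      Continuous.integrable_of_hasCompactSupport (by fun_prop) cutFun_norm_cs.mul_left
    refine tendsto_integral_filter_of_dominated_convergence
      (fun z => |⟪e, z⟫ * cutFun (‖z‖ ^ 2)|) (Eventually.of_forall fun κ => ?_)
      (Eventually.of_forall fun κ => Eventually.of_forall fun z => ?_) hi.abs
      (Eventually.of_forall fun z => ?_)
    · have : Continuous (G.relHeight x₀ κ) := by
        unfold relHeight
        have : Continuous fun y : W N => y none := by fun_prop
        fun_prop
      exact ((sg_measurable.comp this.measurable).aestronglyMeasurable).mul hi.1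
    · rw [norm_mul, Real.norm_eq_abs, abs_sg, one_mul, Real.norm_eq_abs]
    · by_cases h0 : ⟪e, z⟫ = 0
      · simp [h0]
      · refine (sg_tendsto (G.relHeight_tendsto x₀ z) ?_).mul_const _
        exact mul_ne_zero (G.v_pos x₀).ne' h0
  refine key.congr' ?_
  filter_upwards [self_mem_nhdsWithin] with κ hκ
  exact (G.J_νe_eq x₀ e hκ).symm

lemma dist_sq_le_r2 (x₀ x : E N) : ‖x - x₀‖ ^ 2 ≤ G.r2 (G.pos x₀) x := by
  rw [r2_apply, Fintype.sum_option, EuclideanSpace.norm_sq_eq]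
  simp [pos_apply]; positivity

/-- The lower density bound at a point of the graph. -/
lemma J_density {f : SF N} (hf : ∀ x, 0 ≤ f x) (x₀ : E N) {ε : ℝ} (hε : 0 < ε) :
    ∀ᶠ κ in 𝓝[>] (0:ℝ), cc N * f x₀ - ε ≤ G.J f (G.pos x₀) κ := by
  have hcc := cc_pos (N := N)
  set m := f x₀ - ε / (2 * cc N) with hm
  have hcm : cc N * m = cc N * f x₀ - ε / 2 := by rw [hm]; field_simp
  rcases le_or_gt m 0 with h0 | h0
  · filter_upwards [self_mem_nhdsWithin] with κ hκ
    have hκ' : (0:ℝ) < κ := hκ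
    have h1 : 0 ≤ G.J f (G.pos x₀) κ := by
      unfold J
      exact mul_nonneg (by positivity)
        (G.I_nonneg fun x => mul_nonneg (hf x) (G.rd_nonneg _ _ _ _))
    nlinarith
  · have hlt : m < f x₀ := by rw [hm]; have : 0 < ε / (2 * cc N) := by positivity
                              linarith
    obtain ⟨r, hr, hball⟩ := Metric.eventually_nhds_iff.1
      ((SF.continuous f).continuousAt.eventually (lt_mem_nhds hlt))
    have e1 : ∀ᶠ κ in 𝓝[>] (0:ℝ), κ < r / 2 :=
      mem_nhdsWithin_of_mem_nhds (Iio_mem_nhds (by positivity))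
    have e2 : ∀ᶠ κ in 𝓝[>] (0:ℝ), cc N - ε / (2 * m) < G.J (G.νe (G.nu x₀)) (G.pos x₀) κ :=
      (G.J_νe_tendsto x₀).eventually (lt_mem_nhds (by
        have : 0 < ε / (2 * m) := by positivity
        linarith))
    filter_upwards [self_mem_nhdsWithin, e1, e2] with κ hκ h1 h2
    have hκ' : (0:ℝ) < κ := hκ
    have h3 : m * G.J (G.νe (G.nu x₀)) (G.pos x₀) κ ≤ G.J f (G.pos x₀) κ := by
      have k1 : CS (G.νe (G.nu x₀) * G.rd .phi (G.pos x₀) κ) := (G.rd_CS _ _ hκ').mul_l _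
      have k2 : CS (f * G.rd .phi (G.pos x₀) κ) := (G.rd_CS _ _ hκ').mul_l _
      have := G.I_mono (k1.smul m) k2 fun x => by
        simp only [SF.smul_apply, SF.mul_apply]
        by_cases hx : 2 * κ ^ 2 ≤ G.r2 (G.pos x₀) x
        · rw [G.rd_zero _ _ hκ' hx]; simp
        · push Not at hx
          have hd : dist x x₀ < r := by
            rw [dist_eq_norm]
            refine lt_of_pow_lt_pow_left₀ 2 hr.le ?_
            have := G.dist_sq_le_r2 x₀ x
            nlinarith
          have hfx := hball hd
          have hν := (abs_le.1 (G.abs_νe_le (G.nu x₀) x)).2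
          rw [G.norm_nu] at hν
          rw [← mul_assoc]
          refine mul_le_mul_of_nonneg_right ?_ (G.rd_nonneg _ _ _ _)
          nlinarith
      rw [I_smul] at this
      unfold J
      calc _ = (κ ^ N)⁻¹ * (m * G.I (G.νe (G.nu x₀) * G.rd .phi (G.pos x₀) κ)) := by ring
        _ ≤ _ := mul_le_mul_of_nonneg_left this (by positivity)
    have h4 : m * (ε / (2 * m)) = ε / 2 := by field_simp
    nlinarith

end MinGraph

/-! ### Sequences of minimal graphs: bounded and negligible quantities -/

namespace MinGraph

variable {N : ℕ}

section Single

variable (G : MinGraph N)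

lemma cut_le_sq {R : ℝ} (hR : 0 < R) (x : E N) :
    G.cut R x ≤ G.cut (2 * R) x * G.cut (2 * R) x := by
  by_cases h : 2 * R ^ 2 ≤ G.r2 0 x
  · rw [G.cut_zero hR h]; exact mul_self_nonneg _
  · rw [G.cut_one (R := 2 * R) (by positivity) (by nlinarith [sq_nonneg R]), mul_one]
    exact G.cut_le_one R x

lemma cut_sq_le (R : ℝ) (x : E N) : G.cut R x * G.cut R x ≤ G.cut R x := by
  nlinarith [G.cut_nonneg R x, G.cut_le_one R x]

/-- Young's inequality for the carré du champ. -/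
lemma Γ_young (f h : SF N) (a : ℝ) (x : E N) :
    2 * a * G.Γ f h x ≤ a ^ 2 * G.Γ f f x + G.Γ h h x := by
  simp only [Γ_apply, Finset.mul_sum, ← Finset.sum_add_distrib]
  refine Finset.sum_le_sum fun i _ => ?_
  nlinarith [sq_nonneg (a * G.δ i f x - G.δ i h x)]

lemma Γ_mul_self_le (f h : SF N) (x : E N) :
    G.Γ (f * h) (f * h) x ≤ 2 * (f x ^ 2 * G.Γ h h x) + 2 * (h x ^ 2 * G.Γ f f x) := by
  simp only [Γ_apply, Finset.mul_sum, ← Finset.sum_add_distrib]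
  refine Finset.sum_le_sum fun i _ => ?_
  rw [Derivation.leibniz]
  simp only [smul_eq_mul, SF.add_apply, SF.mul_apply]
  nlinarith [sq_nonneg (f x * G.δ i h x - h x * G.δ i f x)]

lemma Γ_lin_le (f h : SF N) (a b : ℝ) (x : E N) :
    G.Γ (a • f + b • h) (a • f + b • h) x
      ≤ 2 * a ^ 2 * G.Γ f f x + 2 * b ^ 2 * G.Γ h h x := by
  simp only [Γ_apply, Finset.mul_sum, ← Finset.sum_add_distrib]
  refine Finset.sum_le_sum fun i _ => ?_
  simp only [map_add, Derivation.map_smul, SF.add_apply, SF.smul_apply]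
  nlinarith [sq_nonneg (a * G.δ i f x - b * G.δ i h x)]

/-- The energy identity for Jacobi functions. -/
lemma jacobi_energy {f : SF N} (hf : G.lap f = -(G.a2 * f)) {χ : SF N} (hχ : CS χ) :
    G.I (χ * χ * G.Γ f f) = G.I (G.a2 * (f * f) * (χ * χ)) - 2 * G.I (f * χ * G.Γ f χ) := by
  have h1 := G.I_lap_mul f ((hχ.mul_l f).mul_r χ)
  have e1 : G.lap f * (f * χ * χ) = -(G.a2 * (f * f) * (χ * χ)) := by rw [hf]; ring
  have e2 : G.Γ f (f * χ * χ) = χ * χ * G.Γ f f + (2:ℝ) • (f * χ * G.Γ f χ) := by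
    rw [Γ_mul_right, Γ_mul_right]
    ext x; simp only [SF.add_apply, SF.mul_apply, SF.smul_apply]; ring
  rw [e1, e2, I_neg, I_add, I_smul] at h1
  · linarith
  · exact (hχ.mul_r χ).mul_r _
  · exact ((hχ.mul_l f).mul_r _).smul _

lemma jacobi_energy_le {f : SF N} (hf : G.lap f = -(G.a2 * f)) {χ : SF N} (hχ : CS χ) :
    G.I (χ * χ * G.Γ f f) ≤ 2 * G.I (G.a2 * (f * f) * (χ * χ)) + 4 * G.I (f * f * G.Γ χ χ) := by
  have h1 := G.jacobi_energy hf hχ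
  have c1 : CS (χ * χ * G.Γ f f) := (hχ.mul_r χ).mul_r _
  have c2 : CS (f * χ * G.Γ f χ) := (hχ.mul_l f).mul_r _
  have c3 : CS (f * f * G.Γ χ χ) := (hχ.Γ G χ).mul_l _
  have h2 := G.I_mono (c2.smul (-2)) ((c1.smul (1/2)).add (c3.smul 2)) fun x => by
    simp only [SF.smul_apply, SF.add_apply, SF.mul_apply]
    have e : G.Γ f χ x = ∑ i, G.δ i f x * G.δ i χ x := G.Γ_apply f χ x
    rw [Γ_apply, Γ_apply, Γ_apply]
    simp only [Finset.mul_sum, ← Finset.sum_add_distrib]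
    refine Finset.sum_le_sum fun i _ => ?_
    nlinarith [sq_nonneg (χ x * G.δ i f x + 2 * f x * G.δ i χ x)]
  rw [I_smul, I_add _ (c1.smul _) (c3.smul _), I_smul, I_smul] at h2
  linarith

lemma lap_νe (e : W N) : G.lap (G.νe e) = -(G.a2 * G.νe e) := by
  have h1 : ∀ i j, G.δ j (SF.const N (e i) * G.ν i) = SF.const N (e i) * G.δ j (G.ν i) := by
    intro i j
    rw [Derivation.leibniz, δ_const]; simp
  have h2 : ∀ i j, G.δ j (SF.const N (e i) * G.δ j (G.ν i))
      = SF.const N (e i) * G.δ j (G.δ j (G.ν i)) := by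
    intro i j
    rw [Derivation.leibniz, δ_const]; simp
  simp only [lap_def, νe, map_sum, h1, h2]
  rw [Finset.sum_comm, Finset.mul_sum, ← Finset.sum_neg_distrib]
  refine Finset.sum_congr rfl fun i _ => ?_
  rw [← Finset.mul_sum, ← lap_def, lap_ν]; ring

lemma δ_νe (e : W N) (i : Idx N) (x : E N) : G.δ i (G.νe e) x = ∑ j, e j * G.A i j x := by
  have h1 : ∀ j, G.δ i (SF.const N (e j) * G.ν j) = SF.const N (e j) * G.A i j := by
    intro j
    rw [Derivation.leibniz, δ_const]; simp; rfl
  simp only [νe, map_sum, h1]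
  simp

lemma Γ_νe_le (e : W N) (x : E N) : G.Γ (G.νe e) (G.νe e) x ≤ ‖e‖ ^ 2 * G.a2 x := by
  rw [Γ_apply, a2_apply, Finset.mul_sum]
  refine Finset.sum_le_sum fun i _ => ?_
  rw [δ_νe, EuclideanSpace.norm_sq_eq, ← sq]
  simpa using Finset.sum_mul_sq_le_sq_mul_sq Finset.univ e.ofLp fun j => G.A i j x

end Single

variable (G : ℕ → MinGraph N)

/-- Quantities whose integrals over bounded regions tend to zero along the sequence. -/
def Neg (f : ℕ → SF N) : Prop :=
  ∀ R : ℝ, 0 < R → Tendsto (fun n => (G n).I (f n * (G n).cut R)) atTop (𝓝 0)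

/-- Quantities whose integrals over bounded regions are bounded along the sequence. -/
def Bdd (f : ℕ → SF N) : Prop :=
  ∀ R : ℝ, 0 < R → ∃ C : ℝ, 0 ≤ C ∧ ∀ n, (G n).I (f n * (G n).cut R) ≤ C

variable {G}

/-- Interpolation: a quantity which is small compared with a bounded one, up to a multiple of a
negligible one, is negligible. -/
lemma Neg.interp {f g h : ℕ → SF N} (hf : Neg G f) (hg : Bdd G g) (hh : ∀ n x, 0 ≤ h n x)
    (H : ∀ R η : ℝ, 0 < R → 0 < η → ∃ C : ℝ, 0 ≤ C ∧ ∀ n x, (G n).r2 0 x ≤ 2 * R ^ 2 →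
      h n x ≤ C * f n x + η * g n x) : Neg G h := by
  intro R hR
  obtain ⟨K, hK0, hK⟩ := hg R hR
  rw [Metric.tendsto_atTop]
  intro ε hε
  obtain ⟨C, hC0, hC⟩ := H R (ε / (2 * (K + 1))) hR (by positivity)
  obtain ⟨n₀, hn₀⟩ := Metric.tendsto_atTop.1 (hf R hR) (ε / (2 * (C + 1))) (by positivity)
  refine ⟨n₀, fun n hn => ?_⟩
  have h1 := hn₀ n hn
  rw [Real.dist_0_eq_abs] at h1 ⊢
  have hc : CS ((G n).cut R) := (G n).cut_CS hR
  have h0 : 0 ≤ (G n).I (h n * (G n).cut R) :=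
    (G n).I_nonneg fun x => mul_nonneg (hh n x) ((G n).cut_nonneg R x)
  have h2 := (G n).I_mono (hc.mul_l (h n)) (((hc.mul_l (f n)).smul C).add
    ((hc.mul_l (g n)).smul (ε / (2 * (K + 1))))) fun x => by
      simp only [SF.add_apply, SF.smul_apply, SF.mul_apply]
      by_cases hx : 2 * R ^ 2 ≤ (G n).r2 0 x
      · rw [(G n).cut_zero hR hx]; simp
      · have := mul_le_mul_of_nonneg_right (hC n x (not_le.1 hx).le) ((G n).cut_nonneg R x)
        linarith
  rw [I_add _ ((hc.mul_l _).smul _) ((hc.mul_l _).smul _), I_smul, I_smul] at h2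
  rw [abs_of_nonneg h0]
  have h3 := hK n
  have h4 : C * (G n).I (f n * (G n).cut R) ≤ ε / 2 * (C / (C + 1)) := by
    calc _ ≤ C * (ε / (2 * (C + 1))) :=
          mul_le_mul_of_nonneg_left ((le_abs_self _).trans h1.le) hC0
      _ = _ := by field_simp
  have h5 : ε / (2 * (K + 1)) * (G n).I (g n * (G n).cut R) ≤ ε / 2 * (K / (K + 1)) := by
    calc _ ≤ ε / (2 * (K + 1)) * K := by gcongr
      _ = _ := by field_simp
  have h6 : C / (C + 1) < 1 := (div_lt_one (by positivity)).2 (by linarith)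
  have h7 : K / (K + 1) < 1 := (div_lt_one (by positivity)).2 (by linarith)
  nlinarith

lemma Bdd.of_le {f g h : ℕ → SF N} (hf : Bdd G f) (hg : Bdd G g)
    (H : ∀ R : ℝ, 0 < R → ∃ C : ℝ, 0 ≤ C ∧ ∀ n x, (G n).r2 0 x ≤ 2 * R ^ 2 →
      h n x ≤ C * f n x + C * g n x) : Bdd G h := by
  intro R hR
  obtain ⟨K, hK0, hK⟩ := hf R hR
  obtain ⟨L, hL0, hL⟩ := hg R hR
  obtain ⟨C, hC0, hC⟩ := H R hR
  refine ⟨C * K + C * L, by positivity, fun n => ?_⟩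
  have hc : CS ((G n).cut R) := (G n).cut_CS hR
  have h2 := (G n).I_mono (hc.mul_l (h n)) (((hc.mul_l (f n)).smul C).add
    ((hc.mul_l (g n)).smul C)) fun x => by
      simp only [SF.add_apply, SF.smul_apply, SF.mul_apply]
      by_cases hx : 2 * R ^ 2 ≤ (G n).r2 0 x
      · rw [(G n).cut_zero hR hx]; simp
      · have := mul_le_mul_of_nonneg_right (hC n x (not_le.1 hx).le) ((G n).cut_nonneg R x)
        linarith
  rw [I_add _ ((hc.mul_l _).smul _) ((hc.mul_l _).smul _), I_smul, I_smul] at h2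
  have := hK n
  have := hL n
  nlinarith [mul_le_mul_of_nonneg_left (hK n) hC0, mul_le_mul_of_nonneg_left (hL n) hC0]

lemma Neg.of_le {f g h : ℕ → SF N} (hf : Neg G f) (hg : Neg G g) (hh : ∀ n x, 0 ≤ h n x)
    (H : ∀ R : ℝ, 0 < R → ∃ C : ℝ, ∀ n x, (G n).r2 0 x ≤ 2 * R ^ 2 →
      h n x ≤ C * f n x + C * g n x) : Neg G h := by
  intro R hR
  obtain ⟨C, hC⟩ := H R hR
  have h1 : Tendsto (fun n => C * (G n).I (f n * (G n).cut R) + C * (G n).I (g n * (G n).cut R))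
      atTop (𝓝 0) := by
    simpa using ((hf R hR).const_mul C).add ((hg R hR).const_mul C)
  refine squeeze_zero (fun n => (G n).I_nonneg fun x =>
    mul_nonneg (hh n x) ((G n).cut_nonneg R x)) (fun n => ?_) h1
  have hc : CS ((G n).cut R) := (G n).cut_CS hR
  have h2 := (G n).I_mono (hc.mul_l (h n)) (((hc.mul_l (f n)).smul C).add
    ((hc.mul_l (g n)).smul C)) fun x => by
      simp only [SF.add_apply, SF.smul_apply, SF.mul_apply]
      by_cases hx : 2 * R ^ 2 ≤ (G n).r2 0 x
      · rw [(G n).cut_zero hR hx]; simp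
      · have := mul_le_mul_of_nonneg_right (hC n x (not_le.1 hx).le) ((G n).cut_nonneg R x)
        linarith
  rwa [I_add _ ((hc.mul_l _).smul _) ((hc.mul_l _).smul _), I_smul, I_smul] at h2

variable (G)

lemma bdd_one : Bdd G fun _ => 1 := by
  intro R hR
  have := aC_nonneg (N := N)
  refine ⟨2 * ((2 * R) ^ N * aC N), by positivity, fun n => ?_⟩
  rw [one_mul]
  exact (G n).I_rd_cut_le 0 hR

lemma bdd_a2 : Bdd G fun n => (G n).a2 := by
  intro R hR
  obtain ⟨C, hC0, hC⟩ := bdd_one G (2 * (2 * R)) (by positivity)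
  have hcc := cutC_pos
  refine ⟨cutC / (2 * R) ^ 2 * C, by positivity, fun n => ?_⟩
  have hc : CS ((G n).cut R) := (G n).cut_CS hR
  have hc2 : CS ((G n).cut (2 * R)) := (G n).cut_CS (by positivity)
  have hc4 : CS ((G n).cut (2 * (2 * R))) := (G n).cut_CS (by positivity)
  have h1 := (G n).I_mono (hc.mul_l (G n).a2) ((hc2.mul_r ((G n).cut (2 * R))).mul_l (G n).a2)
    fun x => mul_le_mul_of_nonneg_left ((G n).cut_le_sq hR x) ((G n).a2_nonneg x)
  have h2 := (G n).I_mono (hc2.Γ (G n) _) (hc4.smul _) fun x =>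
    (G n).Γ_cut_le (R := 2 * R) (by positivity) x
  have h3 := (G n).stability hc2
  have h4 := hC n
  rw [one_mul] at h4
  rw [I_smul] at h2
  exact (h1.trans h3).trans (h2.trans (mul_le_mul_of_nonneg_left h4 (by positivity)))

/-- The Kato inequality absorbs the gradient of `√(|A|² + τ²)` into the left side of
`simons_stability`. -/
lemma bdd_Γ_aτ (hN : 1 ≤ N) {τ : ℝ} (hτ : 0 < τ) :
    Bdd G fun n => (G n).Γ ((G n).aτ hτ) ((G n).aτ hτ) := by
  intro R hR
  obtain ⟨C, hC0, hC⟩ := bdd_one G (2 * (2 * R)) (by positivity)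
  obtain ⟨C', hC0', hC'⟩ := bdd_a2 G (2 * (2 * R)) (by positivity)
  have hcc := cutC_pos
  refine ⟨((N:ℝ) + 1) ^ 2 * (cutC / (2 * R) ^ 2 * (C' + τ ^ 2 * C)), by positivity, fun n => ?_⟩
  set F := (G n).Γ ((G n).aτ hτ) ((G n).aτ hτ) with hF
  have hc : CS ((G n).cut R) := (G n).cut_CS hR
  have hc2 : CS ((G n).cut (2 * R)) := (G n).cut_CS (by positivity)
  have hc4 : CS ((G n).cut (2 * (2 * R))) := (G n).cut_CS (by positivity)
  have h1 := (G n).I_mono (hc.mul_l F) (((hc2.mul_r ((G n).cut (2 * R))).mul_l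
    ((G n).B2 - F)).smul (((N:ℝ) + 1) ^ 2)) fun x => by
      have k1 := (G n).kato hτ hN x
      rw [div_le_iff₀ (by positivity)] at k1
      have k2 := (G n).cut_le_sq hR x
      have k3 := (G n).cut_nonneg R x
      have k4 : 0 ≤ F x := (G n).Γ_self_nonneg _ x
      simp only [SF.smul_apply, SF.mul_apply, SF.sub_apply]
      calc F x * (G n).cut R x ≤ F x * ((G n).cut (2 * R) x * (G n).cut (2 * R) x) := by gcongr
        _ ≤ ((G n).B2 x - F x) * ((N:ℝ) + 1) ^ 2 * ((G n).cut (2 * R) x * (G n).cut (2 * R) x) :=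
            mul_le_mul_of_nonneg_right k1 (mul_self_nonneg _)
        _ = _ := by ring
  have h2 := (G n).simons_stability hτ hc2
  have h3 := (G n).I_mono ((hc2.Γ (G n) ((G n).cut (2 * R))).mul_l
    ((G n).a2 + SF.const N (τ ^ 2))) (((hc4.mul_l (G n).a2).add (hc4.smul (τ ^ 2))).smul
      (cutC / (2 * R) ^ 2)) fun x => by
      have k1 := (G n).Γ_cut_le (R := 2 * R) (by positivity) x
      have k2 := (G n).a2_nonneg x
      simp only [SF.smul_apply, SF.mul_apply, SF.add_apply, SF.const_apply]
      have := mul_le_mul_of_nonneg_left k1 (by positivity : 0 ≤ (G n).a2 x + τ ^ 2)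
      linarith
  have h4 := hC n
  rw [one_mul] at h4
  rw [I_smul] at h1 h3
  rw [I_add _ (hc4.mul_l _) (hc4.smul _), I_smul] at h3
  refine h1.trans (mul_le_mul_of_nonneg_left (h2.trans (h3.trans ?_)) (by positivity))
  have := hC' n
  gcongr

/-- The stability inequality for `√(|A|² + 1)` times a cutoff. -/
lemma bdd_a2_sq (hN : 1 ≤ N) : Bdd G fun n => (G n).a2 * (G n).a2 := by
  intro R hR
  obtain ⟨C, hC0, hC⟩ := bdd_one G (2 * (2 * R)) (by positivity)
  obtain ⟨C', hC0', hC'⟩ := bdd_a2 G (2 * (2 * R)) (by positivity)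
  obtain ⟨L, hL0, hL⟩ := bdd_Γ_aτ G hN one_pos (2 * R) (by positivity)
  have hcc := cutC_pos
  refine ⟨2 * (cutC / (2 * R) ^ 2 * (C' + C)) + 2 * L, by positivity, fun n => ?_⟩
  set a := (G n).aτ one_pos with ha
  have hc : CS ((G n).cut R) := (G n).cut_CS hR
  have hc2 : CS ((G n).cut (2 * R)) := (G n).cut_CS (by positivity)
  have hc4 : CS ((G n).cut (2 * (2 * R))) := (G n).cut_CS (by positivity)
  have hac : CS (a * (G n).cut (2 * R)) := hc2.mul_l a
  have has : ∀ x, a x ^ 2 = (G n).a2 x + 1 := fun x => by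
    simpa using (G n).aτ_sq_apply one_pos x
  have h1 := (G n).I_mono (hc.mul_l ((G n).a2 * (G n).a2)) ((hac.mul_r
    (a * (G n).cut (2 * R))).mul_l (G n).a2) fun x => by
      have k2 := (G n).cut_le_sq hR x
      have k3 := (G n).cut_nonneg R x
      have k4 := (G n).a2_nonneg x
      simp only [SF.mul_apply]
      have k5 : a x * (G n).cut (2 * R) x * (a x * (G n).cut (2 * R) x)
          = ((G n).a2 x + 1) * ((G n).cut (2 * R) x * (G n).cut (2 * R) x) := by
        rw [← has]; ring
      rw [k5, mul_assoc]
      refine mul_le_mul_of_nonneg_left ?_ k4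
      exact mul_le_mul (by linarith) k2 k3 (by linarith)
  have h2 := (G n).stability hac
  have h3 := (G n).I_mono (hac.Γ (G n) _) ((((hc4.mul_l (G n).a2).add hc4).smul
      (2 * (cutC / (2 * R) ^ 2))).add ((hc2.mul_l ((G n).Γ a a)).smul 2)) fun x => by
      have k1 := (G n).Γ_cut_le (R := 2 * R) (by positivity) x
      have k2 := (G n).a2_nonneg x
      have k3 := (G n).Γ_mul_self_le a ((G n).cut (2 * R)) x
      have k4 := (G n).cut_sq_le (2 * R) x
      have k5 : 0 ≤ (G n).Γ a a x := (G n).Γ_self_nonneg _ x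
      simp only [SF.smul_apply, SF.mul_apply, SF.add_apply]
      rw [has] at k3
      have k6 := mul_le_mul_of_nonneg_left k1 (by positivity : 0 ≤ (G n).a2 x + 1)
      have k7 := mul_le_mul_of_nonneg_right k4 k5
      clear k1
      generalize cutC / (2 * R) ^ 2 = q at k6 ⊢
      linarith
  rw [I_add _ (((hc4.mul_l _).add hc4).smul _) ((hc2.mul_l _).smul _), I_smul, I_smul,
    I_add _ (hc4.mul_l _) hc4] at h3
  refine (h1.trans h2).trans (h3.trans ?_)
  have e1 := hC' n
  have e2 := hL n
  have e3 := hC n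
  rw [one_mul] at e3
  have : 0 ≤ cutC / (2 * R) ^ 2 := by positivity
  nlinarith [mul_le_mul_of_nonneg_left (add_le_add e1 e3) this]

variable {G}

/-- Jacobi functions that are small in mean square have small energy. -/
lemma Neg.jacobi (hN : 1 ≤ N) {f : ℕ → SF N} (hf : ∀ n, (G n).lap (f n) = -((G n).a2 * f n))
    (hb : ∀ n x, f n x ^ 2 ≤ (G n).r2 0 x) (h : Neg G fun n => f n * f n) :
    Neg G fun n => (G n).Γ (f n) (f n) := by
  have h1 : Neg G fun n => (G n).a2 * (f n * f n) := by
    refine Neg.interp h (bdd_a2_sq G hN)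
      (fun n x => mul_nonneg ((G n).a2_nonneg x) (mul_self_nonneg _)) fun R η hR hη =>
      ⟨(4 * η)⁻¹ * (2 * R ^ 2), by positivity, fun n x hx => ?_⟩
    simp only [SF.mul_apply]
    have k1 := hb n x
    have k2 : f n x ^ 2 ≤ 2 * R ^ 2 := k1.trans hx
    have k3 : (G n).a2 x * (f n x * f n x)
        ≤ (4 * η)⁻¹ * (f n x ^ 2 * f n x ^ 2) + η * ((G n).a2 x * (G n).a2 x) := by
      have : 0 ≤ (4 * η)⁻¹ * (2 * η * (G n).a2 x - f n x ^ 2) ^ 2 := by positivity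
      have e : (4 * η)⁻¹ * (2 * η * (G n).a2 x - f n x ^ 2) ^ 2
        = η * ((G n).a2 x * (G n).a2 x) - (G n).a2 x * (f n x * f n x)
          + (4 * η)⁻¹ * (f n x ^ 2 * f n x ^ 2) := by field_simp; ring
      linarith
    have k4 : (4 * η)⁻¹ * (f n x ^ 2 * f n x ^ 2) ≤ (4 * η)⁻¹ * (2 * R ^ 2 * f n x ^ 2) := by
      gcongr
    calc _ ≤ _ := k3
      _ ≤ (4 * η)⁻¹ * (2 * R ^ 2 * f n x ^ 2) + η * ((G n).a2 x * (G n).a2 x) := by linarith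
      _ = _ := by ring
  intro R hR
  have hR2 : 0 < 2 * R := by positivity
  have key : Tendsto (fun n => 2 * (G n).I ((G n).a2 * (f n * f n) * (G n).cut (2 * R))
      + 4 * (cutC / (2 * R) ^ 2 * (G n).I (f n * f n * (G n).cut (2 * (2 * R))))) atTop (𝓝 0) := by
    simpa using ((h1 _ hR2).const_mul 2).add
      (((h (2 * (2 * R)) (by positivity)).const_mul (cutC / (2 * R) ^ 2)).const_mul 4)
  refine squeeze_zero (fun n => (G n).I_nonneg fun x =>
    mul_nonneg ((G n).Γ_self_nonneg _ x) ((G n).cut_nonneg R x)) (fun n => ?_) key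
  have hc : CS ((G n).cut R) := (G n).cut_CS hR
  have hc2 : CS ((G n).cut (2 * R)) := (G n).cut_CS (by positivity)
  have hc4 : CS ((G n).cut (2 * (2 * R))) := (G n).cut_CS (by positivity)
  have e1 := (G n).I_mono (hc.mul_l ((G n).Γ (f n) (f n))) ((hc2.mul_r ((G n).cut (2 * R))).mul_r
    ((G n).Γ (f n) (f n))) fun x => by
      have := mul_le_mul_of_nonneg_left ((G n).cut_le_sq hR x) ((G n).Γ_self_nonneg (f n) x)
      simp only [SF.mul_apply]; linarith
  have e2 := (G n).jacobi_energy_le (hf n) hc2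
  have e3 := (G n).I_mono ((hc2.mul_r ((G n).cut (2 * R))).mul_l ((G n).a2 * (f n * f n)))
    (hc2.mul_l ((G n).a2 * (f n * f n))) fun x => by
      have := mul_le_mul_of_nonneg_left ((G n).cut_sq_le (2 * R) x)
        (mul_nonneg ((G n).a2_nonneg x) (mul_self_nonneg (f n x)))
      simpa only [SF.mul_apply] using this
  have e4 := (G n).I_mono ((hc2.Γ (G n) ((G n).cut (2 * R))).mul_l (f n * f n))
    ((hc4.mul_l (f n * f n)).smul (cutC / (2 * R) ^ 2)) fun x => by
      have := mul_le_mul_of_nonneg_left ((G n).Γ_cut_le hR2 x) (mul_self_nonneg (f n x))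
      simp only [SF.mul_apply, SF.smul_apply]; linarith
  rw [I_smul] at e4
  linarith

/-- If `w` is a nonnegative component of the normal and `|A|² w` is small, so is `|∇w|²`. -/
lemma Neg.Γ_νe {e : W N} (h0 : ∀ n x, 0 ≤ (G n).νe e x) (h : Neg G fun n => (G n).a2 * (G n).νe e) :
    Neg G fun n => (G n).Γ ((G n).νe e) ((G n).νe e) := by
  intro R hR
  have hR2 : 0 < 2 * R := by positivity
  have hcc := cutC_pos
  obtain ⟨C, hC0, hC⟩ := bdd_one G (2 * (2 * R)) (by positivity)
  have hpos : ∀ n, 0 ≤ (G n).I ((G n).Γ ((G n).νe e) ((G n).νe e) * (G n).cut R) := fun n =>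
    (G n).I_nonneg fun x => mul_nonneg ((G n).Γ_self_nonneg _ x) ((G n).cut_nonneg R x)
  have main : ∀ η : ℝ, 0 < η → ∀ n,
      (G n).I ((G n).Γ ((G n).νe e) ((G n).νe e) * (G n).cut R)
        ≤ (‖e‖ + ‖e‖ ^ 2 / η) * (G n).I ((G n).a2 * (G n).νe e * (G n).cut (2 * R))
          + η * (‖e‖ * (cutC / (2 * R) ^ 2) * C) := by
    intro η hη n
    set w := (G n).νe e with hw
    set χ := (G n).cut (2 * R) with hχ
    have hc : CS ((G n).cut R) := (G n).cut_CS hR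
    have hc2 : CS χ := (G n).cut_CS (by positivity)
    have hc4 : CS ((G n).cut (2 * (2 * R))) := (G n).cut_CS (by positivity)
    have e1 := (G n).I_mono (hc.mul_l ((G n).Γ w w)) ((hc2.mul_r χ).mul_r
      ((G n).Γ w w)) fun x => by
        have := mul_le_mul_of_nonneg_left ((G n).cut_le_sq hR x) ((G n).Γ_self_nonneg w x)
        simp only [SF.mul_apply]; linarith
    have e2 := (G n).jacobi_energy ((G n).lap_νe e) hc2
    have e3 := (G n).I_mono (((hc2.mul_r χ).mul_l ((G n).a2 * (w * w))).add
      (((hc2.mul_l w).mul_r ((G n).Γ w χ)).smul (-2)))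
      (((hc2.mul_l ((G n).a2 * w)).smul (‖e‖ + ‖e‖ ^ 2 / η)).add
        (hc4.smul (η * (‖e‖ * (cutC / (2 * R) ^ 2))))) fun x => by
        simp only [SF.mul_apply, SF.smul_apply, SF.add_apply]
        have k0 : 0 ≤ w x := h0 n x
        have k1 : w x ≤ ‖e‖ := (le_abs_self _).trans ((G n).abs_νe_le e x)
        have k2 : χ x * χ x ≤ χ x := (G n).cut_sq_le _ x
        have k2' : 0 ≤ χ x := (G n).cut_nonneg _ x
        have k3 := (G n).a2_nonneg x
        have k4 := (G n).Γ_cut_le hR2 x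
        have k5 := (G n).Γ_νe_le e x
        have k6 := (G n).Γ_young w χ (-(χ x / η)) x
        have m1 : (G n).a2 x * (w x * w x) * (χ x * χ x) ≤ ‖e‖ * ((G n).a2 x * w x * χ x) := by
          calc _ = (G n).a2 x * w x * (w x * (χ x * χ x)) := by ring
            _ ≤ (G n).a2 x * w x * (‖e‖ * χ x) := by gcongr
            _ = _ := by ring
        have m2 : -2 * (w x * χ x * (G n).Γ w χ x)
            ≤ ‖e‖ ^ 2 / η * ((G n).a2 x * w x * χ x)
              + η * (‖e‖ * (cutC / (2 * R) ^ 2)) * (G n).cut (2 * (2 * R)) x := by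
          calc -2 * (w x * χ x * (G n).Γ w χ x)
              = w x * η * (2 * (-(χ x / η)) * (G n).Γ w χ x) := by field_simp
            _ ≤ w x * η * ((-(χ x / η)) ^ 2 * (G n).Γ w w x + (G n).Γ χ χ x) := by gcongr
            _ = w x / η * ((χ x * χ x) * (G n).Γ w w x) + w x * (η * (G n).Γ χ χ x) := by
                field_simp
            _ ≤ w x / η * (χ x * (‖e‖ ^ 2 * (G n).a2 x))
                + ‖e‖ * (η * (cutC / (2 * R) ^ 2 * (G n).cut (2 * (2 * R)) x)) := by
                have := (G n).Γ_self_nonneg w x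
                have := (G n).Γ_self_nonneg χ x
                gcongr
            _ = _ := by ring
        linarith
    rw [I_add _ ((hc2.mul_r χ).mul_l _) (((hc2.mul_l w).mul_r _).smul _), I_smul,
      I_add _ ((hc2.mul_l _).smul _) (hc4.smul _), I_smul, I_smul] at e3
    have e4 := hC n
    rw [one_mul] at e4
    have e5 : η * (‖e‖ * (cutC / (2 * R) ^ 2)) * (G n).I ((G n).cut (2 * (2 * R)))
        ≤ η * (‖e‖ * (cutC / (2 * R) ^ 2)) * C := by gcongr
    linarith
  rw [Metric.tendsto_atTop]
  intro ε hε
  set M := ‖e‖ * (cutC / (2 * R) ^ 2) * C with hM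
  have hM0 : 0 ≤ M := by positivity
  set η := ε / (2 * (M + 1)) with hη
  have hη0 : 0 < η := by positivity
  set Q := ‖e‖ + ‖e‖ ^ 2 / η with hQ
  have hQ0 : 0 ≤ Q := by positivity
  obtain ⟨n₀, hn₀⟩ := Metric.tendsto_atTop.1 (h (2 * R) hR2) (ε / (2 * (Q + 1))) (by positivity)
  refine ⟨n₀, fun n hn => ?_⟩
  have h1 := hn₀ n hn
  rw [Real.dist_0_eq_abs] at h1 ⊢
  rw [abs_of_nonneg (hpos n)]
  have h2 := main η hη0 n
  have h4 : Q * (G n).I ((G n).a2 * (G n).νe e * (G n).cut (2 * R)) ≤ ε / 2 * (Q / (Q + 1)) := by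
    calc _ ≤ Q * (ε / (2 * (Q + 1))) :=
          mul_le_mul_of_nonneg_left ((le_abs_self _).trans h1.le) hQ0
      _ = _ := by field_simp
  have h5 : η * M = ε / 2 * (M / (M + 1)) := by rw [hη]; field_simp
  have h6 : Q / (Q + 1) < 1 := (div_lt_one (by positivity)).2 (by linarith)
  have h7 : M / (M + 1) < 1 := (div_lt_one (by positivity)).2 (by linarith)
  nlinarith

end MinGraph

/-! ### The area of a tube around an affine subspace -/

section Tube

variable {N : ℕ} (K : Finset (Idx N))

/-- The squared distance to the span of the axes in `K`. -/
def rho2 (y : W N) : ℝ := ∑ i ∈ Kᶜ, y i ^ 2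

lemma rho2_nonneg (y : W N) : 0 ≤ rho2 K y := Finset.sum_nonneg fun _ _ => sq_nonneg _

lemma rho2_le (y : W N) : rho2 K y ≤ ‖y‖ ^ 2 := by
  rw [EuclideanSpace.norm_sq_eq, rho2]
  simpa using Finset.sum_le_univ_sum_of_nonneg (s := Kᶜ) fun i => sq_nonneg (y i)

lemma tube_one_dim : ∃ C : ℝ, 0 ≤ C ∧ ∀ R : ℝ, 0 < R →
    ∫ t : ℝ in Set.Icc (-R) R, (1 + t ^ 2) ^ (-(13/35:ℝ)) ≤ C * R ^ (9/35:ℝ) := by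
  refine ⟨2 * (35 / 9), by norm_num, fun R hR => ?_⟩
  have hc : Continuous fun t : ℝ => (1 + t ^ 2) ^ (-(13/35:ℝ)) :=
    Continuous.rpow_const (by fun_prop) fun t => Or.inl (by positivity)
  have hi : IntervalIntegrable (fun t : ℝ => t ^ (-(26/35:ℝ))) volume 0 R :=
    intervalIntegral.intervalIntegrable_rpow' (by norm_num)
  have h1 : ∫ t in (0:ℝ)..R, (1 + t ^ 2) ^ (-(13/35:ℝ)) ≤ ∫ t in (0:ℝ)..R, t ^ (-(26/35:ℝ)) := by
    refine intervalIntegral.integral_mono_on_of_le_Ioo hR.le (hc.intervalIntegrable _ _) hi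
      fun t ht => ?_
    have e : t ^ (-(26/35:ℝ)) = (t ^ 2) ^ (-(13/35:ℝ)) := by
      rw [← Real.rpow_natCast t 2, ← Real.rpow_mul ht.1.le]; norm_num
    rw [e]
    exact Real.rpow_le_rpow_of_nonpos (pow_pos ht.1 2) (by linarith) (by norm_num)
  rw [integral_rpow (Or.inl (by norm_num))] at h1
  have h2 : ∫ t in (-R)..0, (1 + t ^ 2) ^ (-(13/35:ℝ))
      = ∫ t in (0:ℝ)..R, (1 + t ^ 2) ^ (-(13/35:ℝ)) := by
    have := intervalIntegral.integral_comp_neg (a := 0) (b := R)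
      fun t : ℝ => (1 + t ^ 2) ^ (-(13/35:ℝ))
    simp only [neg_sq, neg_zero] at this
    exact this.symm
  rw [integral_Icc_eq_integral_Ioc, ← intervalIntegral.integral_of_le (by linarith),
    ← intervalIntegral.integral_add_adjacent_intervals (hc.intervalIntegrable (-R) 0)
      (hc.intervalIntegrable 0 R), h2]
  have e : (-(26/35:ℝ)) + 1 = 9 / 35 := by norm_num
  rw [e, Real.zero_rpow (by norm_num), sub_zero] at h1
  linarith

/-- Since `|y_i| ≤ ρ`, the weight `(1 + ρ²)^(-13/5)` is dominated by a product over the seven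
coordinates off `K` of one-dimensional weights with exponent `-13/35`, whose integrals are explicit. -/
lemma tube_integral (hK : Kᶜ.card = 7) : ∃ C : ℝ, 0 ≤ C ∧ ∀ R : ℝ, 0 < R → ∃ F : W N → ℝ,
    Integrable F ∧ (∀ y, 0 ≤ F y) ∧ (∀ y, ‖y‖ ≤ R → (1 + rho2 K y) ^ (-(13/5:ℝ)) ≤ F y) ∧
    ∫ y, F y ≤ C * (R ^ K.card * R ^ (9/5:ℝ)) := by
  obtain ⟨C₁, hC₁, h1⟩ := tube_one_dim
  refine ⟨2 ^ K.card * C₁ ^ 7, by positivity, fun R hR => ?_⟩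
  let g : Idx N → ℝ → ℝ := fun i => (Set.Icc (-R) R).indicator fun t =>
    if i ∈ K then 1 else (1 + t ^ 2) ^ (-(13/35:ℝ))
  have hc : Continuous fun t : ℝ => (1 + t ^ 2) ^ (-(13/35:ℝ)) :=
    Continuous.rpow_const (by fun_prop) fun t => Or.inl (by positivity)
  have hg : ∀ i, Integrable (g i) := by
    intro i
    refine (IntegrableOn.integrable_indicator ?_ measurableSet_Icc)
    by_cases hi : i ∈ K
    · simp only [hi, if_true]
      exact continuous_const.integrableOn_Icc
    · simp only [hi, if_false]
      exact hc.integrableOn_Icc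
  have hg0 : ∀ i t, 0 ≤ g i t := by
    intro i t
    refine Set.indicator_nonneg (fun t _ => ?_) t
    split_ifs <;> positivity
  have e0 : ∀ F : (Idx N → ℝ) → ℝ, ∫ y : W N, F (WithLp.ofLp y) = ∫ z, F z := fun F =>
    (PiLp.volume_preserving_ofLp (Idx N)).integral_comp
      (MeasurableEquiv.toLp 2 (Idx N → ℝ)).symm.measurableEmbedding F
  refine ⟨fun y => ∏ i, g i (y i), ?_, fun y => Finset.prod_nonneg fun i _ => hg0 i _, ?_, ?_⟩
  · exact (PiLp.volume_preserving_ofLp (Idx N)).integrable_comp_of_integrable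
      (g := fun z : Idx N → ℝ => ∏ i, g i (z i)) (Integrable.fintype_prod hg)
  · intro y hy
    have hm : ∀ i, y i ∈ Set.Icc (-R) R := fun i => by
      have := (PiLp.norm_apply_le y i).trans hy
      exact abs_le.1 this
    have e1 : ∀ i, g i (y i) = if i ∈ K then 1 else (1 + y i ^ 2) ^ (-(13/35:ℝ)) :=
      fun i => Set.indicator_of_mem (hm i) _
    have e2 : ∏ i, g i (y i) = ∏ i ∈ Kᶜ, (1 + y i ^ 2) ^ (-(13/35:ℝ)) := by
      rw [← Finset.prod_mul_prod_compl K]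
      rw [Finset.prod_congr rfl fun i hi => by rw [e1, if_pos hi], Finset.prod_const_one, one_mul]
      exact Finset.prod_congr rfl fun i hi => by rw [e1, if_neg (Finset.mem_compl.1 hi)]
    have hr := rho2_nonneg K y
    have e3 : (1 + rho2 K y) ^ (-(13/5:ℝ)) = ∏ i ∈ Kᶜ, (1 + rho2 K y) ^ (-(13/35:ℝ)) := by
      rw [Finset.prod_const, hK, ← Real.rpow_natCast, ← Real.rpow_mul (by linarith)]
      norm_num
    beta_reduce
    rw [e2, e3]
    refine Finset.prod_le_prod (fun i _ => by positivity) fun i hi => ?_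
    refine Real.rpow_le_rpow_of_nonpos (by positivity) ?_ (by norm_num)
    have : y i ^ 2 ≤ rho2 K y :=
      Finset.single_le_sum (f := fun i => y i ^ 2) (fun _ _ => sq_nonneg _) hi
    linarith
  · rw [e0 fun z => ∏ i, g i (z i), integral_fintype_prod_volume_eq_prod g,
      ← Finset.prod_mul_prod_compl K]
    have e1 : ∀ i ∈ K, ∫ t, g i t = 2 * R := fun i hi => by
      simp only [g, hi, if_true]
      rw [integral_indicator measurableSet_Icc]
      simp; rw [max_eq_left (by linarith)]; ring
    have e2 : ∀ i ∈ Kᶜ, ∫ t, g i t ≤ C₁ * R ^ (9/35:ℝ) := fun i hi => by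
      simp only [g, Finset.mem_compl.1 hi, if_false]
      rw [integral_indicator measurableSet_Icc]
      exact h1 R hR
    rw [Finset.prod_congr rfl e1, Finset.prod_const]
    have e3 : ∏ i ∈ Kᶜ, ∫ t, g i t ≤ (C₁ * R ^ (9/35:ℝ)) ^ 7 := by
      refine (Finset.prod_le_prod (fun i _ => integral_nonneg (hg0 i)) e2).trans ?_
      rw [Finset.prod_const, hK]
    have e4 : (R ^ (9/35:ℝ)) ^ 7 = R ^ (9/5:ℝ) := by
      rw [← Real.rpow_natCast, ← Real.rpow_mul hR.le]; norm_num
    rw [mul_pow, e4] at e3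
    calc (2 * R) ^ K.card * ∏ i ∈ Kᶜ, ∫ t, g i t
        ≤ (2 * R) ^ K.card * (C₁ ^ 7 * R ^ (9/5:ℝ)) := by gcongr
      _ = _ := by rw [mul_pow]; ring

/-- The test function `(1 + ρ²)^(-21/10)`, cut off at radius `R`. -/
noncomputable def tubeTF {R : ℝ} (hR : 0 < R) : TF N where
  f y := (1 + rho2 K y) ^ (-(21/10:ℝ)) * cutFun (‖y‖ ^ 2 / R ^ 2)
  smooth := by
    refine ContDiff.mul ?_ (cutFun_contDiff.comp ((contDiff_norm_sq ℝ).div_const _))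
    refine ContDiff.rpow_const_of_ne ?_ fun y => ?_
    · unfold rho2; fun_prop
    · have := rho2_nonneg K y; positivity
  cs := by
    refine HasCompactSupport.of_support_subset_isCompact (isCompact_closedBall 0 (2 * R))
      fun y hy => ?_
    rw [mem_closedBall_zero_iff]
    by_contra hc
    refine hy ?_
    have h2 : (2 * R) ^ 2 ≤ ‖y‖ ^ 2 := pow_le_pow_left₀ (by positivity) (not_le.1 hc).le 2
    have : 2 ≤ ‖y‖ ^ 2 / R ^ 2 := by rw [le_div_iff₀ (by positivity)]; nlinarith [sq_nonneg R]
    simp only [cutFun_zero this, mul_zero]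

lemma tubeTF_apply {R : ℝ} (hR : 0 < R) (y : W N) : tubeTF K hR y
    = (1 + rho2 K y) ^ (-(21/10:ℝ)) * cutFun (‖y‖ ^ 2 / R ^ 2) := rfl

lemma tubeTF_fderiv : ∃ C : ℝ, 0 ≤ C ∧ ∀ (R : ℝ) (hR : 1 ≤ R) (y : W N),
    ‖fderiv ℝ (tubeTF K (one_pos.trans_le hR)) y‖ ≤ C * (1 + rho2 K y) ^ (-(13/5:ℝ)) ∧
    (2 * R < ‖y‖ → ‖fderiv ℝ (tubeTF K (one_pos.trans_le hR)) y‖ = 0) := by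
  obtain ⟨D, hD0, hD⟩ := exists_deriv_cutFun_le
  refine ⟨8 * D + 5, by positivity, fun R hR y => ?_⟩
  have hR0 : 0 < R := one_pos.trans_le hR
  set β := 1 + rho2 K y with hβ
  have hr := rho2_nonneg K y
  have hβ1 : 1 ≤ β := by linarith
  have hβ0 : 0 < β := by linarith
  have d1 : HasFDerivAt (fun y : W N => 1 + rho2 K y)
      (∑ i ∈ Kᶜ, (2 * y i) • (EuclideanSpace.proj i : W N →L[ℝ] ℝ)) y := by
    unfold rho2
    refine (HasFDerivAt.fun_sum fun i _ => ?_).const_add 1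
    have := ((EuclideanSpace.proj i : W N →L[ℝ] ℝ).hasFDerivAt (x := y)).pow 2
    simpa using this
  have d2 := d1.rpow_const (p := -(21/10:ℝ)) (Or.inl hβ0.ne')
  have d3 : HasFDerivAt (fun y : W N => ‖y‖ ^ 2 / R ^ 2) ((R ^ 2)⁻¹ • (2 • innerSL ℝ y)) y := by
    have := (hasStrictFDerivAt_norm_sq y).hasFDerivAt.const_smul (R ^ 2)⁻¹
    refine this.congr_of_eventuallyEq (Eventually.of_forall fun z => ?_)
    simp [div_eq_inv_mul]
  have d4 := (cutFun_contDiff.differentiable (by simp) (‖y‖ ^ 2 / R ^ 2)).hasDerivAt.comp_hasFDerivAt y d3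
  have d5 : HasFDerivAt (tubeTF K hR0) _ y := d2.mul d4
  rw [d5.fderiv]
  have out : 2 * R ^ 2 ≤ ‖y‖ ^ 2 → cutFun (‖y‖ ^ 2 / R ^ 2) = 0 ∧
      deriv cutFun (‖y‖ ^ 2 / R ^ 2) = 0 := fun h => by
    have h2 : 2 ≤ ‖y‖ ^ 2 / R ^ 2 := by rwa [le_div_iff₀ (by positivity)]
    exact ⟨cutFun_zero h2, deriv_cutFun_zero h2⟩
  constructor
  swap
  · intro h
    obtain ⟨o1, o2⟩ := out (by nlinarith)
    simp [o1, o2]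
  by_cases hy : 2 * R ^ 2 ≤ ‖y‖ ^ 2
  · obtain ⟨o1, o2⟩ := out hy
    simp only [o1, o2]; simp; positivity
  push Not at hy
  have hs : Real.sqrt β ≤ 2 * R := by
    rw [Real.sqrt_le_left (by positivity)]
    have := rho2_le K y
    nlinarith
  have hs0 : 0 < Real.sqrt β := Real.sqrt_pos.2 hβ0
  have hq : β ^ (-(13/5:ℝ)) = β ^ (-(21/10:ℝ)) / Real.sqrt β := by
    rw [Real.sqrt_eq_rpow, ← Real.rpow_sub hβ0]; norm_num
  have hq2 : β ^ (-(21/10:ℝ) - 1) * Real.sqrt β = β ^ (-(21/10:ℝ)) / Real.sqrt β := by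
    rw [Real.rpow_sub_one hβ0.ne']
    field_simp
    rw [Real.sq_sqrt hβ0.le]
  have hyR : ‖y‖ ≤ 2 * R := by nlinarith [norm_nonneg y]
  have hp : 0 < β ^ (-(21/10:ℝ)) := by positivity
  refine ContinuousLinearMap.opNorm_le_bound _ (by positivity) fun h => ?_
  have i1 : |∑ i ∈ Kᶜ, y i * h i| ≤ Real.sqrt β * ‖h‖ := by
    rw [← Real.sqrt_sq (norm_nonneg h), ← Real.sqrt_mul hβ0.le]
    refine Real.abs_le_sqrt ((Finset.sum_mul_sq_le_sq_mul_sq _ _ _).trans ?_)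
    exact mul_le_mul (by rw [hβ, rho2]; linarith) (rho2_le K h) (rho2_nonneg K h) hβ0.le
  have i2 := abs_real_inner_le_norm y h
  have i3 := hD (‖y‖ ^ 2 / R ^ 2)
  have i4 := cutFun_nonneg (‖y‖ ^ 2 / R ^ 2)
  have i5 := cutFun_le_one (‖y‖ ^ 2 / R ^ 2)
  have e : (∑ i ∈ Kᶜ, 2 * y i * h i) = 2 * ∑ i ∈ Kᶜ, y i * h i := by
    rw [Finset.mul_sum]; exact Finset.sum_congr rfl fun _ _ => by ring
  have e' : (∑ i ∈ Kᶜ, 2 * y i * (EuclideanSpace.proj i : W N →L[ℝ] ℝ) h)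
      = 2 * ∑ i ∈ Kᶜ, y i * h i := e
  simp only [_root_.add_apply, _root_.smul_apply, _root_.sum_apply, smul_eq_mul,
    innerSL_apply_apply, nsmul_eq_mul, e', Real.norm_eq_abs, ← hβ]
  refine (abs_add_le _ _).trans ?_
  set c' := deriv cutFun (‖y‖ ^ 2 / R ^ 2)
  set c := cutFun (‖y‖ ^ 2 / R ^ 2)
  have j1 : |β ^ (-(21/10:ℝ)) * (c' * ((R ^ 2)⁻¹ * (((2:ℕ):ℝ) * ⟪y, h⟫)))|
      ≤ 8 * D * β ^ (-(13/5:ℝ)) * ‖h‖ := by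
    simp only [abs_mul, abs_inv, abs_pow, abs_of_pos hR0, abs_of_pos hp, Nat.cast_ofNat,
      abs_two]
    calc _ ≤ β ^ (-(21/10:ℝ)) * (D * ((R ^ 2)⁻¹ * (2 * (2 * R * ‖h‖)))) := by
          gcongr
          exact i2.trans (by gcongr)
      _ = 8 * D * (β ^ (-(21/10:ℝ)) / (2 * R)) * ‖h‖ := by field_simp; ring
      _ ≤ 8 * D * (β ^ (-(21/10:ℝ)) / Real.sqrt β) * ‖h‖ := by gcongr
      _ = _ := by rw [hq]
  have j2 : |c * (-(21/10:ℝ) * β ^ (-(21/10:ℝ) - 1) * (2 * ∑ i ∈ Kᶜ, y i * h i))|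
      ≤ 5 * β ^ (-(13/5:ℝ)) * ‖h‖ := by
    have hp2 : 0 < β ^ (-(21/10:ℝ) - 1) := by positivity
    simp only [abs_mul, abs_of_nonneg i4, abs_of_pos hp2, abs_neg, abs_two]
    rw [abs_of_pos (by norm_num : (0:ℝ) < 21/10)]
    calc _ ≤ 1 * ((21/10:ℝ) * β ^ (-(21/10:ℝ) - 1) * (2 * (Real.sqrt β * ‖h‖))) := by gcongr
      _ = 21/5 * (β ^ (-(21/10:ℝ) - 1) * Real.sqrt β) * ‖h‖ := by ring
      _ = 21/5 * β ^ (-(13/5:ℝ)) * ‖h‖ := by rw [hq2, hq]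
      _ ≤ _ := by gcongr; norm_num
  linarith

end Tube

namespace MinGraph

variable {N : ℕ} (G : MinGraph N) (K : Finset (Idx N))

/-- The weight is `(1 + ρ²)^(-21/10)`, and its gradient is integrated by `tube_integral`. The growth of
the weighted area is slower than `R ^ (|K| + 2)`. -/
lemma tube_area (hK : Kᶜ.card = 7) : ∃ C : ℝ, 0 ≤ C ∧ ∀ (G : MinGraph N) (R : ℝ) (hR : 1 ≤ R),
    G.I (G.tr (tubeTF K (one_pos.trans_le hR))) ≤ C * (R ^ K.card * R ^ (9/5:ℝ)) := by
  obtain ⟨C₁, hC₁, h1⟩ := tube_integral K hK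
  obtain ⟨C₂, hC₂, h2⟩ := tubeTF_fderiv K
  refine ⟨C₂ * (C₁ * (2 ^ K.card * 2 ^ (9/5:ℝ))), by positivity, fun G R hR => ?_⟩
  have hR0 := one_pos.trans_le hR
  obtain ⟨F, hF, hF0, hF1, hF2⟩ := h1 (2 * R) (by positivity)
  have h3 := G.area (tubeTF K hR0)
  have h4 : ∫ y, ‖fderiv ℝ (tubeTF K hR0) y‖ ≤ ∫ y, C₂ * F y := by
    refine integral_mono_of_nonneg (Eventually.of_forall fun y => norm_nonneg _)
      (hF.const_mul _) (Eventually.of_forall fun y => ?_)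
    by_cases hy : ‖y‖ ≤ 2 * R
    · exact ((h2 R hR y).1).trans (mul_le_mul_of_nonneg_left (hF1 y hy) hC₂)
    · beta_reduce
      rw [(h2 R hR y).2 (not_le.1 hy)]; exact mul_nonneg hC₂ (hF0 y)
  rw [integral_const_mul] at h4
  have h5 := mul_le_mul_of_nonneg_left hF2 hC₂
  rw [mul_pow, Real.mul_rpow (by norm_num) hR0.le] at h5
  have h6 : 0 ≤ C₂ * (C₁ * (2 ^ K.card * 2 ^ (9/5:ℝ))) * (R ^ K.card * R ^ (9/5:ℝ)) := by
    positivity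
  have h7 : C₂ * (C₁ * (2 ^ K.card * R ^ K.card * (2 ^ (9/5:ℝ) * R ^ (9/5:ℝ))))
    = C₂ * (C₁ * (2 ^ K.card * 2 ^ (9/5:ℝ))) * (R ^ K.card * R ^ (9/5:ℝ)) := by ring
  linarith

end MinGraph

/-! ### Weighted estimates in tubes -/

namespace MinGraph

variable {N : ℕ} (G : MinGraph N) (K : Finset (Idx N))

/-- One plus the squared distance to the span of the axes in `K`. -/
noncomputable def β : SF N := 1 + ∑ i ∈ Kᶜ, G.XP 0 i * G.XP 0 i

lemma β_apply (x : E N) : G.β K x = 1 + ∑ i ∈ Kᶜ, G.XP 0 i x ^ 2 := by simp [β, sq]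

lemma β_eq_rho2 (x : E N) : G.β K x = 1 + rho2 K (G.pos x) := by
  rw [β_apply, rho2]
  simp [pos_apply]

lemma one_le_β (x : E N) : 1 ≤ G.β K x := by
  rw [β_apply]; have : 0 ≤ ∑ i ∈ Kᶜ, G.XP 0 i x ^ 2 := Finset.sum_nonneg fun _ _ => sq_nonneg _
  linarith

lemma β_pos (x : E N) : 0 < G.β K x := one_pos.trans_le (G.one_le_β K x)

lemma β_le (x : E N) : G.β K x ≤ 1 + G.r2 0 x := by
  rw [β_eq_rho2, ← norm_pos_sq]; have := rho2_le K (G.pos x); linarith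

/-- The inverse of `β`. -/
noncomputable def βi : SF N := ⟨fun x => (G.β K x)⁻¹, by
  change ContDiff ℝ ∞ _
  exact ContDiff.inv (by fun_prop) fun x => (G.β_pos K x).ne'⟩

/-- The weight `β ^ (-11/20)`; any exponent in a small interval left of `-1/2` would do. -/
noncomputable def βh : SF N := ⟨fun x => (G.β K x) ^ (-(11/20:ℝ)), by
  change ContDiff ℝ ∞ _
  exact ContDiff.rpow_const_of_ne (by fun_prop) fun x => (G.β_pos K x).ne'⟩

lemma βi_apply (x : E N) : G.βi K x = (G.β K x)⁻¹ := rfl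
lemma βh_apply (x : E N) : G.βh K x = (G.β K x) ^ (-(11/20:ℝ)) := rfl

lemma βi_pos (x : E N) : 0 < G.βi K x := inv_pos.2 (G.β_pos K x)
lemma βi_le_one (x : E N) : G.βi K x ≤ 1 := inv_le_one_of_one_le₀ (G.one_le_β K x)
lemma βh_pos (x : E N) : 0 < G.βh K x := Real.rpow_pos_of_pos (G.β_pos K x) _
lemma βh_le_one (x : E N) : G.βh K x ≤ 1 :=
  Real.rpow_le_one_of_one_le_of_nonpos (G.one_le_β K x) (by norm_num)

lemma βh_sq_mul_βi (x : E N) :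
    G.βh K x * G.βh K x * G.βi K x = (1 + rho2 K (G.pos x)) ^ (-(21/10:ℝ)) := by
  have h := G.β_pos K x
  rw [← β_eq_rho2, βh_apply, βi_apply, ← Real.rpow_add h, ← Real.rpow_neg_one,
    ← Real.rpow_add h]
  norm_num

lemma δ_βi (i : Idx N) (x : E N) :
    G.δ i (G.βi K) x = -(G.βi K x) ^ 2 * G.δ i (G.β K) x := by
  refine G.δ_chain i (G.βi K) (G.β K) (g := fun t => t⁻¹) (fun _ => rfl) ?_
  exact (hasDerivAt_inv (G.β_pos K x).ne').congr_deriv (by simp [βi_apply])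

lemma δ_βh (i : Idx N) (x : E N) :
    G.δ i (G.βh K) x = -(11/20) * (G.βh K x * G.βi K x) * G.δ i (G.β K) x := by
  refine G.δ_chain i (G.βh K) (G.β K) (g := fun t => t ^ (-(11/20:ℝ))) (fun _ => rfl) ?_
  refine (Real.hasDerivAt_rpow_const (Or.inl (G.β_pos K x).ne')).congr_deriv ?_
  rw [Real.rpow_sub_one (G.β_pos K x).ne', βh_apply, βi_apply]; ring

lemma δ_one (i : Idx N) : G.δ i 1 = 0 := by
  have := G.δ_const i 1
  rwa [show SF.const N 1 = 1 from rfl] at this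

lemma δ_β (i : Idx N) : G.δ i (G.β K)
    = 2 * ∑ j ∈ Kᶜ, G.XP 0 j * ((if i = j then 1 else 0) - G.ν i * G.ν j) := by
  rw [β, map_add, δ_one, zero_add, map_sum, Finset.mul_sum]
  refine Finset.sum_congr rfl fun j _ => ?_
  rw [Derivation.leibniz, δ_XP, smul_eq_mul]; ring

lemma Γ_β (f : SF N) : G.Γ (G.β K) f = 2 * ∑ j ∈ Kᶜ, G.XP 0 j * G.δ j f := by
  have h : ∀ i, G.δ i (G.β K) * G.δ i f = 2 * ∑ j ∈ Kᶜ,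
      (G.XP 0 j * ((if i = j then 1 else 0) * G.δ i f) - G.XP 0 j * G.ν j * (G.ν i * G.δ i f)) := by
    intro i
    rw [δ_β, mul_assoc, Finset.sum_mul]
    congr 1
    exact Finset.sum_congr rfl fun j _ => by ring
  rw [Γ_def, Finset.sum_congr rfl fun i _ => h i, ← Finset.mul_sum, Finset.sum_comm]
  congr 1
  refine Finset.sum_congr rfl fun j _ => ?_
  rw [Finset.sum_sub_distrib, ← Finset.mul_sum, ← Finset.mul_sum, tangent]
  simp

lemma Γ_ββ_le (x : E N) : G.Γ (G.β K) (G.β K) x ≤ 4 * G.β K x := by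
  have h1 : ∑ j ∈ Kᶜ, G.XP 0 j * G.δ j (G.β K) = 2 * (∑ j ∈ Kᶜ, G.XP 0 j * G.XP 0 j
      - (∑ j ∈ Kᶜ, G.XP 0 j * G.ν j) * ∑ j ∈ Kᶜ, G.XP 0 j * G.ν j) := by
    rw [Finset.sum_mul, ← Finset.sum_sub_distrib, Finset.mul_sum]
    refine Finset.sum_congr rfl fun j hj => ?_
    have e : ∑ l ∈ Kᶜ, G.XP 0 l * ((if j = l then 1 else 0) - G.ν j * G.ν l)
        = G.XP 0 j - G.ν j * ∑ l ∈ Kᶜ, G.XP 0 l * G.ν l := by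
      simp only [mul_sub, Finset.sum_sub_distrib, mul_ite, mul_one, mul_zero, Finset.sum_ite_eq, hj,
        if_true, Finset.mul_sum]
      congr 1
      exact Finset.sum_congr rfl fun l _ => by ring
    rw [δ_β, e]; ring
  have h2 : ∑ j ∈ Kᶜ, G.XP 0 j * G.XP 0 j = G.β K - 1 := by rw [β]; ring
  rw [Γ_β, h1, h2]
  simp only [SF.mul_apply, SF.sub_apply, SF.two_apply, SF.one_apply]
  nlinarith [mul_self_nonneg ((∑ j ∈ Kᶜ, G.XP 0 j * G.ν j : SF N) x)]

lemma lap_XP (p : Idx N → ℝ) (j : Idx N) : G.lap (G.XP p j) = 0 := by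
  have h1 : ∑ j, G.δ j (G.ν j) = 0 := G.T.trace
  have h : ∀ i, G.δ i (G.δ i (G.XP p j)) = -(G.ν j * G.δ i (G.ν i) + G.ν i * G.δ i (G.ν j)) := by
    intro i
    have h0 : G.δ i (if i = j then (1 : SF N) else 0) = 0 := by
      split_ifs
      · exact G.δ_one i
      · exact map_zero _
    rw [δ_XP, map_sub, h0, Derivation.leibniz, smul_eq_mul, smul_eq_mul]; ring
  rw [lap_def, Finset.sum_congr rfl fun i _ => h i, Finset.sum_neg_distrib,
    Finset.sum_add_distrib, ← Finset.mul_sum, h1, tangent]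
  simp

lemma lap_mul_self (f : SF N) : G.lap (f * f) = 2 * (f * G.lap f) + 2 * G.Γ f f := by
  simp only [lap_def, Γ_def, Finset.mul_sum, ← Finset.sum_add_distrib]
  refine Finset.sum_congr rfl fun i _ => ?_
  rw [Derivation.leibniz, smul_eq_mul, map_add, Derivation.leibniz, smul_eq_mul, smul_eq_mul]; ring

lemma Γ_XP (p : Idx N → ℝ) (j : Idx N) : G.Γ (G.XP p j) (G.XP p j) = 1 - G.ν j * G.ν j := by
  have h : ∀ i, G.δ i (G.XP p j) * G.δ i (G.XP p j)
      = (if i = j then 1 - 2 * (G.ν i * G.ν j) else 0) + G.ν i * G.ν i * (G.ν j * G.ν j) := by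
    intro i
    rw [δ_XP]; split_ifs <;> ring
  rw [Γ_def, Finset.sum_congr rfl fun i _ => h i, Finset.sum_add_distrib, ← Finset.sum_mul, unit]
  simp; ring

lemma lap_β (hK : Kᶜ.card = 7) (x : E N) : 12 ≤ G.lap (G.β K) x := by
  have h0 : G.lap 1 = 0 := by
    rw [lap_def]; simp only [δ_one]; exact Finset.sum_eq_zero fun i _ => map_zero _
  have h : G.lap (G.β K) = 2 * ∑ j ∈ Kᶜ, (1 - G.ν j * G.ν j) := by
    have e : G.lap (G.β K) = G.lap 1 + ∑ j ∈ Kᶜ, G.lap (G.XP 0 j * G.XP 0 j) := by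
      simp only [lap_def, β, map_add, map_sum, Finset.sum_add_distrib]
      rw [Finset.sum_comm]
    rw [e, h0, zero_add, Finset.mul_sum]
    refine Finset.sum_congr rfl fun j _ => ?_
    rw [lap_mul_self, lap_XP, Γ_XP]; ring
  have h1 := G.unit_apply x
  have h2 : ∑ j ∈ Kᶜ, G.ν j x ^ 2 ≤ ∑ j, G.ν j x ^ 2 :=
    Finset.sum_le_univ_sum_of_nonneg fun i => sq_nonneg _
  have h3 : ∑ j ∈ Kᶜ, (1 - G.ν j x ^ 2) = 7 - ∑ j ∈ Kᶜ, G.ν j x ^ 2 := by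
    rw [Finset.sum_sub_distrib, Finset.sum_const, hK]; norm_num
  rw [h]
  simp only [SF.mul_apply, SF.sum_apply, SF.sub_apply, SF.one_apply, SF.two_apply]
  simp only [← sq]
  rw [h3]; linarith

/-- The image under the second fundamental form of the part of the position vector transverse
to `K`. -/
noncomputable def q (j : Idx N) : SF N := ∑ l ∈ Kᶜ, G.A j l * G.XP 0 l

/-- The squared norm of `q`. -/
noncomputable def Q : SF N := ∑ j, G.q K j * G.q K j

lemma Q_apply (x : E N) : G.Q K x = ∑ j, G.q K j x ^ 2 := by simp only [Q, SF.sum_apply, SF.mul_apply, sq]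

lemma A_ν (j : Idx N) : ∑ i, G.A j i * G.ν i = 0 := by
  rw [← G.tangent (G.ν j)]
  refine Finset.sum_congr rfl fun i _ => ?_
  have : G.A j i = G.A i j := G.T.A_symm j i
  rw [this, mul_comm]; rfl

lemma A_δβ (j : Idx N) : ∑ i, G.A j i * G.δ i (G.β K) = 2 * G.q K j := by
  have h : ∀ i, G.A j i * G.δ i (G.β K) = 2 * ∑ l ∈ Kᶜ,
      (G.XP 0 l * ((if i = l then 1 else 0) * G.A j i) - G.XP 0 l * G.ν l * (G.A j i * G.ν i)) := by
    intro i
    rw [δ_β, mul_left_comm, Finset.mul_sum]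
    congr 1
    exact Finset.sum_congr rfl fun j _ => by ring
  rw [Finset.sum_congr rfl fun i _ => h i, ← Finset.mul_sum, Finset.sum_comm, q]
  congr 1
  refine Finset.sum_congr rfl fun l _ => ?_
  rw [Finset.sum_sub_distrib, ← Finset.mul_sum, ← Finset.mul_sum, A_ν]
  simp; ring

lemma q_eq (j : Idx N) : G.q K j = G.δ j (G.s 0) - ∑ k ∈ K, G.A j k * G.XP 0 k := by
  rw [δ_s, ← Finset.sum_add_sum_compl K, q]; ring

/-- `deficit` for `V = -∇β / (2 β)`. If the graph is conical in the coordinates off `K`, then `A V = 0`;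
the vector `q` measures the failure of this. -/
lemma tube_deficit {τ η : ℝ} (hτ : 0 < τ) (hη : 0 < η) (x : E N) :
    -(G.βi K x * G.Γ (G.β K) G.a2 x) - 1 / 2 * (G.βi K x ^ 2 * G.Γ (G.β K) (G.β K) x * G.a2 x)
      - (η * G.Γ (G.aτ hτ) (G.aτ hτ) x + (4 * η⁻¹ + 2) * G.Q K x)
    ≤ G.B2 x - G.Γ (G.aτ hτ) (G.aτ hτ) x := by
  set a := G.aτ hτ with ha
  set c := G.βi K x with hc
  have hc0 : 0 < c := G.βi_pos K x
  have hc1 : c ≤ 1 := G.βi_le_one K x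
  have h := G.deficit hτ x fun i => -(c / 2) * G.δ i (G.β K) x
  have e1 : ∑ i, -(c / 2) * G.δ i (G.β K) x * G.δ i G.a2 x = -(c / 2) * G.Γ (G.β K) G.a2 x := by
    rw [Γ_apply, Finset.mul_sum]; exact Finset.sum_congr rfl fun _ _ => by ring
  have e2 : ∑ i, (-(c / 2) * G.δ i (G.β K) x) ^ 2 = c ^ 2 / 4 * G.Γ (G.β K) (G.β K) x := by
    rw [Γ_apply, Finset.mul_sum]; exact Finset.sum_congr rfl fun _ _ => by ring
  have e3 : ∀ j, ∑ i, G.A j i x * (-(c / 2) * G.δ i (G.β K) x) = -c * G.q K j x := by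
    intro j
    have := congrArg (fun f : SF N => f x) (G.A_δβ K j)
    simp only [SF.sum_apply, SF.mul_apply, SF.two_apply] at this
    rw [← Finset.sum_congr rfl fun i _ => show -(c / 2) * (G.A j i x * G.δ i (G.β K) x) = _ by ring,
      ← Finset.mul_sum, this]; ring
  simp only [e1, e2, e3] at h
  have hQ := G.Q_apply K x
  set t : Idx N → ℝ := fun k => G.δ k a x / a x with ht
  set w : Idx N → ℝ := fun j => ∑ k, G.A j k x * t k with hw
  have hΓ := G.Γ_apply a a x
  have hapos : 0 < a x := G.aτ_pos hτ x
  have hw2 : ∑ j, w j ^ 2 ≤ G.Γ a a x := by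
    have k1 : ∑ j, w j ^ 2 ≤ G.a2 x * ∑ k, t k ^ 2 := by
      rw [a2_apply, Finset.sum_mul]
      exact Finset.sum_le_sum fun j _ => Finset.sum_mul_sq_le_sq_mul_sq _ _ _
    have k2 : ∑ k, t k ^ 2 = G.Γ a a x / a x ^ 2 := by
      rw [hΓ, Finset.sum_div]
      exact Finset.sum_congr rfl fun k _ => by rw [ht]; ring
    have k3 := G.aτ_sq_apply hτ x
    rw [k2] at k1
    refine k1.trans ?_
    rw [mul_div_assoc', div_le_iff₀ (by positivity), mul_comm]
    exact mul_le_mul_of_nonneg_left (by rw [k3]; nlinarith [sq_nonneg τ]) (G.Γ_self_nonneg a x)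
  have hm : ∑ j, w j * (-c * G.q K j x) ≤ η / 4 * ∑ j, w j ^ 2 + η⁻¹ * ∑ j, G.q K j x ^ 2 := by
    rw [Finset.mul_sum, Finset.mul_sum, ← Finset.sum_add_distrib]
    refine Finset.sum_le_sum fun j _ => ?_
    have m1 : 0 ≤ η⁻¹ * (η / 2 * w j + c * G.q K j x) ^ 2 := by positivity
    have m2 : η⁻¹ * (η / 2 * w j + c * G.q K j x) ^ 2
        = η / 4 * w j ^ 2 + w j * (c * G.q K j x) + η⁻¹ * (c ^ 2 * G.q K j x ^ 2) := by
      field_simp; ring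
    have m3 : η⁻¹ * (c ^ 2 * G.q K j x ^ 2) ≤ η⁻¹ * (1 * G.q K j x ^ 2) := by
      gcongr; exact pow_le_one₀ hc0.le hc1
    linarith
  have hq2 : ∑ j, (-c * G.q K j x) ^ 2 ≤ G.Q K x := by
    rw [hQ]
    refine Finset.sum_le_sum fun j _ => ?_
    rw [mul_pow, neg_sq]
    have := mul_le_mul_of_nonneg_right (pow_le_one₀ hc0.le hc1 : c ^ 2 ≤ 1) (sq_nonneg (G.q K j x))
    linarith
  rw [← hQ] at hm
  have hw3 : η / 4 * ∑ j, w j ^ 2 ≤ η / 4 * G.Γ a a x := by gcongr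
  have hsplit : ∑ x_1, w x_1 * (-c * G.q K x_1 x) = ∑ j, w j * (-c * G.q K j x) := rfl
  linarith

lemma Γ_βh (f : SF N) (x : E N) :
    G.Γ f (G.βh K) x = -(11/20) * (G.βh K x * G.βi K x) * G.Γ f (G.β K) x := by
  simp only [Γ_apply, Finset.mul_sum, δ_βh]
  exact Finset.sum_congr rfl fun _ _ => by ring

lemma Γ_βi (f : SF N) (x : E N) :
    G.Γ f (G.βi K) x = -(G.βi K x) ^ 2 * G.Γ f (G.β K) x := by
  simp only [Γ_apply, Finset.mul_sum, δ_βi]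
  exact Finset.sum_congr rfl fun _ _ => by ring

/-- The weight in `tube_main`. -/
noncomputable def βw : SF N := G.βh K * G.βh K * G.βi K

lemma βw_apply (x : E N) : G.βw K x = G.βh K x * G.βh K x * G.βi K x := rfl

/-- The stability inequality for `√(|A|² + τ²) β^(-b/2) ψ` with `b = 11/10`: the Kato deficit is bounded
below by `tube_deficit`, and the gradient of `|A|²` in it is integrated by parts against `∇β`. Since
`Δ β ≥ 12` and `|∇β|² ≤ 4 β`, the terms without derivatives of `ψ` have the coefficient
`12 - (6 + 4 * b + b ^ 2) = 39/100`; half of it pays for the cross terms. -/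
lemma tube_main (hK : Kᶜ.card = 7) {τ η : ℝ} (hτ : 0 < τ) (hη : 0 < η) {ψ : SF N} (hψ : CS ψ) :
    1 / 5 * G.I (G.a2 * (G.βw K * (ψ * ψ))) ≤
      63 * G.I (G.a2 * (G.βh K * G.βh K * G.Γ ψ ψ))
      + τ ^ 2 * G.I (G.Γ (G.βh K * ψ) (G.βh K * ψ))
      + G.I ((η • G.Γ (G.aτ hτ) (G.aτ hτ) + (4 * η⁻¹ + 2) • G.Q K)
          * (G.βh K * ψ * (G.βh K * ψ))) := by
  set h := G.βh K with hh
  set c := G.βi K with hc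
  set B := G.β K with hB
  set φ := h * ψ with hφd
  set g := G.βw K * (ψ * ψ) with hgd
  set E' := η • G.Γ (G.aτ hτ) (G.aτ hτ) + (4 * η⁻¹ + 2) • G.Q K with hE
  have hφ : CS φ := hψ.mul_l h
  have hg : CS g := (hψ.mul_r ψ).mul_l _
  have hψψ : CS (G.Γ ψ ψ) := hψ.Γ G ψ
  have hφφ : CS (G.Γ φ φ) := hφ.Γ G φ
  have S := G.simons_stability hτ hφ
  have L := G.I_lap_mul B (hg.mul_l G.a2)
  have hBag : CS (G.Γ B (G.a2 * g)) := by rw [Γ_comm]; exact (hg.mul_l _).Γ G B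
  have c1 : CS (G.a2 * (h * h * G.Γ ψ ψ)) := (hψψ.mul_l _).mul_l _
  have c3 : CS (E' * (φ * φ)) := (hφ.mul_r φ).mul_l _
  have c4 : CS ((G.B2 - G.Γ (G.aτ hτ) (G.aτ hτ)) * (φ * φ)) := (hφ.mul_r φ).mul_l _
  have c5 : CS ((G.a2 + SF.const N (τ ^ 2)) * G.Γ φ φ) := hφφ.mul_l _
  have c6 : CS (G.lap B * (G.a2 * g)) := (hg.mul_l _).mul_l _
  have key := G.I_mono (f := (1 / 5 : ℝ) • (G.a2 * g))
    (h := ((63 : ℝ) • (G.a2 * (h * h * G.Γ ψ ψ)) + τ ^ 2 • G.Γ φ φ + E' * (φ * φ))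
      + (((G.B2 - G.Γ (G.aτ hτ) (G.aτ hτ)) * (φ * φ) - (G.a2 + SF.const N (τ ^ 2)) * G.Γ φ φ)
      + (G.lap B * (G.a2 * g) + G.Γ B (G.a2 * g))))
    ((hg.mul_l _).smul _) ((((c1.smul _).add (hφφ.smul _)).add c3).add ((c4.sub c5).add (c6.add hBag)))
    (fun x => ?_)
  · rw [I_add _ (((c1.smul _).add (hφφ.smul _)).add c3) ((c4.sub c5).add (c6.add hBag)),
      I_add _ ((c1.smul _).add (hφφ.smul _)) c3, I_add _ (c1.smul _) (hφφ.smul _),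
      I_add _ (c4.sub c5) (c6.add hBag), I_sub _ c4 c5, I_add _ c6 hBag, I_smul, I_smul, I_smul] at key
    linarith
  · have t := G.tube_deficit K hτ hη x
    have l := G.lap_β K hK x
    have b4 := G.Γ_ββ_le K x
    have b0 := G.Γ_self_nonneg (G.β K) x
    have hφφe : G.Γ φ φ x = h x ^ 2 * (G.Γ ψ ψ x - 11/10 * (ψ x * c x) * G.Γ ψ B x
        + (11/20) ^ 2 * (ψ x * c x) ^ 2 * G.Γ B B x) := by
      rw [hφd, Γ_mul_left, Γ_mul_right, Γ_mul_right]
      simp only [SF.add_apply, SF.mul_apply]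
      rw [Γ_comm _ h ψ, Γ_βh, Γ_βh, Γ_comm _ (G.βh K) (G.β K), Γ_βh]
      ring
    have hge : G.Γ B (G.a2 * g) x = g x * G.Γ B G.a2 x
        + G.a2 x * (h x ^ 2 * (2 * (c x * ψ x) * G.Γ ψ B x - 21/10 * (c x * ψ x) ^ 2 * G.Γ B B x)) := by
      rw [hgd, βw]
      simp only [Γ_mul_right, SF.add_apply, SF.mul_apply]
      rw [Γ_βh, Γ_βi, Γ_comm _ B ψ]
      ring
    have hgx : g x = h x ^ 2 * c x * ψ x ^ 2 := by
      rw [hgd, βw]; simp only [SF.mul_apply]; ring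
    have hφx : φ x = h x * ψ x := rfl
    have hEx : E' x = η * G.Γ (G.aτ hτ) (G.aτ hτ) x + (4 * η⁻¹ + 2) * G.Q K x := rfl
    simp only [SF.add_apply, SF.sub_apply, SF.mul_apply, SF.smul_apply, SF.const_apply]
    rw [hge, hφφe, hgx, hφx, hEx]
    rw [← hc, ← hB] at t
    have ha := G.a2_nonneg x
    have hc0 : 0 < c x := G.βi_pos K x
    have hcB : c x * B x = 1 := inv_mul_cancel₀ (G.β_pos K x).ne'
    -- The small parameter `1/40` keeps the cross term within the margin left by the weights.
    have yy := G.Γ_young B ψ (-(c x * ψ x) / 40) x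
    rw [Γ_comm _ B ψ] at yy
    have q1 : (c x * ψ x) ^ 2 * G.Γ B B x ≤ 4 * (c x * ψ x ^ 2) := by
      calc (c x * ψ x) ^ 2 * G.Γ B B x ≤ (c x * ψ x) ^ 2 * (4 * B x) := by gcongr
        _ = 4 * (c x * B x) * (c x * ψ x ^ 2) := by ring
        _ = _ := by rw [hcB]; ring
    have q2 : 12 * (c x * ψ x ^ 2) ≤ G.lap B x * (c x * ψ x ^ 2) := by gcongr
    have q3 : 0 ≤ c x * ψ x ^ 2 := by positivity
    have q4 : 0 ≤ G.lap B x * (c x * ψ x ^ 2) - 1/5 * (c x * ψ x ^ 2)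
        + 31/10 * (c x * ψ x * G.Γ ψ B x) - 11610/4000 * ((c x * ψ x) ^ 2 * G.Γ B B x)
        + 62 * G.Γ ψ ψ x := by linarith
    have q5 := mul_nonneg (mul_nonneg ha (sq_nonneg (h x))) q4
    have q6 := mul_le_mul_of_nonneg_right t (sq_nonneg (h x * ψ x))
    linarith

end MinGraph

/-! ### Curvature in tubes along a sequence -/

namespace MinGraph

variable {N : ℕ}

section Single

variable (G : MinGraph N) (K : Finset (Idx N))

lemma tr_tubeTF {R : ℝ} (hR : 0 < R) (x : E N) :
    G.tr (tubeTF K hR) x = G.βw K x * G.cut R x := by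
  rw [tr_apply, tubeTF_apply, βw_apply, βh_sq_mul_βi, cut_apply, norm_pos_sq]

lemma Γ_βh_self_le (x : E N) : G.Γ (G.βh K) (G.βh K) x ≤ 2 * G.βw K x := by
  rw [Γ_βh, Γ_comm, Γ_βh, βw_apply]
  have h := G.Γ_ββ_le K x
  have h1 := G.βi_pos K x
  have hc : G.βi K x * G.β K x = 1 := inv_mul_cancel₀ (G.β_pos K x).ne'
  have h2 : (G.βh K x * G.βi K x) ^ 2 * G.Γ (G.β K) (G.β K) x ≤ 4 * (G.βh K x * G.βh K x * G.βi K x) := by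
    calc _ ≤ (G.βh K x * G.βi K x) ^ 2 * (4 * G.β K x) := by gcongr
      _ = 4 * (G.βh K x * G.βh K x * G.βi K x) * (G.βi K x * G.β K x) := by ring
      _ = _ := by rw [hc, mul_one]
  have h0 := G.βh_pos K x
  have h3 : 0 ≤ G.βh K x * G.βh K x * G.βi K x := by positivity
  linarith

lemma Γ_βh_cut_le {S : ℝ} (hS : 1 ≤ S) (x : E N) :
    G.Γ (G.βh K * G.cut S) (G.βh K * G.cut S) x
      ≤ (18 * cutC + 4) * (G.βw K x * G.cut (2 * S) x) := by
  have hS0 : 0 < S := one_pos.trans_le hS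
  have hw : 0 ≤ G.βw K x := by
    have := G.βi_pos K x; have := G.βh_pos K x; rw [βw_apply]; positivity
  refine (G.Γ_mul_self_le (G.βh K) (G.cut S) x).trans ?_
  have h1 : G.cut S x ^ 2 * G.Γ (G.βh K) (G.βh K) x ≤ G.cut (2 * S) x * (2 * G.βw K x) := by
    have e1 : G.cut S x ^ 2 ≤ G.cut (2 * S) x := by
      have a1 := G.cut_sq_le S x
      have a2 := G.cut_le_sq hS0 x
      have a3 := G.cut_sq_le (2 * S) x
      nlinarith
    exact mul_le_mul e1 (G.Γ_βh_self_le K x) (G.Γ_self_nonneg _ x) (G.cut_nonneg _ x)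
  have h2 : G.βh K x ^ 2 * G.Γ (G.cut S) (G.cut S) x
      ≤ 9 * cutC * (G.βw K x * G.cut (2 * S) x) := by
    have hcc := cutC_pos
    by_cases hx : 2 * S ^ 2 ≤ G.r2 0 x
    · rw [G.Γ_cut_zero hS0 hx, mul_zero]
      have := G.cut_nonneg (2 * S) x
      positivity
    · have hβ : G.β K x ≤ 9 * S ^ 2 := by
        have := G.β_le K x
        push Not at hx
        nlinarith
      have hi : (S ^ 2)⁻¹ ≤ 9 * G.βi K x := by
        rw [βi_apply, ← div_eq_mul_inv, inv_eq_one_div, div_le_div_iff₀ (by positivity) (G.β_pos K x)]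
        linarith
      calc _ ≤ G.βh K x ^ 2 * (cutC / S ^ 2 * G.cut (2 * S) x) := by
            gcongr; exact G.Γ_cut_le hS0 x
        _ = G.βh K x ^ 2 * (cutC * G.cut (2 * S) x) * (S ^ 2)⁻¹ := by rw [div_eq_mul_inv]; ring
        _ ≤ G.βh K x ^ 2 * (cutC * G.cut (2 * S) x) * (9 * G.βi K x) := by
            have := G.cut_nonneg (2 * S) x
            gcongr
        _ = _ := by rw [βw_apply]; ring
  linarith

end Single

lemma tube_energy (K : Finset (Idx N)) (hK : Kᶜ.card = 7) :
    ∃ C : ℝ, 0 ≤ C ∧ ∀ (G : MinGraph N) (S : ℝ), 1 ≤ S →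
      G.I (G.Γ (G.βh K * G.cut S) (G.βh K * G.cut S)) ≤ C * (S ^ K.card * S ^ (9/5:ℝ)) := by
  obtain ⟨C, hC0, hC⟩ := tube_area K hK
  have hcc := cutC_pos
  refine ⟨(18 * cutC + 4) * (C * (2 ^ K.card * 2 ^ (9/5:ℝ))), by positivity, fun G S hS => ?_⟩
  have hS0 : 0 < S := one_pos.trans_le hS
  have hS2 : 1 ≤ 2 * S := by linarith
  have hc : CS (G.βh K * G.cut S) := (G.cut_CS hS0).mul_l _
  have h1 := G.I_mono (h := (18 * cutC + 4) • G.tr (tubeTF K (one_pos.trans_le hS2))) (hc.Γ G _)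
    ((G.tr_CS _).smul _) fun x => by
      rw [SF.smul_apply, tr_tubeTF]; exact G.Γ_βh_cut_le K hS x
  rw [I_smul] at h1
  refine h1.trans ?_
  rw [mul_assoc]
  gcongr
  refine (hC G (2 * S) hS2).trans (le_of_eq ?_)
  rw [mul_pow, Real.mul_rpow (by norm_num) hS0.le]; ring

variable {G : ℕ → MinGraph N}

/-- By homogeneity, `A X` is the gradient of the support function; the coordinates in `K` contribute
only gradients of the `ν_k` with `k ∈ K`. -/
lemma Q_le (G : MinGraph N) (K : Finset (Idx N)) (x : E N) :
    G.Q K x ≤ (1 + K.card) * (G.Γ (G.s 0) (G.s 0) x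
      + ∑ k ∈ K, G.r2 0 x * G.Γ (G.ν k) (G.ν k) x) := by
  have hA : ∀ j k, G.A j k x = G.δ j (G.ν k) x := fun _ _ => rfl
  have h1 : ∀ j, G.q K j x ^ 2 ≤ (1 + K.card) * (G.δ j (G.s 0) x ^ 2
      + ∑ k ∈ K, G.r2 0 x * G.δ j (G.ν k) x ^ 2) := by
    intro j
    rw [q_eq]
    simp only [SF.sub_apply, SF.sum_apply, SF.mul_apply]
    have c1 : (∑ k ∈ K, G.A j k x * G.XP 0 k x) ^ 2 ≤ K.card * ∑ k ∈ K, G.r2 0 x * G.δ j (G.ν k) x ^ 2 := by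
      refine sq_sum_le_card_mul_sum_sq.trans ?_
      gcongr with k hk
      rw [mul_pow, mul_comm, hA]
      gcongr
      rw [r2_apply]
      simp only [XP_apply]
      exact Finset.single_le_sum (f := fun i => (G.X i x - (0 : Idx N → ℝ) i) ^ 2)
        (fun i _ => sq_nonneg _) (Finset.mem_univ k)
    set S := ∑ k ∈ K, G.A j k x * G.XP 0 k x
    set T := ∑ k ∈ K, G.r2 0 x * G.δ j (G.ν k) x ^ 2
    set a := G.δ j (G.s 0) x
    have hT : 0 ≤ T := Finset.sum_nonneg fun _ _ => mul_nonneg (G.r2_nonneg 0 x) (sq_nonneg _)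
    have hm : (0:ℝ) ≤ K.card := Nat.cast_nonneg _
    rcases hm.eq_or_lt with h0 | h0
    · rw [← h0, zero_mul] at c1
      have : S = 0 := by nlinarith
      rw [this, ← h0]; nlinarith
    · have y : 0 ≤ (K.card * a + S) ^ 2 / K.card := by positivity
      have y2 : (K.card * a + S) ^ 2 / K.card = K.card * a ^ 2 + 2 * a * S + S ^ 2 / K.card := by
        field_simp; ring
      have y3 : S ^ 2 / K.card ≤ T := by rw [div_le_iff₀ h0]; linarith
      nlinarith
  rw [Q_apply]
  refine (Finset.sum_le_sum fun j _ => h1 j).trans (le_of_eq ?_)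
  rw [← Finset.mul_sum, Finset.sum_add_distrib, Finset.sum_comm]
  simp only [Γ_apply, Finset.mul_sum, sq]

lemma Neg.sum {ι : Type*} (s : Finset ι) {f : ι → ℕ → SF N} (h : ∀ i ∈ s, Neg G (f i)) :
    Neg G fun n => ∑ i ∈ s, f i n := by
  intro R hR
  have := tendsto_finsetSum s fun i hi => h i hi R hR
  rw [Finset.sum_const_zero] at this
  refine this.congr fun n => ?_
  rw [Finset.sum_mul]
  have hc : CS ((G n).cut R) := (G n).cut_CS hR
  clear this h
  classical
  induction s using Finset.induction_on with
  | empty => simp [I]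
  | insert a s ha ih =>
    have e1 : CS (f a n * (G n).cut R) := hc.mul_l (f a n)
    have e2 : CS (∑ i ∈ s, f i n * (G n).cut R) :=
      CS.sum s (fun i => f i n * (G n).cut R) fun i _ => hc.mul_l (f i n)
    rw [Finset.sum_insert ha, Finset.sum_insert ha, I_add _ e1 e2, ih]

variable {K : Finset (Idx N)}

lemma Neg.Q (hN : 1 ≤ N) (hs : Neg G fun n => (G n).s 0 * (G n).s 0)
    (hν : ∀ k ∈ K, Neg G fun n => (G n).Γ ((G n).ν k) ((G n).ν k)) :
    Neg G fun n => (G n).Q K := by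
  have h1 := Neg.jacobi hN (fun n => (G n).lap_s 0) (fun n x => (G n).s_sq_le 0 x) hs
  have h2 := Neg.sum K hν
  refine Neg.of_le h1 h2 (fun n x => ?_) fun R hR =>
    ⟨(1 + K.card) * (1 + 2 * R ^ 2), fun n x hx => ((G n).Q_le K x).trans ?_⟩
  · rw [Q_apply]; exact Finset.sum_nonneg fun _ _ => sq_nonneg _
  · have n1 := (G n).Γ_self_nonneg ((G n).s 0) x
    have n2 : 0 ≤ ∑ k ∈ K, (G n).Γ ((G n).ν k) ((G n).ν k) x :=
      Finset.sum_nonneg fun k _ => (G n).Γ_self_nonneg _ x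
    have n3 := (G n).r2_nonneg 0 x
    rw [← Finset.mul_sum, SF.sum_apply]
    have n4 := mul_le_mul_of_nonneg_right hx n2
    have n5 : (0:ℝ) ≤ 1 + K.card := by positivity
    rw [mul_assoc, mul_assoc, ← mul_add]
    refine mul_le_mul_of_nonneg_left ?_ n5
    have n6 := mul_nonneg (sq_nonneg R) n1
    linarith

/-- If the support function and the normal components along the axes in `K` become negligible, the
curvature weighted along a tube of length `L` grows more slowly than the number of unit tubes. -/
lemma tube_curvature (hN : 1 ≤ N) (hK : Kᶜ.card = 7)
    (hs : Neg G fun n => (G n).s 0 * (G n).s 0)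
    (hν : ∀ k ∈ K, Neg G fun n => (G n).Γ ((G n).ν k) ((G n).ν k)) :
    ∃ C : ℝ, 0 ≤ C ∧ ∀ L : ℝ, 1 ≤ L → ∀ᶠ n in atTop,
      (G n).I ((G n).a2 * ((G n).βw K * (G n).cut L)) ≤ C * (L ^ K.card * L ^ (-(1/5):ℝ)) := by
  obtain ⟨C, hC0, hC⟩ := tube_energy K hK
  have hQ := Neg.Q hN hs hν
  have hcc := cutC_pos
  refine ⟨5 * (63 * (cutC * (C * (8 ^ K.card * 8 ^ (9/5:ℝ))))
    + C * (2 ^ K.card * 2 ^ (9/5:ℝ)) + 2), by positivity, fun L hL => ?_⟩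
  have hL0 : 0 < L := one_pos.trans_le hL
  set P := L ^ K.card * L ^ (-(1/5):ℝ) with hP
  have hP0 : 0 < P := by positivity
  have hPL : L ^ K.card * L ^ (9/5:ℝ) = L ^ 2 * P := by
    have : L ^ (9/5:ℝ) = L ^ 2 * L ^ (-(1/5):ℝ) := by
      rw [← Real.rpow_natCast, ← Real.rpow_add hL0]; norm_num
    rw [hP, this]; ring
  have hR : 0 < 2 * L := by positivity
  have hτ : 0 < L⁻¹ := by positivity
  obtain ⟨M, hM0, hM⟩ := bdd_Γ_aτ G hN hτ (2 * L) hR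
  have hη : 0 < P / (M + 1) := by positivity
  set η := P / (M + 1) with hηd
  have hQ' := (hQ (2 * L) hR).const_mul (4 * η⁻¹ + 2)
  rw [mul_zero] at hQ'
  filter_upwards [hQ'.eventually (gt_mem_nhds hP0)] with n hn
  have hψ : CS ((G n).cut (2 * L)) := (G n).cut_CS hR
  have hw : ∀ x, 0 ≤ (G n).βw K x := fun x => by
    have := (G n).βi_pos K x; have := (G n).βh_pos K x; rw [βw_apply]; positivity
  have main := (G n).tube_main K hK hτ hη hψ
  have t0 : (G n).I ((G n).a2 * ((G n).βw K * (G n).cut L))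
      ≤ (G n).I ((G n).a2 * ((G n).βw K * ((G n).cut (2 * L) * (G n).cut (2 * L)))) := by
    refine I_mono _ ((((G n).cut_CS hL0).mul_l _).mul_l _) (((hψ.mul_l _).mul_l _).mul_l _) fun x => ?_
    simp only [SF.mul_apply]
    exact mul_le_mul_of_nonneg_left (mul_le_mul_of_nonneg_left ((G n).cut_le_sq hL0 x) (hw x))
      ((G n).a2_nonneg x)
  have t1 : (G n).I ((G n).a2 * ((G n).βh K * (G n).βh K * (G n).Γ ((G n).cut (2 * L)) ((G n).cut (2 * L))))
      ≤ cutC * (C * (8 ^ K.card * 8 ^ (9/5:ℝ))) * P := by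
    have h8 : 0 < 2 * (2 * (2 * L)) := by positivity
    set φ := (G n).βh K * (G n).cut (2 * (2 * (2 * L))) with hφ
    have hφc : CS φ := ((G n).cut_CS h8).mul_l _
    have s1 := (G n).stability hφc
    have s2 := hC (G n) (2 * (2 * (2 * L))) (by linarith)
    have s3 : (G n).I ((G n).a2 * ((G n).βh K * (G n).βh K * (G n).Γ ((G n).cut (2 * L)) ((G n).cut (2 * L))))
        ≤ (G n).I ((cutC / (2 * L) ^ 2) • ((G n).a2 * (φ * φ))) := by
      refine I_mono _ (((hψ.Γ (G n) _).mul_l _).mul_l _) (((hφc.mul_l _).mul_l _).smul _) fun x => ?_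
      simp only [SF.mul_apply, SF.smul_apply, hφ]
      have u1 := (G n).Γ_cut_le hR x
      have u2 := (G n).cut_le_sq (show 0 < 2 * (2 * L) by positivity) x
      have u3 : (G n).Γ ((G n).cut (2 * L)) ((G n).cut (2 * L)) x
        ≤ cutC / (2 * L) ^ 2 * ((G n).cut (2 * (2 * (2 * L))) x * (G n).cut (2 * (2 * (2 * L))) x) :=
        u1.trans (mul_le_mul_of_nonneg_left u2 (by positivity))
      have u4 : 0 ≤ (G n).a2 x * ((G n).βh K x * (G n).βh K x) :=
        mul_nonneg ((G n).a2_nonneg x) (mul_self_nonneg _)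
      have := mul_le_mul_of_nonneg_left u3 u4
      linarith
    rw [I_smul] at s3
    have e8 : 2 * (2 * (2 * L)) = 8 * L := by ring
    have s4 : (2 * (2 * (2 * L))) ^ K.card * (2 * (2 * (2 * L))) ^ (9/5:ℝ)
        = 8 ^ K.card * 8 ^ (9/5:ℝ) * (L ^ 2 * P) := by
      rw [e8, ← hPL, mul_pow, Real.mul_rpow (by norm_num) hL0.le]; ring
    rw [s4] at s2
    refine s3.trans ((mul_le_mul_of_nonneg_left (s1.trans s2) (by positivity)).trans ?_)
    have : cutC / (2 * L) ^ 2 * (C * (8 ^ K.card * 8 ^ (9/5:ℝ) * (L ^ 2 * P)))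
      = 1 / 4 * (cutC * (C * (8 ^ K.card * 8 ^ (9/5:ℝ))) * P) := by field_simp; ring
    rw [this]
    have : 0 ≤ cutC * (C * (8 ^ K.card * 8 ^ (9/5:ℝ))) * P := by positivity
    linarith
  have t2 : L⁻¹ ^ 2 * (G n).I ((G n).Γ ((G n).βh K * (G n).cut (2 * L)) ((G n).βh K * (G n).cut (2 * L)))
      ≤ C * (2 ^ K.card * 2 ^ (9/5:ℝ)) * P := by
    have s2 := hC (G n) (2 * L) (by linarith)
    rw [mul_pow, Real.mul_rpow (by norm_num) hL0.le] at s2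
    refine (mul_le_mul_of_nonneg_left s2 (by positivity)).trans (le_of_eq ?_)
    rw [show (2:ℝ) ^ K.card * L ^ K.card * (2 ^ (9/5:ℝ) * L ^ (9/5:ℝ))
      = 2 ^ K.card * 2 ^ (9/5:ℝ) * (L ^ K.card * L ^ (9/5:ℝ)) by ring, hPL]
    field_simp
  have t3 : (G n).I ((η • (G n).Γ ((G n).aτ hτ) ((G n).aτ hτ) + (4 * η⁻¹ + 2) • (G n).Q K)
      * ((G n).βh K * (G n).cut (2 * L) * ((G n).βh K * (G n).cut (2 * L)))) ≤ 2 * P := by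
    have s1 : (G n).I ((η • (G n).Γ ((G n).aτ hτ) ((G n).aτ hτ) + (4 * η⁻¹ + 2) • (G n).Q K)
      * ((G n).βh K * (G n).cut (2 * L) * ((G n).βh K * (G n).cut (2 * L))))
      ≤ (G n).I (η • ((G n).Γ ((G n).aτ hτ) ((G n).aτ hτ) * (G n).cut (2 * L))
        + (4 * η⁻¹ + 2) • ((G n).Q K * (G n).cut (2 * L))) := by
      refine I_mono _ (((hψ.mul_l _).mul_l _).mul_l _)
        (((hψ.mul_l _).smul _).add ((hψ.mul_l _).smul _)) fun x => ?_
      simp only [SF.add_apply, SF.mul_apply, SF.smul_apply]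
      have u1 := (G n).Γ_self_nonneg ((G n).aτ hτ) x
      have u2 : 0 ≤ (G n).Q K x := by rw [Q_apply]; exact Finset.sum_nonneg fun _ _ => sq_nonneg _
      have u3 : (G n).βh K x * (G n).cut (2 * L) x * ((G n).βh K x * (G n).cut (2 * L) x)
          ≤ (G n).cut (2 * L) x := by
        have v1 := (G n).βh_le_one K x
        have v0 := (G n).βh_pos K x
        have v2 := (G n).cut_sq_le (2 * L) x
        have v3 : (G n).βh K x * (G n).βh K x ≤ 1 := by nlinarith
        have v4 := mul_le_mul_of_nonneg_right v3 (mul_self_nonneg ((G n).cut (2 * L) x))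
        linarith
      have u4 := mul_le_mul_of_nonneg_left u3
        (show 0 ≤ η * (G n).Γ ((G n).aτ hτ) ((G n).aτ hτ) x + (4 * η⁻¹ + 2) * (G n).Q K x by positivity)
      linarith
    rw [I_add _ ((hψ.mul_l _).smul _) ((hψ.mul_l _).smul _), I_smul, I_smul] at s1
    have s2 : η * (G n).I ((G n).Γ ((G n).aτ hτ) ((G n).aτ hτ) * (G n).cut (2 * L)) ≤ P := by
      calc _ ≤ η * M := by gcongr; exact hM n
        _ ≤ η * (M + 1) := by gcongr; linarith
        _ = P := by rw [hηd]; field_simp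
    linarith
  linarith

end MinGraph

/-! ### Directional components of the normal -/

namespace MinGraph

variable {N : ℕ} {G : ℕ → MinGraph N}

/-- A linear combination of two nonnegative normal components with negligible curvature is itself
nearly constant. -/
lemma Neg.Γ_comb {e e' : W N} (h0 : ∀ n x, 0 ≤ (G n).νe e x)
    (h : Neg G fun n => (G n).a2 * (G n).νe e) (h0' : ∀ n x, 0 ≤ (G n).νe e' x)
    (h' : Neg G fun n => (G n).a2 * (G n).νe e') (a b : ℝ) {f : ℕ → SF N}
    (hf : ∀ n, f n = a • (G n).νe e + b • (G n).νe e') :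
    Neg G (fun n => (G n).Γ (f n) (f n)) := by
  refine Neg.of_le (Neg.Γ_νe h0 h) (Neg.Γ_νe h0' h') (fun n x => (G n).Γ_self_nonneg _ x)
    fun R _ => ⟨2 * a ^ 2 + 2 * b ^ 2, fun n x _ => ?_⟩
  rw [hf]
  refine ((G n).Γ_lin_le _ _ a b x).trans ?_
  nlinarith [mul_nonneg (sq_nonneg b) ((G n).Γ_self_nonneg ((G n).νe e) x),
    mul_nonneg (sq_nonneg a) ((G n).Γ_self_nonneg ((G n).νe e') x)]

/-- The two components are bounded, so the square of a combination is at most a multiple of their sum. -/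
lemma Neg.a2_comb {e e' : W N} (h0 : ∀ n x, 0 ≤ (G n).νe e x)
    (h : Neg G fun n => (G n).a2 * (G n).νe e) (h0' : ∀ n x, 0 ≤ (G n).νe e' x)
    (h' : Neg G fun n => (G n).a2 * (G n).νe e') (a b : ℝ) {f : ℕ → SF N}
    (hf : ∀ n, f n = a • (G n).νe e + b • (G n).νe e') :
    Neg G (fun n => (G n).a2 * (f n * f n)) := by
  refine Neg.of_le h h' (fun n x => mul_nonneg ((G n).a2_nonneg x) (mul_self_nonneg _))
    fun R _ => ⟨2 * a ^ 2 * ‖e‖ + 2 * b ^ 2 * ‖e'‖, fun n x _ => ?_⟩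
  rw [hf]
  simp only [SF.mul_apply, SF.add_apply, SF.smul_apply]
  have b1 := (le_abs_self _).trans ((G n).abs_νe_le e x)
  have b2 := (le_abs_self _).trans ((G n).abs_νe_le e' x)
  have c1 := h0 n x
  have c2 := h0' n x
  set u := (G n).νe e x
  set w := (G n).νe e' x
  have m : (a * u + b * w) * (a * u + b * w)
      ≤ (2 * a ^ 2 * ‖e‖ + 2 * b ^ 2 * ‖e'‖) * u + (2 * a ^ 2 * ‖e‖ + 2 * b ^ 2 * ‖e'‖) * w := by
    have k1 : a ^ 2 * (u * u) ≤ a ^ 2 * (‖e‖ * u) := by gcongr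
    have k2 : b ^ 2 * (w * w) ≤ b ^ 2 * (‖e'‖ * w) := by gcongr
    have k3 : 0 ≤ b ^ 2 * (‖e'‖ * u) := by positivity
    have k4 : 0 ≤ a ^ 2 * (‖e‖ * w) := by positivity
    nlinarith [sq_nonneg (a * u - b * w)]
  have := mul_le_mul_of_nonneg_left m ((G n).a2_nonneg x)
  linarith

end MinGraph

/-! ### Deformations of test functions -/

namespace MinGraph

variable {N : ℕ} (G : MinGraph N)

/-- The integral of `f` against the restriction of `h` to the graph. -/
noncomputable def II (f : SF N) (h : W N → ℝ) : ℝ := ∫ x, f x * h (G.pos x) ∂G.μ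

lemma II_TF (f : SF N) (ζ : TF N) : G.II f ζ = G.I (f * G.tr ζ) := rfl

lemma pos_continuous : Continuous G.pos := G.pos_contDiff.continuous

lemma II_integrable (f : SF N) {h : W N → ℝ} (hc : Continuous h) {R : ℝ}
    (hR : ∀ y, R < ‖y‖ → h y = 0) : Integrable (fun x => f x * h (G.pos x)) G.μ := by
  have h2 : Continuous fun x => f x * h (G.pos x) :=
    (SF.continuous f).mul (hc.comp G.pos_continuous)
  have h3 : HasCompactSupport fun x => f x * h (G.pos x) := by
    refine HasCompactSupport.of_support_subset_isCompact
      (isCompact_closedBall (0 : E N) (max R 0)) fun x hx => ?_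
    rw [mem_closedBall_zero_iff]
    have h4 : ‖G.pos x‖ ≤ R := by
      by_contra hc
      exact hx (by simp [hR _ (not_le.1 hc)])
    have h5 := G.sum_sq_le_r2 x
    rw [← norm_pos_sq] at h5
    exact (abs_le_of_sq_le_sq' h5 (norm_nonneg _)).2.trans (h4.trans (le_max_left _ _))
  exact h2.integrable_of_hasCompactSupport h3

/-- A mean value inequality for a one-parameter family of test functions. -/
lemma path_le (f : SF N) {Z Z' : ℝ → W N → ℝ} {a b a' b' R δ : ℝ} (ha : a' < a) (hab : a ≤ b)
    (hb : b < b') (hR : 0 ≤ R) (hZ : ∀ t, ∀ y, HasDerivAt (fun t => Z t y) (Z' t y) t)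
    (hc : ∀ t, Continuous (Z t)) (hc' : Continuous fun p : ℝ × W N => Z' p.1 p.2)
    (h0 : ∀ t ∈ Set.Icc a' b', ∀ y, R < ‖y‖ → Z t y = 0)
    (h0' : ∀ t ∈ Set.Icc a' b', ∀ y, R < ‖y‖ → Z' t y = 0)
    (H : ∀ t ∈ Set.Icc a b, |G.II f (Z' t)| ≤ δ) :
    |G.II f (Z b) - G.II f (Z a)| ≤ δ * (b - a) := by
  have hZc' : ∀ t, Continuous (Z' t) := fun t => hc'.comp (Continuous.prodMk_right t)
  obtain ⟨C, hC⟩ := (isCompact_Icc.prod (isCompact_closedBall (0 : W N) R)).exists_bound_of_continuousOn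
    (s := Set.Icc a' b' ×ˢ Metric.closedBall (0 : W N) R) hc'.continuousOn
  have hb2 : Continuous fun y : W N => C * cutFun (‖y‖ ^ 2 / (|R| + 1) ^ 2) :=
    continuous_const.mul (cutFun_contDiff.continuous.comp (by fun_prop))
  have hR1 : 0 < |R| + 1 := by positivity
  have hb0 : ∀ y : W N, 2 * (|R| + 1) < ‖y‖ → C * cutFun (‖y‖ ^ 2 / (|R| + 1) ^ 2) = 0 := by
    intro y hy
    rw [cutFun_zero, mul_zero]
    rw [le_div_iff₀ (by positivity)]; nlinarith
  have bound : ∀ t ∈ Set.Icc a' b', ∀ y : W N, |Z' t y| ≤ C * cutFun (‖y‖ ^ 2 / (|R| + 1) ^ 2) := by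
    intro t ht y
    by_cases hy : R < ‖y‖
    · rw [h0' t ht y hy, abs_zero]
      refine mul_nonneg ?_ (cutFun_nonneg _)
      exact (norm_nonneg _).trans (hC (t, 0) ⟨ht, by simpa using hR⟩)
    · push Not at hy
      rw [cutFun_one, mul_one]
      · exact hC (t, y) ⟨ht, by simpa using hy⟩
      · rw [div_le_one (by positivity)]
        have : ‖y‖ ≤ |R| + 1 := by linarith [le_abs_self R]
        gcongr
  have hderiv : ∀ t ∈ Set.Ioo a' b', HasDerivAt (fun t => G.II f (Z t)) (G.II f (Z' t)) t := by
    intro t ht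
    have hbd := (G.II_integrable f hb2 hb0).norm
    refine (hasDerivAt_integral_of_dominated_loc_of_deriv_le (μ := G.μ) (x₀ := t)
      (s := Set.Ioo a' b') (F := fun t x => f x * Z t (G.pos x))
      (F' := fun t x => f x * Z' t (G.pos x))
      (bound := fun x => ‖f x * (C * cutFun (‖G.pos x‖ ^ 2 / (|R| + 1) ^ 2))‖)
      (isOpen_Ioo.mem_nhds ht)
      (Eventually.of_forall fun k =>
        ((SF.continuous f).mul ((hc k).comp G.pos_continuous)).aestronglyMeasurable)
      (G.II_integrable f (hc t) (h0 t ⟨ht.1.le, ht.2.le⟩))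
      ((SF.continuous f).mul ((hZc' t).comp G.pos_continuous)).aestronglyMeasurable
      (Eventually.of_forall fun x k hk => ?_) hbd
      (Eventually.of_forall fun x k hk => (hZ k _).const_mul _)).2
    rw [norm_mul, norm_mul]
    gcongr
    exact (bound k ⟨hk.1.le, hk.2.le⟩ _).trans (le_abs_self _)
  have hsub : ∀ t ∈ Set.Icc a b, t ∈ Set.Ioo a' b' := fun t ht =>
    ⟨ha.trans_le ht.1, ht.2.trans_lt hb⟩
  have := (convex_Icc a b).norm_image_sub_le_of_norm_hasDerivWithin_le
    (f := fun t => G.II f (Z t)) (C := δ) (fun t ht => (hderiv t (hsub t ht)).hasDerivWithinAt)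
    (fun t ht => H t ht) (Set.left_mem_Icc.2 hab) (Set.right_mem_Icc.2 hab)
  rwa [Real.norm_eq_abs, Real.norm_eq_abs, abs_of_nonneg (sub_nonneg.2 hab)] at this

end MinGraph

lemma Prof.exists_bound (P : Prof) : ∃ B : ℝ, 0 < B ∧ ∀ t, 0 ≤ t → |P t| ≤ B ∧ |deriv P t| ≤ B := by
  have hd : Continuous (deriv P) := P.smooth.continuous_deriv (by simp)
  obtain ⟨B1, h1⟩ := (isCompact_Icc (a := (0 : ℝ)) (b := 3)).exists_bound_of_continuousOn
    P.continuous.continuousOn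
  obtain ⟨B2, h2⟩ := (isCompact_Icc (a := (0 : ℝ)) (b := 3)).exists_bound_of_continuousOn
    hd.continuousOn
  refine ⟨max 1 (max B1 B2), by positivity, fun t ht => ?_⟩
  by_cases h : t ≤ 3
  · exact ⟨(h1 t ⟨ht, h⟩).trans (by simp), (h2 t ⟨ht, h⟩).trans (by simp)⟩
  · push Not at h
    have h3 : (P : ℝ → ℝ) =ᶠ[𝓝 t] fun _ => 0 := by
      filter_upwards [lt_mem_nhds h] with x hx using P.zero x (by linarith)
    rw [h3.deriv_eq, P.zero t (by linarith)]
    simp only [deriv_const, abs_zero]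
    constructor <;> positivity

namespace TF

variable {N : ℕ}

/-- `g` is supported in the ball of radius `R`, and bounded by `M` together with its gradient. -/
def Cls (R M : ℝ) (g : TF N) : Prop :=
  (∀ y, R < ‖y‖ → g y = 0) ∧ (∀ y, |g y| ≤ M) ∧ ∀ y, ‖fderiv ℝ g y‖ ≤ M

/-- The quadratic form `|y|²` with the axes in `A` scaled by `μ`. -/
noncomputable def sq (b : OrthonormalBasis (Idx N) ℝ (W N)) (A : Finset (Idx N)) (μ : ℝ)
    (y : W N) : ℝ := ∑ i, (if i ∈ A then μ ^ 2 else 1) * ⟪b i, y⟫ ^ 2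

variable (b : OrthonormalBasis (Idx N) ℝ (W N)) (A : Finset (Idx N))

lemma sum_inner_sq (y : W N) : ∑ i, ⟪b i, y⟫ ^ 2 = ‖y‖ ^ 2 := by
  simpa using b.sum_sq_norm_inner_right y

lemma le_sq {m μ : ℝ} (hm : 0 ≤ m) (hm1 : m ≤ 1) (h : m ≤ μ) (y : W N) :
    m ^ 2 * ‖y‖ ^ 2 ≤ sq b A μ y := by
  rw [← sum_inner_sq b, Finset.mul_sum]
  refine Finset.sum_le_sum fun i _ => mul_le_mul_of_nonneg_right ?_ (sq_nonneg _)
  split_ifs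
  · gcongr
  · nlinarith

lemma sq_nonneg' (μ : ℝ) (y : W N) : 0 ≤ sq b A μ y := by
  refine Finset.sum_nonneg fun i _ => mul_nonneg ?_ (sq_nonneg _)
  split_ifs <;> positivity

lemma sq_one (y : W N) : sq b A 1 y = ‖y‖ ^ 2 := by
  rw [← sum_inner_sq b]; simp [sq]

lemma sq_contDiff (μ : ℝ) : ContDiff ℝ ∞ (sq b A μ) := by
  unfold sq
  exact ContDiff.sum fun i _ => contDiff_const.mul ((contDiff_const.inner ℝ contDiff_id).pow 2)

lemma sq_hasFDerivAt (μ : ℝ) (y : W N) : HasFDerivAt (sq b A μ)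
    (∑ i, (if i ∈ A then μ ^ 2 else 1) • ((2 * ⟪b i, y⟫) • innerSL ℝ (b i))) y := by
  have : sq b A μ = fun y => ∑ i, (if i ∈ A then μ ^ 2 else 1) * (innerSL ℝ (b i) y) ^ 2 := rfl
  rw [this]
  refine HasFDerivAt.fun_sum fun i _ => HasFDerivAt.const_mul ?_ _
  have h := ((innerSL ℝ (b i)).hasFDerivAt (x := y)).pow 2
  simpa using h

/-- The stretched radial function `μ ^ |A| P(|y|²_μ / κ²)`. -/
noncomputable def stf (P : Prof) (κ μ : ℝ) (y : W N) : ℝ :=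
  μ ^ A.card * P (sq b A μ y / κ ^ 2)

/-- Derivative of `stf` in `μ`. -/
noncomputable def stf' (P : Prof) (κ μ : ℝ) (y : W N) : ℝ :=
  A.card * μ ^ (A.card - 1) * P (sq b A μ y / κ ^ 2) + μ ^ A.card *
    (deriv P (sq b A μ y / κ ^ 2) * ((∑ i, (if i ∈ A then 2 * μ else 0) * ⟪b i, y⟫ ^ 2) / κ ^ 2))

lemma sq_hasDerivAt (μ : ℝ) (y : W N) : HasDerivAt (fun μ => sq b A μ y)
    (∑ i, (if i ∈ A then 2 * μ else 0) * ⟪b i, y⟫ ^ 2) μ := by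
  unfold sq
  refine HasDerivAt.fun_sum fun i _ => HasDerivAt.mul_const ?_ _
  split_ifs
  · simpa using hasDerivAt_pow 2 μ
  · exact hasDerivAt_const _ _

lemma stf_hasDerivAt (P : Prof) (κ μ : ℝ) (y : W N) :
    HasDerivAt (fun μ => stf b A P κ μ y) (stf' b A P κ μ y) μ := by
  unfold stf stf'
  have hP : HasDerivAt P (deriv P (sq b A μ y / κ ^ 2)) (sq b A μ y / κ ^ 2) :=
    (P.smooth.differentiable (by simp) _).hasDerivAt
  exact (hasDerivAt_pow _ _).mul (hP.comp μ ((sq_hasDerivAt b A μ y).div_const _))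

lemma stf_zero {κ m μ : ℝ} (hκ : 0 < κ) (hm : 0 < m) (hm1 : m ≤ 1) (h : m ≤ μ) (y : W N)
    (hy : 2 * κ / m < ‖y‖) : 2 < sq b A μ y / κ ^ 2 := by
  have h1 := le_sq b A hm.le hm1 h y
  rw [div_lt_iff₀ hm] at hy
  rw [lt_div_iff₀ (by positivity)]
  have : (2 * κ) ^ 2 < (‖y‖ * m) ^ 2 := by gcongr
  nlinarith [sq_pos_of_pos hκ]

lemma deriv_prof_zero (P : Prof) {t : ℝ} (h : 2 < t) : deriv P t = 0 := by
  have h3 : (P : ℝ → ℝ) =ᶠ[𝓝 t] fun _ => 0 := by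
    filter_upwards [lt_mem_nhds h] with x hx using P.zero x hx.le
  rw [h3.deriv_eq]; simp

/-- The stretched radial function as a test function. -/
noncomputable def st (P : Prof) {κ μ : ℝ} (hκ : 0 < κ) (hμ : 0 < μ) : TF N where
  f := stf b A P κ μ
  smooth := contDiff_const.mul (P.smooth.comp ((sq_contDiff b A μ).div_const _))
  cs := by
    refine HasCompactSupport.of_support_subset_isCompact
      (isCompact_closedBall (0 : W N) (2 * κ / min μ 1)) fun y hy => ?_
    rw [mem_closedBall_zero_iff]
    by_contra hc
    refine hy ?_
    unfold stf
    rw [P.zero _ (stf_zero b A hκ (lt_min hμ one_pos) (min_le_right _ _) (min_le_left _ _) y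
      (not_le.1 hc)).le, mul_zero]

/-- The product of a test function with a linear coordinate. -/
noncomputable def co (e : W N) (ζ : TF N) : TF N where
  f y := ⟪e, y⟫ * ζ y
  smooth := (contDiff_const.inner ℝ contDiff_id).mul ζ.smooth
  cs := ζ.cs.mul_left

lemma st_hasFDerivAt (P : Prof) {κ μ : ℝ} (hκ : 0 < κ) (hμ : 0 < μ) (y : W N) :
    HasFDerivAt (st b A P hκ hμ)
      ((μ ^ A.card * (deriv P (sq b A μ y / κ ^ 2) / κ ^ 2)) •
      ∑ i, (if i ∈ A then μ ^ 2 else 1) • ((2 * ⟪b i, y⟫) • innerSL ℝ (b i))) y := by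
  change HasFDerivAt (fun y => μ ^ A.card * P (sq b A μ y / κ ^ 2)) _ y
  have hP : HasDerivAt P (deriv P (sq b A μ y / κ ^ 2)) (sq b A μ y / κ ^ 2) :=
    (P.smooth.differentiable (by simp) _).hasDerivAt
  have h := (hP.comp_hasFDerivAt y ((sq_hasFDerivAt b A μ y).mul_const (κ ^ 2)⁻¹)).const_mul
    (μ ^ A.card)
  refine h.congr_fderiv ?_
  rw [smul_smul, smul_smul]; simp only [div_eq_mul_inv, mul_assoc]

lemma co_hasFDerivAt (e : W N) (ζ : TF N) (y : W N) :
    HasFDerivAt (co e ζ) (⟪e, y⟫ • fderiv ℝ ζ y + ζ y • innerSL ℝ e) y :=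
  ((innerSL ℝ e).hasFDerivAt (x := y)).mul (ζ.differentiable y).hasFDerivAt

/-- The derivative of the stretched radial function in the stretching parameter is a divergence along
the stretched directions. -/
lemma pd_co_st (P : Prof) {κ μ : ℝ} (hκ : 0 < κ) (hμ : 0 < μ) (y : W N) :
    ∑ i ∈ A, (co (b i) (st b A P hκ hμ)).pd (b i) y = μ * stf' b A P κ μ y := by
  have h : ∀ i ∈ A, (co (b i) (st b A P hκ hμ)).pd (b i) y = stf b A P κ μ y +
      (μ ^ A.card * (deriv P (sq b A μ y / κ ^ 2) / κ ^ 2)) * (2 * μ ^ 2) * ⟪b i, y⟫ ^ 2 := by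
    intro i hi
    rw [pd_apply, (co_hasFDerivAt _ _ _).fderiv, (st_hasFDerivAt b A P hκ hμ y).fderiv]
    have h2 : ∀ j, ⟪b j, b i⟫ = if j = i then (1 : ℝ) else 0 :=
      fun j => orthonormal_iff_ite.1 b.orthonormal j i
    simp only [_root_.add_apply, _root_.smul_apply, _root_.sum_apply, innerSL_apply_apply,
      smul_eq_mul, h2]
    rw [Finset.sum_eq_single i (fun j _ hj => by simp [hj]) (by simp)]
    simp only [hi, if_true]
    change _ + stf b A P κ μ y * 1 = _
    ring
  rw [Finset.sum_congr rfl h, Finset.sum_add_distrib, ← Finset.mul_sum, Finset.sum_const]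
  unfold stf stf'
  have h3 : ∑ i, (if i ∈ A then 2 * μ else 0) * ⟪b i, y⟫ ^ 2
      = 2 * μ * ∑ i ∈ A, ⟪b i, y⟫ ^ 2 := by
    rw [Finset.mul_sum]; simp [ite_mul, Finset.sum_ite_mem]
  rw [h3, nsmul_eq_mul]
  rcases Nat.eq_zero_or_pos A.card with h0 | h0
  · rw [Finset.card_eq_zero] at h0; simp [h0]
  · obtain ⟨k, hk⟩ := Nat.exists_eq_succ_of_ne_zero h0.ne'
    rw [hk]; simp only [Nat.succ_eq_add_one, Nat.add_sub_cancel]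
    ring

/-- The constant in `cls_co_st`. -/
noncomputable def stC (N : ℕ) (B κ R : ℝ) : ℝ :=
  R * B + (R * (B / κ ^ 2 * (Fintype.card (Idx N) * (2 * R))) + B)

/-- Uniform bounds for the functions whose divergence appears in `pd_co_st`. -/
lemma cls_co_st {P : Prof} {B : ℝ} (hB : ∀ t, 0 ≤ t → |P t| ≤ B ∧ |deriv P t| ≤ B)
    {κ m μ : ℝ} (hκ : 0 < κ) (hm : 0 < m) (hm1 : m ≤ 1) (h : m ≤ μ) (hμ : 0 < μ) (h1 : μ ≤ 1)
    (i : Idx N) : Cls (2 * κ / m) (stC N B κ (2 * κ / m)) (co (b i) (st b A P hκ hμ)) := by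
  have hR : 0 < 2 * κ / m := by positivity
  have hB0 : 0 ≤ B := (abs_nonneg _).trans (hB 0 le_rfl).1
  have hM0 : 0 ≤ stC N B κ (2 * κ / m) := by unfold stC; positivity
  have hst0 : ∀ y, 2 * κ / m < ‖y‖ → st b A P hκ hμ y = 0 := fun y hy => by
    change μ ^ A.card * P (sq b A μ y / κ ^ 2) = 0
    rw [P.zero _ (stf_zero b A hκ hm hm1 h y hy).le, mul_zero]
  have hstB : ∀ y, |st b A P hκ hμ y| ≤ B := fun y => by
    change |μ ^ A.card * P (sq b A μ y / κ ^ 2)| ≤ B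
    rw [abs_mul, abs_of_nonneg (by positivity)]
    have h2 := (hB (sq b A μ y / κ ^ 2) (div_nonneg (sq_nonneg' b A μ y) (by positivity))).1
    have h3 : μ ^ A.card ≤ 1 := pow_le_one₀ hμ.le h1
    nlinarith [abs_nonneg (P (sq b A μ y / κ ^ 2))]
  have hin : ∀ (j : Idx N) (y : W N), |⟪b j, y⟫| ≤ ‖y‖ := fun j y => by
    simpa using abs_real_inner_le_norm (b j) y
  have hnorm : ∀ j : Idx N, ‖innerSL ℝ (b j)‖ = 1 := fun j => by
    rw [innerSL_apply_norm, b.orthonormal.1]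
  refine ⟨fun y hy => ?_, fun y => ?_, fun y => ?_⟩
  · change ⟪b i, y⟫ * st b A P hκ hμ y = 0
    rw [hst0 y hy, mul_zero]
  · change |⟪b i, y⟫ * st b A P hκ hμ y| ≤ _
    by_cases hy : 2 * κ / m < ‖y‖
    · rwa [hst0 y hy, mul_zero, abs_zero]
    · push Not at hy
      rw [abs_mul]
      calc |⟪b i, y⟫| * |st b A P hκ hμ y| ≤ (2 * κ / m) * B :=
            mul_le_mul ((hin i y).trans hy) (hstB y) (abs_nonneg _) hR.le
        _ ≤ _ := by
            unfold stC
            refine le_add_of_nonneg_right ?_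
            positivity
  · rw [(co_hasFDerivAt _ _ _).fderiv, (st_hasFDerivAt b A P hκ hμ y).fderiv]
    by_cases hy : 2 * κ / m < ‖y‖
    · rw [hst0 y hy, deriv_prof_zero P (stf_zero b A hκ hm hm1 h y hy)]
      simpa using hM0
    · push Not at hy
      have e1 : ‖∑ j, (if j ∈ A then μ ^ 2 else 1) • ((2 * ⟪b j, y⟫) • innerSL ℝ (b j))‖
          ≤ Fintype.card (Idx N) * (2 * (2 * κ / m)) := by
        refine (norm_sum_le_of_le _ (f := fun j => (if j ∈ A then μ ^ 2 else 1) •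
          ((2 * ⟪b j, y⟫) • innerSL ℝ (b j))) (n := fun _ => 2 * (2 * κ / m))
          fun j _ => ?_).trans ?_
        · rw [norm_smul, norm_smul, hnorm, mul_one, norm_mul, Real.norm_eq_abs, Real.norm_eq_abs,
            Real.norm_eq_abs, abs_two]
          have h4 : |if j ∈ A then μ ^ 2 else 1| ≤ 1 := by
            split_ifs
            · rw [abs_of_nonneg (by positivity)]; exact pow_le_one₀ hμ.le h1
            · simp
          have h5 := (hin j y).trans hy
          calc |if j ∈ A then μ ^ 2 else 1| * (2 * |⟪b j, y⟫|) ≤ 1 * (2 * (2 * κ / m)) := by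
                gcongr
            _ = _ := one_mul _
        · rw [Finset.sum_const, nsmul_eq_mul, Finset.card_univ]
      have e2 : |μ ^ A.card * (deriv P (sq b A μ y / κ ^ 2) / κ ^ 2)| ≤ B / κ ^ 2 := by
        have h2 := (hB (sq b A μ y / κ ^ 2) (div_nonneg (sq_nonneg' b A μ y) (by positivity))).2
        have h3 : μ ^ A.card ≤ 1 := pow_le_one₀ hμ.le h1
        rw [abs_mul, abs_of_nonneg (by positivity : 0 ≤ μ ^ A.card), abs_div,
          abs_of_nonneg (by positivity : 0 ≤ κ ^ 2)]
        calc _ ≤ 1 * (B / κ ^ 2) := by gcongr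
          _ = _ := one_mul _
      refine (norm_add_le _ _).trans ?_
      rw [norm_smul, norm_smul, norm_smul, hnorm, mul_one, Real.norm_eq_abs, Real.norm_eq_abs,
        Real.norm_eq_abs]
      have e3 : |⟪b i, y⟫| * (|μ ^ A.card * (deriv P (sq b A μ y / κ ^ 2) / κ ^ 2)| *
          ‖∑ j, (if j ∈ A then μ ^ 2 else 1) • ((2 * ⟪b j, y⟫) • innerSL ℝ (b j))‖)
          ≤ (2 * κ / m) * (B / κ ^ 2 * (Fintype.card (Idx N) * (2 * (2 * κ / m)))) :=
        mul_le_mul ((hin i y).trans hy) (mul_le_mul e2 e1 (norm_nonneg _) (by positivity))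
          (by positivity) hR.le
      have e4 := hstB y
      unfold stC
      have : 0 ≤ 2 * κ / m * B := by positivity
      linarith

lemma stf_continuous (P : Prof) (κ μ : ℝ) : Continuous (stf b A P κ μ) :=
  continuous_const.mul (P.continuous.comp ((sq_contDiff b A μ).continuous.div_const _))

lemma stf'_continuous (P : Prof) (κ : ℝ) :
    Continuous fun p : ℝ × W N => stf' b A P κ p.1 p.2 := by
  have hd : Continuous (deriv P) := P.smooth.continuous_deriv (by simp)
  have hP := P.continuous
  have h1 : Continuous fun p : ℝ × W N => sq b A p.1 p.2 := by
    unfold sq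
    refine continuous_finsetSum _ fun i _ => ?_
    split_ifs <;> fun_prop
  have h2 : Continuous fun p : ℝ × W N => ∑ i, (if i ∈ A then 2 * p.1 else 0) * ⟪b i, p.2⟫ ^ 2 := by
    refine continuous_finsetSum _ fun i _ => ?_
    split_ifs <;> fun_prop
  unfold stf'
  exact ((continuous_const.mul (continuous_fst.pow _)).mul (hP.comp (h1.div_const _))).add
    ((continuous_fst.pow _).mul ((hd.comp (h1.div_const _)).mul (h2.div_const _)))

end TF

namespace MinGraph

variable {N : ℕ} (G : MinGraph N)

open TF in
/-- If the derivatives in the directions `b i`, `i ∈ A`, of test functions integrate to almost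
nothing, then stretching a test function along these directions hardly changes its integral. -/
lemma stretch (f : SF N) (b : OrthonormalBasis (Idx N) ℝ (W N)) (A : Finset (Idx N))
    {P : Prof} {B : ℝ} (hB : ∀ t, 0 ≤ t → |P t| ≤ B ∧ |deriv P t| ≤ B)
    {κ L δ : ℝ} (hκ : 0 < κ) (hL : 1 ≤ L) (hL' : 0 < L⁻¹)
    (H : ∀ g : TF N, Cls (4 * κ * L) (stC N B κ (4 * κ * L)) g → ∀ i ∈ A,
      |G.I (f * G.tr (g.pd (b i)))| ≤ δ) :
    |G.I (f * G.tr (st b A P hκ one_pos)) - G.I (f * G.tr (st b A P hκ hL'))|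
      ≤ L * (A.card * δ) := by
  rcases A.eq_empty_or_nonempty with rfl | ⟨i0, hi0⟩
  · have : (st b ∅ P hκ one_pos) = st b ∅ P hκ hL' := by
      unfold st; congr 1
    rw [this]; simp
  have hδ : 0 ≤ δ := by
    refine (abs_nonneg _).trans (H ⟨fun _ => 0, contDiff_const, HasCompactSupport.zero⟩
      ⟨fun _ _ => rfl, fun y => ?_, fun y => ?_⟩ i0 hi0)
    all_goals
      have hB0 : 0 ≤ B := (abs_nonneg _).trans (hB 0 le_rfl).1
      have : 0 ≤ TF.stC N B κ (4 * κ * L) := by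
        unfold TF.stC; have := hL; positivity
      simpa using this
  have hL0 : 0 < L := by linarith
  have hm : 0 < (2 * L)⁻¹ := by positivity
  have hm1 : (2 * L)⁻¹ < L⁻¹ := by gcongr; linarith
  have hLi : L⁻¹ ≤ 1 := inv_le_one_of_one_le₀ hL
  have hR : 2 * κ / (2 * L)⁻¹ = 4 * κ * L := by rw [div_inv_eq_mul]; ring
  have h := G.path_le f (Z := stf b A P κ) (Z' := stf' b A P κ) (a := L⁻¹) (b := 1)
    (a' := (2 * L)⁻¹) (b' := 2) (R := 4 * κ * L) (δ := L * (A.card * δ)) hm1 hLi one_lt_two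
    (by positivity) (fun t y => stf_hasDerivAt b A P κ t y) (stf_continuous b A P κ)
    (stf'_continuous b A P κ) ?_ ?_ ?_
  · have e1 := G.II_TF f (st b A P hκ one_pos)
    have e2 := G.II_TF f (st b A P hκ hL')
    change G.II f (stf b A P κ 1) = _ at e1
    change G.II f (stf b A P κ L⁻¹) = _ at e2
    rw [← e1, ← e2]
    refine h.trans (mul_le_of_le_one_right (by positivity) ?_)
    linarith [inv_pos.2 hL0]
  · intro t ht y hy
    rw [← hR] at hy
    unfold stf
    rw [P.zero _ (stf_zero b A hκ hm (hm1.le.trans hLi) ht.1 y hy).le, mul_zero]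
  · intro t ht y hy
    rw [← hR] at hy
    have h2 := stf_zero b A hκ hm (hm1.le.trans hLi) ht.1 y hy
    unfold stf'
    rw [P.zero _ h2.le, deriv_prof_zero P h2]; ring
  · intro t ht
    have ht0 : 0 < t := hL'.trans_le ht.1
    have e : G.II f (stf' b A P κ t)
        = t⁻¹ * ∑ i ∈ A, G.I (f * G.tr ((co (b i) (st b A P hκ ht0)).pd (b i))) := by
      have h1 : ∀ y, stf' b A P κ t y
          = t⁻¹ * ∑ i ∈ A, (co (b i) (st b A P hκ ht0)).pd (b i) y := fun y => by
        rw [pd_co_st, inv_mul_cancel_left₀ ht0.ne']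
      unfold II
      simp_rw [h1, mul_left_comm _ t⁻¹, integral_const_mul, Finset.mul_sum]
      rw [← Finset.mul_sum, integral_finsetSum]
      · rfl
      · intro i _
        exact G.II_integrable f (TF.continuous _) (TF.exists_support _).choose_spec.2
    rw [e, abs_mul, abs_of_pos (inv_pos.2 ht0)]
    have h1 : t⁻¹ ≤ L := by
      rw [inv_le_comm₀ ht0 hL0]; exact ht.1
    have h2 : |∑ i ∈ A, G.I (f * G.tr ((co (b i) (st b A P hκ ht0)).pd (b i)))| ≤ A.card * δ := by
      refine (Finset.abs_sum_le_sum_abs _ _).trans ?_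
      rw [← nsmul_eq_mul]
      refine Finset.sum_le_card_nsmul _ _ _ fun i hi => H _ ?_ i hi
      rw [← hR]
      exact cls_co_st b A hB hκ hm (hm1.le.trans hLi) (hm1.le.trans ht.1) ht0 ht.2 i
    gcongr

/-- If the derivatives along `p` of translates of a test function integrate to almost nothing,
then so does the difference between the test function and its translate. -/
lemma translate (f : SF N) (ζ : TF N) (p : W N) {δ : ℝ}
    (H : ∀ t ∈ Set.Icc (0 : ℝ) 1, |G.I (f * G.tr ((ζ.tl (-(t • p))).pd p))| ≤ δ) :
    |G.I (f * G.tr (ζ.tl (-p))) - G.I (f * G.tr ζ)| ≤ δ := by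
  obtain ⟨R, hR, hζ⟩ := ζ.exists_support
  have hfar : ∀ t ∈ Set.Icc (-1 : ℝ) 2, ∀ y, R + 2 * ‖p‖ < ‖y‖ → R < ‖y + -(t • p)‖ := by
    intro t ht y hy
    have h1 : ‖t • p‖ ≤ 2 * ‖p‖ := by
      rw [norm_smul, Real.norm_eq_abs]
      gcongr
      exact abs_le.2 ⟨by linarith [ht.1], ht.2⟩
    have h2 : ‖y‖ ≤ ‖y + -(t • p)‖ + ‖t • p‖ := by
      have := norm_add_le (y + -(t • p)) (t • p)
      simpa using this
    linarith
  have hopen : IsOpen {y : W N | R < ‖y‖} := isOpen_lt continuous_const continuous_norm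
  have hζ' : ∀ y, R < ‖y‖ → fderiv ℝ ζ y = 0 := fun y hy => by
    have : (ζ : W N → ℝ) =ᶠ[𝓝 y] fun _ => 0 := by
      filter_upwards [hopen.mem_nhds hy] with z hz using hζ z hz
    rw [this.fderiv_eq]; simp
  have h := G.path_le f (Z := fun t => ζ.tl (-(t • p)))
    (Z' := fun t y => - fderiv ℝ ζ (y + -(t • p)) p) (a := 0) (b := 1)
    (a' := -1) (b' := 2) (R := R + 2 * ‖p‖) (δ := δ) (by norm_num) zero_le_one one_lt_two
    (by positivity) (fun t y => ?_) (fun t => TF.continuous _) ?_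
    (fun t ht y hy => hζ _ (hfar t ht y hy)) (fun t ht y hy => by
      rw [hζ' _ (hfar t ht y hy)]; simp) (fun t ht => ?_)
  · rw [II_TF, II_TF] at h
    have e0 : ζ.tl (-((0 : ℝ) • p)) = ζ := by
      unfold TF.tl; congr 1; ext y; simp
    rw [e0, one_smul] at h
    linarith
  · have h1 : HasDerivAt (fun t : ℝ => y + -(t • p)) (-p) t := by
      have := ((hasDerivAt_id t).smul_const p).neg.const_add y
      simpa using this
    have h2 := (ζ.differentiable (y + -(t • p))).hasFDerivAt.comp_hasDerivAt t h1
    rw [map_neg] at h2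
    exact h2
  · have h1 : Continuous (fderiv ℝ ζ) := ζ.smooth.continuous_fderiv (by simp)
    exact ((h1.comp (by fun_prop)).clm_apply continuous_const).neg
  · have e : G.II f (fun y => - fderiv ℝ ζ (y + -(t • p)) p)
        = - G.I (f * G.tr ((ζ.tl (-(t • p))).pd p)) := by
      rw [← II_TF]; unfold II
      simp_rw [TF.pd_tl, mul_neg, integral_neg]
      rfl
    rw [e, abs_neg]
    exact H t ht

end MinGraph

/-! ### Translation invariance of the curvature measure -/

namespace TangentialCalculus

variable {R ι : Type*} [CommRing R] [Algebra ℝ R] [Fintype ι] (T : TangentialCalculus R ι)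

/-- By the Codazzi equations, the gradient of `|A|²` is a divergence up to a normal term. -/
lemma δ_a2 (k : ι) : T.δ k T.a2
    = 2 * ∑ i, T.δ i (T.A2 i k) + 2 * (T.ν k * ∑ i, ∑ j, T.A i j * T.A2 i j) := by
  have h1 : T.δ k T.a2 = 2 * ∑ i, ∑ j, T.A i j * T.δ k (T.A i j) := by
    unfold a2
    simp only [map_sum, Derivation.leibniz, smul_eq_mul, Finset.mul_sum]
    exact Finset.sum_congr rfl fun i _ => Finset.sum_congr rfl fun j _ => by ring
  have h2 : ∑ i, ∑ j, T.A i j * T.δ k (T.A i j) = ∑ i, ∑ j, T.A i j * T.δ i (T.A k j)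
      + T.ν k * ∑ i, ∑ j, T.A i j * T.A2 i j := by
    have h3 : ∀ i j, T.A i j * T.δ k (T.A i j) = T.A i j * T.δ i (T.A k j)
        + T.ν k * (T.A i j * T.A2 i j) - T.ν i * T.A i j * T.A2 k j := by
      intro i j
      linear_combination T.A i j * T.codazzi k i j
    simp_rw [h3, Finset.sum_sub_distrib, Finset.sum_add_distrib, ← Finset.mul_sum]
    have h4 : ∑ i, ∑ j, T.ν i * T.A i j * T.A2 k j = 0 := by
      rw [Finset.sum_comm]
      refine Finset.sum_eq_zero fun j _ => ?_
      rw [← Finset.sum_mul, T.nu_A, zero_mul]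
    rw [h4, sub_zero]
  have h5 : ∑ i, T.δ i (T.A2 i k) = ∑ i, ∑ j, T.A i j * T.δ i (T.A k j) := by
    have h6 : ∀ i, T.δ i (T.A2 i k) = ∑ j, T.A i j * T.δ i (T.A k j)
        + ∑ j, T.A j k * T.δ i (T.A i j) := by
      intro i
      unfold A2
      simp only [map_sum, Derivation.leibniz, smul_eq_mul, ← Finset.sum_add_distrib]
      exact Finset.sum_congr rfl fun j _ => by rw [T.A_symm j k]
    simp_rw [h6, Finset.sum_add_distrib]
    have h7 : ∑ i, ∑ j, T.A j k * T.δ i (T.A i j) = 0 := by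
      rw [Finset.sum_comm]
      simp_rw [← Finset.mul_sum, T.div_A]
      have : ∀ j, T.A j k * -(T.a2 * T.ν j) = - T.a2 * (T.ν j * T.A j k) := fun j => by ring
      simp_rw [this]
      rw [← Finset.mul_sum, T.nu_A, mul_zero]
    rw [h7, add_zero]
  rw [h1, h2, h5]; ring

end TangentialCalculus

namespace MinGraph

variable {N : ℕ} (G : MinGraph N)

/-- The derivative of a test function in the direction of the normal. -/
noncomputable def dn (ζ : TF N) : SF N :=
  ∑ k, G.ν k * G.tr (ζ.pd (bv k))

lemma dn_apply (ζ : TF N) (x : E N) : G.dn ζ x = fderiv ℝ ζ (G.pos x) (G.nu x) := by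
  rw [TF.fderiv_eq_sum]; simp only [dn, SF.sum_apply, SF.mul_apply, tr_apply, nu_apply]

lemma dn_CS (ζ : TF N) : CS (G.dn ζ) := CS.sum _ _ fun _ _ => (G.tr_CS _).mul_l _

lemma δ_tr' (ζ : TF N) (i : Idx N) : G.δ i (G.tr ζ) = G.tr (ζ.pd (bv i)) - G.ν i * G.dn ζ :=
  G.δ_tr ζ i

lemma tr_pd (ζ : TF N) (e : W N) :
    G.tr (ζ.pd e) = ∑ i, SF.const N (e i) * G.δ i (G.tr ζ) + G.νe e * G.dn ζ := by
  ext x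
  simp only [δ_tr', SF.add_apply, SF.sum_apply, SF.mul_apply, SF.sub_apply, SF.const_apply, νe,
    tr_apply, Finset.sum_mul]
  rw [← Finset.sum_add_distrib, TF.pd_apply, TF.fderiv_eq_sum]
  exact Finset.sum_congr rfl fun i _ => by ring

variable {G} in
lemma abs_dn_le {ζ : TF N} {R M : ℝ} (h : ζ.Cls R M) (x : E N) : |G.dn ζ x| ≤ M := by
  rw [dn_apply]
  have := (fderiv ℝ ζ (G.pos x)).le_opNorm (G.nu x)
  rw [norm_nu, mul_one] at this
  exact this.trans (h.2.2 _)

variable {G} in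
lemma Γ_tr_le {ζ : TF N} {R M : ℝ} (h : ζ.Cls R M) (x : E N) :
    G.Γ (G.tr ζ) (G.tr ζ) x ≤ M ^ 2 := by
  set F := fderiv ℝ ζ (G.pos x) with hF
  have hM : 0 ≤ M := (norm_nonneg _).trans (h.2.2 0)
  set w : W N := WithLp.toLp 2 fun i => F (bv i) with hw
  have h1 : ∀ i, G.δ i (G.tr ζ) x = w i - G.ν i x * F (G.nu x) := fun i => by
    rw [δ_tr', SF.sub_apply, SF.mul_apply, dn_apply]; rfl
  have h2 : ∑ i, w i * G.ν i x = F (G.nu x) := by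
    rw [hF, TF.fderiv_eq_sum]
    exact Finset.sum_congr rfl fun i _ => by rw [nu_apply, mul_comm]; rfl
  have h3 : G.Γ (G.tr ζ) (G.tr ζ) x = ‖w‖ ^ 2 - F (G.nu x) ^ 2 := by
    rw [Γ_apply, EuclideanSpace.real_norm_sq_eq]
    simp_rw [h1]
    have h4 : ∀ i, (w i - G.ν i x * F (G.nu x)) * (w i - G.ν i x * F (G.nu x))
        = w i ^ 2 - 2 * F (G.nu x) * (w i * G.ν i x) + F (G.nu x) ^ 2 * G.ν i x ^ 2 := by
      intro i; ring
    simp_rw [h4, Finset.sum_add_distrib, Finset.sum_sub_distrib, ← Finset.mul_sum, h2,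
      G.unit_apply]
    ring
  have h5 : F w = ‖w‖ ^ 2 := by
    rw [hF, TF.fderiv_eq_sum, EuclideanSpace.real_norm_sq_eq]
    exact Finset.sum_congr rfl fun i _ => by rw [sq]; rfl
  have h6 : ‖w‖ ≤ M := by
    have := (le_abs_self _).trans (F.le_opNorm w)
    rw [h5] at this
    have h7 : ‖F‖ ≤ M := h.2.2 _
    rcases eq_or_lt_of_le (norm_nonneg w) with h0 | h0
    · rw [← h0]; exact hM
    · have : ‖w‖ * ‖w‖ ≤ ‖F‖ * ‖w‖ := by nlinarith
      exact (le_of_mul_le_mul_right this h0).trans h7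
  rw [h3]
  have := norm_nonneg w
  nlinarith [sq_nonneg (F (G.nu x))]

/-- The first variation of the measure `a2 μ` along a coordinate direction. -/
lemma I_a2_δ {h : SF N} (hh : CS h) (k : Idx N) : G.I (G.a2 * G.δ k h)
    = 2 * G.I (∑ i, G.T.A2 i k * G.δ i h)
      - 2 * G.I (h * (G.ν k * ∑ i, ∑ j, G.A i j * G.T.A2 i j)) := by
  have h1 : G.I (G.δ k (G.a2 * h) - 2 • (∑ i, G.δ i (G.T.A2 i k * h))) = 0 := by
    have c1 : CS (G.δ k (G.a2 * h)) := (hh.mul_l _).δ G k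
    have c2 : CS (∑ i, G.δ i (G.T.A2 i k * h)) := CS.sum _ _ fun i _ => (hh.mul_l _).δ G i
    have e : (2 • (∑ i, G.δ i (G.T.A2 i k * h)) : SF N)
        = (2 : ℝ) • (∑ i, G.δ i (G.T.A2 i k * h)) := by
      rw [two_smul, two_smul]
    rw [e, G.I_sub c1 (c2.smul _), I_smul]
    have e1 : G.I (G.δ k (G.a2 * h)) = 0 := G.ibp (hh.mul_l _) k
    have e2 : G.I (∑ i, G.δ i (G.T.A2 i k * h)) = 0 := by
      unfold I
      simp only [SF.sum_apply]
      rw [integral_finsetSum _ fun i _ => ((hh.mul_l _).δ G i).integrable G]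
      exact Finset.sum_eq_zero fun i _ => G.ibp (hh.mul_l _) i
    rw [e1, e2]; ring
  have h2 : G.δ k (G.a2 * h) - 2 • (∑ i, G.δ i (G.T.A2 i k * h))
      = G.a2 * G.δ k h - (2 : ℝ) • (∑ i, G.T.A2 i k * G.δ i h)
        + (2 : ℝ) • (h * (G.ν k * ∑ i, ∑ j, G.A i j * G.T.A2 i j)) := by
    have h3 := G.T.δ_a2 k
    change G.δ k G.a2 = 2 * ∑ i, G.δ i (G.T.A2 i k)
      + 2 * (G.ν k * ∑ i, ∑ j, G.A i j * G.T.A2 i j) at h3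
    simp only [Derivation.leibniz, smul_eq_mul, Finset.sum_add_distrib, h3, two_smul,
      ← Finset.mul_sum]
    ring
  have c3 : CS (G.a2 * G.δ k h) := (hh.δ G k).mul_l _
  have c4 : CS (∑ i, G.T.A2 i k * G.δ i h) := CS.sum _ _ fun i _ => (hh.δ G i).mul_l _
  have c5 : CS (h * (G.ν k * ∑ i, ∑ j, G.A i j * G.T.A2 i j)) := hh.mul_r _
  rw [h2, G.I_add (c3.sub (c4.smul _)) (c5.smul _), G.I_sub c3 (c4.smul _), I_smul, I_smul] at h1
  linarith

/-- The pointwise estimate of the terms in the first variation of `a2 μ`. -/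
lemma a2_variation_le {g : TF N} {R M : ℝ} (hg : g.Cls R M) (k : Idx N) {η : ℝ} (hη : 0 < η)
    (x : E N) :
    |2 * (∑ i, G.T.A2 i k * G.δ i (G.tr g)) x
      - 2 * (G.tr g * (G.ν k * ∑ i, ∑ j, G.A i j * G.T.A2 i j)) x
      + (G.a2 * (G.ν k * G.dn g)) x|
      ≤ η⁻¹ * (1 + 2 * M) * (G.Γ (G.ν k) (G.ν k) x + G.a2 x * G.ν k x ^ 2)
        + η * (M ^ 2 + 2 * M) * (G.a2 x + G.a2 x * G.a2 x) := by
  have hM : 0 ≤ M := (norm_nonneg _).trans (hg.2.2 0)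
  have hηi : 0 < η⁻¹ := inv_pos.2 hη
  have young : ∀ a b : ℝ, 2 * |a * b| ≤ η⁻¹ * a ^ 2 + η * b ^ 2 := by
    intro a b
    have h1 : η⁻¹ * a ^ 2 + η * b ^ 2 - 2 * |a * b| = η⁻¹ * (|a| - η * |b|) ^ 2 := by
      rw [abs_mul, ← sq_abs a, ← sq_abs b]; field_simp; ring
    have h2 : 0 ≤ η⁻¹ * (|a| - η * |b|) ^ 2 := by positivity
    linarith
  have youngS : ∀ (t : Finset (Idx N × Idx N)) (a b : Idx N × Idx N → ℝ),
      2 * |∑ i ∈ t, a i * b i| ≤ η⁻¹ * ∑ i ∈ t, a i ^ 2 + η * ∑ i ∈ t, b i ^ 2 := by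
    intro t a b
    calc 2 * |∑ i ∈ t, a i * b i| ≤ 2 * ∑ i ∈ t, |a i * b i| := by
          gcongr; exact Finset.abs_sum_le_sum_abs _ _
      _ ≤ _ := by
          simp only [Finset.mul_sum, ← Finset.sum_add_distrib]
          exact Finset.sum_le_sum fun i _ => young _ _
  have youngI : ∀ (a b : Idx N → ℝ),
      2 * |∑ i, a i * b i| ≤ η⁻¹ * ∑ i, a i ^ 2 + η * ∑ i, b i ^ 2 := by
    intro a b
    calc 2 * |∑ i, a i * b i| ≤ 2 * ∑ i, |a i * b i| := by
          gcongr; exact Finset.abs_sum_le_sum_abs _ _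
      _ ≤ _ := by
          simp only [Finset.mul_sum, ← Finset.sum_add_distrib]
          exact Finset.sum_le_sum fun i _ => young _ _
  have ha2 := G.a2_nonneg x
  have hA2 : ∀ i j, G.T.A2 i j x = ∑ h, G.A i h x * G.A h j x := fun i j => by
    change (∑ h, G.A i h * G.A h j : SF N) x = _
    simp only [SF.sum_apply, SF.mul_apply]
  have hΓg := Γ_tr_le (G := G) hg x
  rw [Γ_apply] at hΓg
  set d : Idx N → ℝ := fun i => G.δ i (G.tr g) x with hd
  -- first term
  have t1 : 2 * |(∑ i, G.T.A2 i k * G.δ i (G.tr g)) x|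
      ≤ η⁻¹ * G.Γ (G.ν k) (G.ν k) x + η * (M ^ 2 * G.a2 x) := by
    have e1 : (∑ i, G.T.A2 i k * G.δ i (G.tr g)) x
        = ∑ j, G.A j k x * ∑ i, G.A i j x * d i := by
      simp only [SF.sum_apply, SF.mul_apply, hA2, Finset.sum_mul, Finset.mul_sum]
      rw [Finset.sum_comm]
      exact Finset.sum_congr rfl fun j _ => Finset.sum_congr rfl fun i _ => by ring
    rw [e1]
    refine (youngI _ _).trans (add_le_add ?_ ?_)
    · rw [Γ_apply]
      refine le_of_eq ?_
      congr 1
      exact Finset.sum_congr rfl fun j _ => sq _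
    · refine mul_le_mul_of_nonneg_left ?_ hη.le
      rw [a2_apply, Finset.sum_comm, Finset.mul_sum]
      refine Finset.sum_le_sum fun j _ => ?_
      refine (Finset.sum_mul_sq_le_sq_mul_sq _ _ _).trans ?_
      rw [mul_comm]
      refine mul_le_mul_of_nonneg_right ?_ (Finset.sum_nonneg fun _ _ => sq_nonneg _)
      refine le_trans (le_of_eq ?_) hΓg
      exact Finset.sum_congr rfl fun j _ => sq _
  -- second term
  have t2 : 2 * |(G.tr g * (G.ν k * ∑ i, ∑ j, G.A i j * G.T.A2 i j)) x|
      ≤ M * (η⁻¹ * (G.a2 x * G.ν k x ^ 2) + η * (G.a2 x * G.a2 x)) := by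
    have e1 : (G.ν k * ∑ i, ∑ j, G.A i j * G.T.A2 i j) x
        = ∑ q : Idx N × Idx N, (G.ν k x * G.A q.1 q.2 x) * G.T.A2 q.1 q.2 x := by
      rw [Fintype.sum_prod_type]
      simp only [SF.sum_apply, SF.mul_apply, Finset.mul_sum, mul_assoc]
    have e2 : ∑ q : Idx N × Idx N, (G.ν k x * G.A q.1 q.2 x) ^ 2 = G.a2 x * G.ν k x ^ 2 := by
      rw [Fintype.sum_prod_type, a2_apply]
      simp only [Finset.sum_mul]
      exact Finset.sum_congr rfl fun j _ => Finset.sum_congr rfl fun i _ => by ring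
    have e3 : ∑ q : Idx N × Idx N, G.T.A2 q.1 q.2 x ^ 2 ≤ G.a2 x * G.a2 x := by
      rw [Fintype.sum_prod_type]
      have : ∀ i j, G.T.A2 i j x ^ 2 ≤ (∑ h, G.A i h x ^ 2) * ∑ h, G.A j h x ^ 2 := by
        intro i j
        rw [hA2]
        refine (Finset.sum_mul_sq_le_sq_mul_sq _ _ _).trans (le_of_eq ?_)
        congr 1
        exact Finset.sum_congr rfl fun h _ => by rw [G.A_symm_apply]
      refine (Finset.sum_le_sum fun i _ => Finset.sum_le_sum fun j _ => this i j).trans ?_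
      rw [a2_apply, Finset.sum_mul_sum]
    rw [SF.mul_apply, abs_mul, e1]
    have h1 := youngS Finset.univ (fun q => G.ν k x * G.A q.1 q.2 x) (fun q => G.T.A2 q.1 q.2 x)
    rw [e2] at h1
    have h2 : |G.tr g x| ≤ M := hg.2.1 _
    have h3 : η * ∑ q : Idx N × Idx N, G.T.A2 q.1 q.2 x ^ 2 ≤ η * (G.a2 x * G.a2 x) := by gcongr
    have h4 := mul_le_mul h2 (h1.trans (add_le_add le_rfl h3)) (by positivity) hM
    linarith
  -- third term
  have t3 : |(G.a2 * (G.ν k * G.dn g)) x|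
      ≤ M * (η⁻¹ * (G.a2 x * G.ν k x ^ 2) + η * G.a2 x) := by
    rw [SF.mul_apply, SF.mul_apply, abs_mul, abs_mul, abs_of_nonneg ha2]
    have h1 := young (G.ν k x) 1
    rw [mul_one, one_pow, mul_one] at h1
    have h2 := abs_dn_le (G := G) hg x
    have h3 : |G.ν k x| * |G.dn g x| ≤ (η⁻¹ * G.ν k x ^ 2 + η) * M := by
      refine mul_le_mul ?_ h2 (abs_nonneg _) (by positivity)
      have := abs_nonneg (G.ν k x)
      linarith
    calc _ ≤ G.a2 x * ((η⁻¹ * G.ν k x ^ 2 + η) * M) := by gcongr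
      _ = _ := by ring
  have e : ∀ a b c : ℝ, |2 * a - 2 * b + c| ≤ 2 * |a| + 2 * |b| + |c| := by
    intro a b c
    refine (abs_add_le _ _).trans (add_le_add ((abs_sub _ _).trans (add_le_add ?_ ?_)) le_rfl) <;>
    rw [abs_mul, abs_two]
  refine (e _ _ _).trans ?_
  have hΓ := G.Γ_self_nonneg (G.ν k) x
  have hν2 := sq_nonneg (G.ν k x)
  have p1 : 0 ≤ η⁻¹ * M * G.Γ (G.ν k) (G.ν k) x := by positivity
  have p2 : 0 ≤ η⁻¹ * (G.a2 x * G.ν k x ^ 2) := by positivity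
  have p3 : 0 ≤ η * (M ^ 2 + M) * (G.a2 x * G.a2 x) := by positivity
  have p4 : 0 ≤ η * M * G.a2 x := by positivity
  have h := add_le_add (add_le_add t1 t2) t3
  refine h.trans ?_
  nlinarith

/-- If the curvature decays in the normal directions `ν k`, `k ∈ K`, then the measure `a2 μ` is
asymptotically invariant under translations along the axes in `K`. -/
lemma a2_invariance {G : ℕ → MinGraph N} (hN : 1 ≤ N) {k : Idx N}
    (h1 : Neg G fun n => (G n).Γ ((G n).ν k) ((G n).ν k))
    (h2 : Neg G fun n => (G n).a2 * ((G n).ν k * (G n).ν k)) {R M ε : ℝ} (hR : 0 < R) (hε : 0 < ε) :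
    ∀ᶠ n in atTop, ∀ g : TF N, g.Cls R M →
      |(G n).I ((G n).a2 * (G n).tr (g.pd (bv k)))| ≤ ε := by
  obtain ⟨Ca, hCa0, hCa⟩ := bdd_a2 G R hR
  obtain ⟨Cb, hCb0, hCb⟩ := bdd_a2_sq G hN R hR
  set c1 := 1 + 2 * |M| with hc1
  set c2 := M ^ 2 + 2 * |M| with hc2
  have hc1p : 0 ≤ c1 := by positivity
  have hc2p : 0 ≤ c2 := by positivity
  set η := ε / (2 * (c2 * (Ca + Cb) + 1)) with hη'
  have hη : 0 < η := by positivity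
  have hη2 : η * c2 * (Ca + Cb) ≤ ε / 2 := by
    have : η * (2 * (c2 * (Ca + Cb) + 1)) = ε := by rw [hη']; field_simp
    nlinarith
  have ht := ((h1 R hR).add (h2 R hR)).const_mul (η⁻¹ * c1)
  rw [add_zero, mul_zero] at ht
  filter_upwards [ht.eventually_lt_const (half_pos hε)] with n hn g hg
  have hM : 0 ≤ M := (norm_nonneg _).trans (hg.2.2 0)
  have hMa : |M| = M := abs_of_nonneg hM
  set H := G n with hH
  set F : SF N := (2 : ℝ) • (∑ i, H.T.A2 i k * H.δ i (H.tr g))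
      - (2 : ℝ) • (H.tr g * (H.ν k * ∑ i, ∑ j, H.A i j * H.T.A2 i j))
      + H.a2 * (H.ν k * H.dn g) with hF
  have cg : CS (H.tr g) := H.tr_CS g
  have k1 : CS (∑ i, H.T.A2 i k * H.δ i (H.tr g)) := CS.sum _ _ fun i _ => (cg.δ H i).mul_l _
  have k2 : CS (H.tr g * (H.ν k * ∑ i, ∑ j, H.A i j * H.T.A2 i j)) := cg.mul_r _
  have k3 : CS (H.a2 * (H.ν k * H.dn g)) := ((H.dn_CS g).mul_l _).mul_l _
  have kc := H.cut_CS hR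
  have e1 : H.I (H.a2 * H.tr (g.pd (bv k))) = H.I F := by
    have h3 : H.a2 * H.tr (g.pd (bv k)) = H.a2 * H.δ k (H.tr g) + H.a2 * (H.ν k * H.dn g) := by
      rw [δ_tr']; ring
    rw [h3, H.I_add ((cg.δ H k).mul_l _) k3, H.I_a2_δ cg, hF,
      H.I_add ((k1.smul _).sub (k2.smul _)) k3, H.I_sub (k1.smul _) (k2.smul _), I_smul, I_smul]
  set Bd : SF N := (η⁻¹ * c1) • (H.Γ (H.ν k) (H.ν k) * H.cut R)
    + (η⁻¹ * c1) • (H.a2 * (H.ν k * H.ν k) * H.cut R)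
    + ((η * c2) • (H.a2 * H.cut R) + (η * c2) • (H.a2 * H.a2 * H.cut R)) with hBd
  have b1 : CS (H.Γ (H.ν k) (H.ν k) * H.cut R) := kc.mul_l _
  have b2 : CS (H.a2 * (H.ν k * H.ν k) * H.cut R) := kc.mul_l _
  have b3 : CS (H.a2 * H.cut R) := kc.mul_l _
  have b4 : CS (H.a2 * H.a2 * H.cut R) := kc.mul_l _
  have e2 : H.I Bd = η⁻¹ * c1 * (H.I (H.Γ (H.ν k) (H.ν k) * H.cut R)
      + H.I (H.a2 * (H.ν k * H.ν k) * H.cut R))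
      + η * c2 * (H.I (H.a2 * H.cut R) + H.I (H.a2 * H.a2 * H.cut R)) := by
    rw [hBd, H.I_add ((b1.smul _).add (b2.smul _)) ((b3.smul _).add (b4.smul _)),
      H.I_add (b1.smul _) (b2.smul _), H.I_add (b3.smul _) (b4.smul _), I_smul, I_smul, I_smul,
      I_smul]
    ring
  have hBF : ∀ x, |F x| ≤ Bd x := by
    intro x
    by_cases hx : R < ‖H.pos x‖
    · have hz : fderiv ℝ g (H.pos x) = 0 := by
        have : (g : W N → ℝ) =ᶠ[𝓝 (H.pos x)] fun _ => 0 := by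
          filter_upwards [(isOpen_lt continuous_const continuous_norm).mem_nhds hx] with z hz
            using hg.1 z hz
        rw [this.fderiv_eq]; simp
      have z1 : H.dn g x = 0 := by rw [dn_apply, hz]; rfl
      have z2 : ∀ i, H.δ i (H.tr g) x = 0 := fun i => by
        rw [δ_tr', SF.sub_apply, SF.mul_apply, z1, tr_apply, TF.pd_apply, hz]; simp
      have z3 : H.tr g x = 0 := hg.1 _ hx
      have : F x = 0 := by
        simp only [hF, SF.add_apply, SF.sub_apply, SF.smul_apply, SF.mul_apply, SF.sum_apply, z1,
          z2, z3]
        simp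
      rw [this, abs_zero, hBd]
      simp only [SF.add_apply, SF.smul_apply, SF.mul_apply]
      have := H.cut_nonneg R x
      have := H.a2_nonneg x
      have := H.Γ_self_nonneg (H.ν k) x
      have := mul_self_nonneg (H.ν k x)
      positivity
    · push Not at hx
      have hx2 : H.r2 0 x ≤ R ^ 2 := by rw [← norm_pos_sq]; gcongr
      have h4 := H.a2_variation_le hg k hη x
      rw [hBd, hF]
      simp only [SF.add_apply, SF.sub_apply, SF.smul_apply, SF.mul_apply, H.cut_one hR hx2] at h4 ⊢
      refine h4.trans (le_of_eq ?_)
      rw [hc1, hc2, hMa]; ring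
  have hI : |H.I F| ≤ H.I Bd := by
    have cF : CS F := ((k1.smul _).sub (k2.smul _)).add k3
    have cB : CS Bd := ((b1.smul _).add (b2.smul _)).add ((b3.smul _).add (b4.smul _))
    refine abs_le.2 ⟨?_, H.I_mono cF cB fun x => (le_abs_self _).trans (hBF x)⟩
    have := H.I_mono (cF.smul (-1)) cB fun x => by
      rw [SF.smul_apply]; linarith [hBF x, neg_abs_le (F x)]
    rw [I_smul] at this
    linarith
  rw [e1]
  refine hI.trans ?_
  rw [e2]
  have h5 := hCa n
  have h6 := hCb n
  have h7 : η * c2 * (H.I (H.a2 * H.cut R) + H.I (H.a2 * H.a2 * H.cut R))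
      ≤ η * c2 * (Ca + Cb) := by gcongr
  linarith

end MinGraph

/-! ### Vanishing of the curvature in the limit -/

namespace MinGraph

variable {N : ℕ}

/-- A radial cutoff stretched by `L` in the directions `K` is controlled by the tube weight. -/
lemma st_le_βw (G : MinGraph N) (K : Finset (Idx N)) {ρ L : ℝ} (hρ : 0 < ρ) (hL : 1 ≤ L)
    (hL' : 0 < L⁻¹) (x : E N) :
    G.tr (TF.st (EuclideanSpace.basisFun (Idx N) ℝ) K Prof.cut hρ hL') x
      ≤ (1 + 2 * ρ ^ 2) ^ (21/10 : ℝ) * (L ^ K.card)⁻¹ * (G.βw K x * G.cut (2 * ρ * L) x) := by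
  have hL0 : 0 < L := by linarith
  set y := G.pos x with hy
  have e0 : G.tr (TF.st (EuclideanSpace.basisFun (Idx N) ℝ) K Prof.cut hρ hL') x
      = L⁻¹ ^ K.card * cutFun (TF.sq (EuclideanSpace.basisFun (Idx N) ℝ) K L⁻¹ y / ρ ^ 2) := rfl
  have hw : 0 < G.βw K x := by
    have := G.βi_pos K x; have := G.βh_pos K x; rw [βw_apply]; positivity
  have hr : 0 ≤ (1 + 2 * ρ ^ 2) ^ (21/10 : ℝ) * (L ^ K.card)⁻¹ *
      (G.βw K x * G.cut (2 * ρ * L) x) := by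
    have := G.cut_nonneg (2 * ρ * L) x; positivity
  set Q := TF.sq (EuclideanSpace.basisFun (Idx N) ℝ) K L⁻¹ y with hQ
  rw [e0]
  by_cases hc : 2 ≤ Q / ρ ^ 2
  · rw [cutFun_zero hc, mul_zero]; exact hr
  rw [not_le, div_lt_iff₀ (by positivity)] at hc
  have h1 : rho2 K y ≤ Q := by
    have h2 : rho2 K y = ∑ i, if i ∈ K then 0 else y i ^ 2 := by
      rw [rho2, Finset.sum_ite, Finset.sum_const_zero, zero_add]
      congr 1; ext i; simp
    rw [h2, hQ, TF.sq]
    refine Finset.sum_le_sum fun i _ => ?_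
    have : ⟪EuclideanSpace.basisFun (Idx N) ℝ i, y⟫ = y i := by
      rw [EuclideanSpace.basisFun_inner]
    rw [this]
    split_ifs
    · positivity
    · rw [one_mul]
  have h3 : ‖y‖ ^ 2 ≤ (2 * ρ * L) ^ 2 := by
    have := TF.le_sq (EuclideanSpace.basisFun (Idx N) ℝ) K hL'.le (inv_le_one_of_one_le₀ hL)
      (le_refl L⁻¹) y
    rw [← hQ] at this
    have h5 : L ^ 2 * (L⁻¹ ^ 2 * ‖y‖ ^ 2) = ‖y‖ ^ 2 := by field_simp
    have h6 : L ^ 2 * (L⁻¹ ^ 2 * ‖y‖ ^ 2) ≤ L ^ 2 * (2 * ρ ^ 2) :=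
      mul_le_mul_of_nonneg_left (by linarith) (by positivity)
    rw [h5] at h6
    have : 0 ≤ L ^ 2 * ρ ^ 2 := by positivity
    nlinarith
  rw [G.cut_one (by positivity) (by rw [← norm_pos_sq]; exact h3), mul_one, inv_pow]
  have hβ := G.β_pos K x
  have h7 : 1 ≤ (1 + 2 * ρ ^ 2) ^ (21/10 : ℝ) * G.βw K x := by
    rw [βw_apply, βh_sq_mul_βi, ← hy, show (-(21/10) : ℝ) = -(21/10:ℝ) by norm_num,
      Real.rpow_neg (by have := rho2_nonneg K y; linarith), ← div_eq_mul_inv, one_le_div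
      (Real.rpow_pos_of_pos (by have := rho2_nonneg K y; linarith) _)]
    exact Real.rpow_le_rpow (by have := rho2_nonneg K y; linarith) (by linarith) (by norm_num)
  calc (L ^ K.card)⁻¹ * cutFun (Q / ρ ^ 2) ≤ (L ^ K.card)⁻¹ * 1 := by
        gcongr; exact cutFun_le_one _
    _ ≤ (L ^ K.card)⁻¹ * ((1 + 2 * ρ ^ 2) ^ (21/10 : ℝ) * G.βw K x) := by gcongr
    _ = _ := by ring

/-- The curvature measure is asymptotically invariant in the directions `K`, and it grows more
slowly than the volume along tubes in these directions; so it tends to zero. -/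
theorem neg_a2 {G : ℕ → MinGraph N} {K : Finset (Idx N)} (hN : 1 ≤ N) (hK : Kᶜ.card = 7)
    (hs : Neg G fun n => (G n).s 0 * (G n).s 0)
    (hν : ∀ k ∈ K, Neg G fun n => (G n).Γ ((G n).ν k) ((G n).ν k))
    (ha : ∀ k ∈ K, Neg G fun n => (G n).a2 * ((G n).ν k * (G n).ν k)) :
    Neg G fun n => (G n).a2 := by
  intro ρ hρ
  obtain ⟨C, hC0, hC⟩ := tube_curvature hN hK hs hν
  obtain ⟨B, hB0, hB⟩ := Prof.exists_bound .cut
  rw [Metric.tendsto_atTop']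
  intro ε hε
  set D := (1 + 2 * ρ ^ 2) ^ (21/10 : ℝ) * (C * (2 * ρ) ^ K.card) with hD
  have hlim : Tendsto (fun L : ℝ => D * (2 * ρ * L) ^ (-(1/5):ℝ)) atTop (𝓝 0) := by
    have h1 : Tendsto (fun L : ℝ => 2 * ρ * L) atTop atTop :=
      tendsto_id.const_mul_atTop (by positivity)
    simpa using ((tendsto_rpow_neg_atTop (by norm_num : (0:ℝ) < 1/5)).comp h1).const_mul D
  obtain ⟨L, hL1, hL2, hLD⟩ : ∃ L : ℝ, 1 ≤ L ∧ 1 ≤ 2 * ρ * L ∧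
      D * (2 * ρ * L) ^ (-(1/5):ℝ) < ε / 2 :=
    ((eventually_ge_atTop 1).and (((tendsto_id.const_mul_atTop (by positivity : 0 < 2 * ρ)).eventually
      (eventually_ge_atTop 1)).and (hlim.eventually (gt_mem_nhds (half_pos hε))))).exists
  have hL0 : 0 < L := by linarith
  have hL' : 0 < L⁻¹ := inv_pos.2 hL0
  set δ := ε / (4 * L * (K.card + 1)) with hδ
  have hδ0 : 0 < δ := by positivity
  have hinv : ∀ᶠ n in atTop, ∀ k ∈ K, ∀ g : TF N, g.Cls (4 * ρ * L) (TF.stC N B ρ (4 * ρ * L)) →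
      |(G n).I ((G n).a2 * (G n).tr (g.pd (bv k)))| ≤ δ :=
    (Filter.eventually_all_finset K).2 fun k hk => a2_invariance hN (hν k hk) (ha k hk)
      (by positivity) hδ0
  obtain ⟨n0, hn0⟩ := eventually_atTop.1 (hinv.and (hC (2 * ρ * L) hL2))
  refine ⟨n0, fun n hn => ?_⟩
  obtain ⟨h1, h2⟩ := hn0 n hn.le
  set b := EuclideanSpace.basisFun (Idx N) ℝ with hb
  have hcut : (G n).tr (TF.st b K .cut hρ one_pos) = (G n).cut ρ := by
    ext x
    change 1 ^ K.card * cutFun (TF.sq b K 1 ((G n).pos x) / ρ ^ 2) = _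
    rw [TF.sq_one, norm_pos_sq, one_pow, one_mul, cut_apply]
  have h3 := (G n).stretch (G n).a2 b K hB hρ hL1 hL' fun g hg i hi => by
    rw [hb, EuclideanSpace.basisFun_apply]; exact h1 i hi g hg
  rw [hcut] at h3
  have hc : CS ((G n).cut (2 * ρ * L)) := (G n).cut_CS (by positivity)
  have h4 := (G n).I_mono (((G n).tr_CS (TF.st b K .cut hρ hL')).mul_l (G n).a2)
    (((hc.mul_l ((G n).βw K)).mul_l (G n).a2).smul ((1 + 2 * ρ ^ 2) ^ (21/10 : ℝ) * (L ^ K.card)⁻¹))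
    fun x => by
      simp only [SF.smul_apply, SF.mul_apply]
      have := mul_le_mul_of_nonneg_left ((G n).st_le_βw K hρ hL1 hL' x) ((G n).a2_nonneg x)
      refine this.trans (le_of_eq (by ring))
  rw [I_smul] at h4
  have h5 : (1 + 2 * ρ ^ 2) ^ (21/10 : ℝ) * (L ^ K.card)⁻¹ *
      (G n).I ((G n).a2 * ((G n).βw K * (G n).cut (2 * ρ * L))) ≤ D * (2 * ρ * L) ^ (-(1/5):ℝ) := by
    refine (mul_le_mul_of_nonneg_left h2 (by positivity)).trans (le_of_eq ?_)
    rw [mul_pow (2 * ρ) L, hD]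
    field_simp
  have h6 : L * (K.card * δ) ≤ ε / 4 := by
    rw [hδ, show L * ((K.card:ℝ) * (ε / (4 * L * (K.card + 1))))
      = ε / 4 * (K.card / (K.card + 1)) by field_simp]
    have : (K.card : ℝ) / (K.card + 1) ≤ 1 := (div_le_one (by positivity)).2 (by linarith)
    nlinarith
  have h7 := (G n).I_nonneg (f := (G n).a2 * (G n).cut ρ) fun x => by
    rw [SF.mul_apply]; exact mul_nonneg ((G n).a2_nonneg x) ((G n).cut_nonneg ρ x)
  rw [Real.dist_0_eq_abs, abs_of_nonneg h7]
  have := (abs_le.1 h3).2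
  linarith

end MinGraph

/-! ### Localization in the normal direction -/

/-- Composition of a smooth function with a smooth function of one variable. -/
noncomputable def SF.comp {N : ℕ} (g : ℝ → ℝ) (hg : ContDiff ℝ ∞ g) (f : SF N) : SF N :=
  ⟨fun x => g (f x), by
    change ContDiff ℝ ∞ _
    exact hg.comp (SF.contDiff f)⟩

@[simp] lemma SF.comp_apply {N : ℕ} (g : ℝ → ℝ) (hg : ContDiff ℝ ∞ g) (f : SF N) (x : E N) :
    SF.comp g hg f x = g (f x) := rfl

namespace MinGraph

variable {N : ℕ} (G : MinGraph N)

lemma δ_comp {g : ℝ → ℝ} (hg : ContDiff ℝ ∞ g) (f : SF N) (i : Idx N) :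
    G.δ i (SF.comp g hg f) = SF.comp (deriv g) (contDiff_infty_iff_deriv.1 hg).2 f * G.δ i f := by
  ext x
  rw [SF.mul_apply, SF.comp_apply]
  exact G.δ_chain i _ f (fun _ => rfl) ((hg.differentiable (by simp)) _).hasDerivAt

lemma Γ_comp {g : ℝ → ℝ} (hg : ContDiff ℝ ∞ g) (f : SF N) (x : E N) :
    G.Γ (SF.comp g hg f) (SF.comp g hg f) x = deriv g (f x) ^ 2 * G.Γ f f x := by
  simp only [Γ_apply, δ_comp, SF.mul_apply, SF.comp_apply, Finset.mul_sum]
  exact Finset.sum_congr rfl fun i _ => by ring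

lemma lap_comp {g : ℝ → ℝ} (hg : ContDiff ℝ ∞ g) (f : SF N) (x : E N) :
    G.lap (SF.comp g hg f) x = deriv (deriv g) (f x) * G.Γ f f x + deriv g (f x) * G.lap f x := by
  simp only [Γ_apply, lap_def, δ_comp, Derivation.leibniz, smul_eq_mul, SF.sum_apply,
    SF.add_apply, SF.mul_apply, SF.comp_apply, Finset.mul_sum, ← Finset.sum_add_distrib]
  exact Finset.sum_congr rfl fun i _ => by ring

/-- A bump function on the real line, equal to `1` at `1` and supported in `t > 1 - η`. -/
noncomputable def capF (η t : ℝ) : ℝ := cutFun (1 + (1 - t) / η)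

lemma capF_contDiff (η : ℝ) : ContDiff ℝ ∞ (capF η) :=
  cutFun_contDiff.comp (by fun_prop)

/-- The localization to the part of the graph where the normal is close to `e`. -/
noncomputable def cap (η : ℝ) (e : W N) : SF N := SF.comp (capF η) (capF_contDiff η) (G.νe e)

lemma cap_apply (η : ℝ) (e : W N) (x : E N) :
    G.cap η e x = cutFun (1 + (1 - G.νe e x) / η) := rfl

lemma cap_nonneg (η : ℝ) (e : W N) (x : E N) : 0 ≤ G.cap η e x := cutFun_nonneg _

lemma cap_le_one (η : ℝ) (e : W N) (x : E N) : G.cap η e x ≤ 1 := cutFun_le_one _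

lemma cap_zero {η : ℝ} (hη : 0 < η) {e : W N} {x : E N} (h : G.νe e x ≤ 1 - η) :
    G.cap η e x = 0 := by
  rw [cap_apply, cutFun_zero]
  have : 1 ≤ (1 - G.νe e x) / η := (one_le_div hη).2 (by linarith)
  linarith

lemma cap_one {η : ℝ} {e : W N} {x : E N} (h : G.νe e x = 1) : G.cap η e x = 1 := by
  rw [cap_apply, h, cutFun_one (by simp)]

/-- `cap` is a function of a component of the normal, whose gradient and Laplacian are controlled by
`|A|²`. -/
lemma exists_cap_bound (η : ℝ) : ∃ C : ℝ, 0 ≤ C ∧ ∀ (N : ℕ) (G : MinGraph N) (e : W N), ‖e‖ = 1 →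
    ∀ x, G.Γ (G.cap η e) (G.cap η e) x ≤ C ^ 2 * G.a2 x ∧ -(2 * C * G.a2 x) ≤ G.lap (G.cap η e) x := by
  have h1 := contDiff_infty_iff_deriv.1 (capF_contDiff η)
  have h2 := contDiff_infty_iff_deriv.1 h1.2
  obtain ⟨C1, hC1⟩ := (isCompact_Icc (a := (-1:ℝ)) (b := 1)).exists_bound_of_continuousOn
    h1.2.continuous.continuousOn
  obtain ⟨C2, hC2⟩ := (isCompact_Icc (a := (-1:ℝ)) (b := 1)).exists_bound_of_continuousOn
    h2.2.continuous.continuousOn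
  refine ⟨max (max C1 C2) 0, le_max_right _ _, fun N G e he x => ?_⟩
  set C := max (max C1 C2) 0 with hC
  have hC0 : 0 ≤ C := le_max_right _ _
  have hw := G.abs_νe_le e x
  rw [he] at hw
  have b1 := (hC1 _ ⟨(abs_le.1 hw).1, (abs_le.1 hw).2⟩).trans
    (show C1 ≤ C from (le_max_left _ _).trans (le_max_left _ _))
  have b2 := (hC2 _ ⟨(abs_le.1 hw).1, (abs_le.1 hw).2⟩).trans
    (show C2 ≤ C from (le_max_right _ _).trans (le_max_left _ _))
  rw [Real.norm_eq_abs] at b1 b2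
  have g1 := G.Γ_νe_le e x
  rw [he, one_pow, one_mul] at g1
  have g0 := G.Γ_self_nonneg (G.νe e) x
  have ha := G.a2_nonneg x
  constructor
  · rw [cap, Γ_comp]
    have : deriv (capF η) (G.νe e x) ^ 2 ≤ C ^ 2 := by
      rw [← sq_abs]; gcongr
    exact mul_le_mul this g1 g0 (by positivity)
  · rw [cap, lap_comp, lap_νe, SF.neg_apply, SF.mul_apply]
    have k1 : |deriv (deriv (capF η)) (G.νe e x) * G.Γ (G.νe e) (G.νe e) x| ≤ C * G.a2 x := by
      rw [abs_mul, abs_of_nonneg g0]; gcongr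
    have k2 : |deriv (capF η) (G.νe e x) * -(G.a2 x * G.νe e x)| ≤ C * G.a2 x := by
      rw [abs_mul, abs_neg, abs_mul, abs_of_nonneg ha]
      have : G.a2 x * |G.νe e x| ≤ G.a2 x := by nlinarith
      gcongr
    have := (abs_le.1 k1).1
    have := (abs_le.1 k2).1
    linarith

/-- On the support of `cap η e` the normal is close to `e`. -/
lemma abs_νe_cap {η : ℝ} {e : W N} (he : ‖e‖ = 1) (b : W N) {x : E N}
    (h : 1 - η < G.νe e x) : |G.νe b x| ≤ |⟪b, e⟫| + ‖b‖ * √(2 * η) := by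
  rw [νe_apply] at h ⊢
  have h1 : ‖G.nu x - e‖ ≤ √(2 * η) := by
    refine Real.le_sqrt_of_sq_le ?_
    rw [norm_sub_sq_real, norm_nu, he, real_inner_comm]; linarith
  have h2 : ⟪b, G.nu x⟫ = ⟪b, e⟫ + ⟪b, G.nu x - e⟫ := by rw [inner_sub_right]; ring
  rw [h2]
  refine (abs_add_le _ _).trans (add_le_add le_rfl ?_)
  exact (abs_real_inner_le_norm _ _).trans (by gcongr)

lemma ibp_I {f : SF N} (hf : CS f) (i : Idx N) : G.I (G.δ i f) = 0 := G.ibp hf i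

lemma I_sum {κ : Type*} (t : Finset κ) (f : κ → SF N) (hf : ∀ i ∈ t, CS (f i)) :
    G.I (∑ i ∈ t, f i) = ∑ i ∈ t, G.I (f i) := by
  unfold I
  simp only [SF.sum_apply]
  exact integral_finsetSum _ fun i hi => (hf i hi).integrable G

lemma abs_I_le {f h : SF N} (hf : CS f) (hh : CS h) (hle : ∀ x, |f x| ≤ h x) : |G.I f| ≤ G.I h := by
  refine abs_le.2 ⟨?_, G.I_mono hf hh fun x => (le_abs_self _).trans (hle x)⟩
  have := G.I_mono (hf.smul (-1)) hh fun x => by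
    rw [SF.smul_apply]; linarith [hle x, neg_abs_le (f x)]
  rw [I_smul] at this
  linarith

lemma TF_Cls_fderiv_zero {R M : ℝ} {g : TF N} (hg : g.Cls R M) {y : W N} (hy : R < ‖y‖) :
    fderiv ℝ g y = 0 := by
  have : (g : W N → ℝ) =ᶠ[𝓝 y] fun _ => 0 := by
    filter_upwards [(isOpen_lt continuous_const continuous_norm).mem_nhds hy] with z hz
      using hg.1 z hz
  rw [this.fderiv_eq]; simp

/-- Where the normal is close to `e` and the curvature is small, the area measure is almost invariant
under translations orthogonal to `e`. -/
lemma cap_pd_le {η C : ℝ} (hη : 0 < η) (hC : ∀ (e : W N), ‖e‖ = 1 →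
    ∀ x, G.Γ (G.cap η e) (G.cap η e) x ≤ C ^ 2 * G.a2 x) {e : W N} (he : ‖e‖ = 1) (b : W N)
    {R M θ : ℝ} (hR : 0 < R) (hθ : 0 < θ) {g : TF N} (hg : g.Cls R M) :
    |G.I (G.cap η e * G.tr (g.pd b))| ≤ M * (‖b‖ ^ 2 * C ^ 2 / θ) * G.I (G.a2 * G.cut R)
      + M * (θ + (|⟪b, e⟫| + ‖b‖ * √(2 * η))) * G.I (G.cut R) := by
  have hM : 0 ≤ M := (norm_nonneg _).trans (hg.2.2 0)
  have hc := G.cut_CS hR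
  set f := G.cap η e with hf
  set k : SF N := ∑ i, b i • G.δ i f with hk
  have hct := G.tr_CS g
  have hd : ∀ i ∈ Finset.univ, CS (b i • G.δ i (f * G.tr g)) := fun i _ =>
    ((hct.mul_l f).δ G i).smul _
  have h0 : G.I (∑ i, b i • G.δ i (f * G.tr g)) = 0 := by
    rw [I_sum _ _ _ hd]
    exact Finset.sum_eq_zero fun i _ => by rw [I_smul, ibp_I _ (hct.mul_l f), mul_zero]
  have h1 : f * G.tr (g.pd b) = ∑ i, b i • G.δ i (f * G.tr g)
      + (f * (G.νe b * G.dn g) - k * G.tr g) := by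
    rw [tr_pd]
    ext x
    simp only [hk, SF.mul_apply, SF.add_apply, SF.sub_apply, SF.sum_apply, SF.smul_apply,
      SF.const_apply, Derivation.leibniz, smul_eq_mul, mul_add, Finset.sum_add_distrib,
      Finset.mul_sum, Finset.sum_mul]
    have e1 : ∀ i, b i * (f x * G.δ i (G.tr g) x) = f x * (b i * G.δ i (G.tr g) x) := fun i => by ring
    have e2 : ∀ i, b i * (G.tr g x * G.δ i f x) = b i * G.δ i f x * G.tr g x := fun i => by ring
    simp only [e1, e2]
    ring
  have hF : CS (f * (G.νe b * G.dn g) - k * G.tr g) :=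
    (((G.dn_CS g).mul_l _).mul_l _).sub (hct.mul_l _)
  rw [h1, I_add _ (CS.sum _ _ hd) hF, h0, zero_add, ← I_smul, ← I_smul,
    ← I_add _ ((hc.mul_l _).smul _) (hc.smul _)]
  refine G.abs_I_le hF (((hc.mul_l _).smul _).add (hc.smul _)) fun x => ?_
  simp only [SF.add_apply, SF.sub_apply, SF.smul_apply, SF.mul_apply]
  have ha := G.a2_nonneg x
  by_cases hx : R < ‖G.pos x‖
  · have z1 : G.dn g x = 0 := by rw [dn_apply, TF_Cls_fderiv_zero hg hx]; rfl
    have z3 : G.tr g x = 0 := hg.1 _ hx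
    rw [z1, z3]
    simp only [mul_zero, sub_zero, abs_zero]
    have := G.cut_nonneg R x
    positivity
  push Not at hx
  have hx2 : G.r2 0 x ≤ R ^ 2 := by rw [← norm_pos_sq]; gcongr
  rw [G.cut_one hR hx2, mul_one, mul_one]
  have t1 : |f x * (G.νe b x * G.dn g x)| ≤ M * (|⟪b, e⟫| + ‖b‖ * √(2 * η)) := by
    by_cases hν : G.νe e x ≤ 1 - η
    · rw [hf, G.cap_zero hη hν, zero_mul, abs_zero]; positivity
    push Not at hν
    have s1 := G.abs_νe_cap he b hν
    have s2 := G.abs_dn_le hg x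
    rw [abs_mul, abs_mul, abs_of_nonneg (G.cap_nonneg η e x)]
    calc f x * (|G.νe b x| * |G.dn g x|) ≤ 1 * ((|⟪b, e⟫| + ‖b‖ * √(2 * η)) * M) := by
          have := G.cap_le_one η e x
          gcongr
      _ = _ := by ring
  have t2 : |k x * G.tr g x| ≤ M * (θ + ‖b‖ ^ 2 * C ^ 2 / θ * G.a2 x) := by
    have s1 : (k x) ^ 2 ≤ ‖b‖ ^ 2 * (C ^ 2 * G.a2 x) := by
      have c1 := Finset.sum_mul_sq_le_sq_mul_sq Finset.univ b.ofLp fun i => G.δ i f x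
      have c2 : k x = ∑ i, b i * G.δ i f x := by
        rw [hk]; simp only [SF.sum_apply, SF.smul_apply]
      have c3 : ∑ i, G.δ i f x ^ 2 = G.Γ f f x := by
        rw [Γ_apply]; exact Finset.sum_congr rfl fun i _ => sq _
      rw [c2]
      refine c1.trans ?_
      rw [c3, EuclideanSpace.norm_sq_eq]
      simp only [Real.norm_eq_abs, sq_abs]
      exact mul_le_mul_of_nonneg_left (hC e he x) (Finset.sum_nonneg fun _ _ => sq_nonneg _)
    have s2 : |k x| ≤ θ + ‖b‖ ^ 2 * C ^ 2 / θ * G.a2 x := by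
      have e1 : ‖b‖ ^ 2 * C ^ 2 / θ * G.a2 x = ‖b‖ ^ 2 * (C ^ 2 * G.a2 x) / θ := by ring
      have e2 : k x ^ 2 / θ ≤ ‖b‖ ^ 2 * (C ^ 2 * G.a2 x) / θ := by gcongr
      have e3 : |k x| ≤ θ + k x ^ 2 / θ := by
        rw [← sub_nonneg]
        have : θ + k x ^ 2 / θ - |k x| = ((θ - |k x|) ^ 2 + θ * |k x|) / θ := by
          rw [← sq_abs (k x)]; field_simp; ring
        rw [this]; positivity
      linarith
    rw [abs_mul, mul_comm M]
    exact mul_le_mul s2 (hg.2.1 _) (abs_nonneg _) ((abs_nonneg _).trans s2)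
  refine (abs_sub _ _).trans ?_
  have : M * (‖b‖ ^ 2 * C ^ 2 / θ) * G.a2 x + M * (θ + (|⟪b, e⟫| + ‖b‖ * √(2 * η)))
    = M * (|⟪b, e⟫| + ‖b‖ * √(2 * η)) + M * (θ + ‖b‖ ^ 2 * C ^ 2 / θ * G.a2 x) := by ring
  linarith

/-- A bound for the area of the graph inside a ball. -/
noncomputable def vol (N : ℕ) (R : ℝ) : ℝ := 2 * ((2 * R) ^ N * aC N)

lemma vol_nonneg {R : ℝ} (hR : 0 ≤ R) : 0 ≤ vol N R := by
  have := aC_nonneg (N := N); unfold vol; positivity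

lemma I_cut_le {R : ℝ} (hR : 0 < R) : G.I (G.cut R) ≤ vol N R := by
  rw [cut_eq_rd]; exact G.I_rd_cut_le 0 hR

/-- If the curvature tends to zero, the part of the graph with normals close to `e` is
asymptotically invariant under translations orthogonal to `e`. -/
theorem cap_invariance {G : ℕ → MinGraph N} (ha : Neg G fun n => (G n).a2) {η R M B ε : ℝ}
    (hη : 0 < η) (hR : 0 < R) (hε : 0 < ε) :
    ∀ᶠ n in atTop, ∀ e : W N, ‖e‖ = 1 → ∀ b : W N, ‖b‖ ≤ B → ∀ g : TF N, g.Cls R M →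
      |(G n).I ((G n).cap η e * (G n).tr (g.pd b))|
        ≤ ε + |M| * (|⟪b, e⟫| + B * √(2 * η)) * vol N R := by
  obtain ⟨C, hC0, hC⟩ := exists_cap_bound η
  have hV := vol_nonneg (N := N) hR.le
  set θ := ε / (2 * (|M| * vol N R + 1)) with hθ
  have hθ0 : 0 < θ := by positivity
  set D := |M| * (B ^ 2 * C ^ 2 / θ) with hD
  have hD0 : 0 ≤ D := by positivity
  have hlim := (ha R hR).const_mul D
  rw [mul_zero] at hlim
  filter_upwards [hlim.eventually (gt_mem_nhds (half_pos hε))] with n hn e he b hb g hg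
  have hM : |M| = M := abs_of_nonneg ((norm_nonneg _).trans (hg.2.2 0))
  have hg' : g.Cls R |M| := by rw [hM]; exact hg
  refine ((G n).cap_pd_le hη (fun e he x => (hC N (G n) e he x).1) he b hR hθ0 hg').trans ?_
  have h1 := (G n).I_cut_le hR
  have h2 : 0 ≤ (G n).I ((G n).a2 * (G n).cut R) := I_nonneg _ fun x =>
    mul_nonneg ((G n).a2_nonneg x) ((G n).cut_nonneg R x)
  have h3 : |M| * (‖b‖ ^ 2 * C ^ 2 / θ) * (G n).I ((G n).a2 * (G n).cut R)
      ≤ D * (G n).I ((G n).a2 * (G n).cut R) := by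
    rw [hD]; gcongr
  have h4 : |M| * (θ + (|⟪b, e⟫| + ‖b‖ * √(2 * η))) * (G n).I ((G n).cut R)
      ≤ |M| * (θ + (|⟪b, e⟫| + B * √(2 * η))) * vol N R := by
    have : 0 ≤ (G n).I ((G n).cut R) := I_nonneg _ ((G n).cut_nonneg R)
    have : 0 ≤ B := (norm_nonneg _).trans hb
    have : 0 ≤ |M| * (θ + (|⟪b, e⟫| + B * √(2 * η))) := by positivity
    gcongr
  have h5 : |M| * θ * vol N R ≤ ε / 2 := by
    rw [hθ, show |M| * (ε / (2 * (|M| * vol N R + 1))) * vol N R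
      = ε / 2 * ((|M| * vol N R) / (|M| * vol N R + 1)) by field_simp]
    have : (|M| * vol N R) / (|M| * vol N R + 1) ≤ 1 := (div_le_one (by positivity)).2 (by linarith)
    nlinarith
  have h6 : |M| * (θ + (|⟪b, e⟫| + B * √(2 * η))) * vol N R
    = |M| * θ * vol N R + |M| * (|⟪b, e⟫| + B * √(2 * η)) * vol N R := by ring
  linarith

end MinGraph

/-! ### An area bound for stretched test functions -/

/-- The average of `|cos|` over three directions at mutual angle `60°` is at least `1/√3`. -/
lemma sqrt_three_mul_le (x y : ℝ) :
    √3 * √(x ^ 2 + y ^ 2) ≤ |x| + |1 / 2 * x + √3 / 2 * y| + |1 / 2 * x + -(√3 / 2) * y| := by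
  have h3 : √3 ^ 2 = (3 : ℝ) := Real.sq_sqrt (by norm_num)
  have h0 := Real.sqrt_nonneg (3 : ℝ)
  have a1 : |x| ≤ |1 / 2 * x + √3 / 2 * y| + |1 / 2 * x + -(√3 / 2) * y| := by
    have := abs_add_le (1 / 2 * x + √3 / 2 * y) (1 / 2 * x + -(√3 / 2) * y)
    rwa [show 1 / 2 * x + √3 / 2 * y + (1 / 2 * x + -(√3 / 2) * y) = x by ring] at this
  have a2 : √3 * |y| ≤ |1 / 2 * x + √3 / 2 * y| + |1 / 2 * x + -(√3 / 2) * y| := by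
    have := abs_sub (1 / 2 * x + √3 / 2 * y) (1 / 2 * x + -(√3 / 2) * y)
    rwa [show 1 / 2 * x + √3 / 2 * y - (1 / 2 * x + -(√3 / 2) * y) = √3 * y by ring,
      abs_mul, abs_of_nonneg h0] at this
  rw [← Real.sqrt_mul (by norm_num)]
  refine Real.sqrt_le_iff.2 ⟨by positivity, ?_⟩
  rw [← sq_abs x, ← sq_abs y]
  have hx := abs_nonneg x
  have hy := abs_nonneg y
  rw [add_assoc]
  generalize |1 / 2 * x + √3 / 2 * y| + |1 / 2 * x + -(√3 / 2) * y| = m at *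
  rcases le_total (√3 * |y|) |x| with h | h
  · have : (√3 * |y|) ^ 2 ≤ |x| ^ 2 := by gcongr
    rw [mul_pow, h3] at this
    have : (|x| + |x|) ^ 2 ≤ (|x| + m) ^ 2 := by gcongr
    nlinarith
  · have h1 : (|x| + √3 * |y|) ^ 2 ≤ (|x| + m) ^ 2 := by gcongr
    have h2 : |x| * |x| ≤ |x| * (√3 * |y|) := by gcongr
    nlinarith

namespace TF

variable {N : ℕ} (b : OrthonormalBasis (Idx N) ℝ (W N))

/-- The linear map which is diagonal in the basis `b`, with given eigenvalues. -/
noncomputable def diag (w : Idx N → ℝ) : W N →ₗ[ℝ] W N :=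
  Matrix.toLin b.toBasis b.toBasis (Matrix.diagonal w)

lemma inner_diag (w : Idx N → ℝ) (z : W N) (i : Idx N) :
    ⟪b i, diag b w z⟫ = w i * ⟪b i, z⟫ := by
  have h := congrFun (LinearMap.toMatrix_mulVec_repr b.toBasis b.toBasis (diag b w) z) i
  rw [diag, LinearMap.toMatrix_toLin, Matrix.mulVec_diagonal] at h
  simpa [diag, OrthonormalBasis.repr_apply_apply] using h.symm

lemma integral_comp_diag (w : Idx N → ℝ) (hw : ∀ i, 0 < w i) {F : W N → ℝ} (hF : Continuous F) :
    ∫ y, F y = (∏ i, w i) * ∫ z, F (diag b w z) := by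
  have hdet : LinearMap.det (diag b w) = ∏ i, w i := by
    rw [diag, LinearMap.det_toLin, Matrix.det_diagonal]
  have hp : 0 < ∏ i, w i := Finset.prod_pos fun i _ => hw i
  have h := Measure.map_linearMap_addHaar_eq_smul_addHaar (volume : Measure (W N))
    (f := diag b w) (by rw [hdet]; exact hp.ne')
  have hc : Continuous (diag b w) := LinearMap.continuous_of_finiteDimensional _
  rw [← integral_map (μ := volume) (φ := diag b w) hc.aemeasurable hF.aestronglyMeasurable, h, hdet,
    integral_smul_measure, abs_of_pos (inv_pos.2 hp), ENNReal.toReal_ofReal (inv_pos.2 hp).le,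
    smul_eq_mul, mul_inv_cancel_left₀ hp.ne']

lemma norm_comb_sq (c : Idx N → ℝ) : ‖∑ i, c i • innerSL ℝ (b i)‖ ^ 2 = ∑ i, c i ^ 2 := by
  have : ∑ i, c i • innerSL ℝ (b i) = innerSL ℝ (∑ i, c i • b i) := by simp [map_sum]
  rw [this, innerSL_apply_norm, ← sum_inner_sq b]
  exact Finset.sum_congr rfl fun i _ => by rw [b.orthonormal.inner_right_fintype]

/-- Integral gradient bound for the radial test function stretched by `L` in the directions
orthogonal to a two-plane. -/
lemma integral_fderiv_st_le {i0 i1 : Idx N} (hi : i0 ≠ i1) {L : ℝ} (hL : 0 < L) (hL' : 0 < L⁻¹) :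
    ∫ y, ‖fderiv ℝ (st b ({i0, i1}ᶜ) .phi one_pos hL') y‖ ≤ 2 * (√3 * cc N + L⁻¹ * aC N) := by
  set A : Finset (Idx N) := {i0, i1}ᶜ with hA
  set ζ := st b A .phi one_pos hL' with hζ
  set w : Idx N → ℝ := fun i => if i ∈ A then L else 1 with hw
  have hw0 : ∀ i, 0 < w i := fun i => by simp only [hw]; split_ifs <;> positivity
  have hprod : ∏ i, w i = L ^ A.card := by
    simp only [hw]
    rw [Finset.prod_ite_mem, Finset.univ_inter, Finset.prod_const]
  have hcont : Continuous fun y => ‖fderiv ℝ ζ y‖ := (ζ.smooth.continuous_fderiv (by simp)).norm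
  have hcc := cutFun_norm_continuous (N := N)
  have hint : ∀ F : W N → ℝ, Continuous F → Integrable fun z => F z * cutFun (‖z‖ ^ 2) :=
    fun F hF => (hF.mul hcc).integrable_of_hasCompactSupport cutFun_norm_cs.mul_left
  rw [integral_comp_diag b w hw0 hcont, hprod]
  have hsq : ∀ z, sq b A L⁻¹ (diag b w z) = ‖z‖ ^ 2 := fun z => by
    rw [← sum_inner_sq b]
    refine Finset.sum_congr rfl fun i _ => ?_
    rw [inner_diag]
    simp only [hw]
    split_ifs <;> field_simp
  have hb : ∀ z : W N, L ^ A.card * ‖fderiv ℝ ζ (diag b w z)‖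
      ≤ 2 * (√(⟪b i0, z⟫ ^ 2 + ⟪b i1, z⟫ ^ 2) + L⁻¹ * ‖z‖) * cutFun (‖z‖ ^ 2) := by
    intro z
    rw [hζ, (st_hasFDerivAt b A .phi one_pos hL' _).fderiv, hsq, norm_smul]
    simp only [one_pow, div_one, (Prof.phi_hasDerivAt _).deriv, norm_mul, norm_neg, norm_pow]
    rw [Real.norm_of_nonneg (cutFun_nonneg _), Real.norm_of_nonneg hL'.le]
    have e : ∑ i, (if i ∈ A then L⁻¹ ^ 2 else 1) • ((2 * ⟪b i, diag b w z⟫) • innerSL ℝ (b i))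
        = ∑ i, (2 * (if i ∈ A then L⁻¹ else 1) * ⟪b i, z⟫) • innerSL ℝ (b i) := by
      refine Finset.sum_congr rfl fun i _ => ?_
      rw [inner_diag, smul_smul]
      congr 1
      simp only [hw]
      split_ifs <;> field_simp
    rw [e]
    have hn : ‖∑ i, (2 * (if i ∈ A then L⁻¹ else 1) * ⟪b i, z⟫) • innerSL ℝ (b i)‖
        ≤ 2 * (√(⟪b i0, z⟫ ^ 2 + ⟪b i1, z⟫ ^ 2) + L⁻¹ * ‖z‖) := by
      refine abs_le_of_sq_le_sq' ?_ (by positivity) |>.2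
      rw [norm_comb_sq]
      have h1 : ∑ i, (2 * (if i ∈ A then L⁻¹ else 1) * ⟪b i, z⟫) ^ 2
          ≤ ∑ i, (4 * (if i ∈ ({i0, i1} : Finset (Idx N)) then ⟪b i, z⟫ ^ 2 else 0)
            + 4 * L⁻¹ ^ 2 * ⟪b i, z⟫ ^ 2) := by
        refine Finset.sum_le_sum fun i _ => ?_
        by_cases h : i ∈ ({i0, i1} : Finset (Idx N))
        · have h' : i ∉ A := by rw [hA, Finset.mem_compl]; exact fun hc => hc h
          rw [if_neg h', if_pos h]
          have : 0 ≤ 4 * L⁻¹ ^ 2 * ⟪b i, z⟫ ^ 2 := by positivity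
          nlinarith
        · have h' : i ∈ A := by rw [hA, Finset.mem_compl]; exact h
          rw [if_pos h', if_neg h]
          exact le_of_eq (by ring)
      rw [Finset.sum_add_distrib, ← Finset.mul_sum, ← Finset.mul_sum, Finset.sum_ite_mem,
        Finset.univ_inter, Finset.sum_pair hi, sum_inner_sq] at h1
      have h2 := Real.sq_sqrt (show 0 ≤ ⟪b i0, z⟫ ^ 2 + ⟪b i1, z⟫ ^ 2 by positivity)
      have h3 : 0 ≤ √(⟪b i0, z⟫ ^ 2 + ⟪b i1, z⟫ ^ 2) * (L⁻¹ * ‖z‖) := by positivity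
      nlinarith
    calc _ = (L ^ A.card * L⁻¹ ^ A.card) * (cutFun (‖z‖ ^ 2)
          * ‖∑ i, (2 * (if i ∈ A then L⁻¹ else 1) * ⟪b i, z⟫) • innerSL ℝ (b i)‖) := by ring
      _ ≤ 1 * (cutFun (‖z‖ ^ 2) * (2 * (√(⟪b i0, z⟫ ^ 2 + ⟪b i1, z⟫ ^ 2) + L⁻¹ * ‖z‖))) := by
        rw [← mul_pow, mul_inv_cancel₀ hL.ne', one_pow]
        have := cutFun_nonneg (‖z‖ ^ 2)
        gcongr
      _ = _ := by ring
  have h3 : √3 ^ 2 = (3 : ℝ) := Real.sq_sqrt (by norm_num)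
  set e2 : W N := (1 / 2 : ℝ) • b i0 + (√3 / 2) • b i1 with he2
  set e3 : W N := (1 / 2 : ℝ) • b i0 + (-(√3 / 2)) • b i1 with he3
  have h01 : ⟪b i0, b i1⟫ = (0 : ℝ) := by
    rw [orthonormal_iff_ite.1 b.orthonormal]; simp [hi]
  have hnorm : ∀ s t : ℝ, s ^ 2 + t ^ 2 = 1 → ‖s • b i0 + t • b i1‖ = 1 := fun s t h => by
    have := norm_add_sq_real (s • b i0) (t • b i1)
    rw [inner_smul_left, inner_smul_right, h01, norm_smul, norm_smul, b.norm_eq_one, b.norm_eq_one,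
      mul_one, mul_one, Real.norm_eq_abs, Real.norm_eq_abs, sq_abs, sq_abs] at this
    have h4 : ‖s • b i0 + t • b i1‖ ^ 2 = 1 := by rw [this, ← h]; simp
    exact (pow_eq_one_iff_of_nonneg (norm_nonneg _) two_ne_zero).1 h4
  have hn2 : ‖e2‖ = 1 := hnorm _ _ (by nlinarith)
  have hn3 : ‖e3‖ = 1 := hnorm _ _ (by nlinarith)
  rw [← integral_const_mul]
  have hle : ∀ z : W N, L ^ A.card * ‖fderiv ℝ ζ (diag b w z)‖ ≤
      2 / √3 * (|⟪b i0, z⟫| * cutFun (‖z‖ ^ 2) + |⟪e2, z⟫| * cutFun (‖z‖ ^ 2)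
        + |⟪e3, z⟫| * cutFun (‖z‖ ^ 2)) + 2 * L⁻¹ * (‖z‖ * cutFun (‖z‖ ^ 2)) := by
    intro z
    refine (hb z).trans ?_
    have h4 := sqrt_three_mul_le ⟪b i0, z⟫ ⟪b i1, z⟫
    have h5 : ⟪e2, z⟫ = 1 / 2 * ⟪b i0, z⟫ + √3 / 2 * ⟪b i1, z⟫ := by
      rw [he2, inner_add_left, real_inner_smul_left, real_inner_smul_left]
    have h6 : ⟪e3, z⟫ = 1 / 2 * ⟪b i0, z⟫ + -(√3 / 2) * ⟪b i1, z⟫ := by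
      rw [he3, inner_add_left, real_inner_smul_left, real_inner_smul_left]
    rw [← h5, ← h6] at h4
    have h7 : √(⟪b i0, z⟫ ^ 2 + ⟪b i1, z⟫ ^ 2)
        ≤ (|⟪b i0, z⟫| + |⟪e2, z⟫| + |⟪e3, z⟫|) / √3 := by
      rw [le_div_iff₀ (by positivity)]; linarith
    calc _ ≤ 2 * ((|⟪b i0, z⟫| + |⟪e2, z⟫| + |⟪e3, z⟫|) / √3 + L⁻¹ * ‖z‖) * cutFun (‖z‖ ^ 2) := by
          have := cutFun_nonneg (‖z‖ ^ 2)
          gcongr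
      _ = _ := by ring
  have i1' := hint (fun z => |⟪b i0, z⟫|) (by fun_prop)
  have i2' := hint (fun z => |⟪e2, z⟫|) (by fun_prop)
  have i3' := hint (fun z => |⟪e3, z⟫|) (by fun_prop)
  have i4' := hint (fun z => ‖z‖) (by fun_prop)
  have i12 := i1'.add i2'
  have i123 := i12.add i3'
  have hdc : Continuous (diag b w) := LinearMap.continuous_of_finiteDimensional _
  refine (integral_mono_of_nonneg (Eventually.of_forall fun z => by positivity)
    ((i123.const_mul (2 / √3)).add (i4'.const_mul (2 * L⁻¹))) (Eventually.of_forall hle)).trans ?_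
  refine le_of_eq ?_
  refine (integral_add (i123.const_mul (2 / √3)) (i4'.const_mul (2 * L⁻¹))).trans ?_
  rw [integral_const_mul, integral_const_mul, ← aC]
  have : ∫ z : W N, (((fun z => |⟪b i0, z⟫| * cutFun (‖z‖ ^ 2)) + fun z => |⟪e2, z⟫| * cutFun (‖z‖ ^ 2))
      + fun z => |⟪e3, z⟫| * cutFun (‖z‖ ^ 2)) z = 3 * cc N := by
    refine (integral_add i12 i3').trans ?_
    rw [integral_add' i1' i2', cc_inner, cc_inner, cc_inner, hn2, hn3, b.norm_eq_one]
    ring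
  rw [this]
  have h30 : √3 ≠ 0 := by positivity
  field_simp
  linear_combination (-(cc N * L)) * h3

end TF

namespace MinGraph

variable {N : ℕ} (G : MinGraph N)

/-- The area bound for test functions stretched off a two-plane: beyond the flat value `cc N`
one gains a factor `√3 < 2`. -/
lemma I_st_le (b : OrthonormalBasis (Idx N) ℝ (W N)) {i0 i1 : Idx N} (hi : i0 ≠ i1) {L : ℝ}
    (hL : 0 < L) (hL' : 0 < L⁻¹) :
    G.I (G.tr (TF.st b ({i0, i1}ᶜ) .phi one_pos hL')) ≤ √3 * cc N + L⁻¹ * aC N := by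
  have h1 := G.area (TF.st b ({i0, i1}ᶜ) .phi one_pos hL')
  have h2 := TF.integral_fderiv_st_le b hi hL hL'
  linarith

end MinGraph

/-! ### Two good points have nearly the same normal -/

/-- An orthonormal basis adapted to two vectors: all but two basis vectors are orthogonal to
both. -/
lemma exists_plane_basis {N : ℕ} (hN : 1 ≤ N) (e e' : W N) :
    ∃ (b : OrthonormalBasis (Idx N) ℝ (W N)) (i0 i1 : Idx N), i0 ≠ i1 ∧
      ∀ i ∈ ({i0, i1}ᶜ : Finset (Idx N)), ⟪b i, e⟫ = 0 ∧ ⟪b i, e'⟫ = 0 := by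
  have h : Module.finrank ℝ (W N) = Fintype.card (Fin (N + 1)) := by simp
  let f : Fin (N + 1) → W N := fun i => if i = 0 then e else e'
  let j1 : Fin (N + 1) := ⟨1, by omega⟩
  have hj : j1 ≠ 0 := by simp [j1, Fin.ext_iff]
  let c := InnerProductSpace.gramSchmidtOrthonormalBasis h f
  refine ⟨c.reindex (finSuccEquiv N), finSuccEquiv N 0, finSuccEquiv N j1,
    fun h => hj ((finSuccEquiv N).injective h).symm, fun i hi => ?_⟩
  obtain ⟨k, rfl⟩ := (finSuccEquiv N).surjective i
  simp only [Finset.mem_compl, Finset.mem_insert, Finset.mem_singleton, not_or,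
    (finSuccEquiv N).injective.eq_iff] at hi
  rw [OrthonormalBasis.reindex_apply, Equiv.symm_apply_apply]
  have k0 : k.val ≠ 0 := fun h => hi.1 (Fin.ext h)
  have k1 : k.val ≠ 1 := fun h => hi.2 (Fin.ext h)
  have l0 : (0 : Fin (N + 1)) < k := Fin.lt_def.2 (by change 0 < k.val; omega)
  have l1 : j1 < k := Fin.lt_def.2 (by change 1 < k.val; omega)
  have a0 := InnerProductSpace.gramSchmidtOrthonormalBasis_inv_triangular (𝕜 := ℝ) h (f := f) l0
  have a1 := InnerProductSpace.gramSchmidtOrthonormalBasis_inv_triangular (𝕜 := ℝ) h (f := f) l1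
  exact ⟨by simpa [f] using a0, by simpa [f, hj] using a1⟩

namespace TF

variable {N : ℕ}

lemma exists_cls (ζ : TF N) : ∃ M, ∀ p : W N, ‖p‖ ≤ 2 → (ζ.tl (-p)).Cls (ζ.exists_support.choose + 2) M := by
  obtain ⟨hR, hζ⟩ := ζ.exists_support.choose_spec
  set R := ζ.exists_support.choose
  obtain ⟨C1, h1⟩ := ζ.continuous.bounded_above_of_compact_support ζ.cs
  obtain ⟨C2, h2⟩ := (ζ.smooth.continuous_fderiv (by simp)).bounded_above_of_compact_support
    (ζ.cs.fderiv (𝕜 := ℝ))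
  refine ⟨max C1 C2, fun p hp => ⟨fun y hy => hζ _ ?_, fun y => (h1 _).trans (le_max_left _ _),
    fun y => ?_⟩⟩
  · have := norm_add_le (y + -p) p
    rw [neg_add_cancel_right] at this
    linarith
  · change ‖fderiv ℝ (fun y => ζ (y + -p)) y‖ ≤ _
    rw [fderiv_comp_add_right]
    exact (h2 _).trans (le_max_right _ _)

end TF

namespace MinGraph

variable {N : ℕ} (G : MinGraph N)

lemma tr_rad_one (p : W N) :
    G.tr ((TF.rad .phi 0 one_pos).tl (-p)) = G.rd .phi p 1 := by
  rw [← G.tr_rad .phi p one_pos]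
  ext x
  rw [tr_apply, tr_apply, TF.tl_apply, TF.rad_apply, TF.rad_apply, sub_zero, ← sub_eq_add_neg]

lemma tr_st_one (b : OrthonormalBasis (Idx N) ℝ (W N)) (A : Finset (Idx N)) :
    G.tr (TF.st b A .phi one_pos one_pos) = G.tr (TF.rad .phi 0 one_pos) := by
  ext x
  rw [tr_apply, tr_apply, TF.rad_apply, sub_zero]
  change 1 ^ A.card * Prof.phi (TF.sq b A 1 _ / 1 ^ 2) = _
  rw [TF.sq_one, one_pow, one_mul]

lemma cap_add_le_one {η η0 : ℝ} (hη : 0 < η) (h0 : 8 * η ≤ η0 ^ 2) {e e' : W N} (he : ‖e‖ = 1)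
    (he' : ‖e'‖ = 1) (h : η0 ≤ ‖e - e'‖) (hη0 : 0 < η0) (x : E N) :
    G.cap η e x + G.cap η e' x ≤ 1 := by
  rcases le_or_gt (G.νe e x) (1 - η) with h1 | h1
  · rw [G.cap_zero hη h1, zero_add]; exact G.cap_le_one _ _ _
  rcases le_or_gt (G.νe e' x) (1 - η) with h2 | h2
  · rw [G.cap_zero hη h2, add_zero]; exact G.cap_le_one _ _ _
  exfalso
  rw [νe_apply] at h1 h2
  have a1 := norm_sub_sq_real e (G.nu x)
  have a2 := norm_sub_sq_real e' (G.nu x)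
  rw [he, G.norm_nu] at a1
  rw [he', G.norm_nu] at a2
  have a3 : ‖e - e'‖ ≤ ‖e - G.nu x‖ + ‖e' - G.nu x‖ := by
    have := norm_sub_le (e - G.nu x) (e' - G.nu x)
    rwa [sub_sub_sub_cancel_right] at this
  have a4 : η0 ^ 2 ≤ (‖e - G.nu x‖ + ‖e' - G.nu x‖) ^ 2 :=
    pow_le_pow_left₀ hη0.le (h.trans a3) 2
  nlinarith [sq_nonneg (‖e - G.nu x‖ - ‖e' - G.nu x‖)]

lemma norm_le_two {p : W N} (h : ‖p‖ ^ 2 ≤ 2) : ‖p‖ ≤ 2 := by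
  by_contra hc
  push Not at hc
  nlinarith

lemma exists_small_params {c K C1 C2 : ℝ} (hc : 0 < c) (hK : 0 ≤ K) (h1 : 0 ≤ C1) (h2 : 0 ≤ C2) :
    ∃ σ > 0, ∃ ε > 0, ε + 3 * σ * C1 + K * (ε + 2 * σ * C2) ≤ c / 40 := by
  have hD : 0 < C1 + K * C2 + 1 := by positivity
  refine ⟨c / (240 * (C1 + K * C2 + 1)), by positivity, c / (120 * (1 + K)), by positivity, ?_⟩
  have u1 : c / (120 * (1 + K)) * (1 + K) = c / 120 := by field_simp
  have u2 : c / (240 * (C1 + K * C2 + 1)) * (C1 + K * C2 + 1) = c / 240 := by field_simp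
  have u0 : 0 < c / (240 * (C1 + K * C2 + 1)) := by positivity
  have u3 : 0 ≤ c / (240 * (C1 + K * C2 + 1)) * (K * C2) := by positivity
  generalize c / (240 * (C1 + K * C2 + 1)) = σ at *
  generalize c / (120 * (1 + K)) = ε at *
  nlinarith

/-- If the curvature is small, two points near the origin which both see area at least
`(19/20) cc N` with normal close to their own normal, and whose tangent planes nearly pass through
the origin, have nearly the same normal: otherwise one could translate both pieces to the origin
and stretch them off the plane spanned by the normals, contradicting `I_st_le`. -/
theorem two_points (hN : 1 ≤ N) {G : ℕ → MinGraph N} (ha : Neg G fun n => (G n).a2) {η0 : ℝ}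
    (hη0 : 0 < η0) : ∃ η1 > 0, ∃ η > 0, ∀ᶠ n in atTop, ∀ p p' e e' : W N, ‖p‖ ^ 2 ≤ 2 →
      ‖p'‖ ^ 2 ≤ 2 → ‖e‖ = 1 → ‖e'‖ = 1 → |⟪p, e⟫| ≤ η → |⟪p', e'⟫| ≤ η →
      19 / 20 * cc N ≤ (G n).I ((G n).cap η1 e * (G n).rd .phi p 1) →
      19 / 20 * cc N ≤ (G n).I ((G n).cap η1 e' * (G n).rd .phi p' 1) → ‖e - e'‖ < η0 := by
  have hc := cc_pos (N := N)
  have hA := aC_nonneg (N := N)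
  obtain ⟨L, hL1, hLa⟩ : ∃ L : ℝ, 1 ≤ L ∧ 20 * aC N / cc N ≤ L :=
    ⟨max 1 (20 * aC N / cc N), le_max_left _ _, le_max_right _ _⟩
  have hL0 : 0 < L := by linarith
  have hL' : 0 < L⁻¹ := inv_pos.2 hL0
  replace hLa : L⁻¹ * aC N ≤ cc N / 20 := by
    rw [div_le_iff₀ hc] at hLa
    rw [inv_mul_le_iff₀ hL0]; linarith
  obtain ⟨B, hB0, hB⟩ := Prof.phi.exists_bound
  set ζ : TF N := TF.rad .phi 0 one_pos with hζ
  obtain ⟨M1, hM1⟩ := ζ.exists_cls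
  set R1 := ζ.exists_support.choose + 2 with hR1
  have hR10 : 0 < R1 := by have := ζ.exists_support.choose_spec.1; linarith
  set R2 := 4 * 1 * L with hR2
  have hR20 : 0 < R2 := by positivity
  set M2 := TF.stC N B 1 R2 with hM2
  have v1 := vol_nonneg (N := N) hR10.le
  have v2 := vol_nonneg (N := N) hR20.le
  obtain ⟨σ, hσ0, ε, hε0, t4⟩ := exists_small_params (c := cc N) (K := L * (N + 1))
    (C1 := |M1| * vol N R1) (C2 := |M2| * vol N R2) hc (by positivity) (by positivity)
    (by positivity)
  obtain ⟨η1, hη10, h8, hs⟩ : ∃ η1 : ℝ, 0 < η1 ∧ 8 * η1 ≤ η0 ^ 2 ∧ √(2 * η1) ≤ σ := by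
    refine ⟨min (η0 ^ 2 / 8) (σ ^ 2 / 2), lt_min (by positivity) (by positivity), ?_, ?_⟩
    · linarith [min_le_left (η0 ^ 2 / 8) (σ ^ 2 / 2)]
    · exact Real.sqrt_le_iff.2 ⟨hσ0.le, by linarith [min_le_right (η0 ^ 2 / 8) (σ ^ 2 / 2)]⟩
  refine ⟨η1, hη10, σ, hσ0, ?_⟩
  filter_upwards [cap_invariance ha (M := M1) (B := 2) hη10 hR10 hε0,
    cap_invariance ha (M := M2) (B := 2) hη10 hR20 hε0]
    with n i1 i2 p p' e e' hp hp' he he' hpe hpe' g g'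
  by_contra hfar
  push Not at hfar
  obtain ⟨b, j0, j1, hj, hb⟩ := exists_plane_basis hN e e'
  set H := G n
  set Z : SF N := H.tr (TF.st b ({j0, j1}ᶜ) .phi one_pos hL') with hZ
  have key : ∀ p e : W N, ‖p‖ ^ 2 ≤ 2 → ‖e‖ = 1 → |⟪p, e⟫| ≤ σ →
      (∀ i ∈ ({j0, j1}ᶜ : Finset (Idx N)), ⟪b i, e⟫ = 0) →
      19 / 20 * cc N ≤ H.I (H.cap η1 e * H.rd .phi p 1) →
      37 / 40 * cc N ≤ H.I (H.cap η1 e * Z) := by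
    intro p e hp he hpe hbe hg
    have hp2 := norm_le_two hp
    have t1 := H.translate (H.cap η1 e) ζ p (δ := ε + |M1| * (σ + 2 * σ) * vol N R1) fun t ht => by
      have ht' : ‖t • p‖ ≤ 2 := by
        rw [norm_smul, Real.norm_of_nonneg ht.1]
        nlinarith [norm_nonneg p, ht.2]
      refine (i1 e he p hp2 _ (hM1 _ ht')).trans ?_
      gcongr
    have t2 := H.stretch (H.cap η1 e) b ({j0, j1}ᶜ) hB one_pos hL1 hL'
      (δ := ε + |M2| * (0 + 2 * σ) * vol N R2) fun g hg i hi => by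
      refine (i2 e he (b i) (by rw [b.norm_eq_one]; norm_num) _ hg).trans ?_
      rw [hbe i hi, abs_zero]
      gcongr
    rw [tr_rad_one] at t1
    rw [tr_st_one] at t2
    have hcard : ((({j0, j1}ᶜ : Finset (Idx N)).card : ℕ) : ℝ) ≤ N + 1 := by
      have := Finset.card_le_univ ({j0, j1}ᶜ : Finset (Idx N))
      rw [show Fintype.card (Idx N) = N + 1 by simp [Idx]] at this
      exact_mod_cast this
    have t3 : L * ((({j0, j1}ᶜ : Finset (Idx N)).card : ℝ) * (ε + |M2| * (0 + 2 * σ) * vol N R2))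
        ≤ L * (N + 1) * (ε + 2 * σ * (|M2| * vol N R2)) := by
      have h0 : 0 ≤ ε + |M2| * (0 + 2 * σ) * vol N R2 := by positivity
      rw [mul_assoc L]
      refine mul_le_mul_of_nonneg_left ?_ hL0.le
      refine (mul_le_mul_of_nonneg_right hcard h0).trans (le_of_eq (by ring))
    have t5 := (abs_le.1 t1).2
    have t6 := (abs_le.1 (t2.trans t3)).2
    have t7 : ε + |M1| * (σ + 2 * σ) * vol N R1 = ε + 3 * σ * (|M1| * vol N R1) := by ring
    rw [t7] at t5
    linarith
  have k1 := key p e hp he hpe (fun i hi => (hb i hi).1) g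
  have k2 := key p' e' hp' he' hpe' (fun i hi => (hb i hi).2) g'
  have hZ0 : ∀ x, 0 ≤ Z x := fun x =>
    mul_nonneg (pow_nonneg hL'.le _) (Prof.phi.nonneg _)
  have hZc : CS Z := H.tr_CS _
  have hsum : H.I (H.cap η1 e * Z) + H.I (H.cap η1 e' * Z) ≤ H.I Z := by
    rw [← H.I_add (hZc.mul_l _) (hZc.mul_l _)]
    refine H.I_mono ((hZc.mul_l _).add (hZc.mul_l _)) hZc fun x => ?_
    have := H.cap_add_le_one hη10 h8 he he' hfar hη0 x
    simp only [SF.add_apply, SF.mul_apply]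
    nlinarith [hZ0 x]
  have hup := H.I_st_le b hj hL0 hL'
  rw [← hZ] at hup
  have h3 : √3 < 1.74 := by
    rw [Real.sqrt_lt' (by norm_num)]; norm_num
  nlinarith

end MinGraph

/-! ### Most points are good -/

namespace MinGraph

variable {N : ℕ} (G : MinGraph N)

/-- The curvature around the point `p` at scale `κ`, normalised to be scale invariant. -/
noncomputable def ex (p : W N) (κ : ℝ) : ℝ :=
  κ ^ 2 * (κ ^ N)⁻¹ * G.I (G.a2 * G.rd .psi p κ)

lemma ex_nonneg (p : W N) {κ : ℝ} (hκ : 0 < κ) : 0 ≤ G.ex p κ :=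
  mul_nonneg (by positivity) (G.I_nonneg fun x => mul_nonneg (G.a2_nonneg x) (G.rd_nonneg _ _ _ x))

lemma rd_psi_mono (p : W N) {κ κ' : ℝ} (hκ : 0 < κ) (h : κ ≤ κ') (x : E N) :
    G.rd .psi p κ x ≤ G.rd .psi p κ' x := by
  rw [rd_apply, rd_apply]
  refine Prof.psi_antitone ?_
  have : 0 ≤ G.r2 p x := by rw [← norm_pos_sub_sq]; positivity
  gcongr

/-- Almost monotonicity of the weighted area ratio under halving of the scale. -/
lemma J_half {f : SF N} (hf : ∀ x, 0 ≤ f x) {C : ℝ} (hC : 0 ≤ C)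
    (hl : ∀ x, -(2 * C * G.a2 x) ≤ G.lap f x) (p : W N) {κ : ℝ} (hκ : 0 < κ) :
    G.J f p (κ / 2) - C * 2 ^ N * G.ex p κ ≤ G.J f p κ := by
  have hlt : κ / 2 < κ := by linarith
  obtain ⟨c, hc, hslope⟩ := exists_hasDerivAt_eq_slope (G.J f p) (G.J' f p) hlt
    (fun t ht => (G.hasDerivAt_J f p (by linarith [ht.1])).continuousAt.continuousWithinAt)
    (fun t ht => G.hasDerivAt_J f p (by linarith [ht.1]))
  have hc0 : 0 < c := by linarith [hc.1]
  set e := G.I (G.a2 * G.rd .psi p κ) with he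
  have he0 : 0 ≤ e := G.I_nonneg fun x => mul_nonneg (G.a2_nonneg x) (G.rd_nonneg _ _ _ x)
  have h1 : -(2 * C * e) ≤ G.I (G.lap f * G.rd .psi p c) := by
    have h2 : G.I ((-(2 * C)) • (G.a2 * G.rd .psi p κ)) ≤ G.I (G.lap f * G.rd .psi p c) := by
      refine G.I_mono (((G.rd_CS _ p hκ).mul_l _).smul _) ((G.rd_CS _ p hc0).mul_l _) fun x => ?_
      simp only [SF.smul_apply, SF.mul_apply]
      have m := G.rd_psi_mono p hc0 hc.2.le x
      have r0 := G.rd_nonneg .psi p c x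
      have a0 := G.a2_nonneg x
      calc -(2 * C) * (G.a2 x * G.rd .psi p κ x) ≤ -(2 * C) * (G.a2 x * G.rd .psi p c x) :=
            mul_le_mul_of_nonpos_left (mul_le_mul_of_nonneg_left m a0) (by linarith)
        _ = -(2 * C * G.a2 x) * G.rd .psi p c x := by ring
        _ ≤ _ := mul_le_mul_of_nonneg_right (hl x) r0
    rw [G.I_smul, ← he] at h2
    linarith
  have h3 : 0 ≤ G.I (f * (G.s p * G.s p) * G.rd .cut p c) := G.I_nonneg fun x =>
    mul_nonneg (mul_nonneg (hf x) (mul_self_nonneg _)) (G.rd_nonneg _ _ _ x)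
  have h4 : -(C * 2 ^ N * (κ * (κ ^ N)⁻¹ * e)) ≤ G.J' f p c := by
    have h5 : (c ^ (N + 1))⁻¹ * (c ^ 2 / 2 * -(2 * C * e)) ≤ G.J' f p c := by
      unfold J'
      refine mul_le_mul_of_nonneg_left ?_ (by positivity)
      have : 0 ≤ 2 * (c ^ 2)⁻¹ * G.I (f * (G.s p * G.s p) * G.rd .cut p c) := by positivity
      have := mul_le_mul_of_nonneg_left h1 (show 0 ≤ c ^ 2 / 2 by positivity)
      linarith
    refine le_trans ?_ h5
    have h6 : (c ^ (N + 1))⁻¹ * (c ^ 2 / 2 * -(2 * C * e)) = -(C * e * (c * (c ^ N)⁻¹)) := by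
      rw [pow_succ]; field_simp
    have h7 : c * (c ^ N)⁻¹ ≤ κ * (2 ^ N * (κ ^ N)⁻¹) := by
      have : (c ^ N)⁻¹ ≤ 2 ^ N * (κ ^ N)⁻¹ := by
        rw [← div_eq_mul_inv, ← div_pow, ← inv_pow]
        refine pow_le_pow_left₀ (by positivity) ?_ N
        rw [inv_le_comm₀ hc0 (by positivity), inv_div]
        exact hc.1.le
      have := hc.2.le
      gcongr
    have h8 := mul_le_mul_of_nonneg_left h7 (show 0 ≤ C * e by positivity)
    rw [h6]
    linarith [show C * e * (κ * (2 ^ N * (κ ^ N)⁻¹)) = C * 2 ^ N * (κ * (κ ^ N)⁻¹ * e) by ring]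
  rw [hslope, le_div_iff₀ (by linarith)] at h4
  have h9 : C * 2 ^ N * (κ * (κ ^ N)⁻¹ * e) * (κ - κ / 2) ≤ C * 2 ^ N * G.ex p κ := by
    rw [ex, ← he]
    have : 0 ≤ C * 2 ^ N * (κ ^ 2 * (κ ^ N)⁻¹ * e) := by positivity
    linarith [show C * 2 ^ N * (κ * (κ ^ N)⁻¹ * e) * (κ - κ / 2)
      = C * 2 ^ N * (κ ^ 2 * (κ ^ N)⁻¹ * e) / 2 by ring]
  linarith

/-- If the dyadic curvature sums at a point are small, the area ratio at unit scale, restricted to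
normals near the normal at the point, is at least the flat one up to a small error. -/
lemma J_one_ge {f : SF N} (hf : ∀ x, 0 ≤ f x) {C η : ℝ} (hC : 0 ≤ C)
    (hl : ∀ x, -(2 * C * G.a2 x) ≤ G.lap f x) {x₀ : E N} (h1 : f x₀ = 1)
    (hη : ∀ m, ∑ i ∈ Finset.range m, G.ex (G.pos x₀) ((1 / 2) ^ i) ≤ η) :
    cc N - C * 2 ^ N * η ≤ G.J f (G.pos x₀) 1 := by
  set p := G.pos x₀ with hp
  have step : ∀ m, G.J f p ((1 / 2) ^ m)
      - C * 2 ^ N * ∑ i ∈ Finset.range m, G.ex p ((1 / 2) ^ i) ≤ G.J f p 1 := by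
    intro m
    induction m with
    | zero => simp
    | succ m ih =>
      have := G.J_half hf hC hl p (κ := (1 / 2) ^ m) (by positivity)
      rw [Finset.sum_range_succ, mul_add, pow_succ, show (1 / 2 : ℝ) ^ m * (1 / 2)
        = (1 / 2) ^ m / 2 by ring]
      linarith
  refine le_of_forall_pos_le_add fun ε hε => ?_
  have hd := G.J_density hf x₀ hε
  have ht : Tendsto (fun m : ℕ => (1 / 2 : ℝ) ^ m) atTop (𝓝[>] 0) :=
    tendsto_nhdsWithin_iff.2 ⟨tendsto_pow_atTop_nhds_zero_of_lt_one (by norm_num) (by norm_num),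
      Eventually.of_forall fun m => by simp⟩
  obtain ⟨m, hm⟩ := (ht.eventually hd).exists
  rw [h1, mul_one] at hm
  have h3 := mul_le_mul_of_nonneg_left (hη m) (show 0 ≤ C * 2 ^ N by positivity)
  linarith [step m]

/-- The dyadic sum of the scale invariant curvatures around a point of the graph. -/
noncomputable def qe (x : E N) : ENNReal :=
  ∑' i : ℕ, ENNReal.ofReal (((1 / 2 : ℝ) ^ i) ^ 2 * (((1 / 2) ^ i) ^ N)⁻¹) *
    ∫⁻ z, ENNReal.ofReal (G.a2 z * Prof.psi (‖G.pos z - G.pos x‖ ^ 2 / ((1 / 2) ^ i) ^ 2)) ∂G.μ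

lemma ofReal_ex (x : E N) {κ : ℝ} (hκ : 0 < κ) : ENNReal.ofReal (G.ex (G.pos x) κ)
    = ENNReal.ofReal (κ ^ 2 * (κ ^ N)⁻¹) *
      ∫⁻ z, ENNReal.ofReal (G.a2 z * Prof.psi (‖G.pos z - G.pos x‖ ^ 2 / κ ^ 2)) ∂G.μ := by
  rw [ex, ENNReal.ofReal_mul (by positivity), I, ofReal_integral_eq_lintegral_ofReal]
  · congr 2
    ext z
    rw [SF.mul_apply, rd_apply, norm_pos_sub_sq]
  · exact ((G.rd_CS .psi (G.pos x) hκ).mul_l G.a2).integrable G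
  · exact Eventually.of_forall fun z => mul_nonneg (G.a2_nonneg z) (G.rd_nonneg _ _ _ z)

lemma sum_ex_le {x : E N} {η : ℝ} (hη : 0 ≤ η) (h : G.qe x ≤ ENNReal.ofReal η) (m : ℕ) :
    ∑ i ∈ Finset.range m, G.ex (G.pos x) ((1 / 2) ^ i) ≤ η := by
  rw [← ENNReal.ofReal_le_ofReal_iff hη, ENNReal.ofReal_sum_of_nonneg
    fun i _ => G.ex_nonneg _ (by positivity)]
  refine le_trans ?_ h
  rw [Finset.sum_congr rfl fun i _ => G.ofReal_ex x (by positivity)]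
  exact ENNReal.sum_le_tsum _

lemma kernel_meas (κ : ℝ) : Measurable (Function.uncurry fun x z : E N =>
    ENNReal.ofReal (G.a2 z * Prof.psi (‖G.pos z - G.pos x‖ ^ 2 / κ ^ 2))) := by
  have h1 := SF.continuous G.a2
  have h2 := G.pos_continuous
  have h3 := Prof.psi.continuous
  refine ENNReal.measurable_ofReal.comp (Continuous.measurable ?_)
  change Continuous fun q : E N × E N => G.a2 q.2 * Prof.psi (‖G.pos q.2 - G.pos q.1‖ ^ 2 / κ ^ 2)
  fun_prop

lemma kernel_int_meas (κ : ℝ) : Measurable fun x : E N =>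
    ∫⁻ z, ENNReal.ofReal (G.a2 z * Prof.psi (‖G.pos z - G.pos x‖ ^ 2 / κ ^ 2)) ∂G.μ :=
  (G.kernel_meas κ).lintegral_prod_right'

lemma qe_meas : Measurable G.qe :=
  Measurable.tsum fun _ => (G.kernel_int_meas _).const_mul _

lemma psi_le_cut {t : ℝ} (h : 0 ≤ t) : Prof.psi t ≤ 4 * cutFun (t / 4) := by
  rcases le_or_gt t 4 with h4 | h4
  · rw [cutFun_one (by linarith), mul_one]; exact Prof.psi_le h
  · rw [Prof.psi.zero t (by linarith)]
    have := cutFun_nonneg (t / 4)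
    positivity

lemma I_rd_psi_le (p : W N) {κ : ℝ} (hκ : 0 < κ) :
    G.I (G.rd .psi p κ) ≤ 8 * 4 ^ N * aC N * κ ^ N := by
  have h := G.I_rd_cut_le p (κ := 2 * κ) (by positivity)
  have h2 : G.I (G.rd .psi p κ) ≤ G.I ((4 : ℝ) • G.rd .cut p (2 * κ)) := by
    refine G.I_mono (G.rd_CS _ p hκ) ((G.rd_CS _ p (by positivity)).smul _) fun x => ?_
    rw [SF.smul_apply, rd_apply, rd_apply, Prof.cut_apply]
    have h0 : 0 ≤ G.r2 p x / κ ^ 2 := by rw [← norm_pos_sub_sq]; positivity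
    refine (psi_le_cut h0).trans (le_of_eq ?_)
    congr 2
    field_simp; ring
  rw [G.I_smul] at h2
  have h3 : 4 * (2 * ((2 * (2 * κ)) ^ N * aC N)) = 8 * 4 ^ N * aC N * κ ^ N := by
    rw [show 2 * (2 * κ) = 4 * κ by ring, mul_pow]; ring
  linarith

/-- The part of the graph in a fixed ball. -/
def ball2 : Set (E N) := {x | G.r2 0 x ≤ 2}

lemma ball2_meas : MeasurableSet G.ball2 :=
  measurableSet_le (SF.continuous _).measurable measurable_const

/-- Tonelli: the dyadic curvature sums are small on average. -/
lemma lintegral_qe_le : ∫⁻ x in G.ball2, G.qe x ∂G.μ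
    ≤ ENNReal.ofReal (16 * 4 ^ N * aC N * G.I (G.a2 * G.cut 3)) := by
  have hA := aC_nonneg (N := N)
  set e := G.I (G.a2 * G.cut 3) with he
  have he0 : 0 ≤ e := G.I_nonneg fun x => mul_nonneg (G.a2_nonneg x) (G.cut_nonneg _ _)
  unfold qe
  rw [lintegral_tsum fun _ => ((G.kernel_int_meas _).const_mul _).aemeasurable]
  have hi : ∀ i : ℕ, ∫⁻ x in G.ball2, ENNReal.ofReal (((1 / 2 : ℝ) ^ i) ^ 2 * (((1 / 2) ^ i) ^ N)⁻¹) *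
      ∫⁻ z, ENNReal.ofReal (G.a2 z * Prof.psi (‖G.pos z - G.pos x‖ ^ 2 / ((1 / 2) ^ i) ^ 2)) ∂G.μ ∂G.μ
      ≤ ENNReal.ofReal (8 * 4 ^ N * aC N * e * (1 / 2) ^ i) := by
    intro i
    set κ : ℝ := (1 / 2) ^ i with hκd
    have hκ : 0 < κ := by positivity
    have hκ1 : κ ≤ 1 := pow_le_one₀ (by norm_num) (by norm_num)
    rw [lintegral_const_mul _ (G.kernel_int_meas κ),
      lintegral_lintegral_swap (G.kernel_meas κ).aemeasurable]
    have hz : ∀ z, ∫⁻ x in G.ball2,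
        ENNReal.ofReal (G.a2 z * Prof.psi (‖G.pos z - G.pos x‖ ^ 2 / κ ^ 2)) ∂G.μ
        ≤ ENNReal.ofReal (G.a2 z * G.cut 3 z) * ENNReal.ofReal (8 * 4 ^ N * aC N * κ ^ N) := by
      intro z
      have h1 : ∀ x ∈ G.ball2, ENNReal.ofReal (G.a2 z * Prof.psi (‖G.pos z - G.pos x‖ ^ 2 / κ ^ 2))
          ≤ ENNReal.ofReal (G.a2 z * G.cut 3 z) * ENNReal.ofReal (G.rd .psi (G.pos z) κ x) := by
        intro x hx
        have h0 : 0 ≤ G.a2 z * G.cut 3 z := mul_nonneg (G.a2_nonneg z) (G.cut_nonneg _ _)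
        rw [← ENNReal.ofReal_mul h0]
        refine ENNReal.ofReal_le_ofReal ?_
        rw [rd_apply, ← norm_pos_sub_sq, norm_sub_rev]
        have hp := Prof.psi.nonneg (‖G.pos x - G.pos z‖ ^ 2 / κ ^ 2)
        by_cases hfar : 2 ≤ ‖G.pos x - G.pos z‖ ^ 2 / κ ^ 2
        · rw [Prof.psi.zero _ hfar]; simp
        · rw [G.cut_one (by norm_num), mul_one]
          push Not at hfar
          rw [div_lt_iff₀ (by positivity)] at hfar
          have hx2 : ‖G.pos x‖ ^ 2 ≤ 2 := by rw [norm_pos_sq]; exact hx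
          have h2 : ‖G.pos z‖ ≤ ‖G.pos x‖ + ‖G.pos x - G.pos z‖ := by
            have := norm_sub_le (G.pos x) (G.pos x - G.pos z)
            rwa [sub_sub_cancel] at this
          have h3 : ‖G.pos z‖ ^ 2 ≤ (‖G.pos x‖ + ‖G.pos x - G.pos z‖) ^ 2 := by gcongr
          rw [← norm_pos_sq]
          have : κ ^ 2 ≤ 1 := pow_le_one₀ hκ.le hκ1
          nlinarith [sq_nonneg (‖G.pos x‖ - ‖G.pos x - G.pos z‖)]
      refine (setLIntegral_mono' G.ball2_meas h1).trans ?_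
      have hm : Measurable fun x => ENNReal.ofReal (G.rd .psi (G.pos z) κ x) :=
        ENNReal.measurable_ofReal.comp (SF.continuous (G.rd .psi (G.pos z) κ)).measurable
      rw [lintegral_const_mul _ hm]
      refine mul_le_mul_right ?_ _
      refine (setLIntegral_le_lintegral _ _).trans ?_
      rw [← ofReal_integral_eq_lintegral_ofReal ((G.rd_CS .psi (G.pos z) hκ).integrable G)
        (Eventually.of_forall fun x => G.rd_nonneg _ _ _ x)]
      exact ENNReal.ofReal_le_ofReal (G.I_rd_psi_le _ hκ)
    refine (mul_le_mul_right (lintegral_mono hz) _).trans ?_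
    have hm : Measurable fun z => ENNReal.ofReal (G.a2 z * G.cut 3 z) :=
      ENNReal.measurable_ofReal.comp (SF.continuous (G.a2 * G.cut 3)).measurable
    rw [lintegral_mul_const _ hm,
      show ∫⁻ z, ENNReal.ofReal (G.a2 z * G.cut 3 z) ∂G.μ = ENNReal.ofReal e from
        (ofReal_integral_eq_lintegral_ofReal
        (((G.cut_CS (R := 3) (by norm_num)).mul_l G.a2).integrable G)
        (Eventually.of_forall fun x => mul_nonneg (G.a2_nonneg x) (G.cut_nonneg _ _))).symm,
      ← ENNReal.ofReal_mul he0, ← ENNReal.ofReal_mul (by positivity)]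
    refine ENNReal.ofReal_le_ofReal ?_
    have h5 : κ ^ 2 * (κ ^ N)⁻¹ * (e * (8 * 4 ^ N * aC N * κ ^ N)) = 8 * 4 ^ N * aC N * e * κ ^ 2 := by
      field_simp
    rw [h5]
    have h6 : κ ^ 2 ≤ κ := by nlinarith
    gcongr
  refine (ENNReal.tsum_le_tsum hi).trans ?_
  rw [← ENNReal.ofReal_tsum_of_nonneg (fun i => by positivity)
    (summable_geometric_two.mul_left _), tsum_mul_left, tsum_geometric_two]
  refine ENNReal.ofReal_le_ofReal (le_of_eq (by ring))

/-- The points of the ball with large curvature sums, or whose tangent plane is far from the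
origin. -/
def bad (η : ℝ) : Set (E N) := {x ∈ G.ball2 | η ≤ G.s 0 x ^ 2 ∨ ENNReal.ofReal η ≤ G.qe x}

lemma bad_meas (η : ℝ) : MeasurableSet (G.bad η) :=
  G.ball2_meas.inter ((measurableSet_le measurable_const
    ((SF.continuous (G.s 0)).pow 2).measurable).union (measurableSet_le measurable_const G.qe_meas))

/-- Chebyshev's inequality for `s²` and for the dyadic sum of curvatures, the latter after exchanging
the order of integration. -/
lemma mu_bad_le {η : ℝ} (hη : 0 < η) : G.μ (G.bad η) ≤ ENNReal.ofReal
    ((G.I (G.s 0 * G.s 0 * G.cut 2) + 16 * 4 ^ N * aC N * G.I (G.a2 * G.cut 3)) / η) := by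
  have hA := aC_nonneg (N := N)
  have he0 : 0 ≤ G.I (G.a2 * G.cut 3) :=
    G.I_nonneg fun x => mul_nonneg (G.a2_nonneg x) (G.cut_nonneg _ _)
  have hs0 : 0 ≤ G.I (G.s 0 * G.s 0 * G.cut 2) :=
    G.I_nonneg fun x => mul_nonneg (mul_self_nonneg _) (G.cut_nonneg _ _)
  have hη' : ENNReal.ofReal η ≠ 0 := by simpa using hη
  have hsm : Measurable fun x => ENNReal.ofReal (G.s 0 x ^ 2) :=
    ENNReal.measurable_ofReal.comp ((SF.continuous (G.s 0)).pow 2).measurable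
  have h1 : ∫⁻ x in G.ball2, ENNReal.ofReal (G.s 0 x ^ 2) ∂G.μ
      ≤ ENNReal.ofReal (G.I (G.s 0 * G.s 0 * G.cut 2)) := by
    rw [I, ofReal_integral_eq_lintegral_ofReal
      (((G.cut_CS (R := 2) (by norm_num)).mul_l (G.s 0 * G.s 0)).integrable G)
      (Eventually.of_forall fun x => mul_nonneg (mul_self_nonneg _) (G.cut_nonneg _ _))]
    refine le_trans (setLIntegral_mono' G.ball2_meas fun x hx => ENNReal.ofReal_le_ofReal ?_)
      (setLIntegral_le_lintegral _ _)
    rw [SF.mul_apply, SF.mul_apply, G.cut_one (by norm_num), mul_one, sq]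
    have : G.r2 0 x ≤ 2 := hx
    linarith
  have h2 : G.μ (G.bad η) ≤ G.μ.restrict G.ball2 {x | ENNReal.ofReal η ≤ ENNReal.ofReal (G.s 0 x ^ 2)}
      + G.μ.restrict G.ball2 {x | ENNReal.ofReal η ≤ G.qe x} := by
    rw [Measure.restrict_apply (measurableSet_le measurable_const hsm),
      Measure.restrict_apply (measurableSet_le measurable_const G.qe_meas)]
    refine (measure_mono fun x hx => ?_).trans (measure_union_le _ _)
    rcases hx.2 with h | h
    · exact Or.inl ⟨ENNReal.ofReal_le_ofReal h, hx.1⟩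
    · exact Or.inr ⟨h, hx.1⟩
  have m1 := mul_meas_ge_le_lintegral (μ := G.μ.restrict G.ball2) (f := fun x => ENNReal.ofReal (G.s 0 x ^ 2)) hsm (ENNReal.ofReal η)
  have m2 := mul_meas_ge_le_lintegral (μ := G.μ.restrict G.ball2) G.qe_meas (ENNReal.ofReal η)
  rw [ENNReal.ofReal_div_of_pos hη, ENNReal.le_div_iff_mul_le (Or.inl hη')
    (Or.inl ENNReal.ofReal_ne_top), mul_comm]
  refine (mul_le_mul_right h2 _).trans ?_
  rw [mul_add, ENNReal.ofReal_add hs0 (by positivity)]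
  exact add_le_add (m1.trans h1) (m2.trans G.lintegral_qe_le)

end MinGraph

/-! ### The density of nearly flat nearly conical graphs -/

namespace MinGraph

variable {N : ℕ} (G : MinGraph N)

lemma s_eq_inner (x : E N) : G.s 0 x = ⟪G.pos x, G.nu x⟫ := by
  rw [s_apply, PiLp.inner_apply]
  refine Finset.sum_congr rfl fun i _ => ?_
  rw [nu_apply, pos_apply, XP_apply]
  simp [mul_comm]

/-- A graph whose normal is nearly constant off a small set has nearly the area of a plane. -/
lemma J_le_of_close {e : W N} (he : ‖e‖ = 1) {η0 η : ℝ} (hη : 0 < η)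
    (h : ∀ x ∈ G.ball2, x ∉ G.bad η → ‖G.nu x - e‖ ≤ η0) :
    G.J 1 0 1 ≤ cc N + η0 ^ 2 / 2 * aC N + 4 * (G.μ (G.bad η)).toReal := by
  have hfin : G.μ (G.bad η) ≠ ⊤ := ((G.mu_bad_le hη).trans_lt ENNReal.ofReal_lt_top).ne
  have c1 : CS (G.rd .phi 0 1) := G.rd_CS .phi 0 one_pos
  have i1 : Integrable (fun x => G.νe e x * G.rd .phi 0 1 x) G.μ := (c1.mul_l (G.νe e)).integrable G
  have i2 : Integrable (fun x => η0 ^ 2 / 2 * G.rd .phi 0 1 x) G.μ := (c1.integrable G).const_mul _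
  have i3 : Integrable ((G.bad η).indicator fun _ => (4 : ℝ)) G.μ :=
    (integrable_indicator_iff (G.bad_meas η)).2 (integrableOn_const hfin)
  have h1 : ∀ x, G.rd .phi 0 1 x ≤ G.νe e x * G.rd .phi 0 1 x + η0 ^ 2 / 2 * G.rd .phi 0 1 x
      + (G.bad η).indicator (fun _ => (4 : ℝ)) x := by
    intro x
    have r0 := G.rd_nonneg .phi 0 1 x
    have hν : 1 - G.νe e x = ‖G.nu x - e‖ ^ 2 / 2 := by
      rw [norm_sub_sq_real, G.norm_nu, he, νe_apply, real_inner_comm]; ring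
    by_cases hb : x ∈ G.bad η
    · rw [Set.indicator_of_mem hb]
      have h2 : G.rd .phi 0 1 x ≤ 2 := by
        rw [rd_apply]
        exact Prof.phi_le (by rw [← norm_pos_sub_sq]; positivity)
      have h3 := abs_le.1 (G.abs_νe_le e x)
      rw [he] at h3
      have : 0 ≤ η0 ^ 2 / 2 * G.rd .phi 0 1 x := by positivity
      nlinarith [h3.1]
    · rw [Set.indicator_of_notMem hb]
      by_cases hx : x ∈ G.ball2
      · have h2 := h x hx hb
        have h3 : ‖G.nu x - e‖ ^ 2 ≤ η0 ^ 2 := by gcongr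
        nlinarith
      · have : G.rd .phi 0 1 x = 0 := by
          have h2 : ¬ G.r2 0 x ≤ 2 := hx
          push Not at h2
          exact G.rd_zero .phi 0 one_pos ((by norm_num : (2:ℝ) * 1 ^ 2 = 2).trans_le h2.le)
        rw [this]; simp
  have h2 := integral_mono (c1.integrable G) ((i1.add i2).add i3) h1
  change _ ≤ ∫ x, (G.νe e x * G.rd .phi 0 1 x + η0 ^ 2 / 2 * G.rd .phi 0 1 x
      + (G.bad η).indicator (fun _ => (4 : ℝ)) x) ∂G.μ at h2
  have i12 : Integrable (fun x => G.νe e x * G.rd .phi 0 1 x + η0 ^ 2 / 2 * G.rd .phi 0 1 x) G.μ :=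
    i1.add i2
  rw [integral_add i12 i3, integral_add i1 i2, integral_const_mul,
    integral_indicator (G.bad_meas η), setIntegral_const, smul_eq_mul] at h2
  have h3 := (le_abs_self _).trans (G.I_rd_νe_le 0 e one_pos)
  have h4 := G.I_rd_le 0 one_pos
  rw [one_pow, one_mul] at h3 h4
  rw [he, one_mul] at h3
  have h5 : ∫ x, G.νe e x * G.rd .phi 0 1 x ∂G.μ ≤ cc N := by
    rw [mul_comm (G.rd .phi 0 1)] at h3; exact h3
  have h6 : η0 ^ 2 / 2 * ∫ x, G.rd .phi 0 1 x ∂G.μ ≤ η0 ^ 2 / 2 * aC N :=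
    mul_le_mul_of_nonneg_left h4 (by positivity)
  rw [J, one_pow, inv_one, one_mul, one_mul]
  have h7 : G.μ.real (G.bad η) = (G.μ (G.bad η)).toReal := rfl
  rw [h7] at h2
  change ∫ x, G.rd .phi 0 1 x ∂G.μ ≤ _
  linarith

/-- Graphs with small curvature and small support function have, in the limit, the density of
a plane: their normals at most points nearly agree. -/
theorem density_limit (hN : 1 ≤ N) {G : ℕ → MinGraph N} (ha : Neg G fun n => (G n).a2)
    (hs : Neg G fun n => (G n).s 0 * (G n).s 0) {ε : ℝ} (hε : 0 < ε) :
    ∀ᶠ n in atTop, (G n).J 1 0 1 ≤ cc N + ε := by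
  have hA := aC_nonneg (N := N)
  have hc := cc_pos (N := N)
  obtain ⟨η0, hη0, hη0A⟩ : ∃ η0 : ℝ, 0 < η0 ∧ η0 ^ 2 / 2 * aC N ≤ ε / 2 := by
    refine ⟨√(ε / (aC N + 1)), by positivity, ?_⟩
    rw [Real.sq_sqrt (by positivity)]
    have : ε / (aC N + 1) * aC N ≤ ε := by
      rw [div_mul_eq_mul_div, div_le_iff₀ (by positivity)]; nlinarith
    linarith
  obtain ⟨η1, hη1, η, hη, hev⟩ := two_points hN ha hη0
  obtain ⟨C, hC0, hC⟩ := exists_cap_bound η1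
  obtain ⟨θ, hθ, hθ1, hθ2⟩ : ∃ θ : ℝ, 0 < θ ∧ θ ≤ η ^ 2 ∧ C * 2 ^ N * θ ≤ cc N / 20 := by
    refine ⟨min (η ^ 2) (cc N / 20 / (C * 2 ^ N + 1)), by positivity, min_le_left _ _, ?_⟩
    have h1 := min_le_right (η ^ 2) (cc N / 20 / (C * 2 ^ N + 1))
    rw [le_div_iff₀ (by positivity)] at h1
    have h2 : 0 ≤ min (η ^ 2) (cc N / 20 / (C * 2 ^ N + 1)) := by positivity
    nlinarith
  have hlim : Tendsto (fun n => ((G n).I ((G n).s 0 * (G n).s 0 * (G n).cut 2)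
      + 16 * 4 ^ N * aC N * (G n).I ((G n).a2 * (G n).cut 3)) / θ) atTop (𝓝 0) := by
    have := ((hs 2 (by norm_num)).add
      ((ha 3 (by norm_num)).const_mul (16 * 4 ^ N * aC N))).div_const θ
    simpa using this
  filter_upwards [hev, hlim.eventually (gt_mem_nhds (show (0:ℝ) < ε / 8 by positivity))] with n hn hb
  have hgood : ∀ x ∈ (G n).ball2, x ∉ (G n).bad θ → ‖(G n).pos x‖ ^ 2 ≤ 2 ∧
      |⟪(G n).pos x, (G n).nu x⟫| ≤ η ∧ 19 / 20 * cc N ≤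
        (G n).I ((G n).cap η1 ((G n).nu x) * (G n).rd .phi ((G n).pos x) 1) := by
    intro x hx hxb
    have hx' : ¬ (θ ≤ (G n).s 0 x ^ 2 ∨ ENNReal.ofReal θ ≤ (G n).qe x) := fun h => hxb ⟨hx, h⟩
    push Not at hx'
    refine ⟨?_, ?_, ?_⟩
    · rw [norm_pos_sq]; exact hx
    · rw [← s_eq_inner]
      exact abs_le_of_sq_le_sq (hx'.1.le.trans hθ1) hη.le
    · have h1 := (G n).J_one_ge (f := (G n).cap η1 ((G n).nu x)) (fun y => (G n).cap_nonneg _ _ y)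
        hC0 (fun y => (hC N (G n) _ ((G n).norm_nu x) y).2)
        ((G n).cap_one (by rw [νe_apply, real_inner_self_eq_norm_sq, norm_nu, one_pow]))
        ((G n).sum_ex_le hθ.le hx'.2.le)
      rw [J, one_pow, inv_one, one_mul] at h1
      linarith
  obtain ⟨e, he, hclose⟩ : ∃ e : W N, ‖e‖ = 1 ∧
      ∀ x ∈ (G n).ball2, x ∉ (G n).bad θ → ‖(G n).nu x - e‖ ≤ η0 := by
    by_cases hex : ∃ x₀ ∈ (G n).ball2, x₀ ∉ (G n).bad θ
    · obtain ⟨x₀, h0, h0'⟩ := hex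
      refine ⟨(G n).nu x₀, (G n).norm_nu x₀, fun x hx hx' => ?_⟩
      obtain ⟨a1, a2, a3⟩ := hgood x₀ h0 h0'
      obtain ⟨b1, b2, b3⟩ := hgood x hx hx'
      exact (hn _ _ _ _ b1 a1 ((G n).norm_nu _) ((G n).norm_nu _) b2 a2 b3 a3).le
    · push Not at hex
      exact ⟨(G n).nu 0, (G n).norm_nu 0, fun x hx hx' => absurd (hex x hx) hx'⟩
  have h1 := (G n).J_le_of_close he hθ hclose
  have h2 : ((G n).μ ((G n).bad θ)).toReal ≤ ε / 8 :=
    ENNReal.toReal_le_of_le_ofReal (by positivity)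
      (((G n).mu_bad_le hθ).trans (ENNReal.ofReal_le_ofReal hb.le))
  linarith

end MinGraph

/-! ### Rescaling -/

namespace SF

variable {N : ℕ}

/-- Precomposition with a dilation. -/
def dil (c : ℝ) (f : SF N) : SF N := ⟨fun x => f (c • x), by
  change ContDiff ℝ ∞ _
  exact (contDiff f).comp (contDiff_const_smul c)⟩

@[simp] lemma dil_apply (c : ℝ) (f : SF N) (x : E N) : dil c f x = f (c • x) := rfl

lemma pd_dil (e : E N) (c : ℝ) (f : SF N) : pd e (dil c f) = c • dil c (pd e f) := by
  ext x
  have h : fderiv ℝ (fun x => f (c • x)) x = c • fderiv ℝ f (c • x) := fderiv_comp_smul c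
  change fderiv ℝ (fun x => f (c • x)) x e = c * fderiv ℝ f (c • x) e
  rw [h]; rfl

end SF

namespace MinGraph

variable {N : ℕ} (G : MinGraph N)

/-- The graph of `x ↦ c⁻¹ u(c x)`: the graph of `u` dilated by the factor `c⁻¹`. -/
noncomputable def scale {c : ℝ} (hc : 0 < c) : MinGraph N where
  u := c⁻¹ • SF.dil c G.u
  mse := by
    have h1 : ∀ i y, partialDeriv' ((c⁻¹ • SF.dil c G.u : SF N) : E N → ℝ) i y
        = partialDeriv' G.u i (c • y) := by
      intro i y
      have : SF.pd (EuclideanSpace.single i 1) (c⁻¹ • SF.dil c G.u)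
          = SF.dil c (SF.pd (EuclideanSpace.single i 1) G.u) := by
        rw [Derivation.map_smul, SF.pd_dil, smul_smul, inv_mul_cancel₀ hc.ne', one_smul]
      exact congrArg (fun f : SF N => f y) this
    intro x
    simp_rw [h1]
    rw [← mul_zero c, ← G.mse (c • x), Finset.mul_sum]
    refine Finset.sum_congr rfl fun i _ => ?_
    unfold partialDeriv'
    have := fderiv_comp_smul (𝕜 := ℝ) (f := fun y => fderiv ℝ G.u y (EuclideanSpace.single i 1) /
      Real.sqrt (1 + ∑ k, fderiv ℝ G.u y (EuclideanSpace.single k 1) ^ 2)) (x := x) c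
    rw [this]; rfl

variable {c : ℝ} (hc : 0 < c)

lemma scale_du (i : Fin N) : (G.scale hc).du i = SF.dil c (G.du i) := by
  change SF.pd _ (c⁻¹ • SF.dil c G.u) = _
  rw [Derivation.map_smul, SF.pd_dil, smul_smul, inv_mul_cancel₀ hc.ne', one_smul]; rfl

lemma scale_v : (G.scale hc).v = SF.dil c G.v := by
  ext x
  rw [SF.dil_apply, v_apply, v_apply]
  simp only [scale_du, SF.dil_apply]

lemma scale_ν (i : Idx N) : (G.scale hc).ν i = SF.dil c (G.ν i) := by
  ext x
  rcases i with _ | i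
  · rw [ν_none, SF.dil_apply, ν_none, scale_v]; rfl
  · rw [ν_some, SF.dil_apply, ν_some, scale_v, scale_du]; rfl

lemma D_dil (i : Idx N) (f : SF N) : D i (SF.dil c f) = c • SF.dil c (D i f) := by
  rcases i with _ | i
  · ext x; simp
  · exact SF.pd_dil _ _ _

lemma scale_δ (i : Idx N) (f : SF N) :
    (G.scale hc).δ i (SF.dil c f) = c • SF.dil c (G.δ i f) := by
  rw [δ_eq, δ_eq]
  ext x
  simp only [SF.sub_apply, SF.mul_apply, SF.sum_apply, SF.smul_apply, D_dil, scale_ν, SF.dil_apply]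
  rw [mul_sub, Finset.mul_sum, Finset.mul_sum, Finset.mul_sum]
  congr 1
  refine Finset.sum_congr rfl fun k _ => by ring

lemma scale_a2 : (G.scale hc).a2 = c ^ 2 • SF.dil c G.a2 := by
  ext x
  rw [SF.smul_apply, SF.dil_apply, a2_apply, a2_apply, Finset.mul_sum]
  refine Finset.sum_congr rfl fun i _ => ?_
  rw [Finset.mul_sum]
  refine Finset.sum_congr rfl fun j _ => ?_
  have : (G.scale hc).A i j = c • SF.dil c (G.A i j) := by
    change (G.scale hc).δ i ((G.scale hc).ν j) = _
    rw [scale_ν, scale_δ]; rfl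
  rw [this, SF.smul_apply, SF.dil_apply]; ring

lemma scale_X (i : Idx N) : (G.scale hc).X i = c⁻¹ • SF.dil c (G.X i) := by
  ext x
  rcases i with _ | i
  · rfl
  · have := hc.ne'
    simp [X]
    field_simp

lemma scale_XP (i : Idx N) : (G.scale hc).XP 0 i = c⁻¹ • SF.dil c (G.XP 0 i) := by
  ext x
  simp only [XP_apply, SF.smul_apply, SF.dil_apply, scale_X, Pi.zero_apply, sub_zero]

lemma scale_s : (G.scale hc).s 0 = c⁻¹ • SF.dil c (G.s 0) := by
  ext x
  rw [s_apply, SF.smul_apply, SF.dil_apply, s_apply, Finset.mul_sum]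
  refine Finset.sum_congr rfl fun i _ => ?_
  rw [scale_XP, scale_ν, SF.smul_apply, SF.dil_apply, SF.dil_apply]; ring

lemma scale_r2 : (G.scale hc).r2 0 = (c ^ 2)⁻¹ • SF.dil c (G.r2 0) := by
  ext x
  rw [r2_apply, SF.smul_apply, SF.dil_apply, r2_apply, Finset.mul_sum]
  refine Finset.sum_congr rfl fun i _ => ?_
  rw [scale_XP, SF.smul_apply, SF.dil_apply, mul_pow, inv_pow]

lemma scale_νe (e : W N) : (G.scale hc).νe e = SF.dil c (G.νe e) := by
  ext x
  simp only [νe, SF.dil_apply, SF.sum_apply, SF.mul_apply, SF.const_apply, scale_ν]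

lemma scale_rd (P : Prof) (κ : ℝ) : (G.scale hc).rd P 0 κ = SF.dil c (G.rd P 0 (c * κ)) := by
  ext x
  rw [rd_apply, SF.dil_apply, rd_apply]
  congr 1
  have : (G.scale hc).r2 0 x = (c ^ 2)⁻¹ * G.r2 0 (c • x) := by rw [scale_r2]; rfl
  change (G.scale hc).r2 0 x / κ ^ 2 = G.r2 0 (c • x) / (c * κ) ^ 2
  rw [this, mul_pow]; field_simp

lemma scale_cut (R : ℝ) : (G.scale hc).cut R = SF.dil c (G.cut (c * R)) := G.scale_rd hc .cut R

lemma scale_I (f : SF N) : (G.scale hc).I (SF.dil c f) = (c ^ N)⁻¹ * G.I f := by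
  rw [I, I, integral_μ, integral_μ, scale_v]
  have := Measure.integral_comp_smul (volume : Measure (E N)) (fun x => G.v x * f x) c
  simp only [SF.dil_apply]
  rw [this, smul_eq_mul, abs_of_nonneg (by positivity)]
  simp

lemma scale_J (κ : ℝ) : (G.scale hc).J 1 0 κ = G.J 1 0 (c * κ) := by
  rw [J, J, one_mul, one_mul]
  rw [scale_rd, scale_I, mul_pow, mul_inv]; ring

lemma scale_I_s (R : ℝ) : (G.scale hc).I ((G.scale hc).s 0 * (G.scale hc).s 0 * (G.scale hc).cut R)
    = (c ^ (N + 2))⁻¹ * G.I (G.s 0 * G.s 0 * G.cut (c * R)) := by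
  have : (G.scale hc).s 0 * (G.scale hc).s 0 * (G.scale hc).cut R
      = (c ^ 2)⁻¹ • SF.dil c (G.s 0 * G.s 0 * G.cut (c * R)) := by
    ext x
    simp only [scale_s, scale_cut, SF.mul_apply, SF.smul_apply, SF.dil_apply]
    rw [sq, mul_inv]; ring
  rw [this, I_smul, scale_I, pow_add, mul_inv]; ring

lemma scale_I_a2 (e : W N) (R : ℝ) :
    (G.scale hc).I ((G.scale hc).a2 * (G.scale hc).νe e * (G.scale hc).cut R)
    = c ^ 2 * (c ^ N)⁻¹ * G.I (G.a2 * G.νe e * G.cut (c * R)) := by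
  have : (G.scale hc).a2 * (G.scale hc).νe e * (G.scale hc).cut R
      = c ^ 2 • SF.dil c (G.a2 * G.νe e * G.cut (c * R)) := by
    ext x
    simp only [scale_a2, scale_cut, scale_νe, SF.mul_apply, SF.smul_apply, SF.dil_apply]
    ring
  rw [this, I_smul, scale_I]; ring

end MinGraph

/-! ### Blowing down -/

namespace MinGraph

variable {N : ℕ} (G : MinGraph N)

/-- A bounded increasing function has small logarithmic derivative at arbitrarily large scales. -/
lemma exists_small_slope {F F' : ℝ → ℝ} (hd : ∀ κ, 0 < κ → HasDerivAt F (F' κ) κ)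
    (hp : ∀ κ, 0 < κ → 0 ≤ F' κ) {M : ℝ} (hM : ∀ κ, 0 < κ → F κ ≤ M) {R ε : ℝ} (hR : 0 < R)
    (hε : 0 < ε) : ∃ κ, R ≤ κ ∧ κ * F' κ ≤ ε := by
  have mvt : ∀ r, 0 < r → ∃ κ, r < κ ∧ κ < 2 * r ∧ F' κ = (F (2 * r) - F r) / r := by
    intro r hr
    obtain ⟨κ, hκ, h⟩ := exists_hasDerivAt_eq_slope F F' (show r < 2 * r by linarith)
      (fun x hx => (hd x (hr.trans_le hx.1)).continuousAt.continuousWithinAt)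
      fun x hx => hd x (hr.trans hx.1)
    exact ⟨κ, hκ.1, hκ.2, by rw [h]; ring⟩
  have hmono : Monotone fun m : ℕ => F (2 ^ m * R) := by
    refine monotone_nat_of_le_succ fun m => ?_
    have h0 : 0 < 2 ^ m * R := by positivity
    obtain ⟨κ, h1, h2, h3⟩ := mvt _ h0
    have h4 := hp κ (h0.trans h1)
    rw [h3, div_nonneg_iff] at h4
    rw [pow_succ, show (2:ℝ) ^ m * 2 * R = 2 * (2 ^ m * R) by ring]
    rcases h4 with h4 | h4
    · linarith [h4.1]
    · linarith [h4.2]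
  have hlim := tendsto_atTop_ciSup hmono ⟨M, by
    rintro _ ⟨m, rfl⟩; exact hM _ (by positivity)⟩
  have h0 := (hlim.comp (tendsto_add_atTop_nat 1)).sub hlim
  rw [sub_self] at h0
  obtain ⟨m, hm⟩ := (h0.eventually (gt_mem_nhds (show 0 < ε / 2 by positivity))).exists
  have h1 : 0 < 2 ^ m * R := by positivity
  obtain ⟨κ, h2, h3, h4⟩ := mvt _ h1
  have h5 : R ≤ 2 ^ m * R := le_mul_of_one_le_left hR.le (one_le_pow₀ (by norm_num))
  refine ⟨κ, h5.trans h2.le, ?_⟩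
  have h6 : F (2 ^ (m + 1) * R) - F (2 ^ m * R) < ε / 2 := hm
  rw [pow_succ, show (2:ℝ) ^ m * 2 * R = 2 * (2 ^ m * R) by ring] at h6
  have h7 := hp κ (h1.trans h2)
  have h8 : F' κ * (2 ^ m * R) ≤ ε / 2 := by
    rw [h4, div_mul_cancel₀ _ h1.ne']; exact h6.le
  nlinarith

/-- Adding to the area the component of the area in a direction with `⟪ξ, ν⟫ ≥ 0` gives a
subharmonic weight at least `1`, with area ratios which are both increasing and bounded. -/
lemma exists_scale {ξ : W N} (hξ : ∀ x, 0 ≤ G.νe ξ x) {R ε : ℝ} (hR : 0 < R) (hε : 0 < ε) :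
    ∃ κ, R ≤ κ ∧ (κ ^ (N + 2))⁻¹ * G.I (G.s 0 * G.s 0 * G.cut κ) ≤ ε ∧
      κ ^ 2 * (κ ^ N)⁻¹ * G.I (G.a2 * G.νe ξ * G.rd .psi 0 κ) ≤ ε := by
  set f : SF N := SF.const N (‖ξ‖ + 1) - G.νe ξ with hf
  have hf1 : ∀ x, 1 ≤ f x := fun x => by
    have := (abs_le.1 (G.abs_νe_le ξ x)).2
    rw [hf, SF.sub_apply, SF.const_apply]; linarith
  have hlap : G.lap f = G.a2 * G.νe ξ := by
    have h1 : G.lap (SF.const N (‖ξ‖ + 1)) = 0 := by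
      change ∑ i, G.δ i (G.δ i (SF.const N (‖ξ‖ + 1))) = 0
      exact Finset.sum_eq_zero fun i _ => by rw [δ_const, map_zero]
    have h2 : G.lap f = G.lap (SF.const N (‖ξ‖ + 1)) - G.lap (G.νe ξ) := by
      change ∑ i, G.δ i (G.δ i f) = ∑ i, G.δ i (G.δ i _) - ∑ i, G.δ i (G.δ i _)
      simp only [hf, map_sub, Finset.sum_sub_distrib]
    rw [h2, h1, lap_νe, zero_sub, neg_neg]
  have p1 : ∀ κ, 0 < κ → 0 ≤ G.I (f * (G.s 0 * G.s 0) * G.rd .cut 0 κ) := fun κ hκ =>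
    G.I_nonneg fun x => mul_nonneg (mul_nonneg (zero_le_one.trans (hf1 x)) (mul_self_nonneg _))
      (G.rd_nonneg _ _ _ x)
  have p2 : ∀ κ, 0 < κ → 0 ≤ G.I (G.lap f * G.rd .psi 0 κ) := fun κ hκ => by
    rw [hlap]
    exact G.I_nonneg fun x => mul_nonneg (mul_nonneg (G.a2_nonneg x) (hξ x)) (G.rd_nonneg _ _ _ x)
  obtain ⟨κ, hκR, hκ⟩ := exists_small_slope (F := G.J f 0) (F' := G.J' f 0)
    (M := (2 * ‖ξ‖ + 1) * aC N) (fun κ hκ => G.hasDerivAt_J f 0 hκ) (fun κ hκ => by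
      have := p1 κ hκ
      have := p2 κ hκ
      unfold J'; positivity) (fun κ hκ => by
      have h1 := G.J_le_of_nonneg (f := f) (h := SF.const N (‖ξ‖ + 1)) (fun x => by
        rw [hf, SF.sub_apply]; linarith [hξ x]) 0 hκ
      have h2 : G.J (SF.const N (‖ξ‖ + 1)) 0 κ = (‖ξ‖ + 1) * G.J 1 0 κ := by
        have : SF.const N (‖ξ‖ + 1) * G.rd .phi 0 κ = (‖ξ‖ + 1) • (1 * G.rd .phi 0 κ) := by
          ext x; simp
        unfold J
        rw [this, I_smul]; ring
      have h3 := G.J_one_le 0 hκ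
      have h4 := aC_nonneg (N := N)
      have h5 := norm_nonneg ξ
      rw [h2] at h1
      nlinarith [mul_nonneg h5 h4]) hR (half_pos hε)
  have hκ0 : 0 < κ := hR.trans_le hκR
  have q1 := p1 κ hκ0
  have q2 := p2 κ hκ0
  rw [hlap] at q2
  have e1 : κ * G.J' f 0 κ = 2 * ((κ ^ (N + 2))⁻¹ * G.I (f * (G.s 0 * G.s 0) * G.rd .cut 0 κ))
      + κ ^ 2 * (κ ^ N)⁻¹ * G.I (G.a2 * G.νe ξ * G.rd .psi 0 κ) / 2 := by
    rw [J', hlap, pow_add, pow_add]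
    change κ * ((κ ^ N * κ ^ 1)⁻¹ * (2 * (κ ^ 2)⁻¹ * G.I (f * (G.s 0 * G.s 0) * G.rd .cut 0 κ)
      + _)) = _
    field_simp
  have q3 : G.I (G.s 0 * G.s 0 * G.cut κ) ≤ G.I (f * (G.s 0 * G.s 0) * G.rd .cut 0 κ) := by
    refine G.I_mono ((G.cut_CS hκ0).mul_l _) ((G.rd_CS .cut 0 hκ0).mul_l _) fun x => ?_
    rw [SF.mul_apply, SF.mul_apply, SF.mul_apply, SF.mul_apply, SF.mul_apply, ← cut_eq_rd]
    refine mul_le_mul_of_nonneg_right ?_ (G.cut_nonneg _ _)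
    exact le_mul_of_one_le_left (mul_self_nonneg _) (hf1 x)
  have q4 := mul_le_mul_of_nonneg_left q3 (show 0 ≤ (κ ^ (N + 2))⁻¹ by positivity)
  have q5 : 0 ≤ (κ ^ (N + 2))⁻¹ * G.I (f * (G.s 0 * G.s 0) * G.rd .cut 0 κ) := by positivity
  have q6 : 0 ≤ κ ^ 2 * (κ ^ N)⁻¹ * G.I (G.a2 * G.νe ξ * G.rd .psi 0 κ) := by positivity
  refine ⟨κ, hκR, ?_, ?_⟩ <;> linarith

lemma cut_le_psi {κ m R : ℝ} (hκ : 0 < κ) (hm : 0 < m) (hR : 0 < R) (h : 3 * R ≤ m) (x : E N) :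
    G.cut (κ / m * R) x ≤ 8 * G.rd .psi 0 κ x := by
  by_cases hx : 2 * (κ / m * R) ^ 2 ≤ G.r2 0 x
  · rw [G.cut_zero (by positivity) hx]
    exact mul_nonneg (by norm_num) (G.rd_nonneg _ _ _ x)
  · push Not at hx
    have h1 : 2 * (κ / m * R) ^ 2 ≤ κ ^ 2 / 4 := by
      have h2 : κ / m * R ≤ κ / 3 := by
        rw [div_mul_eq_mul_div, div_le_div_iff₀ hm (by norm_num)]; nlinarith
      have h3 : (κ / m * R) ^ 2 ≤ (κ / 3) ^ 2 := by gcongr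
      nlinarith [sq_nonneg κ]
    have h2 : G.r2 0 x / κ ^ 2 ≤ 1 / 4 := by rw [div_le_iff₀ (by positivity)]; linarith
    have h3 := Prof.psi_ge h2
    have h4 := G.cut_le_one (κ / m * R) x
    have h5 : G.rd .psi 0 κ x = Prof.psi (G.r2 0 x / κ ^ 2) := rfl
    rw [h5]; linarith

lemma cut_le_cut {κ m R : ℝ} (hκ : 0 < κ) (hm : 0 < m) (hR : 0 < R) (h : 3 * R ≤ m) (x : E N) :
    G.cut (κ / m * R) x ≤ G.cut κ x := by
  by_cases hx : 2 * (κ / m * R) ^ 2 ≤ G.r2 0 x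
  · rw [G.cut_zero (by positivity) hx]; exact G.cut_nonneg _ _
  · push Not at hx
    have h2 : κ / m * R ≤ κ / 3 := by
      rw [div_mul_eq_mul_div, div_le_div_iff₀ hm (by norm_num)]; nlinarith
    have h3 : (κ / m * R) ^ 2 ≤ (κ / 3) ^ 2 := by gcongr
    rw [G.cut_one hκ (by nlinarith [sq_nonneg κ])]
    exact G.cut_le_one _ _

/-- If `⟪ξ, ν⟫ ≥ 0` then suitable rescalings of the graph are, asymptotically, cones on which
`⟪ξ, ν⟫` vanishes wherever the curvature does not. -/
theorem blowdown {ξ : W N} (hξ : ∀ x, 0 ≤ G.νe ξ x) : ∃ (c : ℕ → ℝ) (hc : ∀ n, 0 < c n),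
    Tendsto c atTop atTop ∧ Neg (fun n => G.scale (hc n))
      (fun n => (G.scale (hc n)).s 0 * (G.scale (hc n)).s 0) ∧
    Neg (fun n => G.scale (hc n)) (fun n => (G.scale (hc n)).a2 * (G.scale (hc n)).νe ξ) := by
  have h := fun n : ℕ => G.exists_scale hξ (R := ((n : ℝ) + 1) ^ 2)
    (ε := (((n : ℝ) + 1) ^ (N + 3))⁻¹) (by positivity) (by positivity)
  choose κ h1 h2 h3 using h
  have hκ : ∀ n, 0 < κ n := fun n => lt_of_lt_of_le (by positivity) (h1 n)
  have hn : Tendsto (fun n : ℕ => (n : ℝ) + 1) atTop atTop :=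
    tendsto_atTop_add_const_right _ _ tendsto_natCast_atTop_atTop
  have hinv : Tendsto (fun n : ℕ => 8 * ((n : ℝ) + 1)⁻¹) atTop (𝓝 0) := by
    simpa using hn.inv_tendsto_atTop.const_mul 8
  refine ⟨fun n => κ n / (n + 1), fun n => div_pos (hκ n) (by positivity), ?_, ?_, ?_⟩
  · refine tendsto_atTop_mono (fun n => ?_) hn
    rw [le_div_iff₀ (by positivity)]
    nlinarith [h1 n]
  · intro R hR
    refine squeeze_zero' (Eventually.of_forall fun n => (G.scale _).I_nonneg fun x =>
      mul_nonneg (mul_self_nonneg _) (cut_nonneg _ _ _)) ?_ hinv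
    filter_upwards [hn.eventually_ge_atTop (3 * R)] with n hnR
    obtain ⟨m, hm, hmd⟩ : ∃ m : ℝ, 1 ≤ m ∧ (n : ℝ) + 1 = m := ⟨_, by simp, rfl⟩
    have g2 := h2 n
    have k0 := hκ n
    rw [scale_I_s]
    simp only [hmd] at *
    have hle : G.I (G.s 0 * G.s 0 * G.cut (κ n / m * R)) ≤ G.I (G.s 0 * G.s 0 * G.cut (κ n)) := by
      refine G.I_mono ((G.cut_CS (by positivity)).mul_l _) ((G.cut_CS k0).mul_l _) fun x => ?_
      refine mul_le_mul_of_nonneg_left ?_ (mul_self_nonneg _)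
      exact G.cut_le_cut k0 (by linarith) hR hnR x
    calc ((κ n / m) ^ (N + 2))⁻¹ * G.I (G.s 0 * G.s 0 * G.cut (κ n / m * R))
        ≤ ((κ n / m) ^ (N + 2))⁻¹ * G.I (G.s 0 * G.s 0 * G.cut (κ n)) :=
          mul_le_mul_of_nonneg_left hle (by positivity)
      _ = m ^ (N + 2) * ((κ n ^ (N + 2))⁻¹ * G.I (G.s 0 * G.s 0 * G.cut (κ n))) := by
          rw [div_pow]; field_simp
      _ ≤ m ^ (N + 2) * (m ^ (N + 3))⁻¹ := mul_le_mul_of_nonneg_left g2 (by positivity)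
      _ = m⁻¹ := by rw [pow_succ m (N + 2)]; field_simp
      _ ≤ 8 * m⁻¹ := by linarith [inv_nonneg.2 (zero_le_one.trans hm)]
  · intro R hR
    refine squeeze_zero' (Eventually.of_forall fun n => (G.scale _).I_nonneg fun x =>
      mul_nonneg (mul_nonneg (a2_nonneg _ x) (by rw [scale_νe]; exact hξ _)) (cut_nonneg _ _ _)) ?_ hinv
    filter_upwards [hn.eventually_ge_atTop (3 * R)] with n hnR
    obtain ⟨m, hm, hmd⟩ : ∃ m : ℝ, 1 ≤ m ∧ (n : ℝ) + 1 = m := ⟨_, by simp, rfl⟩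
    have g3 := h3 n
    have k0 := hκ n
    rw [scale_I_a2]
    simp only [hmd] at *
    have hm0 : 0 < m := by linarith
    have hc1 := (G.rd_CS .psi 0 k0).mul_l (G.a2 * G.νe ξ)
    have hle : G.I (G.a2 * G.νe ξ * G.cut (κ n / m * R))
        ≤ 8 * G.I (G.a2 * G.νe ξ * G.rd .psi 0 (κ n)) := by
      rw [← I_smul]
      refine G.I_mono ((G.cut_CS (by positivity)).mul_l _) (hc1.smul _) fun x => ?_
      have := mul_le_mul_of_nonneg_left (G.cut_le_psi k0 hm0 hR hnR x)
        (mul_nonneg (G.a2_nonneg x) (hξ x))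
      simp only [SF.smul_apply, SF.mul_apply]
      linarith
    have hI : 0 ≤ κ n ^ 2 * (κ n ^ N)⁻¹ * G.I (G.a2 * G.νe ξ * G.rd .psi 0 (κ n)) :=
      mul_nonneg (by positivity) (G.I_nonneg fun x => mul_nonneg
        (mul_nonneg (G.a2_nonneg x) (hξ x)) (G.rd_nonneg _ _ _ x))
    calc (κ n / m) ^ 2 * ((κ n / m) ^ N)⁻¹ * G.I (G.a2 * G.νe ξ * G.cut (κ n / m * R))
        ≤ (κ n / m) ^ 2 * ((κ n / m) ^ N)⁻¹ * (8 * G.I (G.a2 * G.νe ξ * G.rd .psi 0 (κ n))) :=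
          mul_le_mul_of_nonneg_left hle (by positivity)
      _ = 8 * (m ^ N / m ^ 2) * (κ n ^ 2 * (κ n ^ N)⁻¹ * G.I (G.a2 * G.νe ξ * G.rd .psi 0 (κ n))) := by
          rw [div_pow, div_pow]; field_simp
      _ ≤ 8 * m ^ N * (κ n ^ 2 * (κ n ^ N)⁻¹ * G.I (G.a2 * G.νe ξ * G.rd .psi 0 (κ n))) := by
          refine mul_le_mul_of_nonneg_right ?_ hI
          have : m ^ N / m ^ 2 ≤ m ^ N := div_le_self (by positivity) (one_le_pow₀ hm)
          linarith
      _ ≤ 8 * m ^ N * (m ^ (N + 3))⁻¹ := mul_le_mul_of_nonneg_left g3 (by positivity)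
      _ = 8 * (m ^ 3)⁻¹ := by rw [pow_add]; field_simp
      _ ≤ 8 * m⁻¹ := by
          have : m ≤ m ^ 3 := le_self_pow₀ hm (by norm_num)
          gcongr

end MinGraph

/-! ### Cones over entire graphs and the conclusion -/

namespace MinGraph

variable {N : ℕ} (G : MinGraph N)

lemma νe_bv (i : Idx N) : G.νe (bv i) = G.ν i := by
  ext x
  rw [νe_apply, bv, EuclideanSpace.inner_single_left, nu_apply, map_one, one_mul]

lemma lap_one : G.lap 1 = 0 := by
  change ∑ i, G.δ i (G.δ i 1) = 0
  exact Finset.sum_eq_zero fun i _ => by rw [δ_one, map_zero]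

lemma νe_add (e e' : W N) : G.νe (e + e') = G.νe e + G.νe e' := by
  ext x; simp only [νe_apply, SF.add_apply, inner_add_left]

lemma νe_smul (a : ℝ) (e : W N) : G.νe (a • e) = a • G.νe e := by
  ext x; simp only [νe_apply, SF.smul_apply, real_inner_smul_left]

lemma νe_sum {ι : Type*} (s : Finset ι) (ξ : ι → W N) (x : E N) :
    G.νe (∑ k ∈ s, ξ k) x = ∑ k ∈ s, G.νe (ξ k) x := by
  simp only [νe_apply, sum_inner]

/-- The area ratios of the graph about the origin increase with the scale. -/
lemma J_one_mono {κ κ' : ℝ} (hκ : 0 < κ) (h : κ ≤ κ') : G.J 1 0 κ ≤ G.J 1 0 κ' := by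
  have hd : ∀ x ∈ Set.Ici κ, HasDerivAt (G.J 1 0) (G.J' 1 0 x) x := fun x hx =>
    G.hasDerivAt_J 1 0 (hκ.trans_le hx)
  have := monotoneOn_of_deriv_nonneg (convex_Ici κ) (f := G.J 1 0)
    (fun x hx => (hd x hx).continuousAt.continuousWithinAt)
    (fun x hx => (hd x (interior_subset hx)).differentiableAt.differentiableWithinAt)
    fun x hx => by
      rw [(hd x (interior_subset hx)).deriv, J', lap_one]
      have hx0 : 0 < x := hκ.trans_le (interior_subset hx)
      have h1 : 0 ≤ G.I (1 * (G.s 0 * G.s 0) * G.rd .cut 0 x) := G.I_nonneg fun y => by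
        rw [one_mul]
        exact mul_nonneg (mul_self_nonneg _) (G.rd_nonneg _ _ _ y)
      have h2 : 0 ≤ G.I (0 * G.rd .psi 0 x) := by rw [zero_mul]; exact G.I_nonneg fun y => le_rfl
      change 0 ≤ (x ^ (N + 1))⁻¹ * (2 * (x ^ 2)⁻¹ * G.I (1 * (G.s 0 * G.s 0) * G.rd .cut 0 x)
        + x ^ 2 / 2 * G.I (0 * G.rd .psi 0 x))
      positivity
  exact this Set.self_mem_Ici h h

/-- If the area ratios about a point of the graph never exceed the density of a plane, then the
graph is a cone with vertex at that point. -/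
lemma s_eq_zero (h0 : G.u 0 = 0) (h : ∀ κ, 0 < κ → G.J 1 0 κ ≤ cc N) (x : E N) : G.s 0 x = 0 := by
  have hp : G.pos 0 = 0 := by
    ext i
    rw [pos_apply]
    rcases i with _ | i
    · exact h0
    · rfl
  have hJ : ∀ κ, 0 < κ → G.J 1 0 κ = cc N := by
    intro κ hκ
    refine le_antisymm (h κ hκ) (le_of_forall_pos_le_add fun ε hε => ?_)
    have h1 := G.J_density (f := 1) (fun y => zero_le_one) 0 hε
    rw [hp] at h1
    obtain ⟨k, hk, hk1, hk2⟩ := (h1.and (Ioc_mem_nhdsGT hκ)).exists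
    have h2 := G.J_one_mono hk1 hk2
    rw [SF.one_apply, mul_one] at hk
    linarith
  by_contra hx
  obtain ⟨κ, hκ, hκx⟩ : ∃ κ : ℝ, 0 < κ ∧ G.r2 0 x ≤ κ ^ 2 := by
    refine ⟨G.r2 0 x + 1, ?_, ?_⟩ <;> nlinarith [G.r2_nonneg 0 x]
  have hd : HasDerivAt (G.J 1 0) 0 κ :=
    (hasDerivAt_const κ (cc N)).congr_of_eventuallyEq (by
      filter_upwards [lt_mem_nhds hκ] with k hk using hJ k hk)
  have h1 := (G.hasDerivAt_J 1 0 hκ).unique hd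
  rw [J', lap_one, zero_mul] at h1
  have h2 : G.I 0 = 0 := by simp [I]
  rw [h2, mul_zero, add_zero] at h1
  have h3 : 0 < G.I (1 * (G.s 0 * G.s 0) * G.rd .cut 0 κ) := by
    rw [one_mul, I, integral_μ]
    refine Continuous.integral_pos_of_hasCompactSupport_nonneg_nonzero (x := x) ?_ ?_ ?_ ?_
    · exact (SF.continuous _).mul (SF.continuous _)
    · exact ((G.rd_CS .cut 0 hκ).mul_l (G.s 0 * G.s 0)).mul_left
    · exact fun y => mul_nonneg (G.v_pos y).le
        (mul_nonneg (mul_self_nonneg _) (G.rd_nonneg _ _ _ y))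
    · refine mul_ne_zero (G.v_pos x).ne' ?_
      rw [SF.mul_apply, SF.mul_apply, ← cut_eq_rd, G.cut_one hκ hκx, mul_one]
      exact mul_ne_zero hx hx
  have h4 : 0 < (κ ^ (N + 1))⁻¹ * (2 * (κ ^ 2)⁻¹ * G.I (1 * (G.s 0 * G.s 0) * G.rd .cut 0 κ)) := by
    positivity
  exact h4.ne' h1

/-- A smooth function whose graph is a cone is linear. -/
lemma linear_of_cone (h0 : G.u 0 = 0) (h : ∀ x, G.s 0 x = 0) (x : E N) :
    G.u x = fderiv ℝ G.u 0 x := by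
  have hd := SF.differentiable G.u
  have euler : ∀ y, fderiv ℝ G.u y y = G.u y := by
    intro y
    have h1 := h y
    have hv := (G.v_pos y).ne'
    rw [s_apply, Fintype.sum_option] at h1
    simp only [XP_apply, X_none, X_some, ν_none, ν_some, Pi.zero_apply, sub_zero] at h1
    have h2 : fderiv ℝ G.u y y = ∑ i, y i * G.du i y := by
      have hy : y = ∑ i, y i • EuclideanSpace.single i (1 : ℝ) := by
        simpa using ((EuclideanSpace.basisFun (Fin N) ℝ).sum_repr y).symm
      refine (congrArg (fderiv ℝ G.u y) hy).trans ?_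
      rw [map_sum]
      refine Finset.sum_congr rfl fun i _ => ?_
      rw [map_smul, smul_eq_mul]
      rfl
    have h3 : ∑ i, y i * -((G.v y)⁻¹ * G.du i y) = -(G.v y)⁻¹ * ∑ i, y i * G.du i y := by
      rw [Finset.mul_sum]
      exact Finset.sum_congr rfl fun i _ => by ring
    have h4 : G.u y * (G.v y)⁻¹ + ∑ i, y i * -((G.v y)⁻¹ * G.du i y) = 0 := h1
    rw [h3, ← h2] at h4
    field_simp at h4
    linarith
  have hexp : ∀ r : ℝ, HasDerivAt (fun r => Real.exp (-r) * G.u (Real.exp r • x)) 0 r := by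
    intro r
    have h1 : HasDerivAt (fun r => Real.exp r • x) (Real.exp r • x) r :=
      (Real.hasDerivAt_exp r).smul_const x
    have h2 := (hd (Real.exp r • x)).hasFDerivAt.comp_hasDerivAt r h1
    have h3 := (Real.hasDerivAt_exp (-r)).comp r (hasDerivAt_neg r)
    refine (h3.mul h2).congr_deriv ?_
    rw [euler]
    simp
  have hc : ∀ r : ℝ, Real.exp (-r) * G.u (Real.exp r • x) = G.u x := by
    intro r
    have := is_const_of_deriv_eq_zero (fun r => (hexp r).differentiableAt)
      (fun r => (hexp r).deriv) r 0
    simpa using this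
  have hslope : HasDerivAt (fun t : ℝ => G.u (t • x)) (fderiv ℝ G.u 0 x) 0 := by
    have h1 : HasDerivAt (fun t : ℝ => t • x) x 0 := by
      simpa using (hasDerivAt_id (0:ℝ)).smul_const x
    have h2 : HasFDerivAt G.u (fderiv ℝ G.u 0) ((0:ℝ) • x) := by
      rw [zero_smul]; exact (hd 0).hasFDerivAt
    exact h2.comp_hasDerivAt 0 h1
  refine tendsto_nhds_unique (Tendsto.congr' ?_ tendsto_const_nhds) hslope.tendsto_slope_zero_right
  filter_upwards [self_mem_nhdsWithin] with t ht
  have := hc (Real.log t)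
  rw [Real.exp_neg, Real.exp_log ht] at this
  simp only [zero_add, zero_smul, h0, sub_zero, smul_eq_mul]
  exact this.symm

/-- An entire minimal graph on which all but seven components of the normal are combinations of
the vertical component and of one further nonnegative component is a cone. -/
theorem cone (hN : 1 ≤ N) (h0 : G.u 0 = 0) {K : Finset (Idx N)} (hK : Kᶜ.card = 7)
    {ξ : Idx N → W N} {a b : Idx N → ℝ} (hξ : ∀ k ∈ K, ∀ x, 0 ≤ G.νe (ξ k) x)
    (hab : ∀ k ∈ K, G.ν k = a k • G.νe (ξ k) + b k • G.νe (bv none)) (x : E N) : G.s 0 x = 0 := by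
  have hnone : ∀ x, 0 ≤ G.νe (bv none) x := fun x => by
    rw [νe_bv]; exact (G.ν_none_pos x).le
  set Ξ : W N := bv none + ∑ k ∈ K, ξ k with hΞ
  have hsum : ∀ x, G.νe Ξ x = G.νe (bv none) x + ∑ k ∈ K, G.νe (ξ k) x := fun x => by
    rw [hΞ, νe_add, SF.add_apply, νe_sum]
  have hle0 : ∀ x, G.νe (bv none) x ≤ G.νe Ξ x := fun x => by
    rw [hsum]
    have := Finset.sum_nonneg fun k hk => hξ k hk x
    linarith
  have hle : ∀ k ∈ K, ∀ x, G.νe (ξ k) x ≤ G.νe Ξ x := fun k hk x => by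
    rw [hsum]
    have := Finset.single_le_sum (f := fun k => G.νe (ξ k) x) (fun k hk => hξ k hk x) hk
    linarith [hnone x]
  obtain ⟨c, hc, hctop, hs, ha⟩ := G.blowdown fun x => (hnone x).trans (hle0 x)
  set H : ℕ → MinGraph N := fun n => G.scale (hc n) with hH
  have hνH : ∀ e : W N, (∀ x, 0 ≤ G.νe e x) → ∀ n x, 0 ≤ (H n).νe e x := fun e he n x => by
    rw [hH]; dsimp only; rw [scale_νe]; exact he _
  have hneg : ∀ e : W N, (∀ x, 0 ≤ G.νe e x) → (∀ x, G.νe e x ≤ G.νe Ξ x) →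
      Neg H fun n => (H n).a2 * (H n).νe e := by
    intro e he hle
    refine Neg.of_le ha ha (fun n x => mul_nonneg (a2_nonneg _ x) (hνH e he n x)) fun R _ => ⟨1, ?_⟩
    intro n x _
    have h1 : (H n).νe e x ≤ (H n).νe Ξ x := by
      rw [hH]; dsimp only; rw [scale_νe, scale_νe]; exact hle _
    have h2 := mul_le_mul_of_nonneg_left h1 (a2_nonneg (H n) x)
    have h3 := mul_nonneg (a2_nonneg (H n) x) (hνH e he n x)
    change (H n).a2 x * (H n).νe e x ≤ 1 * ((H n).a2 x * (H n).νe Ξ x)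
      + 1 * ((H n).a2 x * (H n).νe Ξ x)
    linarith
  have hcomb : ∀ k ∈ K, ∀ n, (H n).ν k = a k • (H n).νe (ξ k) + b k • (H n).νe (bv none) := by
    intro k hk n
    rw [hH]; dsimp only
    rw [scale_ν, scale_νe, scale_νe, hab k hk]; rfl
  have na := neg_a2 hN hK hs
    (fun k hk => Neg.Γ_comb (hνH _ (hξ k hk)) (hneg _ (hξ k hk) (hle k hk)) (hνH _ hnone)
      (hneg _ hnone hle0) (a k) (b k) (hcomb k hk))
    (fun k hk => Neg.a2_comb (hνH _ (hξ k hk)) (hneg _ (hξ k hk) (hle k hk)) (hνH _ hnone)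
      (hneg _ hnone hle0) (a k) (b k) (hcomb k hk))
  refine G.s_eq_zero h0 (fun κ hκ => le_of_forall_pos_le_add fun ε hε => ?_) x
  obtain ⟨n, hn, hn'⟩ := ((density_limit hN na hs hε).and (hctop.eventually_ge_atTop κ)).exists
  rw [hH] at hn; dsimp only at hn
  rw [scale_J, mul_one] at hn
  exact (G.J_one_mono hκ hn').trans hn

end MinGraph

theorem mse_affine_of_N_sub_seven_one_side_bounded
    {N : ℕ} (hN : 8 ≤ N) (u : EuclideanSpace ℝ (Fin N) → ℝ)
    (hsmooth : ContDiff ℝ (⊤ : ℕ∞) u) (hMSE : IsMSESolution u)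
    (S : Finset (Fin N)) (hcard : S.card = N - 7)
    (hbdd : ∀ j ∈ S,
      (∃ m : ℝ, ∀ x, m ≤ partialDeriv' u j x) ∨ (∃ m : ℝ, ∀ x, partialDeriv' u j x ≤ m)) :
    IsAffineFun u := by
  have hpd : ∀ i y, partialDeriv' (fun x => u x - u 0) i y = partialDeriv' u i y := by
    intro i y
    unfold partialDeriv'
    rw [fderiv_sub_const]
  let G : MinGraph N :=
    { u := ⟨fun x => u x - u 0, show ContDiff ℝ _ _ from hsmooth.sub contDiff_const⟩
      mse := by
        change IsMSESolution fun x => u x - u 0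
        intro x
        simp_rw [hpd]
        exact hMSE x }
  have h0 : G.u 0 = 0 := sub_self _
  have hdu : ∀ i x, G.du i x = partialDeriv' u i x := fun i x => hpd i x
  have hj : ∀ k : Idx N, ∃ (ξ : W N) (a b : ℝ), k ∈ insert none (S.map .some) →
      (∀ x, 0 ≤ G.νe ξ x) ∧ G.ν k = a • G.νe ξ + b • G.νe (bv none) := by
    have hn : ∀ x, 0 ≤ G.νe (bv none) x := fun x => by
      rw [G.νe_bv]; exact (G.ν_none_pos x).le
    have hv : ∀ x, 0 ≤ (G.v x)⁻¹ := fun x => (inv_pos.2 (G.v_pos x)).le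
    intro k
    by_cases hkK : k ∈ insert none (S.map .some)
    swap
    · exact ⟨0, 0, 0, fun h => absurd h hkK⟩
    rcases k with _ | j
    · refine ⟨bv none, 1, 0, fun _ => ⟨hn, ?_⟩⟩
      rw [G.νe_bv, one_smul, zero_smul, add_zero]
    have hjS : j ∈ S := by simpa using hkK
    rcases hbdd j hjS with ⟨m, hm⟩ | ⟨m, hm⟩
    · refine ⟨(-1 : ℝ) • bv (some j) + (-m) • bv none, -1, -m, fun _ => ⟨fun x => ?_, ?_⟩⟩
      · rw [G.νe_add, G.νe_smul, G.νe_smul, G.νe_bv, G.νe_bv]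
        simp only [SF.add_apply, SF.smul_apply, MinGraph.ν_some, MinGraph.ν_none]
        have := mul_nonneg (hv x) (sub_nonneg.2 (hm x))
        rw [← hdu] at this
        linarith
      · ext x
        rw [G.νe_add, G.νe_smul, G.νe_smul, G.νe_bv, G.νe_bv]
        simp only [SF.add_apply, SF.smul_apply]
        ring
    · refine ⟨bv (some j) + m • bv none, 1, -m, fun _ => ⟨fun x => ?_, ?_⟩⟩
      · rw [G.νe_add, G.νe_smul, G.νe_bv, G.νe_bv]
        simp only [SF.add_apply, SF.smul_apply, MinGraph.ν_some, MinGraph.ν_none]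
        have := mul_nonneg (hv x) (sub_nonneg.2 (hm x))
        rw [← hdu] at this
        linarith
      · ext x
        rw [G.νe_add, G.νe_smul, G.νe_bv, G.νe_bv]
        simp only [SF.add_apply, SF.smul_apply]
        ring
  choose ξ a b hk using hj
  have hK : ((insert none (S.map .some))ᶜ : Finset (Idx N)).card = 7 := by
    rw [Finset.card_compl, Finset.card_insert_of_notMem (by simp), Finset.card_map, hcard]
    simp; omega
  have hlin := G.linear_of_cone h0 (G.cone (by omega) h0 hK (fun k h => (hk k h).1)
    fun k h => (hk k h).2)
  refine ⟨(InnerProductSpace.toDual ℝ _).symm (fderiv ℝ G.u 0), u 0, fun x => ?_⟩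
  rw [InnerProductSpace.toDual_symm_apply, ← hlin x]
  exact (sub_add_cancel _ _).symm
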